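/- (Higher integrability estimate for the one-dimensional Navier–Stokes equations.) Let γ > 1, θ = (γ−1)/2, κ = (γ−1)²/(4γ), p(ρ) = κρ^γ, ε > 0, and let (ρ̄, ū), E₀, E₁ be as before. Let (ρ, u) be a classical solution on [0,T] × ℝ with ρ > 0 of ∂_t ρ + ∂_x(ρu) = 0, ∂_t(ρu) + ∂_x(ρu² + p(ρ)) = ε ∂_{xx} u, with the same decay assumptions and initial bounds ∫ Φ_*(ρ(0,·), m(0,·)) dx ≤ E₀ and ∫ ( ε² |∂_x ρ(0,·)|²/ρ(0,·)³ + 2ε |∂_x ρ(0,·) u(0,·)|/ρ(0,·) + ρ(0,·)|u(0,·)| ) dx ≤ E₁. Then for every compact set K ⊂ ℝ and every t ∈ (0,T] there exists a constant C₂ = C₂(E₀, E₁, K, γ, t), independent of ε, such that ∫₀^t ∫_K ( ρ|u|³ + ρ^{γ+θ} + ρ^{γ+1} ) dx dτ ≤ C₂. -/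

import Mathlib

/-!
Finiteness of the initial momentum `∫ ρ|u|` forces the background velocity to vanish (`ub_zero`), so
the background is `(ρ̄, 0)`. Freezing time outside `[0,T]` turns a classical solution into a `Sol`,
which carries besides `ρ, u` the mass potential `Y` and the momentum potential `A`.

**Uniform energy bounds** (`energy_bounds`, `key_prop`). The solution is not assumed to have
integrable dissipation, nor decay that is uniform in time, so the mechanical energy and the
Bresch–Desjardins energy, i.e. the energy built on the effective velocity `w = u + ε ρ_x/ρ²`, are
localized by a cutoff `bump R (Y)` in the mass coordinate; `Y` moves with the fluid, hence no
convective flux appears. The quantity `H = -A - ε log ρ` increases along particle paths, since its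
material derivative is the pressure, so its values at the two end times control it in between. This
yields a bound `o(√R)` of the energy with constants depending on the solution (`Sol.step1`). In
the flux terms the pressure is controlled pointwise by the dissipation (`sup_pressure`), which
improves a bound `F ≪ √R` at radius `2 * R` to a data constant plus `F/4` at radius `R` (`comb_step`).
Iterating along radii `2^j R` removes the dependence on the solution: on every interval, with
constants depending on the data only, both energies are bounded and so are
`ε ∫∫ |u_x|²` and `ε ∫∫ |(ρ^θ)_x|²`.

**The power `ρ^(γ+1)`.** For `ε ≤ 1` the continuity equation is tested with a cutoff times `A` minus
its local average (`dens_small`), which produces `ρ p(ρ)`; for `ε ≥ 1` the dissipation bound is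
uniform and gives pointwise bounds of the density (`dens_large`).

**The cubic terms.** For `ε ≥ 1` they follow from the dissipation (`cubic_loc`). For `ε ≤ 1` the
entropy pair with kernel `(1 - y²)^λ` and a smooth version of `s|s|/2` as generating function is
used; its flux dominates `ρ (|u|³ + ρ^(3θ))` up to lower order terms (`qn_low`). The balance law is
tested with a cutoff whose derivative is a bump near the origin minus a bump in a far window where
the total gradient is at most `1` (`quiet_window`). Such a window exists by the energy bound; its
distance to the origin depends on the solution, but the entropy in between is bounded uniformly by
the energy (`en_bound`). This gives `cubic_small`, and `combined` puts all cases together.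
-/

open MeasureTheory Filter Set

/-- The mechanical energy `η⋆(ρ,m) = m²/(2ρ) + κ ρ^γ/(γ−1)`. -/
noncomputable def mechEnergy (γ κ : ℝ) (ρ m : ℝ) : ℝ :=
  m ^ 2 / (2 * ρ) + κ * ρ ^ γ / (γ - 1)

/-- The relative mechanical energy
`Φ⋆(ρ,m) = η⋆(ρ,m) − η⋆(ρ̄,m̄) − ∇η⋆(ρ̄,m̄)·(ρ−ρ̄, m−m̄)`. -/
noncomputable def relMechEnergy (γ κ : ℝ) (ρb mb : ℝ) (ρ m : ℝ) : ℝ :=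
  mechEnergy γ κ ρ m - mechEnergy γ κ ρb mb
    - ((-(mb ^ 2) / (2 * ρb ^ 2) + κ * γ * ρb ^ (γ - 1) / (γ - 1)) * (ρ - ρb)
        + (mb / ρb) * (m - mb))

/-! ### Compactly supported space-time functions, Green's formula, Gronwall -/

namespace NSHI

/-- A function of time and space that is jointly continuous and whose support in space is
contained in one bounded interval for all times. -/
def CK (f : ℝ → ℝ → ℝ) : Prop :=
  Continuous (fun z : ℝ × ℝ => f z.1 z.2) ∧ ∃ a, ∀ s x, a ≤ |x| → f s x = 0

namespace CK

variable {f g : ℝ → ℝ → ℝ}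

lemma mul (hf : CK f) (hg : Continuous (fun z : ℝ × ℝ => g z.1 z.2)) :
    CK (fun s x => f s x * g s x) := by
  obtain ⟨h1, a, ha⟩ := hf
  exact ⟨h1.mul hg, a, fun s x hx => by simp [ha s x hx]⟩

lemma congr (hf : CK f) (h : ∀ s x, g s x = f s x) : CK g := by
  have : g = f := by funext s x; exact h s x
  rwa [this]

lemma add (hf : CK f) (hg : CK g) : CK (fun s x => f s x + g s x) := by
  obtain ⟨h1, a, ha⟩ := hf
  obtain ⟨h2, b, hb⟩ := hg
  exact ⟨h1.add h2, max a b, fun s x hx => by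
    simp [ha s x (le_trans (le_max_left _ _) hx), hb s x (le_trans (le_max_right _ _) hx)]⟩

lemma cmul (hf : CK f) (c : ℝ) : CK (fun s x => c * f s x) :=
  (hf.mul (g := fun _ _ => c) continuous_const).congr (fun _ _ => mul_comm _ _)

lemma neg (hf : CK f) : CK (fun s x => - f s x) :=
  (hf.cmul (-1)).congr (fun s x => by ring)

lemma sub (hf : CK f) (hg : CK g) : CK (fun s x => f s x - g s x) :=
  (hf.add hg.neg).congr (fun s x => by ring)

lemma abs (hf : CK f) : CK (fun s x => |f s x|) := by
  obtain ⟨h1, a, ha⟩ := hf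
  exact ⟨h1.abs, a, fun s x hx => by simp [ha s x hx]⟩

lemma cont (hf : CK f) : Continuous (fun z : ℝ × ℝ => f z.1 z.2) := hf.1

lemma cont_x (hf : CK f) (s : ℝ) : Continuous (fun x => f s x) :=
  hf.1.comp (by fun_prop : Continuous (fun x : ℝ => (s, x)))

lemma cont_t (hf : CK f) (x : ℝ) : Continuous (fun s => f s x) :=
  hf.1.comp (by fun_prop : Continuous (fun s : ℝ => (s, x)))

lemma integrable (hf : CK f) (s : ℝ) : Integrable (fun x => f s x) := by
  obtain ⟨a, ha⟩ := hf.2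
  refine (hf.cont_x s).integrable_of_hasCompactSupport ?_
  refine HasCompactSupport.intro (isCompact_Icc (a := -a) (b := a)) (fun x hx => ha s x ?_)
  by_contra h
  push Not at h
  exact hx ⟨(abs_lt.mp h).1.le, (abs_lt.mp h).2.le⟩

lemma contI (hf : CK f) : Continuous (fun s => ∫ x, f s x) := by
  obtain ⟨a, ha⟩ := hf.2
  rw [← continuousOn_univ]
  refine continuousOn_integral_of_compact_support (isCompact_Icc (a := -a) (b := a))
    (by simpa [Function.uncurry_def] using hf.1) (fun s x _ hx => ha s x ?_)
  by_contra h
  push Not at h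
  exact hx ⟨(abs_lt.mp h).1.le, (abs_lt.mp h).2.le⟩

lemma ii (hf : CK f) (a b : ℝ) : IntervalIntegrable (fun s => ∫ x, f s x) volume a b :=
  hf.contI.intervalIntegrable a b

lemma int_le (hf : CK f) (hg : CK g) {s : ℝ} (h : ∀ x, f s x ≤ g s x) :
    ∫ x, f s x ≤ ∫ x, g s x :=
  integral_mono (hf.integrable s) (hg.integrable s) h

/-- Space-time monotonicity. -/
lemma int2_le (hf : CK f) (hg : CK g) {a b : ℝ} (hab : a ≤ b)
    (h : ∀ s ∈ Icc a b, ∀ x, f s x ≤ g s x) :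
    ∫ s in a..b, ∫ x, f s x ≤ ∫ s in a..b, ∫ x, g s x :=
  intervalIntegral.integral_mono_on hab (hf.ii a b) (hg.ii a b)
    (fun s hs => hf.int_le hg (h s hs))

/-- Fubini for a time interval. -/
lemma swap (hf : CK f) {a b : ℝ} :
    ∫ s in a..b, ∫ x, f s x = ∫ x, ∫ s in a..b, f s x := by
  obtain ⟨c, hc⟩ := hf.2
  apply intervalIntegral_integral_swap
  have h1 : IntegrableOn (Function.uncurry f) (uIcc a b ×ˢ Icc (-c) c) (volume.prod volume) :=
    ContinuousOn.integrableOn_compact (isCompact_uIcc.prod isCompact_Icc)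
      (by simpa [Function.uncurry_def] using hf.1.continuousOn)
  have h2 : IntegrableOn (Function.uncurry f) (uIoc a b ×ˢ univ) (volume.prod volume) := by
    refine (h1.mono_set (s := uIoc a b ×ˢ Icc (-c) c)
      (prod_mono uIoc_subset_uIcc subset_rfl)).of_forall_sdiff_eq_zero
      (measurableSet_uIoc.prod MeasurableSet.univ) ?_
    rintro ⟨s, x⟩ ⟨hz1, hz2⟩
    simp only [Function.uncurry_apply_pair]
    apply hc
    by_contra h
    push Not at h
    exact hz2 ⟨hz1.1, ⟨(abs_lt.mp h).1.le, (abs_lt.mp h).2.le⟩⟩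
  rw [IntegrableOn, ← Measure.prod_restrict, Measure.restrict_univ] at h2
  exact h2

end CK

/-- The integral of the derivative of a compactly supported function vanishes. -/
lemma integral_deriv_zero {q qx : ℝ → ℝ} {a : ℝ} (hq : ∀ x, HasDerivAt q (qx x) x)
    (hc : Continuous qx) (hs : ∀ x, a ≤ |x| → q x = 0) (hsx : ∀ x, a ≤ |x| → qx x = 0) :
    ∫ x, qx x = 0 := by
  have hsupp : Function.support qx ⊆ Ioc (-(|a| + 1)) (|a| + 1) := by
    intro x hx
    by_contra h
    apply hx
    apply hsx
    rw [mem_Ioc, not_and_or] at h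
    rcases h with h | h
    · push Not at h
      have : -x ≤ |x| := neg_le_abs x
      linarith [le_abs_self a]
    · push Not at h
      linarith [le_abs_self a, le_abs_self x]
  rw [← intervalIntegral.integral_eq_integral_of_support_subset hsupp,
    intervalIntegral.integral_eq_sub_of_hasDerivAt (fun x _ => hq x)
      (hc.intervalIntegrable _ _), hs, hs, sub_zero]
  · rw [abs_neg, abs_of_nonneg (by positivity)]; linarith [le_abs_self a]
  · rw [abs_of_nonneg (by positivity)]; linarith [le_abs_self a]

/-- Integrated form of a balance law `P_t + Q_x = G` with spatially compact support. -/
lemma green {T : ℝ} {P Pt Q Qx G : ℝ → ℝ → ℝ} (hP : CK P) (hQ : CK Q) (hPt : CK Pt)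
    (hQx : CK Qx) (hG : ∀ s ∈ Ioo 0 T, ∀ x, Pt s x + Qx s x = G s x)
    (dP : ∀ s ∈ Ioo 0 T, ∀ x, HasDerivAt (fun τ => P τ x) (Pt s x) s)
    (dQ : ∀ s ∈ Ioo 0 T, ∀ x, HasDerivAt (fun y => Q s y) (Qx s x) x)
    {s : ℝ} (hs : s ∈ Icc 0 T) :
    ∫ x, P s x = (∫ x, P 0 x) + ∫ τ in (0:ℝ)..s, ∫ x, G τ x := by
  have h1 : ∀ τ ∈ Ioo 0 T, ∫ x, G τ x = ∫ x, Pt τ x := by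
    intro τ hτ
    obtain ⟨a, ha⟩ := hQ.2
    obtain ⟨b, hb⟩ := hQx.2
    have h0 : ∫ x, Qx τ x = 0 :=
      integral_deriv_zero (a := max a b) (dQ τ hτ) (hQx.cont_x τ)
        (fun x hx => ha τ x (le_trans (le_max_left _ _) hx))
        (fun x hx => hb τ x (le_trans (le_max_right _ _) hx))
    have : (fun x => G τ x) = fun x => Pt τ x + Qx τ x := by
      funext x; exact (hG τ hτ x).symm
    rw [this, integral_add (hPt.integrable τ) (hQx.integrable τ), h0, add_zero]
  have h2 : ∫ τ in (0:ℝ)..s, ∫ x, G τ x = ∫ τ in (0:ℝ)..s, ∫ x, Pt τ x := by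
    rw [intervalIntegral.integral_of_le hs.1, intervalIntegral.integral_of_le hs.1,
      integral_Ioc_eq_integral_Ioo, integral_Ioc_eq_integral_Ioo]
    exact setIntegral_congr_fun measurableSet_Ioo
      (fun τ hτ => h1 τ ⟨hτ.1, lt_of_lt_of_le hτ.2 hs.2⟩)
  have h3 : ∀ x, ∫ τ in (0:ℝ)..s, Pt τ x = P s x - P 0 x := fun x =>
    intervalIntegral.integral_eq_sub_of_hasDerivAt_of_le hs.1 (hP.cont_t x).continuousOn
      (fun τ hτ => dP τ ⟨hτ.1, lt_of_lt_of_le hτ.2 hs.2⟩ x)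
      ((hPt.cont_t x).intervalIntegrable _ _)
  rw [h2, hPt.swap]
  simp_rw [h3]
  rw [integral_sub (hP.integrable s) (hP.integrable 0)]
  ring

/-- Integral form of Gronwall's inequality. -/
lemma gronwall {T K : ℝ} {f a : ℝ → ℝ} (hf : Continuous f) (ha : Continuous a)
    (ha0 : ∀ s, 0 ≤ a s)
    (h : ∀ s ∈ Icc 0 T, f s ≤ K + ∫ τ in (0:ℝ)..s, a τ * f τ) {s : ℝ} (hs : s ∈ Icc 0 T) :
    f s ≤ K * Real.exp (∫ τ in (0:ℝ)..s, a τ) := by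
  set α : ℝ → ℝ := fun s => ∫ τ in (0:ℝ)..s, a τ
  set β : ℝ → ℝ := fun s => K + ∫ τ in (0:ℝ)..s, a τ * f τ
  have hα : ∀ s, HasDerivAt α (a s) s := fun s =>
    ha.integral_hasStrictDerivAt 0 s |>.hasDerivAt
  have hβ : ∀ s, HasDerivAt β (a s * f s) s := fun s =>
    ((ha.mul hf).integral_hasStrictDerivAt 0 s |>.hasDerivAt).const_add K
  have hG : ∀ s, HasDerivAt (fun s => β s * Real.exp (-α s))
      (a s * f s * Real.exp (-α s) + β s * (Real.exp (-α s) * (-a s))) s := fun s =>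
    (hβ s).mul ((hα s).neg.exp)
  have hanti : AntitoneOn (fun s => β s * Real.exp (-α s)) (Icc 0 T) := by
    apply antitoneOn_of_deriv_nonpos (convex_Icc 0 T)
    · exact fun s _ => (hG s).continuousAt.continuousWithinAt
    · exact fun s _ => (hG s).differentiableAt.differentiableWithinAt
    · intro s hs'
      rw [interior_Icc] at hs'
      rw [(hG s).deriv]
      have := h s ⟨hs'.1.le, hs'.2.le⟩
      have h2 : 0 ≤ a s * Real.exp (-α s) * (β s - f s) :=
        mul_nonneg (mul_nonneg (ha0 s) (Real.exp_pos _).le) (sub_nonneg.mpr this)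
      nlinarith
  have h1 := hanti ⟨le_rfl, hs.1.trans hs.2⟩ hs hs.1
  simp only [α, β, intervalIntegral.integral_same, neg_zero, Real.exp_zero, add_zero, mul_one]
    at h1
  have h2 := h s hs
  have h3 : (K + ∫ τ in (0:ℝ)..s, a τ * f τ) ≤ K * Real.exp (α s) := by
    have : (K + ∫ τ in (0:ℝ)..s, a τ * f τ) =
      (K + ∫ τ in (0:ℝ)..s, a τ * f τ) * Real.exp (-α s) * Real.exp (α s) := by
      rw [mul_assoc, ← Real.exp_add]; simp
    rw [this]
    exact mul_le_mul_of_nonneg_right h1 (Real.exp_pos _).le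
  exact h2.trans h3

/-- Cauchy–Schwarz for interval integrals of continuous functions. -/
lemma cauchy_schwarz {f g : ℝ → ℝ} {a b : ℝ} (hab : a ≤ b) (hf : Continuous f)
    (hg : Continuous g) :
    (∫ x in a..b, f x * g x) ^ 2 ≤ (∫ x in a..b, f x ^ 2) * ∫ x in a..b, g x ^ 2 := by
  set A := ∫ x in a..b, f x ^ 2
  set B := ∫ x in a..b, f x * g x
  set D := ∫ x in a..b, g x ^ 2
  have key : ∀ t : ℝ, 0 ≤ A * (t * t) + (2 * B) * t + D := by
    intro t
    have h1 : 0 ≤ ∫ x in a..b, (t * f x + g x) ^ 2 :=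
      intervalIntegral.integral_nonneg hab (fun x _ => sq_nonneg _)
    have h2 : ∫ x in a..b, (t * f x + g x) ^ 2 = A * (t * t) + (2 * B) * t + D := by
      have e : (fun x => (t * f x + g x) ^ 2) =
          fun x => t * t * f x ^ 2 + (2 * t) * (f x * g x) + g x ^ 2 := by
        funext x; ring
      rw [e, intervalIntegral.integral_add, intervalIntegral.integral_add,
        intervalIntegral.integral_const_mul, intervalIntegral.integral_const_mul]
      · simp only [A, B, D]; ring
      all_goals exact Continuous.intervalIntegrable (by fun_prop) _ _
    linarith
  have := discrim_le_zero key
  unfold discrim at this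
  nlinarith

end NSHI

/-! ### Cutoffs, background data and solutions -/

namespace NSHI

lemma hasDerivAt_max_pow (n : ℕ) (t : ℝ) :
    HasDerivAt (fun t : ℝ => (max 0 t) ^ (n + 2)) ((n + 2) * (max 0 t) ^ (n + 1)) t := by
  rcases lt_trichotomy t 0 with h | h | h
  · rw [max_eq_left h.le]
    have : (fun t : ℝ => (max 0 t) ^ (n + 2)) =ᶠ[nhds t] fun _ => 0 := by
      filter_upwards [gt_mem_nhds h] with y hy
      rw [max_eq_left hy.le]; simp
    refine HasDerivAt.congr_of_eventuallyEq ?_ this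
    simpa using hasDerivAt_const t (0:ℝ)
  · subst h
    have : (fun t : ℝ => (max 0 t) ^ (n + 2)) =O[nhds 0] fun t => ‖t - 0‖ ^ (n + 2) := by
      apply Asymptotics.IsBigO.of_bound 1
      filter_upwards with y
      simp only [norm_pow, sub_zero, Real.norm_eq_abs, abs_abs, one_mul]
      refine pow_le_pow_left₀ (abs_nonneg _) ?_ _
      rcases le_total 0 y with hy | hy
      · rw [max_eq_right hy]
      · rw [max_eq_left hy, abs_zero]; exact abs_nonneg y
    have h2 := (this.hasFDerivAt (𝕜 := ℝ) (by omega)).hasDerivAt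
    refine h2.congr_deriv ?_
    simp
  · rw [max_eq_right h.le]
    have : (fun t : ℝ => (max 0 t) ^ (n + 2)) =ᶠ[nhds t] fun t => t ^ (n + 2) := by
      filter_upwards [lt_mem_nhds h] with y hy
      rw [max_eq_right hy.le]
    refine HasDerivAt.congr_of_eventuallyEq ?_ this
    simpa using hasDerivAt_pow (n + 2) t

/-- The bump `max 0 (1 - (y/R)²)`, supported in `[-R, R]`; its powers serve as cutoffs in the
mass coordinate. -/
noncomputable def bump (R y : ℝ) : ℝ := max 0 (1 - (y / R) ^ 2)

lemma bump_nonneg (R y : ℝ) : 0 ≤ bump R y := le_max_left _ _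

lemma bump_le_one (R y : ℝ) : bump R y ≤ 1 := by
  unfold bump
  exact max_le zero_le_one (by nlinarith [sq_nonneg (y / R)])

@[fun_prop]
lemma continuous_bump {α : Type*} [TopologicalSpace α] {R : ℝ} {f : α → ℝ} (hf : Continuous f) :
    Continuous (fun a => bump R (f a)) := by
  unfold bump; fun_prop

lemma bump_zero {R y : ℝ} (hR : 0 < R) (h : R ≤ |y|) : bump R y = 0 := by
  unfold bump
  apply max_eq_left
  have h1 : 1 ≤ |y / R| := by rw [abs_div, abs_of_pos hR, le_div_iff₀ hR]; linarith
  have h2 : 1 ≤ |y / R| ^ 2 := one_le_pow₀ h1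
  rw [sq_abs] at h2
  linarith

lemma bump_pos_abs {R y : ℝ} (hR : 0 < R) (h : 0 < bump R y) : |y| < R := by
  by_contra h2
  rw [bump_zero hR (not_lt.mp h2)] at h
  exact lt_irrefl _ h

lemma bump_ge {R y c : ℝ} (hR : 0 < R) (h : |y| ≤ c * R) :
    1 - c ^ 2 ≤ bump R y := by
  unfold bump
  refine le_trans ?_ (le_max_right _ _)
  have h1 : |y / R| ≤ c := by rw [abs_div, abs_of_pos hR, div_le_iff₀ hR]; exact h
  have h2 : |y / R| ^ 2 ≤ c ^ 2 := pow_le_pow_left₀ (abs_nonneg _) h1 2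
  rw [sq_abs] at h2
  linarith

/-- First derivative of `bump R ^ k`. -/
noncomputable def dcut (k : ℕ) (R y : ℝ) : ℝ := k * bump R y ^ (k - 1) * (-(2 * y / R ^ 2))

/-- Second derivative of `bump R ^ k`. -/
noncomputable def ddcut (k : ℕ) (R y : ℝ) : ℝ :=
  k * ((k - 1) * bump R y ^ (k - 2) * (-(2 * y / R ^ 2))) * (-(2 * y / R ^ 2))
    + k * bump R y ^ (k - 1) * (-(2 / R ^ 2))

@[fun_prop]
lemma continuous_dcut {α : Type*} [TopologicalSpace α] {k : ℕ} {R : ℝ} {f : α → ℝ}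
    (hf : Continuous f) : Continuous (fun a => dcut k R (f a)) := by
  unfold dcut; fun_prop

@[fun_prop]
lemma continuous_ddcut {α : Type*} [TopologicalSpace α] {k : ℕ} {R : ℝ} {f : α → ℝ}
    (hf : Continuous f) : Continuous (fun a => ddcut k R (f a)) := by
  unfold ddcut; fun_prop

lemma hasDerivAt_bump_pow {k : ℕ} (hk : 2 ≤ k) (R y : ℝ) :
    HasDerivAt (fun y => bump R y ^ k) (dcut k R y) y := by
  obtain ⟨n, rfl⟩ := Nat.exists_eq_add_of_le' hk
  have h1 : HasDerivAt (fun y : ℝ => 1 - (y / R) ^ 2) (-(2 * y / R ^ 2)) y := by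
    have := (((hasDerivAt_id y).div_const R).pow 2).const_sub 1
    refine this.congr_deriv ?_
    simp; ring
  have h2 := (hasDerivAt_max_pow n (1 - (y / R) ^ 2)).comp y h1
  refine h2.congr_deriv ?_
  unfold dcut bump
  push_cast
  rfl

lemma hasDerivAt_dcut {k : ℕ} (hk : 3 ≤ k) (R y : ℝ) :
    HasDerivAt (fun y => dcut k R y) (ddcut k R y) y := by
  have h1 := hasDerivAt_bump_pow (k := k - 1) (by omega) R y
  have h2 : HasDerivAt (fun y : ℝ => -(2 * y / R ^ 2)) (-(2 / R ^ 2)) y := by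
    have := (((hasDerivAt_id y).const_mul 2).div_const (R ^ 2)).neg
    refine this.congr_deriv ?_
    simp
  have h3 := (h1.const_mul (k : ℝ)).mul h2
  refine h3.congr_deriv ?_
  unfold dcut ddcut
  rw [show k - 1 - 1 = k - 2 by omega]
  push_cast [show 1 ≤ k by omega]
  ring

lemma abs_slope_le {R y : ℝ} (hR : 0 < R) (h : |y| ≤ R) : |-(2 * y / R ^ 2)| ≤ 2 / R := by
  rw [abs_neg, abs_div, abs_mul, abs_of_pos (by positivity : (0:ℝ) < R ^ 2), abs_two,
    div_le_div_iff₀ (by positivity) hR]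
  nlinarith

lemma abs_dcut_le {k : ℕ} (hk : 2 ≤ k) {R : ℝ} (hR : 0 < R) (y : ℝ) :
    |dcut k R y| ≤ 2 * k / R * bump R y ^ (k - 1) := by
  unfold dcut
  rcases le_total R |y| with h | h
  · rw [bump_zero hR h, zero_pow (by omega)]; simp
  · rw [abs_mul, abs_of_nonneg (by have := bump_nonneg R y; positivity)]
    calc _ ≤ (k:ℝ) * bump R y ^ (k - 1) * (2 / R) :=
          mul_le_mul_of_nonneg_left (abs_slope_le hR h)
            (by have := bump_nonneg R y; positivity)
      _ = _ := by ring

lemma abs_ddcut_le {k : ℕ} (hk : 3 ≤ k) {R : ℝ} (hR : 0 < R) (y : ℝ) :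
    |ddcut k R y| ≤ 4 * k ^ 2 / R ^ 2 * bump R y ^ (k - 2) := by
  unfold ddcut
  have hb := bump_nonneg R y
  rcases le_total R |y| with h | h
  · rw [bump_zero hR h, zero_pow (by omega), zero_pow (by omega)]; simp
  · have hs := abs_slope_le hR h
    set σ := -(2 * y / R ^ 2)
    have hk1 : (1:ℝ) ≤ k := by exact_mod_cast (by omega : 1 ≤ k)
    have hb1 : bump R y ^ (k - 1) ≤ bump R y ^ (k - 2) :=
      pow_le_pow_of_le_one hb (bump_le_one R y) (by omega)
    have hσ : σ * σ ≤ (2 / R) ^ 2 := by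
      have := pow_le_pow_left₀ (abs_nonneg σ) hs 2
      rw [sq_abs] at this; nlinarith
    have hσ0 : 0 ≤ σ * σ := mul_self_nonneg σ
    set β := bump R y ^ (k - 2)
    have hβ : 0 ≤ β := by positivity
    have e1 : |(k:ℝ) * ((k - 1) * β * σ) * σ| ≤ k * (k - 1) * β * (2 / R) ^ 2 := by
      rw [show (k:ℝ) * ((k - 1) * β * σ) * σ = (k * (k - 1) * β) * (σ * σ) by ring,
        abs_of_nonneg (by have : (0:ℝ) ≤ k - 1 := by linarith
                          positivity)]
      exact mul_le_mul_of_nonneg_left hσ (by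
        have : (0:ℝ) ≤ k - 1 := by linarith
        positivity)
    have e2 : |(k:ℝ) * bump R y ^ (k - 1) * (-(2 / R ^ 2))| ≤ k * β * (2 / R ^ 2) := by
      rw [abs_mul, abs_neg, abs_of_nonneg (by positivity), abs_of_nonneg (by positivity)]
      gcongr
    refine (abs_add_le _ _).trans ((add_le_add e1 e2).trans ?_)
    have : 4 * (k:ℝ) ^ 2 / R ^ 2 * β - (k * (k - 1) * β * (2 / R) ^ 2 + k * β * (2 / R ^ 2))
        = 2 * k * β / R ^ 2 := by field_simp; ring
    have h0 : 0 ≤ 2 * k * β / R ^ 2 := by positivity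
    linarith

/-- Data of the problem in the case of a background at rest. The adiabatic exponent is
`γ = 2θ + 1`; `Ebx` is the derivative of the background enthalpy. -/
structure Bg where
  (θ T L m M ρm E0 E1 : ℝ)
  (ρb Ebx : ℝ → ℝ)
  hθ : 0 < θ
  hT : 0 < T
  hL : 0 < L
  hm : 0 < m
  ρb_ge : ∀ x, m ≤ ρb x
  ρb_le : ∀ x, ρb x ≤ M
  cρb : Continuous ρb
  cEbx : Continuous Ebx
  Ebx_zero : ∀ x, L ≤ |x| → Ebx x = 0
  dEb : ∀ x, HasDerivAt (fun y => θ / 2 * (ρb y ^ θ) ^ 2) (Ebx x) x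
  dpb : ∀ x, HasDerivAt (fun y => θ ^ 2 / (2 * θ + 1) * (ρb y * (ρb y ^ θ) ^ 2))
    (ρb x * Ebx x) x
  ρb_left : ∀ x, x ≤ -L → ρb x = ρm

namespace Bg
variable (B : Bg)

/-- Pressure constant. -/
noncomputable def κ : ℝ := B.θ ^ 2 / (2 * B.θ + 1)
/-- Background enthalpy. -/
noncomputable def Eb (x : ℝ) : ℝ := B.θ / 2 * (B.ρb x ^ B.θ) ^ 2
/-- Background pressure. -/
noncomputable def pb (x : ℝ) : ℝ := B.κ * (B.ρb x * (B.ρb x ^ B.θ) ^ 2)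
/-- Pressure law. -/
noncomputable def pr (ρ : ℝ) : ℝ := B.κ * (ρ * (ρ ^ B.θ) ^ 2)
/-- Relative internal energy. -/
noncomputable def Ψ (x ρ : ℝ) : ℝ := B.pr ρ / (2 * B.θ) - B.Eb x * ρ + B.pb x

lemma κ_pos : 0 < B.κ := by have := B.hθ; unfold κ; positivity
lemma ρb_pos (x : ℝ) : 0 < B.ρb x := B.hm.trans_le (B.ρb_ge x)
lemma mM : B.m ≤ B.M := (B.ρb_ge 0).trans (B.ρb_le 0)
lemma hM : 0 < B.M := B.hm.trans_le B.mM

@[fun_prop]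
lemma continuous_ρb {α : Type*} [TopologicalSpace α] {f : α → ℝ} (hf : Continuous f) :
    Continuous (fun a => B.ρb (f a)) := B.cρb.comp hf
@[fun_prop]
lemma continuous_Ebx {α : Type*} [TopologicalSpace α] {f : α → ℝ} (hf : Continuous f) :
    Continuous (fun a => B.Ebx (f a)) := B.cEbx.comp hf
lemma continuous_Eb0 : Continuous B.Eb :=
  continuous_iff_continuousAt.mpr fun x => (B.dEb x).continuousAt
@[fun_prop]
lemma continuous_Eb {α : Type*} [TopologicalSpace α] {f : α → ℝ} (hf : Continuous f) :
    Continuous (fun a => B.Eb (f a)) := B.continuous_Eb0.comp hf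
lemma continuous_pb0 : Continuous B.pb :=
  continuous_iff_continuousAt.mpr fun x => (B.dpb x).continuousAt
@[fun_prop]
lemma continuous_pb {α : Type*} [TopologicalSpace α] {f : α → ℝ} (hf : Continuous f) :
    Continuous (fun a => B.pb (f a)) := B.continuous_pb0.comp hf

end Bg

/-- A positive classical solution of viscosity `ε`, recorded through its relevant partial
derivatives and through the potentials `Y` (mass) and `A` (momentum). All functions are extended
beyond `[0,T]` by freezing time, so they are globally continuous and the time derivatives
are available on the open time interval. -/
structure Sol (B : Bg) where
  ε : ℝ
  (ρ u ρx ux ρxx uxx Y A : ℝ → ℝ → ℝ)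
  hε : 0 < ε
  pos : ∀ s x, 0 < ρ s x
  cρ : Continuous (fun z : ℝ × ℝ => ρ z.1 z.2)
  cu : Continuous (fun z : ℝ × ℝ => u z.1 z.2)
  cρx : Continuous (fun z : ℝ × ℝ => ρx z.1 z.2)
  cux : Continuous (fun z : ℝ × ℝ => ux z.1 z.2)
  cρxx : Continuous (fun z : ℝ × ℝ => ρxx z.1 z.2)
  cuxx : Continuous (fun z : ℝ × ℝ => uxx z.1 z.2)
  cY : Continuous (fun z : ℝ × ℝ => Y z.1 z.2)
  cA : Continuous (fun z : ℝ × ℝ => A z.1 z.2)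
  ρ_x : ∀ s x, HasDerivAt (fun y => ρ s y) (ρx s x) x
  u_x : ∀ s x, HasDerivAt (fun y => u s y) (ux s x) x
  ρx_x : ∀ s x, HasDerivAt (fun y => ρx s y) (ρxx s x) x
  ux_x : ∀ s x, HasDerivAt (fun y => ux s y) (uxx s x) x
  Y_x : ∀ s x, HasDerivAt (fun y => Y s y) (ρ s x) x
  A_x : ∀ s x, HasDerivAt (fun y => A s y) (ρ s x * u s x) x
  ρ_t : ∀ s ∈ Ioo 0 B.T, ∀ x, HasDerivAt (fun τ => ρ τ x)
    (-(ρx s x * u s x + ρ s x * ux s x)) s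
  u_t : ∀ s ∈ Ioo 0 B.T, ∀ x, HasDerivAt (fun τ => u τ x)
    (-(u s x * ux s x) - B.θ ^ 2 * (ρ s x ^ B.θ) ^ 2 * ρx s x / ρ s x + ε * uxx s x / ρ s x) s
  ρx_t : ∀ s ∈ Ioo 0 B.T, ∀ x, HasDerivAt (fun τ => ρx τ x)
    (-(ρxx s x * u s x + 2 * ρx s x * ux s x + ρ s x * uxx s x)) s
  Y_t : ∀ s ∈ Ioo 0 B.T, ∀ x, HasDerivAt (fun τ => Y τ x) (-(ρ s x * u s x)) s
  A_t : ∀ s ∈ Ioo 0 B.T, ∀ x, HasDerivAt (fun τ => A τ x)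
    (-(ρ s x * u s x ^ 2 + B.pr (ρ s x) - ε * ux s x)) s
  Y_coercive : ∀ R : ℝ, ∃ a, ∀ s x, a ≤ |x| → R ≤ |Y s x|
  ends : ∃ c C : ℝ, 0 < c ∧ ∀ s, s = 0 ∨ s = B.T → ∀ x, c ≤ ρ s x ∧ ρ s x ≤ C
  ends_int : ∀ s, s = 0 ∨ s = B.T →
    Integrable (fun x => ρ s x * u s x ^ 2 / 2 + B.Ψ x (ρ s x))
  init0 : ∫ x, (ρ 0 x * u 0 x ^ 2 / 2 + B.Ψ x (ρ 0 x)) ≤ B.E0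
  init1_int : Integrable (fun x => ε ^ 2 * (ρx 0 x) ^ 2 / (ρ 0 x) ^ 3
    + 2 * ε * |ρx 0 x * u 0 x| / ρ 0 x + ρ 0 x * |u 0 x|)
  init1 : ∫ x, (ε ^ 2 * (ρx 0 x) ^ 2 / (ρ 0 x) ^ 3
    + 2 * ε * |ρx 0 x * u 0 x| / ρ 0 x + ρ 0 x * |u 0 x|) ≤ B.E1

namespace Sol
variable {B : Bg} (S : Sol B)

/-- The Riemann-type variable `ρ^θ`. -/
noncomputable def r (s x : ℝ) : ℝ := S.ρ s x ^ B.θ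
/-- The pressure along the solution. -/
noncomputable def p (s x : ℝ) : ℝ := B.pr (S.ρ s x)
/-- The space derivative of `Sol.r`. -/
noncomputable def rx (s x : ℝ) : ℝ := B.θ * S.r s x * S.ρx s x / S.ρ s x
/-- The effective velocity `u + ε ρ_x / ρ²`. -/
noncomputable def w (s x : ℝ) : ℝ := S.u s x + S.ε * S.ρx s x / S.ρ s x ^ 2
/-- The space derivative of `Sol.w`. -/
noncomputable def wx (s x : ℝ) : ℝ :=
  S.ux s x + S.ε * (S.ρxx s x / S.ρ s x ^ 2 - 2 * S.ρx s x ^ 2 / S.ρ s x ^ 3)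
/-- Minus the potential of the effective momentum `ρ w`; it increases along particle paths. -/
noncomputable def H (s x : ℝ) : ℝ := - S.A s x - S.ε * Real.log (S.ρ s x)
/-- The relative internal energy along the solution. -/
noncomputable def Psi (s x : ℝ) : ℝ := B.Ψ x (S.ρ s x)

section cont
variable {α : Type*} [TopologicalSpace α] {f g : α → ℝ}
@[fun_prop] lemma cρ' (hf : Continuous f) (hg : Continuous g) :
    Continuous (fun a => S.ρ (f a) (g a)) := S.cρ.comp (hf.prodMk hg)
@[fun_prop] lemma cu' (hf : Continuous f) (hg : Continuous g) :
    Continuous (fun a => S.u (f a) (g a)) := S.cu.comp (hf.prodMk hg)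
@[fun_prop] lemma cρx' (hf : Continuous f) (hg : Continuous g) :
    Continuous (fun a => S.ρx (f a) (g a)) := S.cρx.comp (hf.prodMk hg)
@[fun_prop] lemma cux' (hf : Continuous f) (hg : Continuous g) :
    Continuous (fun a => S.ux (f a) (g a)) := S.cux.comp (hf.prodMk hg)
@[fun_prop] lemma cρxx' (hf : Continuous f) (hg : Continuous g) :
    Continuous (fun a => S.ρxx (f a) (g a)) := S.cρxx.comp (hf.prodMk hg)
@[fun_prop] lemma cuxx' (hf : Continuous f) (hg : Continuous g) :
    Continuous (fun a => S.uxx (f a) (g a)) := S.cuxx.comp (hf.prodMk hg)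
@[fun_prop] lemma cY' (hf : Continuous f) (hg : Continuous g) :
    Continuous (fun a => S.Y (f a) (g a)) := S.cY.comp (hf.prodMk hg)
@[fun_prop] lemma cA' (hf : Continuous f) (hg : Continuous g) :
    Continuous (fun a => S.A (f a) (g a)) := S.cA.comp (hf.prodMk hg)
@[fun_prop] lemma cr (hf : Continuous f) (hg : Continuous g) :
    Continuous (fun a => S.r (f a) (g a)) :=
  (S.cρ' hf hg).rpow_const (fun _ => Or.inl (S.pos _ _).ne')
@[fun_prop] lemma cp (hf : Continuous f) (hg : Continuous g) :
    Continuous (fun a => S.p (f a) (g a)) := by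
  have h := S.cr hf hg
  unfold r at h
  unfold p Bg.pr
  fun_prop
@[fun_prop] lemma cinv (hf : Continuous f) (hg : Continuous g) :
    Continuous (fun a => (S.ρ (f a) (g a))⁻¹) :=
  (S.cρ' hf hg).inv₀ (fun _ => (S.pos _ _).ne')
@[fun_prop] lemma crx (hf : Continuous f) (hg : Continuous g) :
    Continuous (fun a => S.rx (f a) (g a)) := by
  unfold rx
  exact Continuous.div (by fun_prop) (by fun_prop) (fun _ => (S.pos _ _).ne')
@[fun_prop] lemma cw (hf : Continuous f) (hg : Continuous g) :
    Continuous (fun a => S.w (f a) (g a)) := by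
  unfold w
  exact Continuous.add (by fun_prop)
    (Continuous.div (by fun_prop) (by fun_prop) (fun _ => (pow_pos (S.pos _ _) 2).ne'))
@[fun_prop] lemma cwx (hf : Continuous f) (hg : Continuous g) :
    Continuous (fun a => S.wx (f a) (g a)) := by
  unfold wx
  refine Continuous.add (by fun_prop) (Continuous.mul (by fun_prop) (Continuous.sub ?_ ?_))
  · exact Continuous.div (by fun_prop) (by fun_prop) (fun _ => (pow_pos (S.pos _ _) 2).ne')
  · exact Continuous.div (by fun_prop) (by fun_prop) (fun _ => (pow_pos (S.pos _ _) 3).ne')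
@[fun_prop] lemma clog (hf : Continuous f) (hg : Continuous g) :
    Continuous (fun a => Real.log (S.ρ (f a) (g a))) :=
  (S.cρ' hf hg).log (fun _ => (S.pos _ _).ne')
@[fun_prop] lemma cH (hf : Continuous f) (hg : Continuous g) :
    Continuous (fun a => S.H (f a) (g a)) := by
  unfold H; fun_prop
@[fun_prop] lemma cPsi (hf : Continuous f) (hg : Continuous g) :
    Continuous (fun a => S.Psi (f a) (g a)) := by
  have h := S.cp hf hg
  unfold p at h
  unfold Psi Bg.Ψ
  fun_prop
end cont

lemma r_pos (s x : ℝ) : 0 < S.r s x := Real.rpow_pos_of_pos (S.pos s x) _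
lemma p_eq (s x : ℝ) : S.p s x = B.κ * (S.ρ s x * S.r s x ^ 2) := rfl
lemma p_pos (s x : ℝ) : 0 < S.p s x := by
  rw [p_eq]; have := B.κ_pos; have := S.pos s x; have := S.r_pos s x; positivity

lemma r_deriv {f : ℝ → ℝ} {f' t : ℝ} (hf : HasDerivAt f f' t) (h : 0 < f t) :
    HasDerivAt (fun y => f y ^ B.θ) (B.θ * f t ^ B.θ * f' / f t) t := by
  have := hf.rpow_const (p := B.θ) (Or.inl h.ne')
  refine this.congr_deriv ?_
  rw [Real.rpow_sub_one h.ne']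
  ring

lemma r_x (s x : ℝ) : HasDerivAt (fun y => S.r s y) (S.rx s x) x :=
  r_deriv (S.ρ_x s x) (S.pos s x)

lemma r_t {s : ℝ} (hs : s ∈ Ioo 0 B.T) (x : ℝ) : HasDerivAt (fun τ => S.r τ x)
    (-(S.u s x * S.rx s x) - B.θ * S.r s x * S.ux s x) s := by
  refine (r_deriv (B := B) (S.ρ_t s hs x) (S.pos s x)).congr_deriv ?_
  have := (S.pos s x).ne'
  change B.θ * S.r s x * _ / _ = _
  unfold rx
  field_simp
  ring

lemma ρx_eq (s x : ℝ) : S.ρx s x = S.ρ s x * S.rx s x / (B.θ * S.r s x) := by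
  have := (S.pos s x).ne'; have := (S.r_pos s x).ne'; have := B.hθ.ne'
  unfold rx; field_simp

lemma κ_mul : B.κ * (2 * B.θ + 1) = B.θ ^ 2 := by
  have := B.hθ
  unfold Bg.κ; field_simp

lemma p_x (s x : ℝ) : HasDerivAt (fun y => S.p s y) (B.θ * S.ρ s x * S.r s x * S.rx s x) x := by
  have h := (((S.ρ_x s x).mul ((S.r_x s x).pow 2)).const_mul B.κ)
  refine h.congr_deriv ?_
  have hk := κ_mul (B := B)
  have := (S.pos s x).ne'; have := (S.r_pos s x).ne'; have := B.hθ.ne'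
  rw [S.ρx_eq]
  simp only [Nat.cast_ofNat, Nat.add_one_sub_one, pow_one, Pi.pow_apply]
  field_simp
  linear_combination (S.rx s x) * hk

lemma p_t {s : ℝ} (hs : s ∈ Ioo 0 B.T) (x : ℝ) : HasDerivAt (fun τ => S.p τ x)
    (-(S.u s x * (B.θ * S.ρ s x * S.r s x * S.rx s x)) - (2 * B.θ + 1) * S.p s x * S.ux s x) s := by
  have h := (((S.ρ_t s hs x).mul ((S.r_t hs x).pow 2)).const_mul B.κ)
  refine h.congr_deriv ?_
  have hk := κ_mul (B := B)
  have := (S.pos s x).ne'; have := (S.r_pos s x).ne'; have := B.hθ.ne'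
  rw [S.ρx_eq, p_eq]
  simp only [Nat.cast_ofNat, Nat.add_one_sub_one, pow_one, Pi.pow_apply]
  field_simp
  linear_combination (-(S.u s x * S.rx s x)) * hk

lemma w_x (s x : ℝ) : HasDerivAt (fun y => S.w s y) (S.wx s x) x := by
  have hp := (S.pos s x).ne'
  have h := (S.u_x s x).add (((S.ρx_x s x).const_mul S.ε).div ((S.ρ_x s x).pow 2)
    (by simpa using hp))
  refine h.congr_deriv ?_
  unfold wx
  simp only [Nat.cast_ofNat, Nat.add_one_sub_one, pow_one, Pi.pow_apply]
  field_simp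

lemma w_t {s : ℝ} (hs : s ∈ Ioo 0 B.T) (x : ℝ) : HasDerivAt (fun τ => S.w τ x)
    (-(S.u s x * S.wx s x) - B.θ * S.r s x * S.rx s x) s := by
  have hp := (S.pos s x).ne'
  have h := (S.u_t s hs x).add (((S.ρx_t s hs x).const_mul S.ε).div ((S.ρ_t s hs x).pow 2)
    (by simpa using hp))
  refine h.congr_deriv ?_
  change -(S.u s x * S.ux s x) - B.θ ^ 2 * (S.r s x) ^ 2 * S.ρx s x / S.ρ s x + _ + _ = _
  unfold wx rx
  simp only [Nat.cast_ofNat, Nat.add_one_sub_one, pow_one, Pi.pow_apply]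
  field_simp
  ring

lemma H_x (s x : ℝ) : HasDerivAt (fun y => S.H s y) (-(S.ρ s x * S.w s x)) x := by
  have hp := (S.pos s x).ne'
  have h := (S.A_x s x).neg.sub (((S.ρ_x s x).log hp).const_mul S.ε)
  refine h.congr_deriv ?_
  unfold w; field_simp; ring

lemma H_t {s : ℝ} (hs : s ∈ Ioo 0 B.T) (x : ℝ) : HasDerivAt (fun τ => S.H τ x)
    (S.p s x + S.u s x * (S.ρ s x * S.w s x)) s := by
  have hp := (S.pos s x).ne'
  have h := (S.A_t s hs x).neg.sub (((S.ρ_t s hs x).log hp).const_mul S.ε)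
  refine h.congr_deriv ?_
  unfold w p; field_simp; ring

lemma Psi_x (s x : ℝ) : HasDerivAt (fun y => S.Psi s y)
    (S.ρ s x * S.r s x * S.rx s x / 2 - B.Eb x * S.ρx s x
      - B.Ebx x * (S.ρ s x - B.ρb x)) x := by
  have h := (((S.p_x s x).div_const (2 * B.θ)).sub ((B.dEb x).mul (S.ρ_x s x))).add (B.dpb x)
  refine h.congr_deriv ?_
  have := B.hθ.ne'
  unfold Bg.Eb
  field_simp
  ring

lemma Psi_t {s : ℝ} (hs : s ∈ Ioo 0 B.T) (x : ℝ) : HasDerivAt (fun τ => S.Psi τ x)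
    ((-(S.u s x * (B.θ * S.ρ s x * S.r s x * S.rx s x))
        - (2 * B.θ + 1) * S.p s x * S.ux s x) / (2 * B.θ)
      + B.Eb x * (S.ρx s x * S.u s x + S.ρ s x * S.ux s x)) s := by
  have h := (((S.p_t hs x).div_const (2 * B.θ)).sub ((S.ρ_t s hs x).const_mul (B.Eb x))).add_const
    (B.pb x)
  refine h.congr_deriv ?_
  ring

lemma ck {k : ℕ} (hk : 1 ≤ k) {R : ℝ} (hR : 0 < R) : CK (fun s x => bump R (S.Y s x) ^ k) := by
  obtain ⟨a, ha⟩ := S.Y_coercive R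
  exact ⟨by fun_prop, a, fun s x hx => by
    beta_reduce
    rw [bump_zero hR (ha s x hx), zero_pow (by omega)]⟩

lemma ckd {k : ℕ} (hk : 2 ≤ k) {R : ℝ} (hR : 0 < R) : CK (fun s x => dcut k R (S.Y s x)) := by
  obtain ⟨a, ha⟩ := S.Y_coercive R
  exact ⟨by fun_prop, a, fun s x hx => by
    unfold dcut
    beta_reduce
    rw [bump_zero hR (ha s x hx), zero_pow (by omega)]; simp⟩

lemma ckdd {k : ℕ} (hk : 3 ≤ k) {R : ℝ} (hR : 0 < R) : CK (fun s x => ddcut k R (S.Y s x)) := by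
  obtain ⟨a, ha⟩ := S.Y_coercive R
  exact ⟨by fun_prop, a, fun s x hx => by
    unfold ddcut
    beta_reduce
    rw [bump_zero hR (ha s x hx), zero_pow (by omega), zero_pow (by omega)]; simp⟩

/-- Green's formula with a cutoff in the mass coordinate: since the mass coordinate is
transported by the flow, only the flux relative to the flow meets the derivative of the cutoff. -/
lemma master {k : ℕ} (hk : 2 ≤ k) {R : ℝ} (hR : 0 < R) {F Ft Fx Nf Nx Sr : ℝ → ℝ → ℝ}
    (cF : Continuous (fun z : ℝ × ℝ => F z.1 z.2))
    (cFt : Continuous (fun z : ℝ × ℝ => Ft z.1 z.2))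
    (cFx : Continuous (fun z : ℝ × ℝ => Fx z.1 z.2))
    (cN : Continuous (fun z : ℝ × ℝ => Nf z.1 z.2))
    (cNx : Continuous (fun z : ℝ × ℝ => Nx z.1 z.2))
    (dFt : ∀ s ∈ Ioo 0 B.T, ∀ x, HasDerivAt (fun τ => F τ x) (Ft s x) s)
    (dFx : ∀ s ∈ Ioo 0 B.T, ∀ x, HasDerivAt (fun y => F s y) (Fx s x) x)
    (dNx : ∀ s ∈ Ioo 0 B.T, ∀ x, HasDerivAt (fun y => Nf s y) (Nx s x) x)
    (hS : ∀ s ∈ Ioo 0 B.T, ∀ x,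
      Ft s x + S.u s x * Fx s x + S.ux s x * F s x + Nx s x = Sr s x)
    {s : ℝ} (hs : s ∈ Icc 0 B.T) :
    ∫ x, bump R (S.Y s x) ^ k * F s x = (∫ x, bump R (S.Y 0 x) ^ k * F 0 x)
      + ∫ τ in (0:ℝ)..s, ∫ x, (dcut k R (S.Y τ x) * (S.ρ τ x * Nf τ x)
          + bump R (S.Y τ x) ^ k * Sr τ x) := by
  have ck1 := S.ck (k := k) (by omega) hR
  have ck2 := S.ckd hk hR
  refine green (T := B.T) (P := fun s x => bump R (S.Y s x) ^ k * F s x)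
    (Pt := fun s x => dcut k R (S.Y s x) * (-(S.ρ s x * S.u s x) * F s x)
      + bump R (S.Y s x) ^ k * Ft s x)
    (Q := fun s x => bump R (S.Y s x) ^ k * (S.u s x * F s x + Nf s x))
    (Qx := fun s x => dcut k R (S.Y s x) * (S.ρ s x * (S.u s x * F s x + Nf s x))
      + bump R (S.Y s x) ^ k * (S.ux s x * F s x + S.u s x * Fx s x + Nx s x))
    (ck1.mul cF) (ck1.mul (by fun_prop)) ((ck2.mul (by fun_prop)).add (ck1.mul (by fun_prop)))
    ((ck2.mul (by fun_prop)).add (ck1.mul (by fun_prop))) ?_ ?_ ?_ hs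
  · intro τ hτ x
    simp only [← hS τ hτ x]
    ring
  · intro τ hτ x
    have h1 := (hasDerivAt_bump_pow hk R (S.Y τ x)).comp τ (S.Y_t τ hτ x)
    refine (h1.mul (dFt τ hτ x)).congr_deriv ?_
    simp only [Function.comp_apply]
    ring
  · intro τ hτ x
    have h1 := (hasDerivAt_bump_pow hk R (S.Y τ x)).comp x (S.Y_x τ x)
    refine (h1.mul (((S.u_x τ x).mul (dFx τ hτ x)).add (dNx τ hτ x))).congr_deriv ?_
    simp only [Function.comp_apply, Pi.mul_apply, Pi.add_apply]
    ring

/-- Integration by parts in space against the derivative of a cutoff. -/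
lemma parts {k : ℕ} (hk : 3 ≤ k) {R : ℝ} (hR : 0 < R) {s : ℝ} {G Gx : ℝ → ℝ}
    (cG : Continuous G) (cGx : Continuous Gx) (dG : ∀ x, HasDerivAt G (Gx x) x) :
    ∫ x, (ddcut k R (S.Y s x) * (S.ρ s x * G x) + dcut k R (S.Y s x) * Gx x) = 0 := by
  obtain ⟨a, ha⟩ := (S.ckd (k := k) (by omega) hR).2
  obtain ⟨b, hb⟩ := (S.ckdd hk hR).2
  refine integral_deriv_zero (q := fun x => dcut k R (S.Y s x) * G x) (a := max a b) ?_
    (by fun_prop) ?_ ?_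
  · intro x
    have h1 := (hasDerivAt_dcut hk R (S.Y s x)).comp x (S.Y_x s x)
    refine (h1.mul (dG x)).congr_deriv ?_
    simp only [Function.comp_apply]
    ring
  · intro x hx
    simp only [ha s x (le_trans (le_max_left _ _) hx), zero_mul]
  · intro x hx
    simp only [ha s x (le_trans (le_max_left _ _) hx), hb s x (le_trans (le_max_right _ _) hx),
      zero_mul, add_zero]

end Sol
end NSHI

/-! ### Estimates of the relative internal energy -/

namespace NSHI

/-- Quantitative strict monotonicity of `z ↦ z^a` at `1`, uniformly on `[0,Z]`. -/
lemma rpow_sub_one_mono {a Z : ℝ} (ha : 0 < a) (hZ : 1 ≤ Z) :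
    ∃ c : ℝ, 0 < c ∧ (∀ z, 1 ≤ z → z ≤ Z → c * (z - 1) ≤ z ^ a - 1) ∧
      (∀ z, 0 ≤ z → z ≤ 1 → c * (1 - z) ≤ 1 - z ^ a) := by
  rcases le_total 1 a with h | h
  · refine ⟨1, one_pos, fun z hz _ => ?_, fun z hz0 hz => ?_⟩
    · have := Real.rpow_le_rpow_of_exponent_le hz h
      rw [Real.rpow_one] at this; linarith
    · have := Real.rpow_le_rpow_of_exponent_ge_of_imp hz0 hz h (by
        intro h0 h1; linarith)
      rw [Real.rpow_one] at this; linarith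
  · have bern : ∀ y : ℝ, 0 ≤ y → y ^ a ≤ 1 + a * (y - 1) := by
      intro y hy
      have := rpow_one_add_le_one_add_mul_self (s := y - 1) (by linarith) ha.le h
      simpa using this
    refine ⟨a / Z, by positivity, fun z hz hzZ => ?_, fun z hz0 hz => ?_⟩
    · have hz0 : 0 < z := by linarith
      have h1 := bern z⁻¹ (by positivity)
      rw [Real.inv_rpow hz0.le] at h1
      have h2 : 1 ≤ z ^ a := Real.one_le_rpow hz ha.le
      have h3 : 1 - (z ^ a)⁻¹ ≤ z ^ a - 1 := by
        have h4 : 0 < z ^ a := by linarith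
        have : z ^ a - 1 - (1 - (z ^ a)⁻¹) = (z ^ a - 1) ^ 2 / z ^ a := by field_simp
        have : 0 ≤ (z ^ a - 1) ^ 2 / z ^ a := by positivity
        linarith
      have h5 : a * (1 - z⁻¹) = a / z * (z - 1) := by field_simp
      have h6 : a / Z * (z - 1) ≤ a / z * (z - 1) := by
        apply mul_le_mul_of_nonneg_right _ (by linarith)
        gcongr
      nlinarith
    · have h1 := bern z hz0
      have h2 : a / Z ≤ a := div_le_self ha.le hZ
      nlinarith

/-- `z^γ - 1 - γ(z-1)` controls `(z-1)²` on bounded intervals. -/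
lemma rel_quadratic {γ Z : ℝ} (hγ : 1 < γ) (hZ : 1 ≤ Z) :
    ∃ c : ℝ, 0 < c ∧ ∀ z, 0 ≤ z → z ≤ Z → c * (z - 1) ^ 2 ≤ z ^ γ - 1 - γ * (z - 1) := by
  obtain ⟨c, hc, h1, h2⟩ := rpow_sub_one_mono (a := γ - 1) (by linarith) hZ
  set g : ℝ → ℝ := fun z => z ^ γ - 1 - γ * (z - 1) - γ * c / 2 * (z - 1) ^ 2
  have hg : ∀ z, HasDerivAt g (γ * (z ^ (γ - 1) - 1 - c * (z - 1))) z := by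
    intro z
    have a1 := Real.hasDerivAt_rpow_const (x := z) (p := γ) (Or.inr hγ.le)
    have a2 := ((hasDerivAt_id z).sub_const 1).const_mul γ
    have a3 := (((hasDerivAt_id z).sub_const 1).pow 2).const_mul (γ * c / 2)
    refine (((a1.sub_const 1).sub a2).sub a3).congr_deriv ?_
    simp only [Nat.cast_ofNat, Nat.add_one_sub_one, pow_one, id]
    ring
  have hcont : Continuous g := continuous_iff_continuousAt.mpr fun z => (hg z).continuousAt
  have g1 : g 1 = 0 := by simp [g]
  refine ⟨γ * c / 2, by positivity, fun z hz0 hz => ?_⟩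
  suffices 0 ≤ g z by simp only [g] at this; linarith
  rcases le_total 1 z with h | h
  · have hm : MonotoneOn g (Icc 1 Z) := by
      apply monotoneOn_of_deriv_nonneg (convex_Icc 1 Z) hcont.continuousOn
      · exact fun z _ => (hg z).differentiableAt.differentiableWithinAt
      · intro y hy
        rw [interior_Icc] at hy
        rw [(hg y).deriv]
        have := h1 y hy.1.le hy.2.le
        exact mul_nonneg (by linarith) (by linarith)
    rw [← g1]
    exact hm ⟨le_rfl, hZ⟩ ⟨h, hz⟩ h
  · have hm : AntitoneOn g (Icc 0 1) := by
      apply antitoneOn_of_deriv_nonpos (convex_Icc 0 1) hcont.continuousOn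
      · exact fun z _ => (hg z).differentiableAt.differentiableWithinAt
      · intro y hy
        rw [interior_Icc] at hy
        rw [(hg y).deriv]
        have := h2 y hy.1.le hy.2.le
        have h3 : 0 ≤ γ * (1 - y ^ (γ - 1) - c * (1 - y)) := mul_nonneg (by linarith) (by linarith)
        nlinarith
    rw [← g1]
    exact hm ⟨hz0, h⟩ ⟨zero_le_one, le_rfl⟩ h

namespace Bg
variable (B : Bg)

lemma rpow_two {ρ : ℝ} (h : 0 < ρ) : ρ * (ρ ^ B.θ) ^ 2 = ρ ^ (2 * B.θ + 1) := by
  rw [Real.rpow_add_one h.ne', mul_comm 2 B.θ, Real.rpow_mul h.le]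
  norm_cast
  ring

lemma Ψ_eq (x : ℝ) {ρ : ℝ} (h : 0 < ρ) : B.Ψ x ρ =
    B.θ / (2 * (2 * B.θ + 1)) * B.ρb x ^ (2 * B.θ + 1) *
      ((ρ / B.ρb x) ^ (2 * B.θ + 1) - 1 - (2 * B.θ + 1) * (ρ / B.ρb x - 1)) := by
  have hb := B.ρb_pos x
  have hθ := B.hθ
  have e1 := B.rpow_two h
  have e2 := B.rpow_two hb
  unfold Ψ pr pb Eb κ
  rw [Real.div_rpow h.le hb.le, ← e1, ← e2]
  have : (B.ρb x ^ B.θ) ≠ 0 := (Real.rpow_pos_of_pos hb _).ne'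
  field_simp
  ring

lemma bγ_bounds (x : ℝ) : B.m ^ (2 * B.θ + 1) ≤ B.ρb x ^ (2 * B.θ + 1) ∧
    B.ρb x ^ (2 * B.θ + 1) ≤ B.M ^ (2 * B.θ + 1) := by
  have := B.hθ
  exact ⟨Real.rpow_le_rpow B.hm.le (B.ρb_ge x) (by linarith),
    Real.rpow_le_rpow (B.ρb_pos x).le (B.ρb_le x) (by linarith)⟩

lemma Ψ_quad (K : ℝ) : ∃ C : ℝ, 0 < C ∧ ∀ x ρ, 0 < ρ → ρ ≤ K →
    (ρ - B.ρb x) ^ 2 ≤ C * B.Ψ x ρ := by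
  have hθ := B.hθ
  have hm := B.hm
  have hM := B.hM
  obtain ⟨c, hc, h⟩ := rel_quadratic (γ := 2 * B.θ + 1) (Z := max 1 (K / B.m)) (by linarith)
    (le_max_left _ _)
  set d := B.θ / (2 * (2 * B.θ + 1)) * B.m ^ (2 * B.θ + 1) * c with hd
  have hd0 : 0 < d := by positivity
  refine ⟨B.M ^ 2 / d, by positivity, fun x ρ hρ hK => ?_⟩
  have hb := B.ρb_pos x
  have h1 := h (ρ / B.ρb x) (by positivity) (by
    refine le_trans ?_ (le_max_right _ _)
    have : ρ / B.ρb x ≤ ρ / B.m := div_le_div_of_nonneg_left hρ.le hm (B.ρb_ge x)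
    exact this.trans (div_le_div_of_nonneg_right hK hm.le))
  rw [B.Ψ_eq x hρ]
  have h2 : d * (ρ / B.ρb x - 1) ^ 2 ≤ B.θ / (2 * (2 * B.θ + 1)) * B.ρb x ^ (2 * B.θ + 1) *
      ((ρ / B.ρb x) ^ (2 * B.θ + 1) - 1 - (2 * B.θ + 1) * (ρ / B.ρb x - 1)) := by
    rw [hd, mul_assoc _ c]
    apply mul_le_mul _ h1 (by positivity) (by positivity)
    exact mul_le_mul_of_nonneg_left (B.bγ_bounds x).1 (by positivity)
  have h3 : (ρ - B.ρb x) ^ 2 = B.ρb x ^ 2 * (ρ / B.ρb x - 1) ^ 2 := by field_simp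
  have h4 : B.ρb x ^ 2 ≤ B.M ^ 2 := pow_le_pow_left₀ hb.le (B.ρb_le x) 2
  rw [h3]
  calc B.ρb x ^ 2 * (ρ / B.ρb x - 1) ^ 2 ≤ B.M ^ 2 * (ρ / B.ρb x - 1) ^ 2 :=
        mul_le_mul_of_nonneg_right h4 (sq_nonneg _)
    _ = B.M ^ 2 / d * (d * (ρ / B.ρb x - 1) ^ 2) := by field_simp
    _ ≤ _ := mul_le_mul_of_nonneg_left h2 (by positivity)

lemma Ψ_nonneg (x : ℝ) {ρ : ℝ} (h : 0 < ρ) : 0 ≤ B.Ψ x ρ := by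
  obtain ⟨C, hC, h1⟩ := B.Ψ_quad ρ
  have := h1 x ρ h le_rfl
  by_contra hn
  push Not at hn
  nlinarith [sq_nonneg (ρ - B.ρb x)]

/-- For large densities the relative internal energy controls density and pressure. -/
lemma Ψ_large : ∃ K C : ℝ, 1 ≤ K ∧ 0 < C ∧ ∀ x ρ, K ≤ ρ → ρ ≤ C * B.Ψ x ρ ∧
    B.pr ρ ≤ C * B.Ψ x ρ := by
  have hθ := B.hθ
  have hM := B.hM
  have hκ := B.κ_pos
  set γ := 2 * B.θ + 1 with hγ
  set Z := (2 * γ) ^ (1 / (2 * B.θ)) with hZ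
  set C1 := 4 * γ / B.θ with hC1
  have hγ0 : 0 < γ := by positivity
  have hC1p : 0 < C1 := by positivity
  refine ⟨max 1 (B.M * Z), C1 * (1 + B.κ), le_max_left _ _, by positivity, fun x ρ hρ => ?_⟩
  have hρ1 : 1 ≤ ρ := (le_max_left _ _).trans hρ
  have hρ0 : 0 < ρ := by linarith
  have hb := B.ρb_pos x
  have hz : Z ≤ ρ / B.ρb x := by
    rw [le_div_iff₀ hb]
    have : B.M * Z ≤ ρ := (le_max_right _ _).trans hρ
    have hZ0 : 0 ≤ Z := by positivity
    nlinarith [B.ρb_le x]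
  set z := ρ / B.ρb x with hzdef
  have hz0 : 0 < z := by positivity
  have hpow : 2 * γ ≤ z ^ (2 * B.θ) := by
    have h1 : Z ^ (2 * B.θ) ≤ z ^ (2 * B.θ) := Real.rpow_le_rpow (by positivity) hz (by positivity)
    rw [hZ, ← Real.rpow_mul (by positivity), one_div, inv_mul_cancel₀ (by positivity),
      Real.rpow_one] at h1
    exact h1
  have hzγ : z ^ γ = z ^ (2 * B.θ) * z := Real.rpow_add_one hz0.ne' _
  have hmain : z ^ γ / 2 ≤ z ^ γ - 1 - γ * (z - 1) := by
    have : 2 * γ * z ≤ z ^ γ := by rw [hzγ]; exact mul_le_mul_of_nonneg_right hpow hz0.le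
    have : 1 ≤ γ := by linarith
    linarith
  have hργ : ρ ^ γ = B.ρb x ^ γ * z ^ γ := by
    rw [← Real.mul_rpow hb.le hz0.le, hzdef]; congr 1; field_simp
  have hΨ : ρ ^ γ ≤ C1 * B.Ψ x ρ := by
    rw [B.Ψ_eq x hρ0, hργ]
    have hbγ : 0 < B.ρb x ^ γ := Real.rpow_pos_of_pos hb _
    calc B.ρb x ^ γ * z ^ γ = C1 * (B.θ / (2 * γ) * B.ρb x ^ γ * (z ^ γ / 2)) := by
          rw [hC1]; field_simp; norm_num
      _ ≤ _ := by
          apply mul_le_mul_of_nonneg_left _ hC1p.le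
          exact mul_le_mul_of_nonneg_left hmain (by positivity)
  have hρle : ρ ≤ ρ ^ γ := by
    have := Real.rpow_le_rpow_of_exponent_le hρ1 (by linarith : (1:ℝ) ≤ γ)
    rwa [Real.rpow_one] at this
  have hΨ0 := B.Ψ_nonneg x hρ0
  have hpr : B.pr ρ = B.κ * ρ ^ γ := by unfold pr; rw [B.rpow_two hρ0]
  constructor
  · have : 0 ≤ C1 * B.κ * B.Ψ x ρ := by positivity
    nlinarith
  · rw [hpr]
    have : 0 ≤ C1 * B.Ψ x ρ := by positivity
    nlinarith

lemma pr_pos {ρ : ℝ} (h : 0 < ρ) : 0 < B.pr ρ := by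
  have := B.κ_pos; have := Real.rpow_pos_of_pos h B.θ
  unfold pr; positivity

lemma pr_mono {ρ σ : ℝ} (h : 0 < ρ) (hle : ρ ≤ σ) : B.pr ρ ≤ B.pr σ := by
  have := B.κ_pos
  have h1 := Real.rpow_le_rpow h.le hle B.hθ.le
  have h2 := Real.rpow_pos_of_pos h B.θ
  have h3 : 0 ≤ σ := by linarith
  unfold pr
  gcongr

lemma Ψ_affine : ∃ C : ℝ, 0 < C ∧ ∀ x ρ, 0 < ρ → ρ ≤ C * (1 + B.Ψ x ρ) ∧
    B.pr ρ ≤ C * (1 + B.Ψ x ρ) := by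
  obtain ⟨K, C, hK, hC, h⟩ := B.Ψ_large
  have hp := B.pr_pos (show 0 < K by linarith)
  refine ⟨K + B.pr K + C, by linarith, fun x ρ hρ => ?_⟩
  have hΨ := B.Ψ_nonneg x hρ
  rcases le_total K ρ with h1 | h1
  · obtain ⟨a, b⟩ := h x ρ h1
    constructor <;> nlinarith
  · have := B.pr_mono hρ h1
    constructor <;> nlinarith

lemma Ψ_vacuum : ∃ c : ℝ, 0 < c ∧ ∀ x ρ, 0 < ρ → ρ ≤ B.m / 2 → c ≤ B.Ψ x ρ := by
  obtain ⟨C, hC, h⟩ := B.Ψ_quad (B.m / 2)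
  have hm := B.hm
  refine ⟨(B.m / 2) ^ 2 / C, by positivity, fun x ρ hρ h1 => ?_⟩
  have := h x ρ hρ h1
  rw [div_le_iff₀ hC]
  have h2 := B.ρb_ge x
  nlinarith

lemma pr_deriv {ρ : ℝ} (h : 0 < ρ) :
    HasDerivAt B.pr (B.θ ^ 2 * (ρ ^ B.θ) ^ 2) ρ := by
  have h1 := ((hasDerivAt_id ρ).mul ((Sol.r_deriv (B := B) (hasDerivAt_id ρ) h).pow 2)).const_mul B.κ
  refine h1.congr_deriv ?_
  have hk := Sol.κ_mul (B := B)
  simp only [id, Nat.cast_ofNat, Nat.add_one_sub_one, pow_one, Pi.pow_apply]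
  field_simp
  linear_combination hk

lemma lip_on {f f' : ℝ → ℝ} {a b D : ℝ}
    (hf : ∀ ρ ∈ Icc a b, HasDerivAt f (f' ρ) ρ) (hD : ∀ ρ ∈ Icc a b, |f' ρ| ≤ D)
    {x y : ℝ} (hx : x ∈ Icc a b) (hy : y ∈ Icc a b) : |f x - f y| ≤ D * |x - y| := by
  have := Convex.norm_image_sub_le_of_norm_hasDerivWithin_le (f := f) (f' := f') (C := D)
    (fun z hz => (hf z hz).hasDerivWithinAt) (fun z hz => by simpa using hD z hz)
    (convex_Icc a b) hy hx
  simpa using this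

/-- Quadratic control of the pressure and of `ρ^θ` around the background. -/
lemma Ψ_diff (K : ℝ) : ∃ C : ℝ, 0 < C ∧ ∀ x ρ, 0 < ρ → ρ ≤ K →
    ρ * (B.pr ρ - B.pb x) ^ 2 ≤ C * B.Ψ x ρ ∧
    ρ * (ρ ^ B.θ - B.ρb x ^ B.θ) ^ 2 ≤ C * B.Ψ x ρ := by
  obtain ⟨C1, hC1, h1⟩ := B.Ψ_quad K
  obtain ⟨c, hc, h2⟩ := B.Ψ_vacuum
  have hm := B.hm
  have hθ := B.hθ
  set Z := max (|K| + 1) B.M with hZ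
  have hZ0 : 0 < Z := lt_of_lt_of_le (by positivity) (le_max_left _ _)
  have hKZ : K ≤ Z := le_trans (by linarith [le_abs_self K]) (le_max_left _ _)
  have hMZ : B.M ≤ Z := le_max_right _ _
  have hZr : 0 < Z ^ B.θ := Real.rpow_pos_of_pos hZ0 _
  have hpZ := B.pr_pos hZ0
  set D := B.θ ^ 2 * (Z ^ B.θ) ^ 2 + B.θ * Z ^ B.θ / (B.m / 2) with hD
  have hD0 : 0 < D := by positivity
  set C := Z * D ^ 2 * C1 + Z * (B.pr Z ^ 2 + (Z ^ B.θ) ^ 2) / c with hC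
  refine ⟨C, by positivity, fun x ρ hρ hK => ?_⟩
  have hb := B.ρb_pos x
  have hΨ := B.Ψ_nonneg x hρ
  have hρZ : ρ ≤ Z := hK.trans hKZ
  have hbZ : B.ρb x ≤ Z := (B.ρb_le x).trans hMZ
  rcases le_total ρ (B.m / 2) with h | h
  · have hv := h2 x ρ hρ h
    have aux : ∀ a b z : ℝ, 0 < a → 0 < b → a ≤ z → b ≤ z →
        z ^ 2 ≤ (B.pr Z ^ 2 + (Z ^ B.θ) ^ 2) → ρ * (a - b) ^ 2 ≤ C * B.Ψ x ρ := by
      intro a b z ha hb haz hbz hz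
      have e1 : (a - b) ^ 2 ≤ z ^ 2 := by nlinarith
      have e2 : ρ * (a - b) ^ 2 ≤ Z * (B.pr Z ^ 2 + (Z ^ B.θ) ^ 2) :=
        mul_le_mul hρZ (e1.trans hz) (sq_nonneg _) hZ0.le
      have e3 : Z * (B.pr Z ^ 2 + (Z ^ B.θ) ^ 2) ≤
          Z * (B.pr Z ^ 2 + (Z ^ B.θ) ^ 2) / c * B.Ψ x ρ := by
        rw [div_mul_eq_mul_div, le_div_iff₀ hc]
        exact mul_le_mul_of_nonneg_left hv (by positivity)
      have e4 : 0 ≤ Z * D ^ 2 * C1 * B.Ψ x ρ := by positivity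
      rw [hC]; nlinarith
    constructor
    · exact aux _ _ (B.pr Z) (B.pr_pos hρ) (B.pr_pos hb) (B.pr_mono hρ hρZ) (B.pr_mono hb hbZ)
        (by nlinarith [sq_nonneg (Z ^ B.θ)])
    · exact aux _ _ (Z ^ B.θ) (Real.rpow_pos_of_pos hρ _) (Real.rpow_pos_of_pos hb _)
        (Real.rpow_le_rpow hρ.le hρZ hθ.le) (Real.rpow_le_rpow hb.le hbZ hθ.le)
        (by nlinarith [sq_nonneg (B.pr Z)])
  · have hq := h1 x ρ hρ hK
    have hxI : ρ ∈ Icc (B.m / 2) Z := ⟨h, hρZ⟩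
    have hbI : B.ρb x ∈ Icc (B.m / 2) Z := ⟨by linarith [B.ρb_ge x], hbZ⟩
    have hposI : ∀ σ ∈ Icc (B.m / 2) Z, 0 < σ := fun σ hσ => lt_of_lt_of_le (by positivity) hσ.1
    have l1 : |B.pr ρ - B.pr (B.ρb x)| ≤ D * |ρ - B.ρb x| := by
      apply lip_on (fun σ hσ => B.pr_deriv (hposI σ hσ)) _ hxI hbI
      intro σ hσ
      have hσ0 := hposI σ hσ
      have := Real.rpow_le_rpow hσ0.le hσ.2 hθ.le
      have := Real.rpow_pos_of_pos hσ0 B.θ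
      rw [abs_of_nonneg (by positivity)]
      have : B.θ ^ 2 * (σ ^ B.θ) ^ 2 ≤ B.θ ^ 2 * (Z ^ B.θ) ^ 2 := by gcongr
      have : 0 < B.θ * Z ^ B.θ / (B.m / 2) := by positivity
      rw [hD]; linarith
    have l2 : |ρ ^ B.θ - B.ρb x ^ B.θ| ≤ D * |ρ - B.ρb x| := by
      apply lip_on (f := fun σ => σ ^ B.θ)
        (fun σ hσ => Sol.r_deriv (B := B) (hasDerivAt_id σ) (hposI σ hσ)) _ hxI hbI
      intro σ hσ
      have hσ0 := hposI σ hσ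
      have := Real.rpow_le_rpow hσ0.le hσ.2 hθ.le
      have := Real.rpow_pos_of_pos hσ0 B.θ
      rw [abs_of_nonneg (by positivity), mul_one]
      have : B.θ * σ ^ B.θ / σ ≤ B.θ * Z ^ B.θ / (B.m / 2) := by
        have := hσ.1
        gcongr
      have : 0 < B.θ ^ 2 * (Z ^ B.θ) ^ 2 := by positivity
      rw [hD]; linarith
    have aux : ∀ a : ℝ, |a| ≤ D * |ρ - B.ρb x| → ρ * a ^ 2 ≤ C * B.Ψ x ρ := by
      intro a ha
      have e1 : a ^ 2 ≤ D ^ 2 * (ρ - B.ρb x) ^ 2 := by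
        rw [← sq_abs a, ← sq_abs (ρ - _), ← mul_pow]
        exact pow_le_pow_left₀ (abs_nonneg _) ha 2
      have e2 : ρ * a ^ 2 ≤ Z * (D ^ 2 * (C1 * B.Ψ x ρ)) :=
        mul_le_mul hρZ (e1.trans (mul_le_mul_of_nonneg_left hq (sq_nonneg _))) (sq_nonneg _) hZ0.le
      have e4 : 0 ≤ Z * (B.pr Z ^ 2 + (Z ^ B.θ) ^ 2) / c * B.Ψ x ρ := by positivity
      rw [hC]; nlinarith
    exact ⟨aux _ l1, aux _ l2⟩

lemma Ψ_rdiff : ∃ C : ℝ, 0 < C ∧ ∀ x ρ, 0 < ρ →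
    ρ * (ρ ^ B.θ - B.ρb x ^ B.θ) ^ 2 ≤ C * B.Ψ x ρ := by
  obtain ⟨K, C1, hK, hC1, h1⟩ := B.Ψ_large
  obtain ⟨C2, hC2, h2⟩ := B.Ψ_diff (max K B.M)
  have hκ := B.κ_pos
  refine ⟨C1 / B.κ + C2, by positivity, fun x ρ hρ => ?_⟩
  have hΨ := B.Ψ_nonneg x hρ
  have hb := B.ρb_pos x
  rcases le_total ρ (max K B.M) with h | h
  · have := (h2 x ρ hρ h).2
    have : 0 ≤ C1 / B.κ * B.Ψ x ρ := by positivity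
    linarith
  · have e := (h1 x ρ ((le_max_left _ _).trans h)).2
    have hr : B.ρb x ^ B.θ ≤ ρ ^ B.θ :=
      Real.rpow_le_rpow hb.le ((B.ρb_le x).trans ((le_max_right _ _).trans h)) B.hθ.le
    have hr0 : 0 < B.ρb x ^ B.θ := Real.rpow_pos_of_pos hb _
    have e1 : (ρ ^ B.θ - B.ρb x ^ B.θ) ^ 2 ≤ (ρ ^ B.θ) ^ 2 := by nlinarith
    have e2 : ρ * (ρ ^ B.θ) ^ 2 ≤ C1 / B.κ * B.Ψ x ρ := by
      rw [div_mul_eq_mul_div, le_div_iff₀ hκ]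
      unfold pr at e; linarith
    have e3 := mul_le_mul_of_nonneg_left e1 hρ.le
    have : 0 ≤ C2 * B.Ψ x ρ := by positivity
    linarith

lemma log_small {ρ : ℝ} (h : 0 < ρ) (h1 : ρ ≤ 1) : Real.log ρ ^ 2 * ρ ≤ 4 := by
  have h2 := Real.log_le_rpow_div (x := ρ⁻¹) (by positivity) (ε := 1 / 2) (by norm_num)
  rw [Real.log_inv, ← Real.sqrt_eq_rpow] at h2
  have h3 : Real.log ρ ≤ 0 := Real.log_nonpos h.le h1
  have h4 : Real.sqrt ρ⁻¹ ^ 2 = ρ⁻¹ := Real.sq_sqrt (by positivity)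
  have h5 : Real.log ρ ^ 2 ≤ 4 * ρ⁻¹ := by
    rw [← h4]
    have : 0 ≤ Real.sqrt ρ⁻¹ := Real.sqrt_nonneg _
    nlinarith
  calc Real.log ρ ^ 2 * ρ ≤ 4 * ρ⁻¹ * ρ := mul_le_mul_of_nonneg_right h5 h.le
    _ = 4 := by field_simp

lemma log_large {ρ : ℝ} (h1 : 1 ≤ ρ) : 0 ≤ Real.log ρ ∧ Real.log ρ ≤ ρ ^ B.θ / B.θ :=
  ⟨Real.log_nonneg h1, Real.log_le_rpow_div (by linarith) B.hθ⟩

lemma log_sq_le : ∃ C : ℝ, 0 < C ∧ ∀ x ρ, 0 < ρ →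
    ρ * Real.log ρ ^ 2 ≤ C * (ρ + B.Ψ x ρ) := by
  obtain ⟨C1, hC1, h1⟩ := B.Ψ_affine
  obtain ⟨c, hc, h2⟩ := B.Ψ_vacuum
  have hκ := B.κ_pos
  have hθ := B.hθ
  have hm := B.hm
  refine ⟨C1 / (B.κ * B.θ ^ 2) + 4 / c + 8 / B.m, by positivity, fun x ρ hρ => ?_⟩
  have hΨ := B.Ψ_nonneg x hρ
  have t1 : 0 < C1 / (B.κ * B.θ ^ 2) := by positivity
  have t2 : 0 < 4 / c := by positivity
  have t3 : 0 < 8 / B.m := by positivity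
  have t4 : 0 ≤ C1 / (B.κ * B.θ ^ 2) * (ρ + B.Ψ x ρ) := by positivity
  have t5 : 0 ≤ 4 / c * (ρ + B.Ψ x ρ) := by positivity
  have t6 : 0 ≤ 8 / B.m * (ρ + B.Ψ x ρ) := by positivity
  rcases le_total 1 ρ with h | h
  · obtain ⟨l0, l1⟩ := B.log_large h
    have e1 : Real.log ρ ^ 2 ≤ (ρ ^ B.θ / B.θ) ^ 2 := pow_le_pow_left₀ l0 l1 2
    have e2 := (h1 x ρ hρ).2
    have e3 : ρ * Real.log ρ ^ 2 ≤ B.pr ρ / (B.κ * B.θ ^ 2) := by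
      refine (mul_le_mul_of_nonneg_left e1 hρ.le).trans (le_of_eq ?_)
      unfold pr; field_simp
    have e4 : B.pr ρ / (B.κ * B.θ ^ 2) ≤ C1 / (B.κ * B.θ ^ 2) * (ρ + B.Ψ x ρ) := by
      rw [div_mul_eq_mul_div]
      gcongr
      refine e2.trans ?_
      gcongr
    linarith
  · have e := log_small hρ h
    rcases le_total ρ (B.m / 2) with h3 | h3
    · have := h2 x ρ hρ h3
      have : 4 ≤ 4 / c * (ρ + B.Ψ x ρ) := by
        rw [div_mul_eq_mul_div, le_div_iff₀ hc]; nlinarith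
      linarith
    · have : 4 ≤ 8 / B.m * (ρ + B.Ψ x ρ) := by
        rw [div_mul_eq_mul_div, le_div_iff₀ hm]; nlinarith
      linarith

/-- Weighted bound of `ρ |log ρ|` against cutoff powers `b^(n+2), b^n` of two different orders. -/
lemma log_weight_le : ∃ C : ℝ, 0 < C ∧ ∀ (n : ℕ) x ρ b, 0 < ρ → 0 ≤ b → b ≤ 1 →
    b ^ (n + 2) * (ρ * |Real.log ρ|) ≤
      C * (b ^ (n + 4) * B.Ψ x ρ + b ^ n * ρ + b ^ n * (ρ * B.pr ρ)) := by
  obtain ⟨c, hc, h2⟩ := B.Ψ_vacuum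
  have hκ := B.κ_pos
  have hθ := B.hθ
  have hm := B.hm
  refine ⟨1 / (B.κ * B.θ) + 1 / c + 1 + 8 / B.m, by positivity, fun n x ρ b hρ hb hb1 => ?_⟩
  have hΨ := B.Ψ_nonneg x hρ
  have hp := B.pr_pos hρ
  have hbn : b ^ (n + 2) ≤ b ^ n := pow_le_pow_of_le_one hb hb1 (by omega)
  have hbn0 : 0 ≤ b ^ n := by positivity
  have hbn2 : 0 ≤ b ^ (n + 2) := by positivity
  set X := b ^ (n + 4) * B.Ψ x ρ + b ^ n * ρ + b ^ n * (ρ * B.pr ρ) with hX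
  have x1 : 0 ≤ b ^ (n + 4) * B.Ψ x ρ := by positivity
  have x2 : 0 ≤ b ^ n * ρ := by positivity
  have x3 : 0 ≤ b ^ n * (ρ * B.pr ρ) := by positivity
  have hX0 : 0 ≤ X := by positivity
  have t4 : 0 ≤ 1 / (B.κ * B.θ) * X := by positivity
  have t5 : 0 ≤ 1 / c * X := by positivity
  have t6 : 0 ≤ 8 / B.m * X := by positivity
  rcases le_total 1 ρ with h | h
  · obtain ⟨l0, l1⟩ := B.log_large h
    have hr : 1 ≤ ρ ^ B.θ := Real.one_le_rpow h hθ.le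
    have e1 : ρ ^ B.θ / B.θ ≤ B.pr ρ * (1 / (B.κ * B.θ)) := by
      have : B.pr ρ * (1 / (B.κ * B.θ)) = ρ * (ρ ^ B.θ) ^ 2 / B.θ := by unfold pr; field_simp
      rw [this]
      gcongr
      nlinarith
    rw [abs_of_nonneg l0]
    have e2 : b ^ (n + 2) * (ρ * Real.log ρ) ≤ b ^ n * (ρ * (B.pr ρ * (1 / (B.κ * B.θ)))) := by
      gcongr; exact l1.trans e1
    have e3 : b ^ n * (ρ * (B.pr ρ * (1 / (B.κ * B.θ)))) =
      1 / (B.κ * B.θ) * (b ^ n * (ρ * B.pr ρ)) := by ring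
    have e4 : 1 / (B.κ * B.θ) * (b ^ n * (ρ * B.pr ρ)) ≤ 1 / (B.κ * B.θ) * X := by
      gcongr; rw [hX]; linarith
    linarith
  · have e := log_small hρ h
    -- `(ρ |log ρ|)² ≤ 4ρ`
    have e0 : (ρ * |Real.log ρ|) ^ 2 ≤ 4 * ρ := by
      rw [mul_pow, sq_abs]; nlinarith
    have e1 : b ^ (n + 2) * (ρ * |Real.log ρ|) ≤ b ^ (n + 4) + b ^ n * ρ := by
      have : b ^ 2 * (ρ * |Real.log ρ|) ≤ b ^ 4 + ρ := by
        nlinarith [sq_nonneg (2 * b ^ 2 - ρ * |Real.log ρ|)]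
      calc b ^ (n + 2) * (ρ * |Real.log ρ|) = b ^ n * (b ^ 2 * (ρ * |Real.log ρ|)) := by ring
        _ ≤ b ^ n * (b ^ 4 + ρ) := mul_le_mul_of_nonneg_left this hbn0
        _ = _ := by ring
    rcases le_total ρ (B.m / 2) with h3 | h3
    · have hv := h2 x ρ hρ h3
      have : b ^ (n + 4) ≤ 1 / c * X := by
        rw [one_div, inv_mul_eq_div, le_div_iff₀ hc]
        have : b ^ (n + 4) * c ≤ b ^ (n + 4) * B.Ψ x ρ := by gcongr
        rw [hX]; linarith
      have : b ^ n * ρ ≤ X := by rw [hX]; linarith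
      nlinarith
    · have e5 : b ^ (n + 4) ≤ b ^ n := pow_le_pow_of_le_one hb hb1 (by omega)
      have : b ^ (n + 4) ≤ 8 / B.m * X := by
        rw [div_mul_eq_mul_div, le_div_iff₀ hm]
        have : b ^ (n + 4) * B.m ≤ b ^ n * (2 * ρ) := by gcongr; linarith
        rw [hX]; linarith
      have : b ^ n * ρ ≤ X := by rw [hX]; linarith
      nlinarith

end Bg
end NSHI

/-! ### Weighted integrals in the mass coordinate and the basic balance laws -/

namespace NSHI

namespace CK
variable {f g1 g2 g3 g4 : ℝ → ℝ → ℝ} {s : ℝ}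

lemma le1 (hf : CK f) (h1 : CK g1) (a1 : ℝ) (h : ∀ x, f s x ≤ a1 * g1 s x) :
    ∫ x, f s x ≤ a1 * ∫ x, g1 s x := by
  refine (hf.int_le (h1.cmul a1) h).trans ?_
  rw [integral_const_mul]

lemma le2 (hf : CK f) (h1 : CK g1) (h2 : CK g2) (a1 a2 : ℝ)
    (h : ∀ x, f s x ≤ a1 * g1 s x + a2 * g2 s x) :
    ∫ x, f s x ≤ a1 * (∫ x, g1 s x) + a2 * ∫ x, g2 s x := by
  refine (hf.int_le ((h1.cmul a1).add (h2.cmul a2)) h).trans ?_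
  rw [integral_add ((h1.cmul a1).integrable s) ((h2.cmul a2).integrable s), integral_const_mul,
    integral_const_mul]

lemma le3 (hf : CK f) (h1 : CK g1) (h2 : CK g2) (h3 : CK g3) (a1 a2 a3 : ℝ)
    (h : ∀ x, f s x ≤ a1 * g1 s x + a2 * g2 s x + a3 * g3 s x) :
    ∫ x, f s x ≤ a1 * (∫ x, g1 s x) + a2 * (∫ x, g2 s x) + a3 * ∫ x, g3 s x := by
  refine (hf.int_le (((h1.cmul a1).add (h2.cmul a2)).add (h3.cmul a3)) h).trans ?_
  rw [integral_add (((h1.cmul a1).add (h2.cmul a2)).integrable s) ((h3.cmul a3).integrable s),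
    integral_add ((h1.cmul a1).integrable s) ((h2.cmul a2).integrable s), integral_const_mul,
    integral_const_mul, integral_const_mul]

lemma le4 (hf : CK f) (h1 : CK g1) (h2 : CK g2) (h3 : CK g3) (h4 : CK g4) (a1 a2 a3 a4 : ℝ)
    (h : ∀ x, f s x ≤ a1 * g1 s x + a2 * g2 s x + a3 * g3 s x + a4 * g4 s x) :
    ∫ x, f s x ≤ a1 * (∫ x, g1 s x) + a2 * (∫ x, g2 s x) + a3 * (∫ x, g3 s x)
      + a4 * ∫ x, g4 s x := by
  refine (hf.int_le ((((h1.cmul a1).add (h2.cmul a2)).add (h3.cmul a3)).add (h4.cmul a4))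
    h).trans ?_
  rw [integral_add ((((h1.cmul a1).add (h2.cmul a2)).add (h3.cmul a3)).integrable s)
      ((h4.cmul a4).integrable s),
    integral_add (((h1.cmul a1).add (h2.cmul a2)).integrable s) ((h3.cmul a3).integrable s),
    integral_add ((h1.cmul a1).integrable s) ((h2.cmul a2).integrable s), integral_const_mul,
    integral_const_mul, integral_const_mul, integral_const_mul]

lemma int_nonneg (h : ∀ x, 0 ≤ f s x) : 0 ≤ ∫ x, f s x := integral_nonneg h

end CK

section time
variable {f g1 g2 g3 g4 : ℝ → ℝ} {a b : ℝ}

lemma tle1 (hab : a ≤ b) (hf : Continuous f) (h1 : Continuous g1) (a1 : ℝ)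
    (h : ∀ x ∈ Icc a b, f x ≤ a1 * g1 x) :
    ∫ x in a..b, f x ≤ a1 * ∫ x in a..b, g1 x := by
  refine (intervalIntegral.integral_mono_on hab (hf.intervalIntegrable _ _)
    ((h1.const_mul a1).intervalIntegrable _ _) h).trans ?_
  rw [intervalIntegral.integral_const_mul]

lemma tle2 (hab : a ≤ b) (hf : Continuous f) (h1 : Continuous g1) (h2 : Continuous g2) (a1 a2 : ℝ)
    (h : ∀ x ∈ Icc a b, f x ≤ a1 * g1 x + a2 * g2 x) :
    ∫ x in a..b, f x ≤ a1 * (∫ x in a..b, g1 x) + a2 * ∫ x in a..b, g2 x := by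
  refine (intervalIntegral.integral_mono_on hab (hf.intervalIntegrable _ _)
    ((by fun_prop : Continuous fun x => a1 * g1 x + a2 * g2 x).intervalIntegrable _ _) h).trans ?_
  rw [intervalIntegral.integral_add ((h1.const_mul a1).intervalIntegrable _ _)
    ((h2.const_mul a2).intervalIntegrable _ _), intervalIntegral.integral_const_mul,
    intervalIntegral.integral_const_mul]

lemma tle3 (hab : a ≤ b) (hf : Continuous f) (h1 : Continuous g1) (h2 : Continuous g2)
    (h3 : Continuous g3) (a1 a2 a3 : ℝ)
    (h : ∀ x ∈ Icc a b, f x ≤ a1 * g1 x + a2 * g2 x + a3 * g3 x) :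
    ∫ x in a..b, f x ≤ a1 * (∫ x in a..b, g1 x) + a2 * (∫ x in a..b, g2 x)
      + a3 * ∫ x in a..b, g3 x := by
  refine (tle2 hab hf (by fun_prop : Continuous fun x => a1 * g1 x + a2 * g2 x) h3 1 a3
    (fun x hx => by rw [one_mul]; exact h x hx)).trans ?_
  have := tle2 hab (by fun_prop : Continuous fun x => a1 * g1 x + a2 * g2 x) h1 h2 a1 a2
    (fun x _ => le_rfl)
  linarith

lemma tle4 (hab : a ≤ b) (hf : Continuous f) (h1 : Continuous g1) (h2 : Continuous g2)
    (h3 : Continuous g3) (h4 : Continuous g4) (a1 a2 a3 a4 : ℝ)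
    (h : ∀ x ∈ Icc a b, f x ≤ a1 * g1 x + a2 * g2 x + a3 * g3 x + a4 * g4 x) :
    ∫ x in a..b, f x ≤ a1 * (∫ x in a..b, g1 x) + a2 * (∫ x in a..b, g2 x)
      + a3 * (∫ x in a..b, g3 x) + a4 * ∫ x in a..b, g4 x := by
  refine (tle2 hab hf (by fun_prop : Continuous fun x => a1 * g1 x + a2 * g2 x + a3 * g3 x)
    h4 1 a4 (fun x hx => by rw [one_mul]; exact h x hx)).trans ?_
  have := tle3 hab (by fun_prop : Continuous fun x => a1 * g1 x + a2 * g2 x + a3 * g3 x)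
    h1 h2 h3 a1 a2 a3 (fun x _ => le_rfl)
  linarith

/-- Enlarging the interval of integration of a nonnegative function. -/
lemma t_mono (hf : Continuous f) (h0 : ∀ x, 0 ≤ f x) {c d : ℝ} (hca : c ≤ a) (hab : a ≤ b)
    (hbd : b ≤ d) : ∫ x in a..b, f x ≤ ∫ x in c..d, f x :=
  intervalIntegral.integral_mono_interval hca hab hbd (ae_of_all _ h0)
    (hf.intervalIntegrable _ _)

end time

lemma bump_pow_le {R : ℝ} (hR : 0 < R) (y : ℝ) (j N : ℕ) (hj : 1 ≤ j) :
    bump R y ^ j ≤ (4 / 3) ^ N * bump (2 * R) y ^ N := by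
  have h2 := bump_nonneg (2 * R) y
  rcases le_or_gt R |y| with h | h
  · rw [bump_zero hR h, zero_pow (by omega)]; positivity
  · have h1 : 3 / 4 ≤ bump (2 * R) y := by
      have := bump_ge (R := 2 * R) (c := 1 / 2) (by positivity) (y := y) (by linarith)
      linarith
    calc bump R y ^ j ≤ 1 := pow_le_one₀ (bump_nonneg _ _) (bump_le_one _ _)
      _ ≤ (4 / 3 * bump (2 * R) y) ^ N := one_le_pow₀ (by linarith)
      _ = _ := by rw [mul_pow]

lemma bump_pow_anti (R y : ℝ) {j k : ℕ} (h : j ≤ k) : bump R y ^ k ≤ bump R y ^ j :=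
  pow_le_pow_of_le_one (bump_nonneg _ _) (bump_le_one _ _) h

namespace Sol
variable {B : Bg} (S : Sol B)

/-- The integral of `F` against the cutoff `bump R ^ k` in the mass coordinate. -/
noncomputable def Wt (k : ℕ) (R : ℝ) (F : ℝ → ℝ → ℝ) (s : ℝ) : ℝ :=
  ∫ x, bump R (S.Y s x) ^ k * F s x

lemma ckw {k : ℕ} (hk : 1 ≤ k) {R : ℝ} (hR : 0 < R) {F : ℝ → ℝ → ℝ}
    (cF : Continuous (fun z : ℝ × ℝ => F z.1 z.2)) :
    CK (fun s x => bump R (S.Y s x) ^ k * F s x) := (S.ck hk hR).mul cF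

lemma Wt_cont {k : ℕ} (hk : 1 ≤ k) {R : ℝ} (hR : 0 < R) {F : ℝ → ℝ → ℝ}
    (cF : Continuous (fun z : ℝ × ℝ => F z.1 z.2)) : Continuous (S.Wt k R F) :=
  (S.ckw hk hR cF).contI

lemma Wt_nonneg {k : ℕ} {R : ℝ} {F : ℝ → ℝ → ℝ} {s : ℝ} (h : ∀ x, 0 ≤ F s x) :
    0 ≤ S.Wt k R F s :=
  integral_nonneg fun x => mul_nonneg (pow_nonneg (bump_nonneg _ _) _) (h x)

lemma Wt_mono {k : ℕ} (hk : 1 ≤ k) {R : ℝ} (hR : 0 < R) {F G : ℝ → ℝ → ℝ}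
    (cF : Continuous (fun z : ℝ × ℝ => F z.1 z.2)) (cG : Continuous (fun z : ℝ × ℝ => G z.1 z.2))
    {s : ℝ} (c : ℝ) (h : ∀ x, |S.Y s x| < R → F s x ≤ c * G s x) :
    S.Wt k R F s ≤ c * S.Wt k R G s := by
  refine (S.ckw hk hR cF).le1 (S.ckw hk hR cG) c (fun x => ?_)
  rcases le_or_gt R |S.Y s x| with h1 | h1
  · rw [bump_zero hR h1, zero_pow (by omega)]; simp
  · have := mul_le_mul_of_nonneg_left (h x h1) (pow_nonneg (bump_nonneg R (S.Y s x)) k)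
    linarith

lemma Wt_double {j N : ℕ} (hj : 1 ≤ j) (hN : 1 ≤ N) {R : ℝ} (hR : 0 < R) {F : ℝ → ℝ → ℝ}
    (cF : Continuous (fun z : ℝ × ℝ => F z.1 z.2)) {s : ℝ} (h : ∀ x, 0 ≤ F s x) :
    S.Wt j R F s ≤ (4 / 3) ^ N * S.Wt N (2 * R) F s := by
  refine (S.ckw hj hR cF).le1 (S.ckw hN (by positivity : 0 < 2 * R) cF) _ (fun x => ?_)
  rw [← mul_assoc]
  exact mul_le_mul_of_nonneg_right (bump_pow_le hR _ _ _ hj) (h x)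

lemma Wt_anti {j k : ℕ} (hj : 1 ≤ j) (hk : j ≤ k) {R : ℝ} (hR : 0 < R) {F : ℝ → ℝ → ℝ}
    (cF : Continuous (fun z : ℝ × ℝ => F z.1 z.2)) {s : ℝ} (h : ∀ x, 0 ≤ F s x) :
    S.Wt k R F s ≤ S.Wt j R F s :=
  (S.ckw (hj.trans hk) hR cF).int_le (S.ckw hj hR cF)
    (fun x => mul_le_mul_of_nonneg_right (bump_pow_anti _ _ hk) (h x))

/-- A cutoff at mass radius `R` sees mass at most `2 * R`. -/
lemma mass_le {k : ℕ} (hk : 1 ≤ k) {R : ℝ} (hR : 0 < R) (s : ℝ) :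
    S.Wt k R S.ρ s ≤ 2 * R := by
  obtain ⟨a, ha⟩ := S.Y_coercive R
  set β : ℝ → ℝ := fun y => ∫ t in (0:ℝ)..y, bump R t ^ k
  have cb : Continuous fun t => bump R t ^ k := by fun_prop
  have hβ : ∀ y, HasDerivAt β (bump R y ^ k) y := fun y =>
    (cb.integral_hasStrictDerivAt 0 y).hasDerivAt
  have hd : ∀ x, HasDerivAt (fun x => β (S.Y s x)) (bump R (S.Y s x) ^ k * S.ρ s x) x :=
    fun x => (hβ (S.Y s x)).comp x (S.Y_x s x)
  have cint : Continuous fun x => bump R (S.Y s x) ^ k * S.ρ s x := by fun_prop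
  have hsub : Function.support (fun x => bump R (S.Y s x) ^ k * S.ρ s x) ⊆ Ioc (-(|a|+1)) (|a|+1) := by
    intro x hx
    by_contra h
    apply hx
    have : a ≤ |x| := by
      rw [mem_Ioc, not_and_or] at h
      rcases h with h | h
      · push Not at h; linarith [neg_le_abs x, le_abs_self a]
      · push Not at h; linarith [le_abs_self x, le_abs_self a]
    simp only [bump_zero hR (ha s x this)]
    rw [zero_pow (by omega), zero_mul]
  unfold Wt
  rw [← intervalIntegral.integral_eq_integral_of_support_subset hsub,
    intervalIntegral.integral_eq_sub_of_hasDerivAt (fun x _ => hd x)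
      (cint.intervalIntegrable _ _)]
  have e : β (S.Y s (|a|+1)) - β (S.Y s (-(|a|+1)))
      = ∫ t in (S.Y s (-(|a|+1)))..(S.Y s (|a|+1)), bump R t ^ k := by
    simp only [β]
    rw [intervalIntegral.integral_interval_sub_left (cb.intervalIntegrable _ _)
      (cb.intervalIntegrable _ _)]
  rw [e]
  set y1 := S.Y s (-(|a|+1))
  set y2 := S.Y s (|a|+1)
  have hi : IntegrableOn (fun _ : ℝ => (1:ℝ)) (Icc (-R) R) := by
    rw [integrableOn_const_iff]; right; simp
  have hb : Integrable (fun t => bump R t ^ k) := by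
    apply cb.integrable_of_hasCompactSupport
    apply HasCompactSupport.intro (K := Icc (-R) R) isCompact_Icc
    intro t ht
    rw [bump_zero hR, zero_pow (by omega)]
    rw [mem_Icc, not_and_or] at ht
    rcases ht with ht | ht
    · push Not at ht; linarith [neg_le_abs t]
    · push Not at ht; linarith [le_abs_self t]
  have h2 : ∫ t, bump R t ^ k ≤ 2 * R := by
    have : ∫ t, bump R t ^ k = ∫ t in Icc (-R) R, bump R t ^ k := by
      rw [setIntegral_eq_integral_of_forall_compl_eq_zero]
      intro t ht
      rw [bump_zero hR, zero_pow (by omega)]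
      rw [mem_Icc, not_and_or] at ht
      rcases ht with ht | ht
      · push Not at ht; linarith [neg_le_abs t]
      · push Not at ht; linarith [le_abs_self t]
    rw [this]
    calc _ ≤ ∫ t in Icc (-R) R, (1:ℝ) := by
          apply integral_mono hb.integrableOn hi
          intro t
          exact pow_le_one₀ (bump_nonneg _ _) (bump_le_one _ _)
      _ = 2 * R := by simp [hR.le]; ring
  refine le_trans ?_ h2
  have hy : y1 ≤ y2 ∨ y2 ≤ y1 := le_total _ _
  rcases hy with hy | hy
  · rw [intervalIntegral.integral_of_le hy]
    exact setIntegral_le_integral hb (ae_of_all _ fun t => pow_nonneg (bump_nonneg _ _) _)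
  · have h1 : 0 ≤ ∫ t, bump R t ^ k := integral_nonneg fun t => pow_nonneg (bump_nonneg _ _) _
    rw [intervalIntegral.integral_symm]
    have h3 : 0 ≤ ∫ t in y2..y1, bump R t ^ k :=
      intervalIntegral.integral_nonneg hy (fun t _ => pow_nonneg (bump_nonneg _ _) _)
    linarith

/-- Transport identity for functions of the potential `H`. -/
lemma id_H {k : ℕ} (hk : 2 ≤ k) {R : ℝ} (hR : 0 < R) {h h' : ℝ → ℝ}
    (ch : Continuous h) (ch' : Continuous h') (dh : ∀ y, HasDerivAt h (h' y) y)
    {s : ℝ} (hs : s ∈ Icc 0 B.T) :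
    S.Wt k R (fun s x => S.ρ s x * h (S.H s x)) s =
      S.Wt k R (fun s x => S.ρ s x * h (S.H s x)) 0
      + ∫ τ in (0:ℝ)..s, S.Wt k R (fun s x => S.ρ s x * S.p s x * h' (S.H s x)) τ := by
  have := S.master hk hR (F := fun s x => S.ρ s x * h (S.H s x))
    (Ft := fun s x => -(S.ρx s x * S.u s x + S.ρ s x * S.ux s x) * h (S.H s x)
      + S.ρ s x * (h' (S.H s x) * (S.p s x + S.u s x * (S.ρ s x * S.w s x))))
    (Fx := fun s x => S.ρx s x * h (S.H s x)
      + S.ρ s x * (h' (S.H s x) * (-(S.ρ s x * S.w s x))))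
    (Nf := fun _ _ => 0) (Nx := fun _ _ => 0)
    (Sr := fun s x => S.ρ s x * S.p s x * h' (S.H s x))
    (by fun_prop) (by fun_prop) (by fun_prop) (by fun_prop) (by fun_prop)
    (fun s hs x => (S.ρ_t s hs x).mul ((dh _).comp s (S.H_t hs x)))
    (fun s _ x => (S.ρ_x s x).mul ((dh _).comp x (S.H_x s x)))
    (fun s _ x => hasDerivAt_const x 0)
    (fun s _ x => by ring) hs
  simpa [Wt] using this

/-- Balance of the relative energy built on the effective velocity. -/
lemma id_W {k : ℕ} (hk : 2 ≤ k) {R : ℝ} (hR : 0 < R) {s : ℝ} (hs : s ∈ Icc 0 B.T) :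
    S.Wt k R (fun s x => S.ρ s x * S.w s x ^ 2 / 2 + S.Psi s x) s =
      S.Wt k R (fun s x => S.ρ s x * S.w s x ^ 2 / 2 + S.Psi s x) 0
      + ∫ τ in (0:ℝ)..s, ∫ x, (dcut k R (S.Y τ x) * (S.ρ τ x * ((S.p τ x - B.pb x) * S.u τ x))
          + bump R (S.Y τ x) ^ k *
            (-(S.ε * S.rx τ x ^ 2) - S.ρ τ x * S.u τ x * B.Ebx x)) := by
  refine S.master hk hR (F := fun s x => S.ρ s x * S.w s x ^ 2 / 2 + S.Psi s x)
    (Ft := fun s x => -(S.ρx s x * S.u s x + S.ρ s x * S.ux s x) * S.w s x ^ 2 / 2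
      + S.ρ s x * (S.w s x * (-(S.u s x * S.wx s x) - B.θ * S.r s x * S.rx s x))
      + ((-(S.u s x * (B.θ * S.ρ s x * S.r s x * S.rx s x))
        - (2 * B.θ + 1) * S.p s x * S.ux s x) / (2 * B.θ)
      + B.Eb x * (S.ρx s x * S.u s x + S.ρ s x * S.ux s x)))
    (Fx := fun s x => S.ρx s x * S.w s x ^ 2 / 2 + S.ρ s x * (S.w s x * S.wx s x)
      + (S.ρ s x * S.r s x * S.rx s x / 2 - B.Eb x * S.ρx s x
      - B.Ebx x * (S.ρ s x - B.ρb x)))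
    (Nf := fun s x => (S.p s x - B.pb x) * S.u s x)
    (Nx := fun s x => (B.θ * S.ρ s x * S.r s x * S.rx s x - B.ρb x * B.Ebx x) * S.u s x
      + (S.p s x - B.pb x) * S.ux s x)
    (Sr := fun s x => -(S.ε * S.rx s x ^ 2) - S.ρ s x * S.u s x * B.Ebx x)
    (by fun_prop) (by fun_prop) (by fun_prop) (by fun_prop) (by fun_prop) ?_ ?_ ?_ ?_ hs
  · intro s hs x
    refine ((((S.ρ_t s hs x).mul ((S.w_t hs x).pow 2)).div_const 2).add (S.Psi_t hs x)).congr_deriv ?_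
    simp only [Nat.cast_ofNat, Nat.add_one_sub_one, pow_one, Pi.pow_apply]
    ring
  · intro s _ x
    refine ((((S.ρ_x s x).mul ((S.w_x s x).pow 2)).div_const 2).add (S.Psi_x s x)).congr_deriv ?_
    simp only [Nat.cast_ofNat, Nat.add_one_sub_one, pow_one, Pi.pow_apply]
    ring
  · intro s _ x
    exact ((S.p_x s x).sub (B.dpb x)).mul (S.u_x s x)
  · intro s _ x
    have hk := κ_mul (B := B)
    have h1 := (S.pos s x).ne'; have h2 := (S.r_pos s x).ne'; have h3 := B.hθ.ne'
    unfold Psi Bg.Ψ w rx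
    rw [show B.pr (S.ρ s x) = S.p s x from rfl, S.p_eq]
    field_simp
    ring

/-- Balance of the relative mechanical energy. -/
lemma id_E {k : ℕ} (hk : 2 ≤ k) {R : ℝ} (hR : 0 < R) {s : ℝ} (hs : s ∈ Icc 0 B.T) :
    S.Wt k R (fun s x => S.ρ s x * S.u s x ^ 2 / 2 + S.Psi s x) s =
      S.Wt k R (fun s x => S.ρ s x * S.u s x ^ 2 / 2 + S.Psi s x) 0
      + ∫ τ in (0:ℝ)..s, ∫ x, (dcut k R (S.Y τ x) * (S.ρ τ x * ((S.p τ x - B.pb x) * S.u τ x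
            - S.ε * (S.u τ x * S.ux τ x)))
          + bump R (S.Y τ x) ^ k *
            (-(S.ε * S.ux τ x ^ 2) - S.ρ τ x * S.u τ x * B.Ebx x)) := by
  refine S.master hk hR (F := fun s x => S.ρ s x * S.u s x ^ 2 / 2 + S.Psi s x)
    (Ft := fun s x => -(S.ρx s x * S.u s x + S.ρ s x * S.ux s x) * S.u s x ^ 2 / 2
      + S.u s x * (-(S.u s x * S.ux s x) * S.ρ s x
          - B.θ ^ 2 * S.r s x ^ 2 * S.ρx s x + S.ε * S.uxx s x)
      + ((-(S.u s x * (B.θ * S.ρ s x * S.r s x * S.rx s x))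
        - (2 * B.θ + 1) * S.p s x * S.ux s x) / (2 * B.θ)
      + B.Eb x * (S.ρx s x * S.u s x + S.ρ s x * S.ux s x)))
    (Fx := fun s x => S.ρx s x * S.u s x ^ 2 / 2 + S.ρ s x * (S.u s x * S.ux s x)
      + (S.ρ s x * S.r s x * S.rx s x / 2 - B.Eb x * S.ρx s x
      - B.Ebx x * (S.ρ s x - B.ρb x)))
    (Nf := fun s x => (S.p s x - B.pb x) * S.u s x - S.ε * (S.u s x * S.ux s x))
    (Nx := fun s x => (B.θ * S.ρ s x * S.r s x * S.rx s x - B.ρb x * B.Ebx x) * S.u s x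
      + (S.p s x - B.pb x) * S.ux s x - S.ε * (S.ux s x * S.ux s x + S.u s x * S.uxx s x))
    (Sr := fun s x => -(S.ε * S.ux s x ^ 2) - S.ρ s x * S.u s x * B.Ebx x)
    (by fun_prop) (by fun_prop) (by fun_prop) (by fun_prop) (by fun_prop) ?_ ?_ ?_ ?_ hs
  · intro s hs x
    refine ((((S.ρ_t s hs x).mul ((S.u_t s hs x).pow 2)).div_const 2).add (S.Psi_t hs x)).congr_deriv ?_
    simp only [Nat.cast_ofNat, Nat.add_one_sub_one, pow_one, Pi.pow_apply]
    have h1 := (S.pos s x).ne'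
    rw [show S.ρ s x ^ B.θ = S.r s x from rfl]
    field_simp
  · intro s _ x
    refine ((((S.ρ_x s x).mul ((S.u_x s x).pow 2)).div_const 2).add (S.Psi_x s x)).congr_deriv ?_
    simp only [Nat.cast_ofNat, Nat.add_one_sub_one, pow_one, Pi.pow_apply]
    ring
  · intro s _ x
    exact (((S.p_x s x).sub (B.dpb x)).mul (S.u_x s x)).sub
      (((S.u_x s x).mul (S.ux_x s x)).const_mul S.ε)
  · intro s _ x
    have hk := κ_mul (B := B)
    have h1 := (S.pos s x).ne'; have h2 := (S.r_pos s x).ne'; have h3 := B.hθ.ne'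
    unfold Psi Bg.Ψ rx
    rw [show B.pr (S.ρ s x) = S.p s x from rfl, S.p_eq]
    field_simp
    ring

/-- Balance of the momentum potential. -/
lemma id_A {k : ℕ} (hk : 2 ≤ k) {R : ℝ} (hR : 0 < R) {s : ℝ} (hs : s ∈ Icc 0 B.T) :
    S.Wt k R S.A s = S.Wt k R S.A 0
      + ∫ τ in (0:ℝ)..s, ∫ x, (dcut k R (S.Y τ x) *
            (S.ρ τ x * (-(S.ε * S.u τ x + S.u τ x * S.A τ x)))
          + bump R (S.Y τ x) ^ k * (- S.p τ x - S.ρ τ x * S.u τ x ^ 2)) := by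
  refine S.master hk hR (F := S.A)
    (Ft := fun s x => -(S.ρ s x * S.u s x ^ 2 + S.p s x - S.ε * S.ux s x))
    (Fx := fun s x => S.ρ s x * S.u s x)
    (Nf := fun s x => -(S.ε * S.u s x + S.u s x * S.A s x))
    (Nx := fun s x => -(S.ε * S.ux s x + (S.ux s x * S.A s x + S.u s x * (S.ρ s x * S.u s x))))
    (Sr := fun s x => - S.p s x - S.ρ s x * S.u s x ^ 2)
    S.cA (by fun_prop) (by fun_prop) (by fun_prop) (by fun_prop) ?_ ?_ ?_ ?_ hs
  · intro s hs x
    exact S.A_t s hs x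
  · intro s _ x
    exact S.A_x s x
  · intro s _ x
    exact (((S.u_x s x).const_mul S.ε).add ((S.u_x s x).mul (S.A_x s x))).neg
  · intro s _ x
    ring

end Sol
end NSHI

/-! ### The momentum potentials at the end times and along particle paths -/

namespace NSHI
namespace Sol
variable {B : Bg} (S : Sol B)

lemma Y_sub (s a b : ℝ) : S.Y s b - S.Y s a = ∫ x in a..b, S.ρ s x :=
  (intervalIntegral.integral_eq_sub_of_hasDerivAt (fun x _ => S.Y_x s x)
    ((by fun_prop : Continuous fun x => S.ρ s x).intervalIntegrable _ _)).symm

lemma A_sub (s a b : ℝ) : S.A s b - S.A s a = ∫ x in a..b, S.ρ s x * S.u s x :=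
  (intervalIntegral.integral_eq_sub_of_hasDerivAt (fun x _ => S.A_x s x)
    ((by fun_prop : Continuous fun x => S.ρ s x * S.u s x).intervalIntegrable _ _)).symm

lemma Psi_nonneg (s x : ℝ) : 0 ≤ S.Psi s x := B.Ψ_nonneg x (S.pos s x)

/-- Cauchy–Schwarz for the momentum potential. -/
lemma A_sq_le (s : ℝ) {a b : ℝ} (hab : a ≤ b) :
    (S.A s b - S.A s a) ^ 2 ≤ (S.Y s b - S.Y s a) * ∫ x in a..b, S.ρ s x * S.u s x ^ 2 := by
  have h := cauchy_schwarz (f := fun x => Real.sqrt (S.ρ s x))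
    (g := fun x => Real.sqrt (S.ρ s x) * S.u s x) hab (by fun_prop) (by fun_prop)
  have e : ∀ x, Real.sqrt (S.ρ s x) ^ 2 = S.ρ s x := fun x => Real.sq_sqrt (S.pos s x).le
  have e1 : ∀ x, Real.sqrt (S.ρ s x) * (Real.sqrt (S.ρ s x) * S.u s x) = S.ρ s x * S.u s x :=
    fun x => by rw [← mul_assoc, ← sq, e]
  simp only [e1, mul_pow, e] at h
  rwa [S.A_sub, S.Y_sub]

lemma Y_mono (s : ℝ) : StrictMono (S.Y s) :=
  strictMono_of_hasDerivAt_pos (fun x => S.Y_x s x) (fun x => S.pos s x)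

/-- At the initial and final times the momentum potential grows slower than the square root of
the mass coordinate, since the kinetic energy is integrable. -/
lemma A_end {s : ℝ} (hs : s = 0 ∨ s = B.T) {η : ℝ} (hη : 0 < η) :
    ∃ C : ℝ, 0 < C ∧ ∀ x, |S.A s x| ≤ C + η * Real.sqrt |S.Y s x| := by
  have hInt : Integrable (fun x => S.ρ s x * S.u s x ^ 2) := by
    have h1 := (S.ends_int s hs).const_mul 2
    refine h1.mono' (by fun_prop : Continuous _).aestronglyMeasurable (ae_of_all _ fun x => ?_)
    have h2 := S.Psi_nonneg s x
    have h3 := S.pos s x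
    rw [Real.norm_eq_abs, abs_of_nonneg (by positivity)]
    unfold Psi at h2
    linarith
  have hc : Continuous (fun x => S.ρ s x * S.u s x ^ 2) := by fun_prop
  have h0 : ∀ x, 0 ≤ S.ρ s x * S.u s x ^ 2 := fun x => by have := S.pos s x; positivity
  -- `a` is chosen so that the kinetic energy outside `[-a,a]` is at most `η²`
  obtain ⟨a, ha0, ha⟩ : ∃ a : ℝ, 0 < a ∧ ∀ b c, b ≤ c → (a ≤ b ∨ c ≤ -a) →
      ∫ x in b..c, S.ρ s x * S.u s x ^ 2 ≤ η ^ 2 := by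
    have ht := intervalIntegral_tendsto_integral hInt tendsto_neg_atTop_atBot tendsto_id
    have h1 := (ht.eventually (lt_mem_nhds (show (∫ x, S.ρ s x * S.u s x ^ 2) - η ^ 2
      < ∫ x, S.ρ s x * S.u s x ^ 2 by nlinarith [sq_pos_of_pos hη]))).and (eventually_gt_atTop 0)
    obtain ⟨a, ha, ha0⟩ := h1.exists
    refine ⟨a, ha0, fun b c hbc hd => ?_⟩
    simp only [id] at ha
    rw [intervalIntegral.integral_of_le hbc]
    rw [intervalIntegral.integral_of_le (by linarith)] at ha
    have hdis : Disjoint (Ioc (-a) a) (Ioc b c) := by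
      rw [Set.disjoint_left]
      rintro x ⟨h1, h2⟩ ⟨h3, h4⟩
      rcases hd with h | h <;> linarith
    have hu := setIntegral_union hdis measurableSet_Ioc hInt.integrableOn hInt.integrableOn
    have hle : ∫ x in Ioc (-a) a ∪ Ioc b c, S.ρ s x * S.u s x ^ 2
        ≤ ∫ x, S.ρ s x * S.u s x ^ 2 := setIntegral_le_integral hInt (ae_of_all _ h0)
    linarith
  obtain ⟨D, hD⟩ := (isCompact_Icc (a := -a) (b := a)).exists_bound_of_continuousOn
    (f := fun x => S.A s x) (by fun_prop : Continuous fun x => S.A s x).continuousOn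
  have sq_le : ∀ {d e : ℝ}, 0 ≤ e → d ^ 2 ≤ e * η ^ 2 → |d| ≤ η * Real.sqrt e := by
    intro d e he h
    have : Real.sqrt (d ^ 2) ≤ Real.sqrt (e * η ^ 2) := Real.sqrt_le_sqrt h
    rw [Real.sqrt_sq_eq_abs, Real.sqrt_mul he, Real.sqrt_sq hη.le] at this
    linarith
  have sqrt_split : ∀ y z : ℝ, Real.sqrt (|y| + |z|) ≤ Real.sqrt |y| + Real.sqrt |z| := by
    intro y z
    exact Real.sqrt_le_iff.mpr ⟨by positivity, by
      nlinarith [Real.sq_sqrt (abs_nonneg y), Real.sq_sqrt (abs_nonneg z),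
        Real.sqrt_nonneg |y|, Real.sqrt_nonneg |z|,
        mul_nonneg (Real.sqrt_nonneg |y|) (Real.sqrt_nonneg |z|)]⟩
  refine ⟨|D| + η * (Real.sqrt |S.Y s a| + Real.sqrt |S.Y s (-a)|) + 1, by positivity, fun x => ?_⟩
  have p1 := Real.sqrt_nonneg |S.Y s a|
  have p2 := Real.sqrt_nonneg |S.Y s (-a)|
  have p3 := Real.sqrt_nonneg |S.Y s x|
  rcases le_or_gt x (-a) with h | h
  · have h1 := S.A_sq_le s h
    have hm := (S.Y_mono s).monotone h
    have h2 := ha x (-a) h (Or.inr le_rfl)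
    have h3 := sq_le (sub_nonneg.mpr hm)
      (h1.trans (mul_le_mul_of_nonneg_left h2 (sub_nonneg.mpr hm)))
    have h4 : Real.sqrt (S.Y s (-a) - S.Y s x) ≤ Real.sqrt |S.Y s (-a)| + Real.sqrt |S.Y s x| :=
      (Real.sqrt_le_sqrt (by linarith [le_abs_self (S.Y s (-a)), neg_le_abs (S.Y s x)])).trans
        (sqrt_split _ _)
    have h5 := hD (-a) ⟨le_rfl, by linarith⟩
    rw [Real.norm_eq_abs] at h5
    have h6 : |S.A s x| ≤ |S.A s (-a)| + |S.A s (-a) - S.A s x| := by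
      have := abs_sub_abs_le_abs_sub (S.A s x) (S.A s (-a))
      rw [abs_sub_comm] at this; linarith
    nlinarith [le_abs_self D]
  rcases le_or_gt a x with h' | h'
  · have h1 := S.A_sq_le s h'
    have hm := (S.Y_mono s).monotone h'
    have h2 := ha a x h' (Or.inl le_rfl)
    have h3 := sq_le (sub_nonneg.mpr hm)
      (h1.trans (mul_le_mul_of_nonneg_left h2 (sub_nonneg.mpr hm)))
    have h4 : Real.sqrt (S.Y s x - S.Y s a) ≤ Real.sqrt |S.Y s x| + Real.sqrt |S.Y s a| :=
      (Real.sqrt_le_sqrt (by linarith [le_abs_self (S.Y s x), neg_le_abs (S.Y s a)])).trans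
        (sqrt_split _ _)
    have h5 := hD a ⟨by linarith, le_rfl⟩
    rw [Real.norm_eq_abs] at h5
    have h6 : |S.A s x| ≤ |S.A s a| + |S.A s x - S.A s a| := by
      have := abs_sub_abs_le_abs_sub (S.A s x) (S.A s a)
      linarith
    nlinarith [le_abs_self D]
  · have h5 := hD x ⟨h.le, h'.le⟩
    rw [Real.norm_eq_abs] at h5
    have := mul_nonneg hη.le p1
    have := mul_nonneg hη.le p2
    have := mul_nonneg hη.le p3
    nlinarith [le_abs_self D]

/-- The end-time bound for both potentials on the support of a cutoff. -/
lemma H_end {η : ℝ} (hη : 0 < η) : ∃ C : ℝ, 0 < C ∧ ∀ R, ∀ s, (s = 0 ∨ s = B.T) →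
    ∀ x, |S.Y s x| < R → |S.H s x| ≤ C + η * Real.sqrt R ∧ |S.A s x| ≤ C + η * Real.sqrt R := by
  obtain ⟨C0, hC0, h0⟩ := S.A_end (s := 0) (Or.inl rfl) hη
  obtain ⟨C1, hC1, h1⟩ := S.A_end (s := B.T) (Or.inr rfl) hη
  obtain ⟨c, C, hc, hcC⟩ := S.ends
  refine ⟨C0 + C1 + S.ε * (|Real.log c| + |Real.log C|), by have := S.hε; positivity,
    fun R s hs x hx => ?_⟩
  have hl : |Real.log (S.ρ s x)| ≤ |Real.log c| + |Real.log C| := by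
    have := hcC s hs x
    have l1 := Real.log_le_log hc this.1
    have l2 := Real.log_le_log (S.pos s x) this.2
    rw [abs_le]
    constructor <;> linarith [neg_abs_le (Real.log c), le_abs_self (Real.log C),
      abs_nonneg (Real.log c), abs_nonneg (Real.log C)]
  have hA : |S.A s x| ≤ C0 + C1 + η * Real.sqrt R := by
    have h2 : η * Real.sqrt |S.Y s x| ≤ η * Real.sqrt R :=
      mul_le_mul_of_nonneg_left (Real.sqrt_le_sqrt hx.le) hη.le
    rcases hs with rfl | rfl
    · linarith [h0 x]
    · linarith [h1 x]
  have hel := mul_le_mul_of_nonneg_left hl S.hε.le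
  have hel0 : 0 ≤ S.ε * (|Real.log c| + |Real.log C|) := by have := S.hε; positivity
  refine ⟨?_, by linarith⟩
  unfold H
  have : |-S.A s x - S.ε * Real.log (S.ρ s x)| ≤ |S.A s x| + S.ε * |Real.log (S.ρ s x)| := by
    have := abs_sub (-S.A s x) (S.ε * Real.log (S.ρ s x))
    rwa [abs_neg, abs_mul, abs_of_pos S.hε] at this
  linarith

/-- Weighted bounds for functions `ρ h(H)` at the end times. -/
lemma Wt_h_end {k : ℕ} (hk : 1 ≤ k) {R : ℝ} (hR : 0 < R) {D s : ℝ}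
    {h : ℝ → ℝ} (ch : Continuous h) {G : ℝ}
    (hD : ∀ x, |S.Y s x| < R → |S.H s x| ≤ D) (hG : ∀ y, |y| ≤ D → |h y| ≤ G) (hG0 : 0 ≤ G) :
    |S.Wt k R (fun s x => S.ρ s x * h (S.H s x)) s| ≤ G * (2 * R) := by
  have hm := S.mass_le hk hR s
  have cF : Continuous (fun z : ℝ × ℝ => S.ρ z.1 z.2 * h (S.H z.1 z.2)) := by fun_prop
  rw [abs_le]
  constructor
  · have h1 := S.Wt_mono (F := fun s x => -(S.ρ s x * h (S.H s x))) (G := S.ρ) hk hR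
      cF.neg S.cρ (s := s) G (fun x hx => by
        have := neg_le_abs (h (S.H s x)); have := hG _ (hD x hx); have := S.pos s x
        nlinarith)
    have h2 : S.Wt k R (fun s x => -(S.ρ s x * h (S.H s x))) s
        = - S.Wt k R (fun s x => S.ρ s x * h (S.H s x)) s := by
      unfold Wt; rw [← integral_neg]; congr 1; funext x; ring
    nlinarith
  · have h1 := S.Wt_mono (F := fun s x => S.ρ s x * h (S.H s x)) (G := S.ρ) hk hR
      cF S.cρ (s := s) G (fun x hx => by
        have := le_abs_self (h (S.H s x)); have := hG _ (hD x hx); have := S.pos s x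
        nlinarith)
    nlinarith

/-- Bounds following from the monotonicity of the potential `H` along particle paths. -/
lemma H_bounds {k : ℕ} (hk : 2 ≤ k) {R : ℝ} (hR : 0 < R) {D : ℝ} (hD0 : 0 ≤ D)
    (hD : ∀ s, (s = 0 ∨ s = B.T) → ∀ x, |S.Y s x| < R → |S.H s x| ≤ D) :
    (∫ τ in (0:ℝ)..B.T, S.Wt k R (fun s x => S.ρ s x * S.p s x) τ) ≤ 4 * R * D ∧
    (∫ τ in (0:ℝ)..B.T, S.Wt k R (fun s x => S.ρ s x * S.p s x * S.H s x ^ 2) τ)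
      ≤ 2 * R * D ^ 3 ∧
    ∀ s ∈ Icc 0 B.T, S.Wt k R (fun s x => S.ρ s x * S.H s x ^ 2) s ≤ 4 * R * D ^ 2 := by
  have hT := B.hT
  have hTm : B.T ∈ Icc 0 B.T := ⟨hT.le, le_rfl⟩
  have hk1 : 1 ≤ k := by omega
  refine ⟨?_, ?_, ?_⟩
  · have h := S.id_H hk hR (h := fun y => y) (h' := fun _ => 1) (by fun_prop) (by fun_prop)
      (fun y => hasDerivAt_id y) hTm
    have e0 := S.Wt_h_end hk1 hR (h := fun y => y) (by fun_prop) (hD 0 (Or.inl rfl))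
      (fun y hy => hy) hD0
    have e1 := S.Wt_h_end hk1 hR (h := fun y => y) (by fun_prop) (hD B.T (Or.inr rfl))
      (fun y hy => hy) hD0
    rw [abs_le] at e0 e1
    simp only [mul_one] at h
    linarith
  · have h := S.id_H hk hR (h := fun y => y ^ 3 / 3) (h' := fun y => y ^ 2) (by fun_prop)
      (by fun_prop) (fun y => by
        refine ((hasDerivAt_pow 3 y).div_const 3).congr_deriv ?_
        push_cast; ring) hTm
    have hG : ∀ y : ℝ, |y| ≤ D → |y ^ 3 / 3| ≤ D ^ 3 / 3 := by
      intro y hy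
      rw [abs_div, abs_pow, abs_of_pos (by norm_num : (0:ℝ) < 3)]
      have := pow_le_pow_left₀ (abs_nonneg y) hy 3
      linarith
    have e0 := S.Wt_h_end hk1 hR (h := fun y => y ^ 3 / 3) (by fun_prop) (hD 0 (Or.inl rfl))
      hG (by positivity)
    have e1 := S.Wt_h_end hk1 hR (h := fun y => y ^ 3 / 3) (by fun_prop) (hD B.T (Or.inr rfl))
      hG (by positivity)
    rw [abs_le] at e0 e1
    have : 0 ≤ R * D ^ 3 := by positivity
    linarith
  · intro s hs
    have d1 : ∀ y : ℝ, HasDerivAt (fun y : ℝ => (max 0 y) ^ 2) (2 * max 0 y) y := fun y => by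
      simpa using hasDerivAt_max_pow 0 y
    have d2 : ∀ y : ℝ, HasDerivAt (fun y : ℝ => -(max 0 (-y)) ^ 2) (2 * max 0 (-y)) y := fun y => by
      have := ((d1 (-y)).comp y (hasDerivAt_neg y)).neg
      refine this.congr_deriv (by ring)
    have i1 := fun {s} hs => S.id_H (s := s) hk hR (by fun_prop) (by fun_prop) d1 hs
    have i2 := S.id_H hk hR (by fun_prop) (by fun_prop) d2 hs
    have hmax : ∀ y : ℝ, |y| ≤ D → |(max 0 y) ^ 2| ≤ D ^ 2 := by
      intro y hy
      rw [abs_of_nonneg (by positivity)]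
      exact pow_le_pow_left₀ (le_max_left _ _) (max_le hD0 ((le_abs_self y).trans hy)) 2
    have e1 := S.Wt_h_end hk1 hR (h := fun y => (max 0 y) ^ 2) (by fun_prop) (hD B.T (Or.inr rfl))
      hmax (by positivity)
    have e2 := S.Wt_h_end hk1 hR (h := fun y => -(max 0 (-y)) ^ 2) (by fun_prop)
      (hD 0 (Or.inl rfl)) (fun y hy => by
        rw [abs_neg]; exact hmax _ (by rwa [abs_neg])) (by positivity : 0 ≤ D ^ 2)
    rw [abs_le] at e1 e2
    have n1 : ∀ τ, 0 ≤ S.Wt k R (fun s x => S.ρ s x * S.p s x * (2 * max 0 (S.H s x))) τ :=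
      fun τ => S.Wt_nonneg fun x => by
        have := S.pos τ x; have := S.p_pos τ x
        have := le_max_left 0 (S.H τ x); positivity
    have n2 : 0 ≤ ∫ τ in (0:ℝ)..s,
        S.Wt k R (fun s x => S.ρ s x * S.p s x * (2 * max 0 (-S.H s x))) τ :=
      intervalIntegral.integral_nonneg hs.1 fun τ _ => S.Wt_nonneg fun x => by
        have := S.pos τ x; have := S.p_pos τ x
        have := le_max_left 0 (-S.H τ x); positivity
    have n3 := t_mono (S.Wt_cont hk1 hR (by fun_prop)) n1 le_rfl hs.1 hs.2
    have j1 := i1 hs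
    have j2 := i1 hTm
    have hsum := (S.ckw hk1 hR (F := fun s x => S.ρ s x * S.H s x ^ 2) (by fun_prop)).le2
      (s := s)
      (S.ckw hk1 hR (F := fun s x => S.ρ s x * (max 0 (S.H s x)) ^ 2) (by fun_prop))
      (S.ckw hk1 hR (F := fun s x => S.ρ s x * -(max 0 (-S.H s x)) ^ 2) (by fun_prop)) 1 (-1)
      (fun x => by
        apply le_of_eq
        rcases le_total 0 (S.H s x) with h | h
        · rw [max_eq_right h, max_eq_left (by linarith : -S.H s x ≤ 0)]; ring
        · rw [max_eq_left h, max_eq_right (by linarith : 0 ≤ -S.H s x)]; ring)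
    unfold Wt at *
    linarith

end Sol
end NSHI

/-! ### Pointwise estimates for the first energy bound -/

namespace NSHI

lemma abs_dcut_le' (n : ℕ) {R : ℝ} (hR : 0 < R) (y : ℝ) :
    |dcut (n + 4) R y| ≤ 2 * (n + 4) / R * bump R y ^ (n + 3) := by
  have := abs_dcut_le (k := n + 4) (by omega) hR y
  push_cast at this
  exact this

lemma abs_ddcut_le' (n : ℕ) {R : ℝ} (hR : 0 < R) (y : ℝ) :
    |ddcut (n + 4) R y| ≤ 4 * (n + 4) ^ 2 / R ^ 2 * bump R y ^ (n + 2) := by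
  have := abs_ddcut_le (k := n + 4) (by omega) hR y
  push_cast at this
  exact this

/-- Young's inequality distributing powers of a cutoff. -/
lemma young_b {b : ℝ} (hb : 0 ≤ b) (n : ℕ) {l : ℝ} (hl : 0 < l) (x y : ℝ) :
    b ^ (n + 3) * (x * y) ≤ l * (b ^ (n + 4) * x ^ 2) + b ^ (n + 2) * y ^ 2 / (4 * l) := by
  have h : l * (b ^ (n + 4) * x ^ 2) + b ^ (n + 2) * y ^ 2 / (4 * l) - b ^ (n + 3) * (x * y)
      = b ^ (n + 2) * (l * (b * x - y / (2 * l)) ^ 2) := by field_simp; ring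
  have : 0 ≤ b ^ (n + 2) * (l * (b * x - y / (2 * l)) ^ 2) := by positivity
  linarith

/-- Young's inequality for a flux multiplied by the derivative of a cutoff. -/
lemma young_dcut (n : ℕ) {R : ℝ} (hR : 0 < R) (Y : ℝ) {l : ℝ} (hl : 0 < l) {z x y : ℝ}
    (hz : |z| ≤ x * y) :
    |dcut (n + 4) R Y * z| ≤ l * (bump R Y ^ (n + 4) * x ^ 2)
      + (n + 4) ^ 2 / l / R ^ 2 * (bump R Y ^ (n + 2) * y ^ 2) := by
  have hb := bump_nonneg R Y
  have h1 := abs_dcut_le' n hR Y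
  have h2 := young_b hb n hl x (2 * (n + 4) / R * y)
  rw [abs_mul]
  calc |dcut (n + 4) R Y| * |z| ≤ (2 * (n + 4) / R * bump R Y ^ (n + 3)) * (x * y) :=
        mul_le_mul h1 hz (abs_nonneg _) (by positivity)
    _ = bump R Y ^ (n + 3) * (x * (2 * (n + 4) / R * y)) := by ring
    _ ≤ _ := h2
    _ = _ := by field_simp; ring

namespace Bg
variable (B : Bg)
lemma pb_pos (x : ℝ) : 0 < B.pb x := B.pr_pos (B.ρb_pos x)
lemma pb_le (x : ℝ) : B.pb x ≤ B.pr B.M := B.pr_mono (B.ρb_pos x) (B.ρb_le x)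
end Bg

namespace Sol
variable {B : Bg} (S : Sol B)

/-- Density of the relative energy built on the effective velocity. -/
noncomputable def BF (s x : ℝ) : ℝ := S.ρ s x * S.w s x ^ 2 / 2 + S.Psi s x
/-- Density of the relative mechanical energy. -/
noncomputable def MF (s x : ℝ) : ℝ := S.ρ s x * S.u s x ^ 2 / 2 + S.Psi s x

lemma cBF : Continuous (fun z : ℝ × ℝ => S.BF z.1 z.2) := by unfold BF; fun_prop
lemma cMF : Continuous (fun z : ℝ × ℝ => S.MF z.1 z.2) := by unfold MF; fun_prop
lemma BF_nonneg (s x : ℝ) : 0 ≤ S.BF s x := by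
  have := S.Psi_nonneg s x; have := S.pos s x; unfold BF; positivity
lemma MF_nonneg (s x : ℝ) : 0 ≤ S.MF s x := by
  have := S.Psi_nonneg s x; have := S.pos s x; unfold MF; positivity
lemma MF_u (s x : ℝ) : S.ρ s x * S.u s x ^ 2 ≤ 2 * S.MF s x := by
  have := S.Psi_nonneg s x; unfold MF; linarith
lemma BF_w (s x : ℝ) : S.ρ s x * S.w s x ^ 2 ≤ 2 * S.BF s x := by
  have := S.Psi_nonneg s x; unfold BF; linarith
lemma BF_Psi (s x : ℝ) : S.Psi s x ≤ S.BF s x := by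
  have := S.pos s x; unfold BF
  have : 0 ≤ S.ρ s x * S.w s x ^ 2 / 2 := by positivity
  linarith
lemma MF_Psi (s x : ℝ) : S.Psi s x ≤ S.MF s x := by
  have := S.pos s x; unfold MF
  have : 0 ≤ S.ρ s x * S.u s x ^ 2 / 2 := by positivity
  linarith

lemma Wt_le_integral {k : ℕ} {R : ℝ} {F : ℝ → ℝ} {s : ℝ} {G : ℝ → ℝ → ℝ}
    (hk : 1 ≤ k) (hR : 0 < R) (cG : Continuous (fun z : ℝ × ℝ => G z.1 z.2))
    (hF : Integrable F) (h0 : ∀ x, 0 ≤ G s x) (h : ∀ x, G s x ≤ F x) :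
    S.Wt k R G s ≤ ∫ x, F x := by
  refine integral_mono ((S.ckw hk hR cG).integrable s) hF (fun x => ?_)
  have h1 : bump R (S.Y s x) ^ k ≤ 1 := pow_le_one₀ (bump_nonneg _ _) (bump_le_one _ _)
  calc bump R (S.Y s x) ^ k * G s x ≤ 1 * G s x := mul_le_mul_of_nonneg_right h1 (h0 x)
    _ ≤ F x := by rw [one_mul]; exact h x

lemma init_M {k : ℕ} {R : ℝ} (hk : 1 ≤ k) (hR : 0 < R) : S.Wt k R S.MF 0 ≤ B.E0 :=
  (S.Wt_le_integral hk hR S.cMF (S.ends_int 0 (Or.inl rfl)) (S.MF_nonneg 0)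
    (fun _ => le_rfl)).trans S.init0

lemma init_B {k : ℕ} {R : ℝ} (hk : 1 ≤ k) (hR : 0 < R) : S.Wt k R S.BF 0 ≤ B.E0 + B.E1 := by
  have h := S.Wt_le_integral hk hR S.cBF ((S.ends_int 0 (Or.inl rfl)).add S.init1_int)
    (S.BF_nonneg 0) (fun x => ?_)
  · refine h.trans ?_
    simp only [Pi.add_apply]
    rw [integral_add (S.ends_int 0 (Or.inl rfl)) S.init1_int]
    exact add_le_add S.init0 S.init1
  · have hp := S.pos 0 x
    have he := S.hε
    have e : S.ρ 0 x * S.w 0 x ^ 2 = S.ρ 0 x * S.u 0 x ^ 2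
        + 2 * S.ε * (S.ρx 0 x * S.u 0 x) / S.ρ 0 x + S.ε ^ 2 * (S.ρx 0 x) ^ 2 / (S.ρ 0 x) ^ 3 := by
      unfold w; field_simp; ring
    have h1 : 2 * S.ε * (S.ρx 0 x * S.u 0 x) / S.ρ 0 x ≤ 2 * S.ε * |S.ρx 0 x * S.u 0 x| / S.ρ 0 x := by
      gcongr; exact le_abs_self _
    have h2 : 0 ≤ 2 * S.ε * |S.ρx 0 x * S.u 0 x| / S.ρ 0 x := by positivity
    have h3 : 0 ≤ S.ε ^ 2 * (S.ρx 0 x) ^ 2 / (S.ρ 0 x) ^ 3 := by positivity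
    have h4 : 0 ≤ S.ρ 0 x * |S.u 0 x| := by positivity
    simp only [Pi.add_apply]
    unfold BF Psi
    rw [e]
    linarith

/-- Sources located on the support of the background gradient. -/
noncomputable def src (n : ℕ) (s x : ℝ) : ℝ :=
  |B.Ebx x| * (2 * (n + 4) * S.ε * |Real.log (S.ρ s x)| * B.ρb x + S.ρ s x * |S.u s x|)

lemma ck_src (n : ℕ) : CK (S.src n) := by
  refine ⟨by unfold src; fun_prop, B.L, fun s x hx => ?_⟩
  unfold src
  rw [B.Ebx_zero x hx]; simp

set_option maxHeartbeats 2000000 in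
/-- Pointwise estimate behind the first, solution dependent, energy bound. -/
lemma step1_pointwise (n : ℕ) : ∃ C : ℝ, 0 < C ∧ ∀ R, 1 ≤ R → ∀ s x,
    (dcut (n + 4) R (S.Y s x) * (S.ρ s x * ((S.p s x - B.pb x) * S.u s x))
          + bump R (S.Y s x) ^ (n + 4) *
            (-(S.ε * S.rx s x ^ 2) - S.ρ s x * S.u s x * B.Ebx x))
      + (ddcut (n + 4) R (S.Y s x) * (S.ρ s x * (S.H s x * S.p s x))
        + dcut (n + 4) R (S.Y s x) * (-(S.ρ s x * S.w s x) * S.p s x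
            + S.H s x * (B.θ * S.ρ s x * S.r s x * S.rx s x)))
      - S.ε * (ddcut (n + 4) R (S.Y s x) * (S.ρ s x * (Real.log (S.ρ s x) * B.pb x))
        + dcut (n + 4) R (S.Y s x) * (S.ρx s x / S.ρ s x * B.pb x
            + Real.log (S.ρ s x) * (B.ρb x * B.Ebx x)))
    ≤ C * (bump R (S.Y s x) ^ (n + 4) * S.BF s x)
      + (-(S.ε / 2)) * (bump R (S.Y s x) ^ (n + 4) * S.rx s x ^ 2)
      + C / R ^ 2 * (bump R (S.Y s x) ^ n *
        (S.ρ s x + S.ρ s x * S.p s x + S.ρ s x * S.p s x * S.H s x ^ 2))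
      + 1 * S.src n s x := by
  obtain ⟨C5, hC5, h5⟩ := B.log_weight_le
  have hκ := B.κ_pos
  have hθ := B.hθ
  have he := S.hε
  have hP := B.pr_pos B.hM
  set P := B.pr B.M with hPdef
  set N : ℝ := n + 4 with hN
  have hN0 : 0 < N := by positivity
  set c1 := N ^ 2 / (1 / 2) * P ^ 2
  set c2 := N ^ 2 / (S.ε / 4) * (S.ε ^ 2 * B.κ / B.θ ^ 2)
  set c3 := 4 * N ^ 2
  set c4 := N ^ 2 / (S.ε / 4) * (B.θ ^ 2 / B.κ)
  set c5 := S.ε * (4 * N ^ 2) * P * C5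
  have hc1 : 0 < c1 := by positivity
  have hc2 : 0 < c2 := by positivity
  have hc3 : 0 < c3 := by positivity
  have hc4 : 0 < c4 := by positivity
  have hc5 : 0 < c5 := by positivity
  refine ⟨1 + c1 + c2 + c3 + c4 + c5, by positivity, fun R hR s x => ?_⟩
  have hR0 : 0 < R := by linarith
  have hR2 : 1 ≤ R ^ 2 := one_le_pow₀ hR
  have hρ := S.pos s x
  have hr := S.r_pos s x
  have hp := S.p_pos s x
  have hpb := B.pb_pos x
  have hpbP := B.pb_le x
  have hΨ := S.Psi_nonneg s x
  have hb := bump_nonneg R (S.Y s x)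
  have hb1 := bump_le_one R (S.Y s x)
  set b := bump R (S.Y s x)
  set ρ := S.ρ s x
  set p := S.p s x with hpdef
  set r := S.r s x
  set rx := S.rx s x
  set w := S.w s x
  set H := S.H s x
  have hpe : p = B.κ * (ρ * r ^ 2) := S.p_eq s x
  have hbn : 0 ≤ b ^ n := by positivity
  have hb2 : b ^ (n + 2) ≤ b ^ n := pow_le_pow_of_le_one hb hb1 (by omega)
  have hb3 : b ^ (n + 3) ≤ 1 := pow_le_one₀ hb hb1
  have hb4 : b ^ (n + 4) ≤ 1 := pow_le_one₀ hb hb1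
  have hb20 : 0 ≤ b ^ (n + 2) := by positivity
  set q := b ^ n * (ρ + ρ * p + ρ * p * H ^ 2) with hq
  have hq0 : 0 ≤ q := by positivity
  have q1 : b ^ (n + 2) * ρ ≤ q := by
    have : b ^ (n + 2) * ρ ≤ b ^ n * ρ := by gcongr
    have : 0 ≤ b ^ n * (ρ * p + ρ * p * H ^ 2) := by positivity
    rw [hq]; linarith
  have q2 : b ^ (n + 2) * (ρ * p) ≤ q := by
    have : b ^ (n + 2) * (ρ * p) ≤ b ^ n * (ρ * p) := by gcongr
    have : 0 ≤ b ^ n * (ρ + ρ * p * H ^ 2) := by positivity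
    rw [hq]; linarith
  have q3 : b ^ (n + 2) * (ρ * p * H ^ 2) ≤ q := by
    have : b ^ (n + 2) * (ρ * p * H ^ 2) ≤ b ^ n * (ρ * p * H ^ 2) := by gcongr
    have : 0 ≤ b ^ n * (ρ + ρ * p) := by positivity
    rw [hq]; linarith
  have q4 : b ^ (n + 2) * (ρ * p * |H|) ≤ q := by
    have h1 : |H| ≤ 1 + H ^ 2 := by
      rcases abs_cases H with h | h <;> nlinarith [sq_nonneg (H - 1), sq_nonneg (H + 1)]
    have : b ^ (n + 2) * (ρ * p * |H|) ≤ b ^ n * (ρ * p * (1 + H ^ 2)) := by gcongr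
    have : 0 ≤ b ^ n * ρ := by positivity
    rw [hq]; linarith
  set dc := dcut (n + 4) R (S.Y s x)
  set dd := ddcut (n + 4) R (S.Y s x)
  -- the flux `ρ p̄ w`
  have t1 : |dc * (ρ * B.pb x * w)| ≤ 1 / 2 * (b ^ (n + 4) * (ρ * w ^ 2)) + c1 / R ^ 2 * q := by
    have h := young_dcut n hR0 (S.Y s x) (l := 1 / 2) (by norm_num)
      (z := ρ * B.pb x * w) (x := Real.sqrt ρ * |w|) (y := Real.sqrt ρ * P)
      (by
        rw [abs_mul, abs_mul, abs_of_pos hρ, abs_of_pos hpb,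
          show Real.sqrt ρ * |w| * (Real.sqrt ρ * P) = (Real.sqrt ρ * Real.sqrt ρ) * P * |w| by ring,
          Real.mul_self_sqrt hρ.le]
        gcongr)
    rw [mul_pow, mul_pow, Real.sq_sqrt hρ.le, sq_abs] at h
    refine h.trans (add_le_add le_rfl ?_)
    calc _ = c1 / R ^ 2 * (b ^ (n + 2) * ρ) := by simp only [c1]; ring
      _ ≤ _ := by gcongr
  have sq_id : ρ ^ 2 * r ^ 2 = ρ * p / B.κ := by rw [hpe]; field_simp
  have t2 : |dc * (S.ε * p * (S.ρx s x / ρ))| ≤ S.ε / 4 * (b ^ (n + 4) * rx ^ 2) + c2 / R ^ 2 * q := by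
    have e : S.ε * p * (S.ρx s x / ρ) = S.ε * B.κ / B.θ * (ρ * r) * rx := by
      have hρx : S.ρx s x = ρ * rx / (B.θ * r) := S.ρx_eq s x
      rw [hρx, hpe]; field_simp
    have h := young_dcut n hR0 (S.Y s x) (l := S.ε / 4) (by positivity)
      (z := S.ε * p * (S.ρx s x / ρ)) (x := |rx|) (y := S.ε * B.κ / B.θ * (ρ * r))
      (by rw [e, abs_mul, abs_of_pos (by positivity), mul_comm])
    rw [sq_abs] at h
    refine h.trans (add_le_add le_rfl ?_)
    calc _ = c2 / R ^ 2 * (b ^ (n + 2) * (ρ * p)) := by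
          rw [show (S.ε * B.κ / B.θ * (ρ * r)) ^ 2 = S.ε ^ 2 * B.κ ^ 2 / B.θ ^ 2 * (ρ ^ 2 * r ^ 2) by
            ring, sq_id]
          simp only [c2]; field_simp; ring
      _ ≤ _ := by gcongr
  have hdd := abs_ddcut_le' n hR0 (S.Y s x)
  have t3 : |dd * (ρ * (H * p))| ≤ c3 / R ^ 2 * q := by
    rw [abs_mul, abs_mul, abs_mul, abs_of_pos hρ, abs_of_pos hp]
    calc |dd| * (ρ * (|H| * p)) ≤ (4 * N ^ 2 / R ^ 2 * b ^ (n + 2)) * (ρ * (|H| * p)) := by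
          gcongr
      _ = c3 / R ^ 2 * (b ^ (n + 2) * (ρ * p * |H|)) := by simp only [c3]; ring
      _ ≤ _ := by gcongr
  have t4 : |dc * (H * (B.θ * ρ * r * rx))| ≤ S.ε / 4 * (b ^ (n + 4) * rx ^ 2) + c4 / R ^ 2 * q := by
    have h := young_dcut n hR0 (S.Y s x) (l := S.ε / 4) (by positivity)
      (z := H * (B.θ * ρ * r * rx)) (x := |rx|) (y := B.θ * (ρ * r) * |H|)
      (by rw [abs_mul, abs_mul, abs_of_pos (by positivity : 0 < B.θ * ρ * r)]
          apply le_of_eq; ring)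
    rw [sq_abs] at h
    refine h.trans (add_le_add le_rfl ?_)
    calc _ = c4 / R ^ 2 * (b ^ (n + 2) * (ρ * p * H ^ 2)) := by
          rw [show (B.θ * (ρ * r) * |H|) ^ 2 = B.θ ^ 2 * (ρ ^ 2 * r ^ 2) * |H| ^ 2 by
            ring, sq_id, sq_abs]
          simp only [c4]; field_simp; ring
      _ ≤ _ := by gcongr
  have t5 : |S.ε * (dd * (ρ * (Real.log ρ * B.pb x)))|
      ≤ c5 * (b ^ (n + 4) * S.Psi s x) + c5 / R ^ 2 * q := by
    have hl := h5 n x ρ b hρ hb hb1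
    rw [abs_mul, abs_mul, abs_mul, abs_mul, abs_of_pos hρ, abs_of_pos he, abs_of_pos hpb]
    have hΨb : 0 ≤ b ^ (n + 4) * S.Psi s x := by positivity
    calc S.ε * (|dd| * (ρ * (|Real.log ρ| * B.pb x)))
        ≤ S.ε * ((4 * N ^ 2 / R ^ 2 * b ^ (n + 2)) * (ρ * (|Real.log ρ| * P))) := by gcongr
      _ = S.ε * (4 * N ^ 2) * P / R ^ 2 * (b ^ (n + 2) * (ρ * |Real.log ρ|)) := by ring
      _ ≤ S.ε * (4 * N ^ 2) * P / R ^ 2 * (C5 * (b ^ (n + 4) * B.Ψ x ρ + b ^ n * ρ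
            + b ^ n * (ρ * B.pr ρ))) := by gcongr
      _ = c5 / R ^ 2 * (b ^ (n + 4) * S.Psi s x) + c5 / R ^ 2 * (b ^ n * ρ + b ^ n * (ρ * p)) := by
          simp only [c5]; rw [show B.Ψ x ρ = S.Psi s x from rfl, show B.pr ρ = p from rfl]; ring
      _ ≤ _ := by
          have a1 : c5 / R ^ 2 ≤ c5 := div_le_self hc5.le hR2
          have a2 : b ^ n * ρ + b ^ n * (ρ * p) ≤ q := by
            have : 0 ≤ b ^ n * (ρ * p * H ^ 2) := by positivity
            rw [hq]; linarith
          gcongr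
  -- terms supported where the background varies
  have t6 : |S.ε * (dc * (Real.log ρ * (B.ρb x * B.Ebx x)))| + |b ^ (n + 4) * (ρ * S.u s x * B.Ebx x)|
      ≤ S.src n s x := by
    have hdc := abs_dcut_le' n hR0 (S.Y s x)
    have hρb := B.ρb_pos x
    have h1 : |dc| ≤ 2 * N := by
      refine hdc.trans ?_
      calc 2 * N / R * b ^ (n + 3) ≤ 2 * N / R * 1 := by gcongr
        _ ≤ 2 * N := by rw [mul_one]; exact div_le_self (by positivity) hR
    rw [abs_mul, abs_mul, abs_mul, abs_mul, abs_mul, abs_mul, abs_mul, abs_of_pos he,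
      abs_of_pos hρb, abs_of_pos hρ, abs_of_nonneg (by positivity : 0 ≤ b ^ (n + 4))]
    unfold src
    calc S.ε * (|dc| * (|Real.log ρ| * (B.ρb x * |B.Ebx x|))) + b ^ (n + 4) * (ρ * |S.u s x| * |B.Ebx x|)
        ≤ S.ε * (2 * N * (|Real.log ρ| * (B.ρb x * |B.Ebx x|))) + 1 * (ρ * |S.u s x| * |B.Ebx x|) := by
          gcongr
      _ = _ := by rw [hN]; ring
  have hBF : S.BF s x = ρ * w ^ 2 / 2 + S.Psi s x := rfl
  have hu : ρ * S.u s x = ρ * w - S.ε * (S.ρx s x / ρ) := by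
    have hw : w = S.u s x + S.ε * S.ρx s x / ρ ^ 2 := rfl
    rw [hw]; field_simp; ring
  have hle : ∀ z : ℝ, z ≤ |z| := le_abs_self
  have hge : ∀ z : ℝ, -z ≤ |z| := neg_le_abs
  have key : (dc * (ρ * ((p - B.pb x) * S.u s x)) + b ^ (n + 4) *
        (-(S.ε * rx ^ 2) - ρ * S.u s x * B.Ebx x))
      + (dd * (ρ * (H * p)) + dc * (-(ρ * w) * p + H * (B.θ * ρ * r * rx)))
      - S.ε * (dd * (ρ * (Real.log ρ * B.pb x)) + dc * (S.ρx s x / ρ * B.pb x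
            + Real.log ρ * (B.ρb x * B.Ebx x)))
      = -(dc * (ρ * B.pb x * w)) - dc * (S.ε * p * (S.ρx s x / ρ)) + dd * (ρ * (H * p))
        + dc * (H * (B.θ * ρ * r * rx)) - S.ε * (dd * (ρ * (Real.log ρ * B.pb x)))
        - S.ε * (dc * (Real.log ρ * (B.ρb x * B.Ebx x)))
        - b ^ (n + 4) * (ρ * S.u s x * B.Ebx x) - S.ε * (b ^ (n + 4) * rx ^ 2) := by
    have : dc * (ρ * ((p - B.pb x) * S.u s x)) = dc * ((p - B.pb x) * (ρ * S.u s x)) := by ring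
    rw [this, show dc * ((p - B.pb x) * (ρ * S.u s x)) = dc * ((p - B.pb x) * (ρ * w - S.ε * (S.ρx s x / ρ))) by
      rw [hu]]
    ring
  rw [key, hBF]
  have nb : 0 ≤ b ^ (n + 4) * (ρ * w ^ 2) := by positivity
  have nP : 0 ≤ b ^ (n + 4) * S.Psi s x := by positivity
  have nr : 0 ≤ b ^ (n + 4) * rx ^ 2 := by positivity
  have nq : 0 ≤ q / R ^ 2 := by positivity
  have g1 := hge (dc * (ρ * B.pb x * w))
  have g2 := hge (dc * (S.ε * p * (S.ρx s x / ρ)))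
  have g3 := hle (dd * (ρ * (H * p)))
  have g4 := hle (dc * (H * (B.θ * ρ * r * rx)))
  have g5 := hge (S.ε * (dd * (ρ * (Real.log ρ * B.pb x))))
  have g6 := hge (S.ε * (dc * (Real.log ρ * (B.ρb x * B.Ebx x))))
  have g7 := hge (b ^ (n + 4) * (ρ * S.u s x * B.Ebx x))
  have f1 : (1 + c1 + c2 + c3 + c4 + c5) * (b ^ (n + 4) * (ρ * w ^ 2 / 2 + S.Psi s x))
      ≥ 1 / 2 * (b ^ (n + 4) * (ρ * w ^ 2)) + c5 * (b ^ (n + 4) * S.Psi s x) := by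
    have : 0 ≤ (c1 + c2 + c3 + c4 + c5) * (b ^ (n + 4) * (ρ * w ^ 2)) := by positivity
    have : 0 ≤ (1 + c1 + c2 + c3 + c4) * (b ^ (n + 4) * S.Psi s x) := by positivity
    linarith
  have f2 : (1 + c1 + c2 + c3 + c4 + c5) / R ^ 2 * q
      = q / R ^ 2 + c1 / R ^ 2 * q + c2 / R ^ 2 * q + c3 / R ^ 2 * q + c4 / R ^ 2 * q
        + c5 / R ^ 2 * q := by ring
  rw [f2]
  linarith

end Sol
end NSHI

/-! ### The first, solution dependent, energy bound -/

namespace NSHI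

/-- Gronwall's inequality retaining a dissipation term. -/
lemma energy_gronwall {T K : ℝ} {f a d : ℝ → ℝ} (hf : Continuous f) (ha : Continuous a)
    (hd : Continuous d) (ha0 : ∀ s, 0 ≤ a s) (hf0 : ∀ s, 0 ≤ f s) (hd0 : ∀ s, 0 ≤ d s)
    (h : ∀ s ∈ Icc 0 T, f s + ∫ τ in (0:ℝ)..s, d τ ≤ K + ∫ τ in (0:ℝ)..s, a τ * f τ)
    {s : ℝ} (hs : s ∈ Icc 0 T) :
    f s + ∫ τ in (0:ℝ)..s, d τ ≤ K * Real.exp (∫ τ in (0:ℝ)..T, a τ) := by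
  have cd : Continuous (fun s => ∫ τ in (0:ℝ)..s, d τ) :=
    intervalIntegral.continuous_primitive (fun a b => hd.intervalIntegrable a b) 0
  have hI : ∀ s, 0 ≤ s → 0 ≤ ∫ τ in (0:ℝ)..s, d τ := fun s hs =>
    intervalIntegral.integral_nonneg hs (fun τ _ => hd0 τ)
  have hg := gronwall (T := T) (K := K) (f := fun s => f s + ∫ τ in (0:ℝ)..s, d τ)
    (hf.add cd) ha ha0 (fun s hs => (h s hs).trans (by
      have := tle1 hs.1 (ha.mul hf) (ha.mul (hf.add cd)) 1 (fun τ hτ => by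
        have := mul_nonneg (ha0 τ) (hI τ hτ.1)
        simp only [Pi.mul_apply, Pi.add_apply]
        linarith)
      simp only [Pi.mul_apply, Pi.add_apply, one_mul] at this
      linarith)) hs
  refine hg.trans ?_
  have hK : 0 ≤ K := by
    have h0 := h 0 ⟨le_rfl, hs.1.trans hs.2⟩
    simp at h0
    exact (hf0 0).trans h0
  have := t_mono ha ha0 le_rfl hs.1 hs.2
  gcongr

namespace Sol
variable {B : Bg} (S : Sol B)

/-- `S.EB N R F`: the localized relative energy of the effective velocity and its dissipation
stay below `F` on `[0,T]`. -/
def EB (N : ℕ) (R F : ℝ) : Prop :=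
  ∀ s ∈ Icc 0 B.T, S.Wt N R S.BF s
    + S.ε * ∫ τ in (0:ℝ)..s, S.Wt N R (fun s x => S.rx s x ^ 2) τ ≤ F

lemma ck_idW {k : ℕ} (hk : 2 ≤ k) {R : ℝ} (hR : 0 < R) :
    CK (fun s x => dcut k R (S.Y s x) * (S.ρ s x * ((S.p s x - B.pb x) * S.u s x))
          + bump R (S.Y s x) ^ k *
            (-(S.ε * S.rx s x ^ 2) - S.ρ s x * S.u s x * B.Ebx x)) := by
  refine CK.add (CK.mul (S.ckd hk hR) ?_) (CK.mul (S.ck (by omega) hR) ?_) <;> fun_prop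

lemma step1_space {n : ℕ} (hn : 1 ≤ n) : ∃ C : ℝ, 0 < C ∧ ∀ R, 1 ≤ R → ∀ s,
    ∫ x, (dcut (n + 4) R (S.Y s x) * (S.ρ s x * ((S.p s x - B.pb x) * S.u s x))
          + bump R (S.Y s x) ^ (n + 4) *
            (-(S.ε * S.rx s x ^ 2) - S.ρ s x * S.u s x * B.Ebx x))
    ≤ C * S.Wt (n + 4) R S.BF s + (-(S.ε / 2)) * S.Wt (n + 4) R (fun s x => S.rx s x ^ 2) s
      + C / R ^ 2 * S.Wt n R (fun s x =>
        S.ρ s x + S.ρ s x * S.p s x + S.ρ s x * S.p s x * S.H s x ^ 2) s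
      + 1 * ∫ x, S.src n s x := by
  obtain ⟨C, hC, h⟩ := S.step1_pointwise n
  refine ⟨C, hC, fun R hR s => ?_⟩
  have hR0 : 0 < R := by linarith
  have ck1 := S.ck_idW (k := n + 4) (by omega) hR0
  have ck2 : CK (fun s x => ddcut (n + 4) R (S.Y s x) * (S.ρ s x * (S.H s x * S.p s x))
        + dcut (n + 4) R (S.Y s x) * (-(S.ρ s x * S.w s x) * S.p s x
            + S.H s x * (B.θ * S.ρ s x * S.r s x * S.rx s x))) := by
    refine CK.add (CK.mul (S.ckdd (by omega) hR0) ?_) (CK.mul (S.ckd (by omega) hR0) ?_) <;>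
      fun_prop
  have clr : Continuous (fun z : ℝ × ℝ => S.ρx z.1 z.2 / S.ρ z.1 z.2) :=
    Continuous.div (by fun_prop) (by fun_prop) (fun _ => (S.pos _ _).ne')
  have ck3 : CK (fun s x => ddcut (n + 4) R (S.Y s x) * (S.ρ s x * (Real.log (S.ρ s x) * B.pb x))
        + dcut (n + 4) R (S.Y s x) * (S.ρx s x / S.ρ s x * B.pb x
            + Real.log (S.ρ s x) * (B.ρb x * B.Ebx x))) := by
    refine CK.add (CK.mul (S.ckdd (by omega) hR0) ?_) (CK.mul (S.ckd (by omega) hR0) ?_)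
    · fun_prop
    · exact (clr.mul (by fun_prop)).add (by fun_prop)
  have z2 := S.parts (k := n + 4) (by omega) hR0 (s := s) (G := fun x => S.H s x * S.p s x)
    (Gx := fun x => -(S.ρ s x * S.w s x) * S.p s x
            + S.H s x * (B.θ * S.ρ s x * S.r s x * S.rx s x))
    (by fun_prop) (by fun_prop) (fun x => (S.H_x s x).mul (S.p_x s x))
  have z3 := S.parts (k := n + 4) (by omega) hR0 (s := s)
    (G := fun x => Real.log (S.ρ s x) * B.pb x)
    (Gx := fun x => S.ρx s x / S.ρ s x * B.pb x + Real.log (S.ρ s x) * (B.ρb x * B.Ebx x))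
    (by fun_prop)
    ((Continuous.mul (Continuous.div (by fun_prop) (by fun_prop) (fun _ => (S.pos _ _).ne'))
      (by fun_prop)).add (by fun_prop))
    (fun x => ((S.ρ_x s x).log (S.pos s x).ne').mul (B.dpb x))
  have hle := CK.le4 (s := s) ((ck1.add ck2).sub (ck3.cmul S.ε))
    (S.ckw (k := n + 4) (by omega) hR0 S.cBF)
    (S.ckw (k := n + 4) (by omega) hR0 (F := fun s x => S.rx s x ^ 2) (by fun_prop))
    (S.ckw (k := n) (by omega) hR0 (F := fun s x =>
        S.ρ s x + S.ρ s x * S.p s x + S.ρ s x * S.p s x * S.H s x ^ 2) (by fun_prop))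
    (S.ck_src n) _ _ _ _ (h R hR s)
  rw [integral_sub ((ck1.add ck2).integrable s) ((ck3.cmul S.ε).integrable s),
    integral_add (ck1.integrable s) (ck2.integrable s), integral_const_mul, z2, z3,
    mul_zero, add_zero, sub_zero] at hle
  exact hle

/-- First energy bound: sublinear growth in the Lagrangian radius, with constants that depend on
the solution. -/
lemma step1 {n : ℕ} (hn : 2 ≤ n) {δ : ℝ} (hδ : 0 < δ) : ∃ C : ℝ, 0 < C ∧ ∀ R, 1 ≤ R →
    S.EB (n + 4) R (C + δ * Real.sqrt R) := by
  obtain ⟨C, hC, h⟩ := S.step1_space (n := n) (by omega)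
  have hT := B.hT
  set X := Real.exp (B.T * C) with hX
  have hX0 : 0 < X := Real.exp_pos _
  set η := min 1 (δ / (48 * C * X)) with hη
  have hη0 : 0 < η := by positivity
  have hη1 : η ≤ 1 := min_le_left _ _
  have hη2 : 48 * C * X * η ≤ δ := by
    have := min_le_right 1 (δ / (48 * C * X))
    rwa [← hη, le_div_iff₀' (by positivity)] at this
  obtain ⟨D0, hD0, hD⟩ := S.H_end hη0
  set J := ∫ τ in (0:ℝ)..B.T, ∫ x, S.src n τ x with hJ
  have src0 : ∀ s x, 0 ≤ S.src n s x := fun s x => by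
    have := S.hε; have := S.pos s x; have := B.ρb_pos x
    unfold src; positivity
  have hJ0 : 0 ≤ J := intervalIntegral.integral_nonneg hT.le
    (fun τ _ => integral_nonneg (src0 τ))
  refine ⟨1 + 2 * (|B.E0 + B.E1| + C * (2 * B.T + 4 + 24 * D0 ^ 3) + J) * X, by positivity,
    fun R hR s hs => ?_⟩
  have hR0 : 0 < R := by linarith
  set D := D0 + η * Real.sqrt R with hDdef
  have hsR : 1 ≤ Real.sqrt R := Real.one_le_sqrt.mpr hR
  have hsq : Real.sqrt R ^ 2 = R := Real.sq_sqrt hR0.le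
  have hDp : 0 < D := by positivity
  obtain ⟨b1, b2, -⟩ := S.H_bounds hn hR0 hDp.le (fun s hs x hx => (hD R s hs x hx).1)
  have cQ := S.Wt_cont (k := n) (by omega) hR0 (F := fun s x =>
        S.ρ s x + S.ρ s x * S.p s x + S.ρ s x * S.p s x * S.H s x ^ 2) (by fun_prop)
  have Q0 : ∀ s, 0 ≤ S.Wt n R (fun s x =>
        S.ρ s x + S.ρ s x * S.p s x + S.ρ s x * S.p s x * S.H s x ^ 2) s := fun s =>
    S.Wt_nonneg (fun x => by have := S.pos s x; have := S.p_pos s x; positivity)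
  have hQ : ∫ τ in (0:ℝ)..B.T, S.Wt n R (fun s x =>
        S.ρ s x + S.ρ s x * S.p s x + S.ρ s x * S.p s x * S.H s x ^ 2) τ
      ≤ 2 * R * B.T + 4 * R * D + 2 * R * D ^ 3 := by
    have := tle3 hT.le cQ (continuous_const (y := 2 * R))
      (S.Wt_cont (k := n) (by omega) hR0 (F := fun s x => S.ρ s x * S.p s x) (by fun_prop))
      (S.Wt_cont (k := n) (by omega) hR0 (F := fun s x => S.ρ s x * S.p s x * S.H s x ^ 2)
        (by fun_prop)) 1 1 1 (fun τ _ => by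
        have h1 := CK.le3 (s := τ)
          (S.ckw (k := n) (by omega) hR0 (F := fun s x =>
            S.ρ s x + S.ρ s x * S.p s x + S.ρ s x * S.p s x * S.H s x ^ 2) (by fun_prop))
          (S.ckw (k := n) (by omega) hR0 (F := S.ρ) (by fun_prop))
          (S.ckw (k := n) (by omega) hR0 (F := fun s x => S.ρ s x * S.p s x) (by fun_prop))
          (S.ckw (k := n) (by omega) hR0 (F := fun s x => S.ρ s x * S.p s x * S.H s x ^ 2)
            (by fun_prop)) 1 1 1 (fun x => le_of_eq (by ring))
        have h2 := S.mass_le (k := n) (by omega) hR0 τ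
        simp only [Wt] at h2 ⊢
        linarith)
    simp only [intervalIntegral.integral_const, smul_eq_mul, sub_zero] at this
    linarith
  have cB := S.Wt_cont (k := n + 4) (by omega) hR0 S.cBF
  have cr := S.Wt_cont (k := n + 4) (by omega) hR0 (F := fun s x => S.rx s x ^ 2) (by fun_prop)
  have hgr := energy_gronwall (T := B.T)
    (K := |B.E0 + B.E1| + C / R ^ 2 * (2 * R * B.T + 4 * R * D + 2 * R * D ^ 3) + J)
    (f := S.Wt (n + 4) R S.BF) (a := fun _ => C)
    (d := fun s => S.ε / 2 * S.Wt (n + 4) R (fun s x => S.rx s x ^ 2) s)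
    cB continuous_const (continuous_const.mul cr) (fun _ => hC.le)
    (fun s => S.Wt_nonneg (S.BF_nonneg s))
    (fun s => mul_nonneg (half_pos S.hε).le (S.Wt_nonneg (fun x => sq_nonneg _)))
    (fun s hs => by
      have e := S.id_W (k := n + 4) (by omega) hR0 hs
      change S.Wt (n + 4) R S.BF s = S.Wt (n + 4) R S.BF 0 + _ at e
      have i0 := S.init_B (k := n + 4) (by omega) hR0
      have i1 := tle4 hs.1 (S.ck_idW (k := n + 4) (by omega) hR0).contI cB cr cQ
        (S.ck_src n).contI _ _ _ _ (fun τ _ => h R hR τ)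
      have i2 := t_mono cQ Q0 le_rfl hs.1 hs.2
      have i3 := t_mono (S.ck_src n).contI (fun τ => integral_nonneg (src0 τ)) le_rfl hs.1 hs.2
      have i4 : C / R ^ 2 * ∫ τ in (0:ℝ)..s, S.Wt n R (fun s x =>
        S.ρ s x + S.ρ s x * S.p s x + S.ρ s x * S.p s x * S.H s x ^ 2) τ
          ≤ C / R ^ 2 * (2 * R * B.T + 4 * R * D + 2 * R * D ^ 3) :=
        mul_le_mul_of_nonneg_left (i2.trans hQ) (by positivity)
      rw [intervalIntegral.integral_const_mul, intervalIntegral.integral_const_mul]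
      have := le_abs_self (B.E0 + B.E1)
      linarith) hs
  simp only [intervalIntegral.integral_const, smul_eq_mul, sub_zero] at hgr
  rw [← hX, intervalIntegral.integral_const_mul] at hgr
  have hD3 : D ^ 3 ≤ 4 * (D0 ^ 3 + η * R * Real.sqrt R) := by
    have h1 : D ^ 3 ≤ 4 * (D0 ^ 3 + (η * Real.sqrt R) ^ 3) := by
      have : 0 ≤ (D0 + η * Real.sqrt R) * (D0 - η * Real.sqrt R) ^ 2 := by positivity
      rw [hDdef]; nlinarith
    have h2 : (η * Real.sqrt R) ^ 3 ≤ η * R * Real.sqrt R := by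
      have : η ^ 3 ≤ η := by
        calc η ^ 3 ≤ η ^ 1 := pow_le_pow_of_le_one hη0.le hη1 (by norm_num)
          _ = η := pow_one _
      calc (η * Real.sqrt R) ^ 3 = η ^ 3 * (Real.sqrt R ^ 2 * Real.sqrt R) := by ring
        _ ≤ η * (Real.sqrt R ^ 2 * Real.sqrt R) := by gcongr
        _ = _ := by rw [hsq]; ring
    linarith
  have hDD : D ≤ 1 + D ^ 3 := by
    rcases le_total D 1 with h1 | h1
    · have : 0 < D ^ 3 := by positivity
      linarith
    · have : D ^ 1 ≤ D ^ 3 := pow_le_pow_right₀ h1 (by norm_num)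
      rw [pow_one] at this; linarith
  have hK : C / R ^ 2 * (2 * R * B.T + 4 * R * D + 2 * R * D ^ 3)
      ≤ C * (2 * B.T + 4 + 24 * D0 ^ 3) + 24 * C * η * Real.sqrt R := by
    have h1 : 2 * R * B.T + 4 * R * D + 2 * R * D ^ 3
        ≤ R * (2 * B.T + 4 + 24 * (D0 ^ 3 + η * R * Real.sqrt R)) := by
      have : 2 * B.T + 4 * D + 2 * D ^ 3 ≤ 2 * B.T + 4 + 24 * (D0 ^ 3 + η * R * Real.sqrt R) := by
        linarith
      calc _ = R * (2 * B.T + 4 * D + 2 * D ^ 3) := by ring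
        _ ≤ _ := by gcongr
    calc _ ≤ C / R ^ 2 * (R * (2 * B.T + 4 + 24 * (D0 ^ 3 + η * R * Real.sqrt R))) := by gcongr
      _ = C * ((2 * B.T + 4 + 24 * D0 ^ 3) / R) + 24 * C * η * Real.sqrt R := by
        field_simp; ring
      _ ≤ _ := by
        have : (2 * B.T + 4 + 24 * D0 ^ 3) / R ≤ 2 * B.T + 4 + 24 * D0 ^ 3 :=
          div_le_self (by positivity) hR
        gcongr
  have hB0 : 0 ≤ S.Wt (n + 4) R S.BF s := S.Wt_nonneg (S.BF_nonneg s)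
  have f1 : (|B.E0 + B.E1| + C / R ^ 2 * (2 * R * B.T + 4 * R * D + 2 * R * D ^ 3) + J) * X
      ≤ (|B.E0 + B.E1| + (C * (2 * B.T + 4 + 24 * D0 ^ 3) + 24 * C * η * Real.sqrt R) + J) * X := by
    gcongr
  have f2 : 48 * C * X * η * Real.sqrt R ≤ δ * Real.sqrt R := by gcongr
  linarith

end Sol
end NSHI

/-! ### Space-time bound of the kinetic energy -/

namespace NSHI
namespace Sol
variable {B : Bg} (S : Sol B)

lemma ck_idA {k : ℕ} (hk : 2 ≤ k) {R : ℝ} (hR : 0 < R) :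
    CK (fun s x => dcut k R (S.Y s x) * (S.ρ s x * (-(S.ε * S.u s x + S.u s x * S.A s x)))
          + bump R (S.Y s x) ^ k * (- S.p s x - S.ρ s x * S.u s x ^ 2)) := by
  refine CK.add (CK.mul (S.ckd hk hR) ?_) (CK.mul (S.ck (by omega) hR) ?_) <;> fun_prop

lemma kinetic_pointwise (n : ℕ) : ∃ C : ℝ, 0 < C ∧ ∀ R, 1 ≤ R → ∀ s x,
    dcut (n + 4) R (S.Y s x) * (S.ρ s x * (-(S.ε * S.u s x + S.u s x * S.A s x)))
          + bump R (S.Y s x) ^ (n + 4) * (- S.p s x - S.ρ s x * S.u s x ^ 2)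
    ≤ (-(1 / 2)) * (bump R (S.Y s x) ^ (n + 4) * (S.ρ s x * S.u s x ^ 2))
      + C / R ^ 2 * (bump R (S.Y s x) ^ (n + 2) * S.ρ s x)
      + C / R ^ 2 * (bump R (S.Y s x) ^ (n + 2) * (S.ρ s x * S.H s x ^ 2))
      + C / R ^ 2 * (bump R (S.Y s x) ^ (n + 2) * S.Psi s x) := by
  obtain ⟨C0, hC0, h0⟩ := B.log_sq_le
  have he := S.hε
  set N : ℝ := n + 4 with hN
  have hN0 : 0 < N := by positivity
  set c := 3 * (S.ε ^ 2 + 1 + S.ε ^ 2 * C0) with hc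
  have hcp : 0 < c := by positivity
  refine ⟨2 * N ^ 2 * c, by positivity, fun R hR s x => ?_⟩
  have hR0 : 0 < R := by linarith
  have hρ := S.pos s x
  have hΨ := S.Psi_nonneg s x
  have hp := S.p_pos s x
  have hl : S.ρ s x * Real.log (S.ρ s x) ^ 2 ≤ C0 * (S.ρ s x + S.Psi s x) := h0 x _ hρ
  have hb := bump_nonneg R (S.Y s x)
  have hA : S.ρ s x * (S.ε + S.A s x) ^ 2
      ≤ c * S.ρ s x + c * (S.ρ s x * S.H s x ^ 2) + c * S.Psi s x := by
    have e : S.A s x = - S.H s x - S.ε * Real.log (S.ρ s x) := by unfold H; ring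
    have h1 : (S.ε + S.A s x) ^ 2
        ≤ 3 * (S.ε ^ 2 + S.H s x ^ 2 + S.ε ^ 2 * Real.log (S.ρ s x) ^ 2) := by
      rw [e]
      nlinarith [sq_nonneg (S.ε + S.H s x), sq_nonneg (S.ε + S.ε * Real.log (S.ρ s x)),
        sq_nonneg (S.H s x - S.ε * Real.log (S.ρ s x))]
    calc S.ρ s x * (S.ε + S.A s x) ^ 2
        ≤ S.ρ s x * (3 * (S.ε ^ 2 + S.H s x ^ 2 + S.ε ^ 2 * Real.log (S.ρ s x) ^ 2)) := by gcongr
      _ = 3 * (S.ε ^ 2 * S.ρ s x + S.ρ s x * S.H s x ^ 2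
            + S.ε ^ 2 * (S.ρ s x * Real.log (S.ρ s x) ^ 2)) := by ring
      _ ≤ 3 * (S.ε ^ 2 * S.ρ s x + S.ρ s x * S.H s x ^ 2
            + S.ε ^ 2 * (C0 * (S.ρ s x + S.Psi s x))) := by gcongr
      _ ≤ _ := by
          have : 0 ≤ 3 * S.ρ s x := by positivity
          have : 0 ≤ 3 * (S.ε ^ 2 + S.ε ^ 2 * C0) * (S.ρ s x * S.H s x ^ 2) := by positivity
          have : 0 ≤ 3 * (S.ε ^ 2 + 1) * S.Psi s x := by positivity
          rw [hc]; linarith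
  have h := young_dcut n hR0 (S.Y s x) (l := 1 / 2) (by norm_num)
      (z := S.ρ s x * (-(S.ε * S.u s x + S.u s x * S.A s x)))
      (x := Real.sqrt (S.ρ s x) * |S.u s x|) (y := Real.sqrt (S.ρ s x) * |S.ε + S.A s x|)
      (by
        rw [show Real.sqrt (S.ρ s x) * |S.u s x| * (Real.sqrt (S.ρ s x) * |S.ε + S.A s x|)
          = (Real.sqrt (S.ρ s x) * Real.sqrt (S.ρ s x)) * (|S.u s x| * |S.ε + S.A s x|) by ring,
          Real.mul_self_sqrt hρ.le, ← abs_mul, abs_mul, abs_of_pos hρ, abs_neg]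
        apply le_of_eq; congr 2; ring)
  rw [mul_pow, mul_pow, Real.sq_sqrt hρ.le, sq_abs, sq_abs] at h
  have h1 := le_abs_self (dcut (n + 4) R (S.Y s x) *
    (S.ρ s x * (-(S.ε * S.u s x + S.u s x * S.A s x))))
  have h2 : N ^ 2 / (1 / 2) / R ^ 2 * (bump R (S.Y s x) ^ (n + 2) * (S.ρ s x * (S.ε + S.A s x) ^ 2))
      ≤ N ^ 2 / (1 / 2) / R ^ 2 * (bump R (S.Y s x) ^ (n + 2) *
        (c * S.ρ s x + c * (S.ρ s x * S.H s x ^ 2) + c * S.Psi s x)) := by gcongr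
  have h3 : 0 ≤ bump R (S.Y s x) ^ (n + 4) * S.p s x := by positivity
  have h4 : N ^ 2 / (1 / 2) / R ^ 2 * (bump R (S.Y s x) ^ (n + 2) *
        (c * S.ρ s x + c * (S.ρ s x * S.H s x ^ 2) + c * S.Psi s x))
      = 2 * N ^ 2 * c / R ^ 2 * (bump R (S.Y s x) ^ (n + 2) * S.ρ s x)
      + 2 * N ^ 2 * c / R ^ 2 * (bump R (S.Y s x) ^ (n + 2) * (S.ρ s x * S.H s x ^ 2))
      + 2 * N ^ 2 * c / R ^ 2 * (bump R (S.Y s x) ^ (n + 2) * S.Psi s x) := by ring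
  linarith

lemma A_end_bound {k : ℕ} (hk : 1 ≤ k) : ∃ C : ℝ, 0 < C ∧ ∀ R, 1 ≤ R → ∀ s, (s = 0 ∨ s = B.T) →
    |S.Wt k R S.A s| ≤ C * (R * Real.sqrt R) := by
  obtain ⟨D0, hD0, hD⟩ := S.H_end one_pos
  obtain ⟨c, C, hc, hcC⟩ := S.ends
  refine ⟨2 * (D0 + 1) / c, by positivity, fun R hR s hs => ?_⟩
  have hR0 : 0 < R := by linarith
  have hsR : 1 ≤ Real.sqrt R := Real.one_le_sqrt.mpr hR
  have hA : ∀ x, |S.Y s x| < R → |S.A s x| ≤ (D0 + 1) * Real.sqrt R / c * S.ρ s x := fun x hx => by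
    have h1 := (hD R s hs x hx).2
    have h2 := (hcC s hs x).1
    calc |S.A s x| ≤ D0 + 1 * Real.sqrt R := h1
      _ ≤ (D0 + 1) * Real.sqrt R := by nlinarith
      _ = (D0 + 1) * Real.sqrt R / c * c := by field_simp
      _ ≤ _ := by gcongr
  have hm := S.mass_le hk hR0 s
  have h1 := S.Wt_mono hk hR0 S.cA S.cρ ((D0 + 1) * Real.sqrt R / c)
    (fun x hx => (le_abs_self _).trans (hA x hx))
  have h2 := S.Wt_mono hk hR0 (F := fun s x => -S.A s x) (by fun_prop) S.cρ
    ((D0 + 1) * Real.sqrt R / c) (fun x hx => (neg_le_abs _).trans (hA x hx))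
  have h3 : S.Wt k R (fun s x => -S.A s x) s = - S.Wt k R S.A s := by
    unfold Wt; rw [← integral_neg]; congr 1; funext x; ring
  have h4 : (D0 + 1) * Real.sqrt R / c * S.Wt k R S.ρ s ≤ (D0 + 1) * Real.sqrt R / c * (2 * R) := by
    gcongr
  have h5 : (D0 + 1) * Real.sqrt R / c * (2 * R) = 2 * (D0 + 1) / c * (R * Real.sqrt R) := by ring
  rw [abs_le]
  constructor <;> linarith

/-- Space-time bound of the kinetic energy, with a constant depending on the solution; the
growth `R^{3/2}` is what the viscous flux term tolerates. -/
lemma kinetic {n : ℕ} (hn : 2 ≤ n) : ∃ C : ℝ, 0 < C ∧ ∀ R, 1 ≤ R →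
    ∫ τ in (0:ℝ)..B.T, S.Wt (n + 4) R (fun s x => S.ρ s x * S.u s x ^ 2) τ
      ≤ C * (R * Real.sqrt R) := by
  obtain ⟨C, hC, h⟩ := S.kinetic_pointwise n
  obtain ⟨Ca, hCa, ha⟩ := S.A_end_bound (k := n + 4) (by omega)
  obtain ⟨Cs, hCs, h1⟩ := S.step1 hn one_pos
  obtain ⟨D0, hD0, hD⟩ := S.H_end one_pos
  have hT := B.hT
  refine ⟨2 * (2 * Ca + B.T * C * (2 + 4 * (D0 + 1) ^ 2 + (4 / 3) ^ (n + 4) * (Cs + 2))),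
    by positivity, fun R hR => ?_⟩
  have hR0 : 0 < R := by linarith
  have hsR : 1 ≤ Real.sqrt R := Real.one_le_sqrt.mpr hR
  have hsq : Real.sqrt R ^ 2 = R := Real.sq_sqrt hR0.le
  have hsR' : Real.sqrt R ≤ R := by nlinarith
  set D := D0 + 1 * Real.sqrt R with hDdef
  have hDp : 0 < D := by positivity
  obtain ⟨-, -, b3⟩ := S.H_bounds (k := n + 2) (by omega) hR0 hDp.le
    (fun s hs x hx => (hD R s hs x hx).1)
  have hD2 : 4 * R * D ^ 2 ≤ 4 * (D0 + 1) ^ 2 * R ^ 2 := by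
    have : D ≤ (D0 + 1) * Real.sqrt R := by rw [hDdef]; nlinarith
    calc 4 * R * D ^ 2 ≤ 4 * R * ((D0 + 1) * Real.sqrt R) ^ 2 := by gcongr
      _ = _ := by rw [mul_pow, hsq]; ring
  have cU := S.Wt_cont (k := n + 4) (by omega) hR0 (F := fun s x => S.ρ s x * S.u s x ^ 2)
    (by fun_prop)
  have e := S.id_A (k := n + 4) (by omega) hR0 (s := B.T) ⟨hT.le, le_rfl⟩
  have hspace : ∀ τ ∈ Icc 0 B.T, ∫ x, (dcut (n + 4) R (S.Y τ x) *
            (S.ρ τ x * (-(S.ε * S.u τ x + S.u τ x * S.A τ x)))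
          + bump R (S.Y τ x) ^ (n + 4) * (- S.p τ x - S.ρ τ x * S.u τ x ^ 2))
      ≤ (-(1 / 2)) * S.Wt (n + 4) R (fun s x => S.ρ s x * S.u s x ^ 2) τ
        + 1 * (C * (2 + 4 * (D0 + 1) ^ 2 + (4 / 3) ^ (n + 4) * (Cs + 2))) := fun τ hτ => by
    have h2 := CK.le4 (s := τ) (S.ck_idA (k := n + 4) (by omega) hR0)
      (S.ckw (k := n + 4) (by omega) hR0 (F := fun s x => S.ρ s x * S.u s x ^ 2) (by fun_prop))
      (S.ckw (k := n + 2) (by omega) hR0 (F := S.ρ) (by fun_prop))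
      (S.ckw (k := n + 2) (by omega) hR0 (F := fun s x => S.ρ s x * S.H s x ^ 2) (by fun_prop))
      (S.ckw (k := n + 2) (by omega) hR0 (F := S.Psi) (by fun_prop)) _ _ _ _ (h R hR τ)
    have m1 := S.mass_le (k := n + 2) (by omega) hR0 τ
    have m2 := (b3 τ hτ).trans hD2
    have m3 : S.Wt (n + 2) R S.Psi τ ≤ (4 / 3) ^ (n + 4) * ((Cs + 2) * R ^ 2) := by
      have a1 := S.Wt_double (j := n + 2) (N := n + 4) (by omega) (by omega) hR0
        (F := S.Psi) (by fun_prop) (S.Psi_nonneg τ)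
      have a2 := S.Wt_mono (k := n + 4) (by omega) (R := 2 * R) (by positivity)
        (F := S.Psi) (by fun_prop) S.cBF (s := τ) 1
        (fun x _ => by rw [one_mul]; exact S.BF_Psi τ x)
      have a3 := h1 (2 * R) (by linarith) τ hτ
      have a4 : 0 ≤ S.ε * ∫ τ in (0:ℝ)..τ, S.Wt (n + 4) (2 * R) (fun s x => S.rx s x ^ 2) τ :=
        mul_nonneg S.hε.le (intervalIntegral.integral_nonneg hτ.1
          (fun _ _ => S.Wt_nonneg (fun _ => sq_nonneg _)))
      have a5 : Real.sqrt (2 * R) ≤ 2 * R := by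
        rw [Real.sqrt_le_left (by positivity)]; nlinarith
      have a6 : R ≤ R ^ 2 := by nlinarith
      have a7 : (1:ℝ) ≤ R ^ 2 := by nlinarith
      have a8 : Cs + 2 * R ≤ (Cs + 2) * R ^ 2 := by nlinarith
      have : S.Wt (n + 4) (2 * R) S.Psi τ ≤ (Cs + 2) * R ^ 2 := by linarith
      exact a1.trans (by gcongr)
    have m4 : 2 * R ≤ 2 * R ^ 2 := by nlinarith
    simp only [Wt] at m1 m2 m3 ⊢
    have k1 := mul_le_mul_of_nonneg_left (m1.trans m4) (by positivity : 0 ≤ C / R ^ 2)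
    have k2 := mul_le_mul_of_nonneg_left m2 (by positivity : 0 ≤ C / R ^ 2)
    have k3 := mul_le_mul_of_nonneg_left m3 (by positivity : 0 ≤ C / R ^ 2)
    have k4 : C / R ^ 2 * (2 * R ^ 2) + C / R ^ 2 * (4 * (D0 + 1) ^ 2 * R ^ 2)
        + C / R ^ 2 * ((4 / 3) ^ (n + 4) * ((Cs + 2) * R ^ 2))
        = C * (2 + 4 * (D0 + 1) ^ 2 + (4 / 3) ^ (n + 4) * (Cs + 2)) := by
      field_simp
    linarith
  have i1 := tle2 hT.le (S.ck_idA (k := n + 4) (by omega) hR0).contI cU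
    (continuous_const (y := C * (2 + 4 * (D0 + 1) ^ 2 + (4 / 3) ^ (n + 4) * (Cs + 2)))) _ _ hspace
  simp only [intervalIntegral.integral_const, smul_eq_mul, sub_zero] at i1
  have j1 := (abs_le.mp (ha R hR 0 (Or.inl rfl))).2
  have j2 := (abs_le.mp (ha R hR B.T (Or.inr rfl))).1
  have j3 : 1 ≤ R * Real.sqrt R := by nlinarith
  have j4 : B.T * C * (2 + 4 * (D0 + 1) ^ 2 + (4 / 3) ^ (n + 4) * (Cs + 2)) * 1
      ≤ B.T * C * (2 + 4 * (D0 + 1) ^ 2 + (4 / 3) ^ (n + 4) * (Cs + 2)) * (R * Real.sqrt R) := by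
    gcongr
  linarith

end Sol
end NSHI

/-! ### Pointwise bound of the pressure -/

namespace NSHI

/-- The oscillation on an interval is at most the integral of a majorant of the derivative. -/
lemma osc_le {f f' G : ℝ → ℝ} {a b x y : ℝ} (hf : ∀ z, HasDerivAt f (f' z) z)
    (cf : Continuous f') (cG : Continuous G) (h : ∀ z ∈ Icc a b, |f' z| ≤ G z)
    (hx : x ∈ Icc a b) (hy : y ∈ Icc a b) : |f x - f y| ≤ ∫ z in a..b, G z := by
  have key : ∀ x y, x ∈ Icc a b → y ∈ Icc a b → y ≤ x → |f x - f y| ≤ ∫ z in a..b, G z := by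
    intro x y hx hy hyx
    have e : ∫ z in y..x, f' z = f x - f y :=
      intervalIntegral.integral_eq_sub_of_hasDerivAt (fun z _ => hf z) (cf.intervalIntegrable _ _)
    rw [← e]
    refine (intervalIntegral.abs_integral_le_integral_abs hyx).trans ?_
    calc ∫ z in y..x, |f' z| ≤ ∫ z in a..b, |f' z| :=
          t_mono cf.abs (fun _ => abs_nonneg _) hy.1 hyx hx.2
      _ ≤ ∫ z in a..b, G z := intervalIntegral.integral_mono_on (hx.1.trans hx.2)
          (cf.abs.intervalIntegrable _ _) (cG.intervalIntegrable _ _) h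
  rcases le_total y x with h1 | h1
  · exact key x y hx hy h1
  · rw [abs_sub_comm]; exact key y x hy hx h1

namespace Sol
variable {B : Bg} (S : Sol B)

lemma Y_surj (s y : ℝ) : ∃ x, S.Y s x = y := by
  obtain ⟨a, ha⟩ := S.Y_coercive (|S.Y s 0| + |y| + 1)
  have hm := S.Y_mono s
  have h1 := ha s (|a| + 1) (by rw [abs_of_pos (by positivity)]; linarith [le_abs_self a])
  have h2 := ha s (-(|a| + 1)) (by rw [abs_neg, abs_of_pos (by positivity)]; linarith [le_abs_self a])
  have m1 : S.Y s 0 < S.Y s (|a| + 1) := hm (by positivity)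
  have m2 : S.Y s (-(|a| + 1)) < S.Y s 0 := hm (by have := abs_nonneg a; linarith)
  have n1 := neg_abs_le (S.Y s 0)
  have n2 := le_abs_self (S.Y s 0)
  have k1 : |y| ≤ S.Y s (|a| + 1) := by
    have := abs_nonneg y
    rcases abs_cases (S.Y s (|a| + 1)) with h | h <;> linarith
  have k2 : S.Y s (-(|a| + 1)) ≤ -|y| := by
    have := abs_nonneg y
    rcases abs_cases (S.Y s (-(|a| + 1))) with h | h <;> linarith
  have hc : Continuous (S.Y s) := S.cY' continuous_const continuous_id
  have hle : -(|a| + 1) ≤ |a| + 1 := by have := abs_nonneg a; linarith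
  obtain ⟨x, -, hx⟩ := intermediate_value_Icc hle hc.continuousOn
    (show y ∈ Icc _ _ from ⟨k2.trans (neg_abs_le y), (le_abs_self y).trans k1⟩)
  exact ⟨x, hx⟩

/-- Integrals over an interval contained in `{|Y| ≤ R}` are controlled by the weight of
radius `2 * R`. -/
lemma int_le_Wt {N : ℕ} (hN : 1 ≤ N) {R : ℝ} (hR : 0 < R) {G : ℝ → ℝ → ℝ}
    (cG : Continuous (fun z : ℝ × ℝ => G z.1 z.2)) {s a b : ℝ} (hab : a ≤ b)
    (h0 : ∀ x, 0 ≤ G s x) (hY : ∀ x ∈ Icc a b, |S.Y s x| ≤ R) :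
    ∫ x in a..b, G s x ≤ (4 / 3) ^ N * S.Wt N (2 * R) G s := by
  have cGx : Continuous (fun x => G s x) :=
    cG.comp (by fun_prop : Continuous (fun x : ℝ => (s, x)))
  have ck := S.ckw hN (R := 2 * R) (by positivity) cG
  have hw : 0 ≤ᵐ[volume] fun x => bump (2 * R) (S.Y s x) ^ N * G s x :=
    ae_of_all _ fun x => mul_nonneg (pow_nonneg (bump_nonneg _ _) _) (h0 x)
  calc ∫ x in a..b, G s x
      ≤ ∫ x in a..b, (4 / 3) ^ N * (bump (2 * R) (S.Y s x) ^ N * G s x) := by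
        refine intervalIntegral.integral_mono_on hab (cGx.intervalIntegrable _ _)
          ((continuous_const.mul (ck.cont_x s)).intervalIntegrable _ _) (fun x hx => ?_)
        have h1 := bump_ge (R := 2 * R) (by positivity) (c := 1 / 2) (y := S.Y s x)
          (by have := hY x hx; linarith)
        have h2 : (3 / 4 : ℝ) ^ N ≤ bump (2 * R) (S.Y s x) ^ N :=
          pow_le_pow_left₀ (by norm_num) (by norm_num at h1; exact h1) N
        have h3 : (1:ℝ) = (4 / 3) ^ N * (3 / 4) ^ N := by rw [← mul_pow]; norm_num
        calc G s x = (4 / 3) ^ N * ((3 / 4) ^ N * G s x) := by rw [← mul_assoc, ← h3, one_mul]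
          _ ≤ _ := by have := h0 x; gcongr
    _ = (4 / 3) ^ N * ∫ x in a..b, bump (2 * R) (S.Y s x) ^ N * G s x :=
        intervalIntegral.integral_const_mul _ _
    _ ≤ _ := by
        gcongr
        rw [intervalIntegral.integral_of_le hab]
        exact setIntegral_le_integral (ck.integrable s) hw

/-- The function `√ρ ρ^θ`, a constant multiple of the square root of the pressure. -/
noncomputable def g (s x : ℝ) : ℝ := Real.sqrt (S.ρ s x) * S.r s x
lemma g_x (s x : ℝ) : HasDerivAt (fun y => S.g s y)
    ((1 + 1 / (2 * B.θ)) * (Real.sqrt (S.ρ s x) * S.rx s x)) x := by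
  have hp := S.pos s x
  have hr := S.r_pos s x
  have hθ := B.hθ
  have h := ((S.ρ_x s x).sqrt hp.ne').mul (S.r_x s x)
  refine h.congr_deriv ?_
  have hs := Real.sqrt_pos.mpr hp
  rw [S.ρx_eq]
  have e : S.ρ s x = Real.sqrt (S.ρ s x) ^ 2 := (Real.sq_sqrt hp.le).symm
  set q := Real.sqrt (S.ρ s x)
  rw [e]
  field_simp
  ring
lemma p_g (s x : ℝ) : S.p s x = B.κ * S.g s x ^ 2 := by
  rw [S.p_eq]; unfold g
  rw [mul_pow, Real.sq_sqrt (S.pos s x).le]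

end Sol

/-- Pressure bound: where the localized relative energy is at most `F`, the pressure is controlled
by the dissipation. -/
lemma sup_pressure (B : Bg) {N : ℕ} (hN : 1 ≤ N) : ∃ C : ℝ, 1 ≤ C ∧ ∀ S : Sol B, ∀ R F s : ℝ,
    1 ≤ F → C * F ≤ R → S.Wt N (2 * R) S.Psi s ≤ F → ∀ x, |S.Y s x| ≤ R →
    S.p s x ≤ C * (1 + F * S.Wt N (2 * R) (fun s x => S.rx s x ^ 2) s) := by
  obtain ⟨K, C1, hK, hC1, hl⟩ := B.Ψ_large
  have hκ := B.κ_pos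
  have hθ := B.hθ
  set c := 1 + 1 / (2 * B.θ) with hc
  have hcp : 0 < c := by positivity
  set q : ℝ := (4 / 3) ^ N with hq
  have hqp : 0 < q := by positivity
  set gK := Real.sqrt K * K ^ B.θ with hgK
  have hgK0 : 0 ≤ gK := by positivity
  set c2 := 4 * c ^ 2 * C1 * q ^ 2 with hc2
  refine ⟨1 + C1 * q + 2 * B.κ * c2 + 2 * B.κ * gK ^ 2, by
    have : 0 ≤ C1 * q + 2 * B.κ * c2 + 2 * B.κ * gK ^ 2 := by positivity
    linarith, fun S R F s hF hR hΨ x hx => ?_⟩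
  have hbig : C1 * q * F < R := by
    have : 0 < (1 + 2 * B.κ * c2 + 2 * B.κ * gK ^ 2) * F := by positivity
    linarith
  have hR0 : 0 < R := lt_of_le_of_lt (by positivity) hbig
  set β := S.Wt N (2 * R) (fun s x => S.rx s x ^ 2) s with hβ
  have hβ0 : 0 ≤ β := S.Wt_nonneg (fun _ => sq_nonneg _)
  obtain ⟨x1, h1⟩ := S.Y_surj s (-R)
  obtain ⟨x2, h2⟩ := S.Y_surj s R
  have hm := S.Y_mono s
  have h12 : x1 < x2 := by rw [← hm.lt_iff_lt, h1, h2]; linarith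
  have hin : ∀ y ∈ Icc x1 x2, |S.Y s y| ≤ R := fun y hy => by
    rw [abs_le, ← h1]
    exact ⟨hm.monotone hy.1, (hm.monotone hy.2).trans h2.le⟩
  have hxI : x ∈ Icc x1 x2 := by
    rw [abs_le] at hx
    constructor
    · rw [← hm.le_iff_le, h1]; exact hx.1
    · rw [← hm.le_iff_le, h2]; exact hx.2
  have iΨ : ∫ y in x1..x2, S.Psi s y ≤ q * F :=
    (S.int_le_Wt hN hR0 (G := S.Psi) (by fun_prop) h12.le (S.Psi_nonneg s) hin).trans (by gcongr)
  have iβ : ∫ y in x1..x2, S.rx s y ^ 2 ≤ q * β :=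
    S.int_le_Wt hN hR0 (G := fun s x => S.rx s x ^ 2) (by fun_prop) h12.le
      (fun _ => sq_nonneg _) hin
  have cΨ : Continuous (fun y => S.Psi s y) := by fun_prop
  have cβ : Continuous (fun y => S.rx s y ^ 2) := by fun_prop
  obtain ⟨x0, hx0, hρ0⟩ : ∃ x0 ∈ Icc x1 x2, S.ρ s x0 ≤ K := by
    by_contra hcon
    push Not at hcon
    have e := S.Y_sub s x1 x2
    have := tle1 h12.le (f := fun y => S.ρ s y) (by fun_prop) cΨ C1
      (fun y hy => (hl y _ (hcon y hy).le).1)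
    have : C1 * ∫ y in x1..x2, S.Psi s y ≤ C1 * (q * F) := by gcongr
    rw [h1, h2] at e
    linarith
  -- the excess of `g` over the value attained at density `K`
  set v : ℝ → ℝ := fun y => max 0 (S.g s y - gK) with hv
  have hv0 : ∀ y, 0 ≤ v y := fun y => le_max_left _ _
  have cg : Continuous (fun y => S.g s y) :=
    continuous_iff_continuousAt.mpr fun y => (S.g_x s y).continuousAt
  have cv : Continuous v := by fun_prop
  have hgle : ∀ y, S.ρ s y ≤ K → v y = 0 := fun y hy => by
    have : S.g s y ≤ gK := by
      have hp := (S.pos s y).le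
      exact mul_le_mul (Real.sqrt_le_sqrt hy) (Real.rpow_le_rpow hp hy hθ.le)
        (Real.rpow_nonneg hp _) (Real.sqrt_nonneg _)
    exact max_eq_left (by linarith)
  have dv : ∀ y, HasDerivAt (fun y => v y ^ 2)
      (2 * v y * (c * (Real.sqrt (S.ρ s y) * S.rx s y))) y := fun y => by
    have := (hasDerivAt_max_pow 0 (S.g s y - gK)).comp y ((S.g_x s y).sub_const gK)
    exact this.congr_deriv (by simp [hv, hc])
  obtain ⟨xm, hxm, hmax⟩ := isCompact_Icc.exists_isMaxOn (nonempty_Icc.mpr h12.le) cv.continuousOn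
  set Z := v xm ^ 2 with hZ
  have hZ0 : 0 ≤ Z := sq_nonneg _
  have hvZ : ∀ y ∈ Icc x1 x2, v y ^ 2 ≤ Z := fun y hy =>
    pow_le_pow_left₀ (hv0 y) (hmax hy) 2
  set l := 1 / (2 * C1 * q * F) with hl'
  have hlp : 0 < l := by positivity
  have hosc := osc_le (a := x1) (b := x2) (x := xm) (y := x0) dv (by fun_prop)
    (G := fun y => l * C1 * Z * S.Psi s y + c ^ 2 / l * S.rx s y ^ 2) (by fun_prop) (fun y hy => by
      rcases le_or_gt (S.ρ s y) K with h | h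
      · rw [hgle y h]
        have := S.Psi_nonneg s y
        simp only [mul_zero, zero_mul, abs_zero]
        positivity
      · have hΨ' := (hl y _ h.le).1
        have hp := S.pos s y
        change S.ρ s y ≤ C1 * S.Psi s y at hΨ'
        rw [abs_mul, abs_mul, abs_mul, abs_mul, abs_of_pos hcp, abs_of_nonneg (hv0 y),
          abs_of_nonneg (Real.sqrt_nonneg _), abs_of_pos (by norm_num : (0:ℝ) < 2)]
        have k1 : 2 * v y * (c * (Real.sqrt (S.ρ s y) * |S.rx s y|))
            ≤ l * (v y ^ 2 * S.ρ s y) + c ^ 2 / l * S.rx s y ^ 2 := by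
          have : l * (v y ^ 2 * S.ρ s y) + c ^ 2 / l * S.rx s y ^ 2
              - 2 * v y * (c * (Real.sqrt (S.ρ s y) * |S.rx s y|))
              = l * (v y * Real.sqrt (S.ρ s y) - c / l * |S.rx s y|) ^ 2 := by
            have a1 := Real.sq_sqrt hp.le
            have a2 := sq_abs (S.rx s y)
            rw [← a2]
            nth_rewrite 1 [← a1]
            field_simp
            ring
          have : 0 ≤ l * (v y * Real.sqrt (S.ρ s y) - c / l * |S.rx s y|) ^ 2 := by positivity
          linarith
        have k2 : l * (v y ^ 2 * S.ρ s y) ≤ l * (Z * (C1 * S.Psi s y)) := by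
          have := hvZ y hy
          gcongr
        linarith) hxm hx0
  rw [hgle x0 hρ0] at hosc
  have hosc' := (le_abs_self _).trans (hosc.trans (tle2 h12.le (by fun_prop) cΨ cβ
    (l * C1 * Z) (c ^ 2 / l) (fun y _ => le_rfl)))
  have j1 : l * C1 * Z * ∫ y in x1..x2, S.Psi s y ≤ l * C1 * Z * (q * F) := by gcongr
  have j2 : c ^ 2 / l * ∫ y in x1..x2, S.rx s y ^ 2 ≤ c ^ 2 / l * (q * β) := by gcongr
  have j3 : l * C1 * Z * (q * F) = Z / 2 := by rw [hl']; field_simp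
  have j4 : c ^ 2 / l * (q * β) = c2 * F * β / 2 := by rw [hl', hc2]; field_simp; ring
  have hZle : Z ≤ c2 * (F * β) := by
    simp only [ne_eq, OfNat.ofNat_ne_zero, not_false_eq_true, zero_pow, sub_zero] at hosc'
    linarith
  have hg : S.g s x ^ 2 ≤ 2 * Z + 2 * gK ^ 2 := by
    have a1 : S.g s x ≤ v x + gK := by
      have := le_max_right 0 (S.g s x - gK); simp only [hv]; linarith
    have a0 : 0 ≤ S.g s x := by have := S.r_pos s x; unfold Sol.g; positivity
    have a2 := hvZ x hxI
    nlinarith [sq_nonneg (v x - gK), hv0 x]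
  rw [S.p_g]
  calc B.κ * S.g s x ^ 2 ≤ B.κ * (2 * (c2 * (F * β)) + 2 * gK ^ 2) := by
        gcongr; linarith
    _ ≤ _ := by
        have : 0 ≤ (1 + C1 * q + 2 * B.κ * c2) := by positivity
        have : 0 ≤ (1 + C1 * q + 2 * B.κ * gK ^ 2) * (F * β) := by positivity
        linarith

end NSHI

/-! ### Flux terms through the cutoff -/

namespace NSHI

lemma dcut_zero (n : ℕ) {R : ℝ} (hR : 0 < R) {y : ℝ} (h : R ≤ |y|) : dcut (n + 4) R y = 0 := by
  have := abs_dcut_le' n hR y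
  rw [bump_zero hR h, zero_pow (by omega), mul_zero] at this
  exact abs_nonpos_iff.mp this

lemma Bg.Ebx_bdd (B : Bg) : ∃ C : ℝ, 0 < C ∧ ∀ x, |B.Ebx x| ≤ C := by
  obtain ⟨C, hC⟩ := (isCompact_Icc (a := -B.L) (b := B.L)).exists_bound_of_continuousOn
    B.cEbx.continuousOn
  refine ⟨|C| + 1, by positivity, fun x => ?_⟩
  by_cases h : B.L ≤ |x|
  · rw [B.Ebx_zero x h]; simp; positivity
  · have := hC x (abs_le.mp (not_le.mp h).le)
    rw [Real.norm_eq_abs] at this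
    have := le_abs_self C
    linarith

/-- Flux of the pressure through the cutoff, given a bound `Λ` of the pressure on the support. -/
lemma flux_pointwise (B : Bg) (n : ℕ) : ∃ C : ℝ, 0 < C ∧ ∀ (S : Sol B) (R l s x : ℝ), 0 < R →
    1 ≤ l → (|S.Y s x| < R → S.p s x ≤ l) →
    |dcut (n + 4) R (S.Y s x) * (S.ρ s x * ((S.p s x - B.pb x) * S.u s x))|
      ≤ C / R * l * (bump R (S.Y s x) ^ (n + 4) * (S.ρ s x * S.u s x ^ 2))
        + C / R * l * (bump (2 * R) (S.Y s x) ^ (n + 4) * S.Psi s x) := by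
  obtain ⟨K, C1, hK, hC1, h1⟩ := B.Ψ_large
  obtain ⟨C2, hC2, h2⟩ := B.Ψ_diff K
  set P := B.pr B.M with hP
  have hP0 : 0 < P := B.pr_pos B.hM
  set C3 := C2 + (1 + P) ^ 2 * C1 with hC3
  set q : ℝ := (4 / 3) ^ (n + 4) with hq
  have hq0 : 0 < q := by positivity
  refine ⟨2 * (n + 4) * (1 + C3 * q), by positivity, fun S R l s x hR hl hp => ?_⟩
  have hρ := S.pos s x
  have hΨ := S.Psi_nonneg s x
  have hb := bump_nonneg R (S.Y s x)
  have hb2 := bump_nonneg (2 * R) (S.Y s x)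
  by_cases hY : |S.Y s x| < R
  swap
  · rw [dcut_zero n hR (not_lt.mp hY), zero_mul, abs_zero]; positivity
  have hpl := hp hY
  have hpb := B.pb_pos x
  have hpbP := B.pb_le x
  have hpp := S.p_pos s x
  obtain ⟨y, hy0, hy1, hy2⟩ : ∃ y : ℝ, 0 ≤ y ∧ |S.p s x - B.pb x| * Real.sqrt (S.ρ s x) ≤ l * y
      ∧ y ^ 2 ≤ C3 * S.Psi s x := by
    rcases le_or_gt (S.ρ s x) K with h | h
    · refine ⟨|S.p s x - B.pb x| * Real.sqrt (S.ρ s x), by positivity, ?_, ?_⟩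
      · exact le_mul_of_one_le_left (by positivity) hl
      · rw [mul_pow, sq_abs, Real.sq_sqrt hρ.le, mul_comm]
        have : S.ρ s x * (S.p s x - B.pb x) ^ 2 ≤ C2 * S.Psi s x := (h2 x _ hρ h).1
        have : 0 ≤ (1 + P) ^ 2 * C1 * S.Psi s x := by positivity
        rw [hC3]; linarith
    · refine ⟨(1 + P) * Real.sqrt (S.ρ s x), by positivity, ?_, ?_⟩
      · have : |S.p s x - B.pb x| ≤ l * (1 + P) := by
          rw [abs_le]
          constructor <;> nlinarith
        rw [← mul_assoc]
        gcongr
      · rw [mul_pow, Real.sq_sqrt hρ.le]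
        have : S.ρ s x ≤ C1 * S.Psi s x := (h1 x _ h.le).1
        have : (1 + P) ^ 2 * S.ρ s x ≤ (1 + P) ^ 2 * (C1 * S.Psi s x) := by gcongr
        have : 0 ≤ C2 * S.Psi s x := by positivity
        rw [hC3]; linarith
  have hz : |S.ρ s x * ((S.p s x - B.pb x) * S.u s x)|
      ≤ l * ((Real.sqrt (S.ρ s x) * |S.u s x|) * y) := by
    rw [abs_mul, abs_mul, abs_of_pos hρ]
    nth_rewrite 1 [← Real.mul_self_sqrt hρ.le]
    calc Real.sqrt (S.ρ s x) * Real.sqrt (S.ρ s x) * (|S.p s x - B.pb x| * |S.u s x|)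
        = (|S.p s x - B.pb x| * Real.sqrt (S.ρ s x)) * (Real.sqrt (S.ρ s x) * |S.u s x|) := by ring
      _ ≤ (l * y) * (Real.sqrt (S.ρ s x) * |S.u s x|) := by gcongr
      _ = _ := by ring
  have hd := abs_dcut_le' n hR (S.Y s x)
  have hyg := young_b hb n one_pos (Real.sqrt (S.ρ s x) * |S.u s x|) y
  rw [mul_pow, sq_abs, Real.sq_sqrt hρ.le] at hyg
  have hbb := bump_pow_le hR (S.Y s x) (n + 2) (n + 4) (by omega)
  rw [abs_mul]
  calc |dcut (n + 4) R (S.Y s x)| * |S.ρ s x * ((S.p s x - B.pb x) * S.u s x)|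
      ≤ (2 * (n + 4) / R * bump R (S.Y s x) ^ (n + 3)) *
        (l * ((Real.sqrt (S.ρ s x) * |S.u s x|) * y)) := by gcongr
    _ = 2 * (n + 4) / R * l * (bump R (S.Y s x) ^ (n + 3) *
        ((Real.sqrt (S.ρ s x) * |S.u s x|) * y)) := by ring
    _ ≤ 2 * (n + 4) / R * l * (1 * (bump R (S.Y s x) ^ (n + 4) * (S.ρ s x * S.u s x ^ 2))
        + bump R (S.Y s x) ^ (n + 2) * y ^ 2 / (4 * 1)) := by gcongr
    _ ≤ 2 * (n + 4) / R * l * (1 * (bump R (S.Y s x) ^ (n + 4) * (S.ρ s x * S.u s x ^ 2))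
        + (q * bump (2 * R) (S.Y s x) ^ (n + 4)) * (C3 * S.Psi s x)) := by
        have a1 : bump R (S.Y s x) ^ (n + 2) * y ^ 2
            ≤ (q * bump (2 * R) (S.Y s x) ^ (n + 4)) * (C3 * S.Psi s x) := by gcongr
        have a2 : 0 ≤ bump R (S.Y s x) ^ (n + 2) * y ^ 2 := by positivity
        gcongr
        linarith
    _ ≤ _ := by
        have a1 : 0 ≤ 2 * (n + 4) / R * l * (C3 * q) *
          (bump R (S.Y s x) ^ (n + 4) * (S.ρ s x * S.u s x ^ 2)) := by positivity
        have a2 : 0 ≤ 2 * (n + 4) / R * l *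
          (bump (2 * R) (S.Y s x) ^ (n + 4) * S.Psi s x) := by positivity
        have e : 2 * ((n:ℝ) + 4) * (1 + C3 * q) / R * l
          = 2 * (n + 4) / R * l * (1 + C3 * q) := by ring
        rw [e]
        linarith

/-- Interpolation between two powers of the cutoff, using the superlinear pressure. -/
lemma cut_interp {θ : ℝ} (hθ : 0 < θ) {n : ℕ} (hn : 1 ≤ (n + 1) * θ) {b ρ : ℝ} (hb : 0 ≤ b)
    (hb1 : b ≤ 1) (hρ : 0 < ρ) : b ^ (n + 2) * ρ ≤ b ^ (n + 4) * (ρ * (ρ ^ θ) ^ 2) + b := by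
  have hr : 0 ≤ ρ ^ θ := Real.rpow_nonneg hρ.le _
  rcases le_or_gt (b ^ (n + 1) * ρ) 1 with h | h
  · have : b ^ (n + 2) * ρ = b * (b ^ (n + 1) * ρ) := by ring
    have h2 : b * (b ^ (n + 1) * ρ) ≤ b * 1 := by gcongr
    have : 0 ≤ b ^ (n + 4) * (ρ * (ρ ^ θ) ^ 2) := by positivity
    linarith
  · have hb0 : 0 < b := by
      rcases hb.lt_or_eq with h0 | h0
      · exact h0
      · rw [← h0, zero_pow (by omega)] at h; linarith
    have h1 : 1 ≤ (b ^ (n + 1) * ρ) ^ θ := Real.one_le_rpow h.le hθ.le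
    rw [Real.mul_rpow (by positivity) hρ.le, ← Real.rpow_natCast b (n + 1),
      ← Real.rpow_mul hb] at h1
    have h2 : b ^ (((n + 1 : ℕ) : ℝ) * θ) ≤ b ^ (1:ℝ) :=
      Real.rpow_le_rpow_of_exponent_ge hb0 hb1 (by push_cast; exact hn)
    rw [Real.rpow_one] at h2
    have h3 : 1 ≤ b * ρ ^ θ := h1.trans (by gcongr)
    have h4 : 1 ≤ (b * ρ ^ θ) ^ 2 := one_le_pow₀ h3
    calc b ^ (n + 2) * ρ = b ^ (n + 2) * ρ * 1 := by ring
      _ ≤ b ^ (n + 2) * ρ * (b * ρ ^ θ) ^ 2 := by gcongr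
      _ = b ^ (n + 4) * (ρ * (ρ ^ θ) ^ 2) := by ring
      _ ≤ _ := by linarith

/-- Viscous flux through the cutoff. -/
lemma visc_pointwise (B : Bg) (n : ℕ) (hn : 1 ≤ (n + 1) * B.θ) : ∃ C : ℝ, 0 < C ∧
    ∀ (S : Sol B) (R l s x : ℝ), 0 < R → 1 ≤ l → (|S.Y s x| < R → S.p s x ≤ l) →
    |dcut (n + 4) R (S.Y s x) * (S.ρ s x * (S.ε * (S.u s x * S.ux s x)))|
      ≤ S.ε / 2 * (bump R (S.Y s x) ^ (n + 4) * S.ux s x ^ 2)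
        + C * S.ε / R ^ 2 * l * (bump R (S.Y s x) ^ (n + 4) * (S.ρ s x * S.u s x ^ 2))
        + C * S.ε / R ^ 2 * (bump (2 * R) (S.Y s x) ^ (n + 4) * (S.ρ s x * S.u s x ^ 2)) := by
  have hκ := B.κ_pos
  set q : ℝ := (4 / 3) ^ (n + 4) with hq
  have hq0 : 0 < q := by positivity
  refine ⟨2 * (n + 4) ^ 2 * (1 / B.κ + q), by positivity, fun S R l s x hR hl hp => ?_⟩
  have hρ := S.pos s x
  have he := S.hε
  have hb := bump_nonneg R (S.Y s x)
  have hb2 := bump_nonneg (2 * R) (S.Y s x)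
  by_cases hY : |S.Y s x| < R
  swap
  · rw [dcut_zero n hR (not_lt.mp hY), zero_mul, abs_zero]; positivity
  have hpl := hp hY
  have h := young_dcut n hR (S.Y s x) (l := S.ε / 2) (by positivity)
      (z := S.ρ s x * (S.ε * (S.u s x * S.ux s x)))
      (x := |S.ux s x|) (y := S.ε * S.ρ s x * |S.u s x|)
      (by rw [abs_mul, abs_mul, abs_mul, abs_of_pos hρ, abs_of_pos he]; apply le_of_eq; ring)
  rw [mul_pow, sq_abs, sq_abs] at h
  have hi := cut_interp B.hθ hn hb (bump_le_one R (S.Y s x)) hρ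
  have hbb := bump_pow_le hR (S.Y s x) 1 (n + 4) le_rfl
  rw [pow_one] at hbb
  have hpe : S.ρ s x * (S.ρ s x ^ B.θ) ^ 2 ≤ l / B.κ := by
    rw [le_div_iff₀' hκ]; exact hpl
  have hi2 : bump R (S.Y s x) ^ (n + 2) * S.ρ s x ≤ bump R (S.Y s x) ^ (n + 4) * (l / B.κ)
      + q * bump (2 * R) (S.Y s x) ^ (n + 4) := by
    refine hi.trans ?_
    gcongr
  refine h.trans ?_
  have hi3 : bump R (S.Y s x) ^ (n + 2) * ((S.ε * S.ρ s x) ^ 2 * S.u s x ^ 2)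
      ≤ S.ε ^ 2 * ((bump R (S.Y s x) ^ (n + 4) * (l / B.κ)
      + q * bump (2 * R) (S.Y s x) ^ (n + 4)) * (S.ρ s x * S.u s x ^ 2)) := by
    calc _ = S.ε ^ 2 * ((bump R (S.Y s x) ^ (n + 2) * S.ρ s x) * (S.ρ s x * S.u s x ^ 2)) := by ring
      _ ≤ _ := by gcongr
  have hi4 : ((n:ℝ) + 4) ^ 2 / (S.ε / 2) / R ^ 2 *
      (bump R (S.Y s x) ^ (n + 2) * ((S.ε * S.ρ s x) ^ 2 * S.u s x ^ 2))
      ≤ ((n:ℝ) + 4) ^ 2 / (S.ε / 2) / R ^ 2 * (S.ε ^ 2 * ((bump R (S.Y s x) ^ (n + 4) * (l / B.κ)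
      + q * bump (2 * R) (S.Y s x) ^ (n + 4)) * (S.ρ s x * S.u s x ^ 2))) := by gcongr
  set U := S.ρ s x * S.u s x ^ 2 with hU
  have hU0 : 0 ≤ U := by positivity
  have e1 : ((n:ℝ) + 4) ^ 2 / (S.ε / 2) / R ^ 2 * (S.ε ^ 2 * ((bump R (S.Y s x) ^ (n + 4) * (l / B.κ)
      + q * bump (2 * R) (S.Y s x) ^ (n + 4)) * U))
      = 2 * (n + 4) ^ 2 * (1 / B.κ) * S.ε / R ^ 2 * l * (bump R (S.Y s x) ^ (n + 4) * U)
        + 2 * (n + 4) ^ 2 * q * S.ε / R ^ 2 * (bump (2 * R) (S.Y s x) ^ (n + 4) * U) := by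
    field_simp
  have p1 : 0 ≤ 2 * (n + 4) ^ 2 * q * S.ε / R ^ 2 * l * (bump R (S.Y s x) ^ (n + 4) * U) := by
    positivity
  have p2 : 0 ≤ 2 * (n + 4) ^ 2 * (1 / B.κ) * S.ε / R ^ 2 *
    (bump (2 * R) (S.Y s x) ^ (n + 4) * U) := by positivity
  have e2 : 2 * (n + 4) ^ 2 * (1 / B.κ + q) * S.ε / R ^ 2 * l * (bump R (S.Y s x) ^ (n + 4) * U)
      = 2 * (n + 4) ^ 2 * (1 / B.κ) * S.ε / R ^ 2 * l * (bump R (S.Y s x) ^ (n + 4) * U)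
      + 2 * (n + 4) ^ 2 * q * S.ε / R ^ 2 * l * (bump R (S.Y s x) ^ (n + 4) * U) := by ring
  have e3 : 2 * (n + 4) ^ 2 * (1 / B.κ + q) * S.ε / R ^ 2 * (bump (2 * R) (S.Y s x) ^ (n + 4) * U)
      = 2 * (n + 4) ^ 2 * (1 / B.κ) * S.ε / R ^ 2 * (bump (2 * R) (S.Y s x) ^ (n + 4) * U)
      + 2 * (n + 4) ^ 2 * q * S.ε / R ^ 2 * (bump (2 * R) (S.Y s x) ^ (n + 4) * U) := by ring
  rw [e2, e3]
  linarith

/-- Work of the background gradient. -/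
lemma bg_pointwise (B : Bg) : ∃ C : ℝ, 0 < C ∧ ∀ (S : Sol B) (b s x : ℝ), 0 ≤ b → b ≤ 1 →
    |b * (S.ρ s x * S.u s x * B.Ebx x)| ≤ C * (b * S.MF s x) + C * B.Ebx x ^ 2 := by
  obtain ⟨C1, hC1, h1⟩ := B.Ψ_affine
  obtain ⟨E, hE, hEb⟩ := B.Ebx_bdd
  refine ⟨1 + C1 + C1 * E ^ 2, by positivity, fun S b s x hb hb1 => ?_⟩
  have hρ := S.pos s x
  have hΨ := S.Psi_nonneg s x
  have ha : S.ρ s x ≤ C1 * (1 + S.Psi s x) := (h1 x _ hρ).1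
  have hE2 : B.Ebx x ^ 2 ≤ E ^ 2 := by
    rw [← sq_abs]; exact pow_le_pow_left₀ (abs_nonneg _) (hEb x) 2
  rw [abs_mul, abs_of_nonneg hb]
  have k1 : |S.ρ s x * S.u s x * B.Ebx x| ≤ S.ρ s x * S.u s x ^ 2 / 2 + S.ρ s x * B.Ebx x ^ 2 := by
    rw [abs_mul, abs_mul, abs_of_pos hρ]
    have : |S.u s x| * |B.Ebx x| ≤ S.u s x ^ 2 / 2 + B.Ebx x ^ 2 := by
      rw [← sq_abs (S.u s x), ← sq_abs (B.Ebx x)]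
      nlinarith [sq_nonneg (|S.u s x| - |B.Ebx x|), sq_nonneg (B.Ebx x)]
    nlinarith
  have k2 : S.ρ s x * B.Ebx x ^ 2 ≤ C1 * B.Ebx x ^ 2 + C1 * E ^ 2 * S.Psi s x := by
    calc S.ρ s x * B.Ebx x ^ 2 ≤ C1 * (1 + S.Psi s x) * B.Ebx x ^ 2 := by gcongr
      _ = C1 * B.Ebx x ^ 2 + C1 * S.Psi s x * B.Ebx x ^ 2 := by ring
      _ ≤ C1 * B.Ebx x ^ 2 + C1 * S.Psi s x * E ^ 2 := by gcongr
      _ = _ := by ring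
  have k3 : |S.ρ s x * S.u s x * B.Ebx x| ≤ (1 + C1 + C1 * E ^ 2) * S.MF s x
      + C1 * B.Ebx x ^ 2 := by
    have : 0 ≤ S.ρ s x * S.u s x ^ 2 / 2 := by positivity
    have : 0 ≤ (C1 + C1 * E ^ 2) * (S.ρ s x * S.u s x ^ 2 / 2) := by positivity
    have : 0 ≤ (1 + C1) * S.Psi s x := by positivity
    unfold Sol.MF
    linarith
  calc b * |S.ρ s x * S.u s x * B.Ebx x|
      ≤ b * ((1 + C1 + C1 * E ^ 2) * S.MF s x + C1 * B.Ebx x ^ 2) := by gcongr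
    _ = (1 + C1 + C1 * E ^ 2) * (b * S.MF s x) + b * (C1 * B.Ebx x ^ 2) := by ring
    _ ≤ (1 + C1 + C1 * E ^ 2) * (b * S.MF s x) + 1 * (C1 * B.Ebx x ^ 2) := by gcongr
    _ ≤ _ := by
        have : 0 ≤ (1 + C1 * E ^ 2) * B.Ebx x ^ 2 := by positivity
        linarith

end NSHI

/-! ### Self-improvement of the energy bound -/

namespace NSHI

lemma CK.le5 {f g1 g2 g3 g4 g5 : ℝ → ℝ → ℝ} {s : ℝ}
    (hf : CK f) (h1 : CK g1) (h2 : CK g2) (h3 : CK g3) (h4 : CK g4) (h5 : CK g5)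
    (a1 a2 a3 a4 a5 : ℝ)
    (h : ∀ x, f s x ≤ a1 * g1 s x + a2 * g2 s x + a3 * g3 s x + a4 * g4 s x + a5 * g5 s x) :
    ∫ x, f s x ≤ a1 * (∫ x, g1 s x) + a2 * (∫ x, g2 s x) + a3 * (∫ x, g3 s x)
      + a4 * (∫ x, g4 s x) + a5 * ∫ x, g5 s x := by
  have k1 := CK.le4 (s := s) hf h1 h2 h3 ((h4.cmul a4).add (h5.cmul a5)) a1 a2 a3 1
    (fun x => by have := h x; simp only [one_mul]; linarith)
  rw [integral_add ((h4.cmul a4).integrable s) ((h5.cmul a5).integrable s), integral_const_mul,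
    integral_const_mul] at k1
  linarith

lemma Bg.ck_Ebx (B : Bg) : CK (fun _ x => B.Ebx x ^ 2) :=
  ⟨by fun_prop, B.L, fun _ x hx => by simp [B.Ebx_zero x hx]⟩

namespace Sol
lemma ck_idE {B : Bg} (S : Sol B) {k : ℕ} (hk : 2 ≤ k) {R : ℝ} (hR : 0 < R) :
    CK (fun s x => dcut k R (S.Y s x) * (S.ρ s x * ((S.p s x - B.pb x) * S.u s x
            - S.ε * (S.u s x * S.ux s x)))
          + bump R (S.Y s x) ^ k *
            (-(S.ε * S.ux s x ^ 2) - S.ρ s x * S.u s x * B.Ebx x)) := by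
  refine CK.add (CK.mul (S.ckd hk hR) ?_) (CK.mul (S.ck (by omega) hR) ?_) <;> fun_prop
end Sol

/-- Production terms of both localized energies, given a bound `l` of the pressure where the
cutoff lives. The constant does not depend on the solution. -/
lemma comb_space (B : Bg) (n : ℕ) (hn : 1 ≤ (n + 1) * B.θ) : ∃ C : ℝ, 0 < C ∧
    ∀ (S : Sol B) (R l F s : ℝ), 1 ≤ R → S.ε ≤ R → 1 ≤ l →
    (∀ x, |S.Y s x| < R → S.p s x ≤ l) → S.Wt (n + 4) (2 * R) S.Psi s ≤ F →
    (∫ x, (dcut (n + 4) R (S.Y s x) * (S.ρ s x * ((S.p s x - B.pb x) * S.u s x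
            - S.ε * (S.u s x * S.ux s x)))
          + bump R (S.Y s x) ^ (n + 4) *
            (-(S.ε * S.ux s x ^ 2) - S.ρ s x * S.u s x * B.Ebx x))
      ≤ (-(S.ε / 2)) * S.Wt (n + 4) R (fun s x => S.ux s x ^ 2) s
        + (C + C / R * l) * S.Wt (n + 4) R S.MF s + C / R * l * F
        + C * S.ε / R ^ 2 * S.Wt (n + 4) (2 * R) (fun s x => S.ρ s x * S.u s x ^ 2) s + C) ∧
    (∫ x, (dcut (n + 4) R (S.Y s x) * (S.ρ s x * ((S.p s x - B.pb x) * S.u s x))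
          + bump R (S.Y s x) ^ (n + 4) *
            (-(S.ε * S.rx s x ^ 2) - S.ρ s x * S.u s x * B.Ebx x))
      ≤ (-S.ε) * S.Wt (n + 4) R (fun s x => S.rx s x ^ 2) s
        + (C + C / R * l) * S.Wt (n + 4) R S.MF s + C / R * l * F + C) := by
  obtain ⟨Cf, hCf, hf⟩ := flux_pointwise B n
  obtain ⟨Cv, hCv, hv⟩ := visc_pointwise B n hn
  obtain ⟨Cb, hCb, hb⟩ := bg_pointwise B
  set J := ∫ x, B.Ebx x ^ 2 with hJ
  have hJ0 : 0 ≤ J := integral_nonneg fun x => sq_nonneg _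
  set C := Cb + 2 * Cf + 2 * Cv + Cb * J with hC
  have hCp : 0 < C := by positivity
  refine ⟨C, hCp, fun S R l F s hR hεR hl hp hF => ?_⟩
  have hR0 : 0 < R := by linarith
  have hε := S.hε
  have hM0 : 0 ≤ S.Wt (n + 4) R S.MF s := S.Wt_nonneg (S.MF_nonneg s)
  have hP0 : 0 ≤ S.Wt (n + 4) (2 * R) S.Psi s := S.Wt_nonneg (S.Psi_nonneg s)
  have hU0 : 0 ≤ S.Wt (n + 4) (2 * R) (fun s x => S.ρ s x * S.u s x ^ 2) s :=
    S.Wt_nonneg (fun x => by have := S.pos s x; positivity)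
  have hεR2 : S.ε / R ^ 2 ≤ 1 / R := by
    rw [div_le_div_iff₀ (by positivity) hR0]; nlinarith
  have ckM := S.ckw (k := n + 4) (by omega) hR0 S.cMF
  have ckP := S.ckw (k := n + 4) (by omega) (by positivity : 0 < 2 * R) (F := S.Psi) (by fun_prop)
  have ckU := S.ckw (k := n + 4) (by omega) (by positivity : 0 < 2 * R)
    (F := fun s x => S.ρ s x * S.u s x ^ 2) (by fun_prop)
  have hUM : ∀ x, bump R (S.Y s x) ^ (n + 4) * (S.ρ s x * S.u s x ^ 2)
      ≤ 2 * (bump R (S.Y s x) ^ (n + 4) * S.MF s x) := fun x => by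
    have := mul_le_mul_of_nonneg_left (S.MF_u s x) (pow_nonneg (bump_nonneg R (S.Y s x)) (n + 4))
    linarith
  have hflux : ∀ x, |dcut (n + 4) R (S.Y s x) * (S.ρ s x * ((S.p s x - B.pb x) * S.u s x))|
      ≤ 2 * Cf / R * l * (bump R (S.Y s x) ^ (n + 4) * S.MF s x)
        + Cf / R * l * (bump (2 * R) (S.Y s x) ^ (n + 4) * S.Psi s x) := fun x => by
    refine (hf S R l s x hR0 hl (hp x)).trans ?_
    have := mul_le_mul_of_nonneg_left (hUM x) (by positivity : 0 ≤ Cf / R * l)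
    have e : 2 * Cf / R * l = 2 * (Cf / R * l) := by ring
    rw [e]; linarith
  have hvisc : ∀ x, |dcut (n + 4) R (S.Y s x) * (S.ρ s x * (S.ε * (S.u s x * S.ux s x)))|
      ≤ S.ε / 2 * (bump R (S.Y s x) ^ (n + 4) * S.ux s x ^ 2)
        + 2 * Cv / R * l * (bump R (S.Y s x) ^ (n + 4) * S.MF s x)
        + Cv * S.ε / R ^ 2 * (bump (2 * R) (S.Y s x) ^ (n + 4) * (S.ρ s x * S.u s x ^ 2)) :=
    fun x => by
    refine (hv S R l s x hR0 hl (hp x)).trans ?_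
    have h0 : 0 ≤ bump R (S.Y s x) ^ (n + 4) * S.MF s x :=
      mul_nonneg (pow_nonneg (bump_nonneg _ _) _) (S.MF_nonneg s x)
    have h1 : Cv * S.ε / R ^ 2 * l ≤ Cv / R * l := by
      have : Cv * (S.ε / R ^ 2) ≤ Cv * (1 / R) := by gcongr
      calc Cv * S.ε / R ^ 2 * l = Cv * (S.ε / R ^ 2) * l := by ring
        _ ≤ Cv * (1 / R) * l := by gcongr
        _ = _ := by ring
    have h2 : Cv * S.ε / R ^ 2 * l * (bump R (S.Y s x) ^ (n + 4) * (S.ρ s x * S.u s x ^ 2))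
        ≤ Cv / R * l * (2 * (bump R (S.Y s x) ^ (n + 4) * S.MF s x)) :=
      mul_le_mul h1 (hUM x) (mul_nonneg (pow_nonneg (bump_nonneg _ _) _)
        (by have := S.pos s x; positivity)) (by positivity)
    have e : 2 * Cv / R * l * (bump R (S.Y s x) ^ (n + 4) * S.MF s x)
      = Cv / R * l * (2 * (bump R (S.Y s x) ^ (n + 4) * S.MF s x)) := by ring
    rw [e]; linarith
  have hbg : ∀ x, |bump R (S.Y s x) ^ (n + 4) * (S.ρ s x * S.u s x * B.Ebx x)|
      ≤ Cb * (bump R (S.Y s x) ^ (n + 4) * S.MF s x) + Cb * B.Ebx x ^ 2 := fun x =>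
    hb S _ s x (pow_nonneg (bump_nonneg _ _) _)
      (pow_le_one₀ (bump_nonneg _ _) (bump_le_one _ _))
  have e1 : (Cb + 2 * Cf / R * l + 2 * Cv / R * l) * S.Wt (n + 4) R S.MF s
      ≤ (C + C / R * l) * S.Wt (n + 4) R S.MF s := by
    have k1 : Cb ≤ C := by
      have : 0 ≤ 2 * Cf + 2 * Cv + Cb * J := by positivity
      linarith
    have k2 : 2 * Cf / R * l + 2 * Cv / R * l ≤ C / R * l := by
      have : 2 * Cf + 2 * Cv ≤ C := by
        have : 0 ≤ Cb + Cb * J := by positivity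
        linarith
      calc _ = (2 * Cf + 2 * Cv) / R * l := by ring
        _ ≤ _ := by gcongr
    apply mul_le_mul_of_nonneg_right _ hM0
    linarith
  have e2 : Cf / R * l * S.Wt (n + 4) (2 * R) S.Psi s ≤ C / R * l * F := by
    have : Cf ≤ C := by
      have : 0 ≤ Cb + Cf + 2 * Cv + Cb * J := by positivity
      linarith
    gcongr
  have e3 : Cv * S.ε / R ^ 2 * S.Wt (n + 4) (2 * R) (fun s x => S.ρ s x * S.u s x ^ 2) s
      ≤ C * S.ε / R ^ 2 * S.Wt (n + 4) (2 * R) (fun s x => S.ρ s x * S.u s x ^ 2) s := by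
    have : Cv ≤ C := by
      have : 0 ≤ Cb + 2 * Cf + Cv + Cb * J := by positivity
      linarith
    gcongr
  have e4 : Cb * J ≤ C := by
    have : 0 ≤ Cb + 2 * Cf + 2 * Cv := by positivity
    linarith
  constructor
  · have h := CK.le5 (s := s) (S.ck_idE (k := n + 4) (by omega) hR0)
      (S.ckw (k := n + 4) (by omega) hR0 (F := fun s x => S.ux s x ^ 2) (by fun_prop))
      ckM ckP ckU B.ck_Ebx (-(S.ε / 2)) (Cb + 2 * Cf / R * l + 2 * Cv / R * l) (Cf / R * l)
      (Cv * S.ε / R ^ 2) Cb (fun x => by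
        have a1 := le_abs_self (dcut (n + 4) R (S.Y s x) *
          (S.ρ s x * ((S.p s x - B.pb x) * S.u s x)))
        have a2 := neg_abs_le (dcut (n + 4) R (S.Y s x) *
          (S.ρ s x * (S.ε * (S.u s x * S.ux s x))))
        have a3 := neg_abs_le (bump R (S.Y s x) ^ (n + 4) * (S.ρ s x * S.u s x * B.Ebx x))
        have b1 := hflux x
        have b2 := hvisc x
        have b3 := hbg x
        linarith)
    simp only [Sol.Wt] at *
    linarith
  · have h := CK.le4 (s := s) (S.ck_idW (k := n + 4) (by omega) hR0)
      (S.ckw (k := n + 4) (by omega) hR0 (F := fun s x => S.rx s x ^ 2) (by fun_prop))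
      ckM ckP B.ck_Ebx (-S.ε) (Cb + 2 * Cf / R * l) (Cf / R * l) Cb (fun x => by
        have a1 := le_abs_self (dcut (n + 4) R (S.Y s x) *
          (S.ρ s x * ((S.p s x - B.pb x) * S.u s x)))
        have a3 := neg_abs_le (bump R (S.Y s x) ^ (n + 4) * (S.ρ s x * S.u s x * B.Ebx x))
        have b1 := hflux x
        have b3 := hbg x
        linarith)
    have e5 : 0 ≤ 2 * Cv / R * l * S.Wt (n + 4) R S.MF s := by positivity
    simp only [Sol.Wt] at *
    linarith

/-- Self-improvement of the energy bound: a bound `F ≪ √R` at radius `2 * R` becomes a data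
constant plus `F/4` at radius `R`. -/
lemma comb_step (B : Bg) {n : ℕ} (hn2 : 2 ≤ n) (hn : 1 ≤ (n + 1) * B.θ) : ∃ Cd : ℝ, 1 ≤ Cd ∧
    ∀ S : Sol B, ∃ R0 δ : ℝ, 1 ≤ R0 ∧ 0 < δ ∧ ∀ R F, R0 ≤ R → 1 ≤ F → F ≤ δ * Real.sqrt R →
    S.EB (n + 4) (2 * R) F →
    (∀ s ∈ Icc 0 B.T, S.Wt (n + 4) R S.MF s
      + S.ε / 2 * ∫ τ in (0:ℝ)..s, S.Wt (n + 4) R (fun s x => S.ux s x ^ 2) τ ≤ Cd + F) ∧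
    S.EB (n + 4) R (Cd + F / 4) := by
  obtain ⟨C, hC, hsp⟩ := comb_space B n hn
  obtain ⟨Cs, hCs, hsup⟩ := sup_pressure B (N := n + 4) (by omega)
  have hT := B.hT
  set X := Real.exp (C * B.T + 1) with hX
  have hX0 : 0 < X := Real.exp_pos _
  set D := X * (|B.E0| + C * B.T + 1) with hD
  have hD0 : 0 < D := by positivity
  set μ := 1 / (4 * ((C * B.T + 1) * X + 1)) with hμ
  have hμ0 : 0 < μ := by positivity
  have hμ1 : μ * ((C * B.T + 1) * X + 1) = 1 / 4 := by rw [hμ]; field_simp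
  have hμX : μ * X ≤ 1 := by
    have : 0 ≤ μ * (C * B.T * X + 1) := by positivity
    linarith
  have hμle : μ ≤ 1 / 4 := by
    have : 0 ≤ μ * ((C * B.T + 1) * X) := by positivity
    linarith
  refine ⟨|B.E0 + B.E1| + (C * B.T + 1) * D + C * B.T + D + 1, by
    have : 0 ≤ |B.E0 + B.E1| + (C * B.T + 1) * D + C * B.T + D := by positivity
    linarith, fun S => ?_⟩
  obtain ⟨Ck, hCk, hk⟩ := S.kinetic hn2
  have hε := S.hε
  set δ := min (1 / Cs) (Real.sqrt (μ * S.ε / (2 * C * Cs))) with hδ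
  have hδ0 : 0 < δ := by positivity
  have hδ1 : Cs * δ ≤ 1 := by
    have : δ ≤ 1 / Cs := min_le_left _ _
    rwa [le_div_iff₀' (by positivity)] at this
  have hδ2 : 2 * C * Cs * δ ^ 2 ≤ μ * S.ε := by
    have h1 : δ ≤ Real.sqrt (μ * S.ε / (2 * C * Cs)) := min_le_right _ _
    have h2 : δ ^ 2 ≤ μ * S.ε / (2 * C * Cs) := by
      calc δ ^ 2 ≤ Real.sqrt (μ * S.ε / (2 * C * Cs)) ^ 2 := by gcongr
        _ = _ := Real.sq_sqrt (by positivity)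
    rwa [le_div_iff₀' (by positivity)] at h2
  refine ⟨1 + S.ε + 2 * C * Cs * B.T / μ + (4 * C * S.ε * Ck) ^ 2, δ, by
    have : 0 ≤ S.ε + 2 * C * Cs * B.T / μ + (4 * C * S.ε * Ck) ^ 2 := by positivity
    linarith, hδ0, fun R F hR hF hFR hEB => ?_⟩
  have t1 : 0 ≤ 2 * C * Cs * B.T / μ := by positivity
  have t2 : 0 ≤ (4 * C * S.ε * Ck) ^ 2 := by positivity
  have hR1 : 1 ≤ R := by linarith
  have hR0 : 0 < R := by linarith
  have h2R : 0 < 2 * R := by linarith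
  have hεR : S.ε ≤ R := by linarith
  have hsR : 1 ≤ Real.sqrt R := Real.one_le_sqrt.mpr hR1
  have hsq : Real.sqrt R ^ 2 = R := Real.sq_sqrt hR0.le
  have hCF : Cs * F ≤ R := by
    calc Cs * F ≤ Cs * (δ * Real.sqrt R) := by gcongr
      _ = (Cs * δ) * Real.sqrt R := by ring
      _ ≤ 1 * Real.sqrt R := by gcongr
      _ ≤ R := by nlinarith
  -- the time-integrable bound of the pressure
  set β := S.Wt (n + 4) (2 * R) (fun s x => S.rx s x ^ 2) with hβ
  have cβ : Continuous β := S.Wt_cont (by omega) h2R (by fun_prop)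
  have β0 : ∀ s, 0 ≤ β s := fun s => S.Wt_nonneg (fun x => sq_nonneg _)
  set Λ : ℝ → ℝ := fun s => Cs * (1 + F * β s) with hΛ
  have cΛ : Continuous Λ := by fun_prop
  have Λ1 : ∀ s, 1 ≤ Λ s := fun s => by
    have : 0 ≤ F * β s := mul_nonneg (by linarith) (β0 s)
    simp only [hΛ]; nlinarith
  have hPsi : ∀ s ∈ Icc 0 B.T, S.Wt (n + 4) (2 * R) S.Psi s ≤ F := fun s hs => by
    have a2 := S.Wt_mono (k := n + 4) (by omega) h2R
        (F := S.Psi) (by fun_prop) S.cBF (s := s) 1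
        (fun x _ => by rw [one_mul]; exact S.BF_Psi s x)
    have a3 := hEB s hs
    have a4 : 0 ≤ S.ε * ∫ τ in (0:ℝ)..s, β τ :=
      mul_nonneg hε.le (intervalIntegral.integral_nonneg hs.1 (fun _ _ => β0 _))
    linarith
  have hβT : ∫ τ in (0:ℝ)..B.T, β τ ≤ F / S.ε := by
    rw [le_div_iff₀' hε]
    have a3 := hEB B.T ⟨hT.le, le_rfl⟩
    have : 0 ≤ S.Wt (n + 4) (2 * R) S.BF B.T := S.Wt_nonneg (S.BF_nonneg _)
    linarith
  have hΛT : C / R * ∫ τ in (0:ℝ)..B.T, Λ τ ≤ μ := by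
    have h1 : ∫ τ in (0:ℝ)..B.T, Λ τ = Cs * (B.T + F * ∫ τ in (0:ℝ)..B.T, β τ) := by
      simp only [hΛ]
      rw [intervalIntegral.integral_const_mul, intervalIntegral.integral_add
        (by simp) ((cβ.const_mul F).intervalIntegrable _ _), intervalIntegral.integral_const_mul]
      simp
    rw [h1]
    have h2 : Cs * (B.T + F * ∫ τ in (0:ℝ)..B.T, β τ) ≤ Cs * (B.T + F * (F / S.ε)) := by gcongr
    have h3 : F ^ 2 ≤ δ ^ 2 * R := by
      calc F ^ 2 ≤ (δ * Real.sqrt R) ^ 2 := by gcongr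
        _ = _ := by rw [mul_pow, hsq]
    have h4 : 2 * (C * Cs * B.T) ≤ μ * R := by
      have : 2 * C * Cs * B.T / μ ≤ R := by linarith
      rw [div_le_iff₀ hμ0] at this
      linarith
    have h5 : 2 * (C * Cs * (F * (F / S.ε))) ≤ μ * R := by
      calc 2 * (C * Cs * (F * (F / S.ε))) = 2 * C * Cs * F ^ 2 / S.ε := by ring
        _ ≤ 2 * C * Cs * (δ ^ 2 * R) / S.ε := by gcongr
        _ = (2 * C * Cs * δ ^ 2) * R / S.ε := by ring
        _ ≤ (μ * S.ε) * R / S.ε := by gcongr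
        _ = μ * R := by field_simp
    rw [div_mul_eq_mul_div, div_le_iff₀ hR0]
    have h6 : C * (Cs * (B.T + F * ∫ τ in (0:ℝ)..B.T, β τ)) ≤ C * (Cs * (B.T + F * (F / S.ε))) := by
      gcongr
    linarith
  have hp : ∀ s ∈ Icc 0 B.T, ∀ x, |S.Y s x| < R → S.p s x ≤ Λ s := fun s hs x hx =>
    hsup S R F s hF hCF (hPsi s hs) x hx.le
  have hkin : C * S.ε / R ^ 2 * ∫ τ in (0:ℝ)..B.T,
      S.Wt (n + 4) (2 * R) (fun s x => S.ρ s x * S.u s x ^ 2) τ ≤ 1 := by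
    have h1 := hk (2 * R) (by linarith)
    have h2 : Real.sqrt (2 * R) ≤ 2 * Real.sqrt R := by
      rw [Real.sqrt_le_left (by positivity), mul_pow, hsq]; linarith
    have h3 : 4 * C * S.ε * Ck ≤ Real.sqrt R := by
      apply Real.le_sqrt_of_sq_le; linarith
    calc _ ≤ C * S.ε / R ^ 2 * (Ck * (2 * R * (2 * Real.sqrt R))) := by
          refine mul_le_mul_of_nonneg_left (h1.trans ?_) (by positivity)
          gcongr
      _ = (4 * C * S.ε * Ck) * Real.sqrt R / R := by field_simp; norm_num
      _ ≤ Real.sqrt R * Real.sqrt R / R := by gcongr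
      _ = 1 := by rw [← sq, hsq]; field_simp
  have cM := S.Wt_cont (k := n + 4) (by omega) hR0 S.cMF
  have M0 : ∀ s, 0 ≤ S.Wt (n + 4) R S.MF s := fun s => S.Wt_nonneg (S.MF_nonneg s)
  have cux := S.Wt_cont (k := n + 4) (by omega) hR0 (F := fun s x => S.ux s x ^ 2) (by fun_prop)
  have crx := S.Wt_cont (k := n + 4) (by omega) hR0 (F := fun s x => S.rx s x ^ 2) (by fun_prop)
  have cU := S.Wt_cont (k := n + 4) (by omega) h2R (F := fun s x => S.ρ s x * S.u s x ^ 2)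
    (by fun_prop)
  have U0 : ∀ s, 0 ≤ S.Wt (n + 4) (2 * R) (fun s x => S.ρ s x * S.u s x ^ 2) s := fun s =>
    S.Wt_nonneg (fun x => by have := S.pos s x; positivity)
  set a : ℝ → ℝ := fun s => C + C / R * Λ s with ha
  have ca : Continuous a := by fun_prop
  have a0 : ∀ s, 0 ≤ a s := fun s => by
    have := Λ1 s; simp only [ha]; positivity
  have haT : ∫ τ in (0:ℝ)..B.T, a τ ≤ C * B.T + μ := by
    simp only [ha]
    rw [intervalIntegral.integral_add (by simp) ((cΛ.const_mul _).intervalIntegrable _ _),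
      intervalIntegral.integral_const_mul]
    simp only [intervalIntegral.integral_const, smul_eq_mul, sub_zero]
    linarith
  have hΛs : ∀ s ∈ Icc 0 B.T, C / R * ∫ τ in (0:ℝ)..s, Λ τ ≤ μ := fun s hs =>
    (mul_le_mul_of_nonneg_left (t_mono cΛ (fun s => by linarith [Λ1 s]) le_rfl hs.1 hs.2)
      (by positivity)).trans hΛT
  have hM : ∀ s ∈ Icc 0 B.T, S.Wt (n + 4) R S.MF s
      + S.ε / 2 * ∫ τ in (0:ℝ)..s, S.Wt (n + 4) R (fun s x => S.ux s x ^ 2) τ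
      ≤ D + μ * X * F := fun s hs => by
    have hgr := energy_gronwall (T := B.T) (K := |B.E0| + C * B.T + 1 + μ * F)
      (f := S.Wt (n + 4) R S.MF) (a := a)
      (d := fun s => S.ε / 2 * S.Wt (n + 4) R (fun s x => S.ux s x ^ 2) s)
      cM ca (continuous_const.mul cux) a0 M0
      (fun s => mul_nonneg (half_pos hε).le (S.Wt_nonneg (fun x => sq_nonneg _)))
      (fun s hs => by
        have e := S.id_E (k := n + 4) (by omega) hR0 hs
        change S.Wt (n + 4) R S.MF s = S.Wt (n + 4) R S.MF 0 + _ at e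
        have i0 := S.init_M (k := n + 4) (by omega) hR0
        have i1 := tle4 hs.1 (S.ck_idE (k := n + 4) (by omega) hR0).contI cux (ca.mul cM)
          (g3 := fun s => C / R * F * Λ s + C) (by fun_prop)
          cU (-(S.ε / 2)) 1 1 (C * S.ε / R ^ 2) (fun τ hτ => by
            have hτ' : τ ∈ Icc 0 B.T := ⟨hτ.1, hτ.2.trans hs.2⟩
            have := (hsp S R (Λ τ) F τ hR1 hεR (Λ1 τ) (hp τ hτ') (hPsi τ hτ')).1
            simp only [Pi.mul_apply, ha]
            linarith)
        have i2 := t_mono cU U0 le_rfl hs.1 hs.2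
        have i3 := mul_le_mul_of_nonneg_left i2 (by positivity : 0 ≤ C * S.ε / R ^ 2)
        have i4 : ∫ τ in (0:ℝ)..s, (C / R * F * Λ τ + C)
            = F * (C / R * ∫ τ in (0:ℝ)..s, Λ τ) + C * s := by
          rw [intervalIntegral.integral_add ((cΛ.const_mul _).intervalIntegrable _ _) (by simp),
            intervalIntegral.integral_const_mul]
          simp only [intervalIntegral.integral_const, smul_eq_mul, sub_zero]
          ring
        rw [i4] at i1
        have i5 := mul_le_mul_of_nonneg_left (hΛs s hs) (by linarith : 0 ≤ F)
        have i6 : C * s ≤ C * B.T := mul_le_mul_of_nonneg_left hs.2 hC.le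
        rw [intervalIntegral.integral_const_mul]
        have := le_abs_self B.E0
        simp only [Pi.mul_apply] at i1
        linarith) hs
    rw [intervalIntegral.integral_const_mul] at hgr
    refine hgr.trans ?_
    have : Real.exp (∫ τ in (0:ℝ)..B.T, a τ) ≤ X := Real.exp_le_exp.mpr (by linarith)
    calc _ ≤ (|B.E0| + C * B.T + 1 + μ * F) * X := by gcongr
      _ = _ := by rw [hD]; ring
  have hux0 : ∀ s ∈ Icc 0 B.T,
      0 ≤ S.ε / 2 * ∫ τ in (0:ℝ)..s, S.Wt (n + 4) R (fun s x => S.ux s x ^ 2) τ := fun s hs =>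
    mul_nonneg (half_pos hε).le (intervalIntegral.integral_nonneg hs.1
      (fun _ _ => S.Wt_nonneg (fun _ => sq_nonneg _)))
  constructor
  · intro s hs
    refine (hM s hs).trans ?_
    have h1 : μ * X * F ≤ 1 * F := by gcongr
    have : 0 ≤ |B.E0 + B.E1| + (C * B.T + 1) * D + C * B.T := by positivity
    linarith
  · intro s hs
    have e := S.id_W (k := n + 4) (by omega) hR0 hs
    change S.Wt (n + 4) R S.BF s = S.Wt (n + 4) R S.BF 0 + _ at e
    have i0 := S.init_B (k := n + 4) (by omega) hR0
    have i1 := tle3 hs.1 (S.ck_idW (k := n + 4) (by omega) hR0).contI crx ca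
      (g3 := fun s => C / R * F * Λ s + C) (by fun_prop) (-S.ε) (D + μ * X * F) 1 (fun τ hτ => by
        have hτ' : τ ∈ Icc 0 B.T := ⟨hτ.1, hτ.2.trans hs.2⟩
        have h1 := (hsp S R (Λ τ) F τ hR1 hεR (Λ1 τ) (hp τ hτ') (hPsi τ hτ')).2
        have h2 : a τ * S.Wt (n + 4) R S.MF τ ≤ a τ * (D + μ * X * F) :=
          mul_le_mul_of_nonneg_left (by linarith [hM τ hτ', hux0 τ hτ']) (a0 τ)
        simp only [ha] at h2 ⊢
        linarith)
    have i4 : ∫ τ in (0:ℝ)..s, (C / R * F * Λ τ + C)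
        = F * (C / R * ∫ τ in (0:ℝ)..s, Λ τ) + C * s := by
      rw [intervalIntegral.integral_add ((cΛ.const_mul _).intervalIntegrable _ _) (by simp),
        intervalIntegral.integral_const_mul]
      simp only [intervalIntegral.integral_const, smul_eq_mul, sub_zero]
      ring
    rw [i4] at i1
    have i5 := mul_le_mul_of_nonneg_left (hΛs s hs) (by linarith : 0 ≤ F)
    have i6 : C * s ≤ C * B.T := mul_le_mul_of_nonneg_left hs.2 hC.le
    have i7 : (D + μ * X * F) * ∫ τ in (0:ℝ)..s, a τ ≤ (D + μ * X * F) * (C * B.T + 1) := by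
      have := t_mono ca a0 le_rfl hs.1 hs.2
      have : 0 ≤ D + μ * X * F := by positivity
      gcongr
      linarith
    have i8 : μ * X * F * (C * B.T + 1) + F * μ = F / 4 := by
      calc _ = (μ * ((C * B.T + 1) * X + 1)) * F := by ring
        _ = _ := by rw [hμ1]; ring
    have := le_abs_self (B.E0 + B.E1)
    linarith

/-- Uniform energy bounds at every large radius, with constants depending on the data only. -/
lemma energy_bounds (B : Bg) : ∃ (N : ℕ) (C : ℝ), 1 ≤ N ∧ 1 ≤ C ∧ ∀ S : Sol B, ∃ R0 : ℝ, 1 ≤ R0 ∧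
    ∀ R, R0 ≤ R → S.EB N R C ∧ ∀ s ∈ Icc 0 B.T, S.Wt N R S.MF s
      + S.ε / 2 * ∫ τ in (0:ℝ)..s, S.Wt N R (fun s x => S.ux s x ^ 2) τ ≤ C := by
  set n : ℕ := 8 + ⌈1 / B.θ⌉₊ with hn
  have hθ := B.hθ
  have hn1 : 1 ≤ ((n:ℝ) + 1) * B.θ := by
    have h1 : 1 / B.θ ≤ ⌈1 / B.θ⌉₊ := Nat.le_ceil _
    have h2 : 1 / B.θ ≤ (n:ℝ) + 1 := by rw [hn]; push_cast; linarith
    rwa [div_le_iff₀ hθ] at h2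
  obtain ⟨Cd, hCd, hst⟩ := comb_step B (n := n) (by omega) hn1
  refine ⟨n + 4, 3 * Cd, by omega, by linarith, fun S => ?_⟩
  obtain ⟨R0, δ, hR0, hδ, h⟩ := hst S
  obtain ⟨C, hC, h1⟩ := S.step1 (n := n) (by omega) (δ := δ / 4) (by positivity)
  set R1 := R0 + (2 * (4 / 3 * Cd + C) / δ) ^ 2 with hR1
  have hRR : ∀ R, R1 ≤ R → R0 ≤ R ∧ 1 ≤ R ∧ 4 / 3 * Cd + C ≤ δ / 2 * Real.sqrt R := fun R hR => by
    have t : 0 ≤ (2 * (4 / 3 * Cd + C) / δ) ^ 2 := by positivity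
    refine ⟨by linarith, by linarith, ?_⟩
    have : 2 * (4 / 3 * Cd + C) / δ ≤ Real.sqrt R := Real.le_sqrt_of_sq_le (by linarith)
    rw [div_le_iff₀ hδ] at this
    linarith
  have hit : ∀ m : ℕ, ∀ R, R1 ≤ R →
      S.EB (n + 4) R (4 / 3 * Cd + (C + δ / 4 * Real.sqrt R) * (1 / 2) ^ m) := by
    intro m
    induction m with
    | zero =>
      intro R hR s hs
      refine (h1 R (hRR R hR).2.1 s hs).trans ?_
      simp only [pow_zero, mul_one]
      linarith
    | succ m ih =>
      intro R hR
      obtain ⟨r1, r2, r3⟩ := hRR R hR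
      have hb := ih (2 * R) (by linarith)
      have hsq : Real.sqrt R ^ 2 = R := Real.sq_sqrt (by linarith)
      have hs0 := Real.sqrt_nonneg R
      have h2 : Real.sqrt (2 * R) ≤ 2 * Real.sqrt R := by
        rw [Real.sqrt_le_left (by positivity), mul_pow, hsq]; linarith
      have hq : (1 / 2 : ℝ) ^ m ≤ 1 := pow_le_one₀ (by norm_num) (by norm_num)
      have hq0 : (0 : ℝ) < (1 / 2 : ℝ) ^ m := by positivity
      set G := 4 / 3 * Cd + (C + δ / 4 * (2 * Real.sqrt R)) * (1 / 2) ^ m with hG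
      have hb' : S.EB (n + 4) (2 * R) G := fun s hs => (hb s hs).trans (by rw [hG]; gcongr)
      have hG1 : 1 ≤ G := by
        have : 0 ≤ (C + δ / 4 * (2 * Real.sqrt R)) * (1 / 2) ^ m := by positivity
        linarith
      have hG2 : G ≤ δ * Real.sqrt R := by
        have : (C + δ / 4 * (2 * Real.sqrt R)) * (1 / 2) ^ m
          ≤ (C + δ / 4 * (2 * Real.sqrt R)) * 1 := by gcongr
        linarith
      have hE := (h R G r1 hG1 hG2 hb').2
      intro s hs
      refine (hE s hs).trans ?_
      rw [hG, pow_succ]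
      have : 0 ≤ C * (1 / 2) ^ m := by positivity
      linarith
  have hlim : ∀ R, R1 ≤ R → S.EB (n + 4) R (4 / 3 * Cd) := fun R hR s hs => by
    have ht : Tendsto (fun m : ℕ => 4 / 3 * Cd + (C + δ / 4 * Real.sqrt R) * (1 / 2 : ℝ) ^ m)
        atTop (nhds (4 / 3 * Cd + (C + δ / 4 * Real.sqrt R) * 0)) :=
      ((tendsto_pow_atTop_nhds_zero_of_lt_one (by norm_num) (by norm_num)).const_mul _).const_add _
    rw [mul_zero, add_zero] at ht
    exact ge_of_tendsto' ht (fun m => hit m R hR s hs)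
  refine ⟨R1, hR0.trans (by have : 0 ≤ (2 * (4 / 3 * Cd + C) / δ) ^ 2 := by positivity
                            linarith), fun R hR => ?_⟩
  obtain ⟨r1, r2, r3⟩ := hRR R hR
  have hE := h R (4 / 3 * Cd) r1 (by linarith) (by
    have : 0 ≤ δ / 2 * Real.sqrt R := by positivity
    linarith) (hlim (2 * R) (by linarith))
  exact ⟨fun s hs => (hlim R hR s hs).trans (by linarith),
    fun s hs => (hE.1 s hs).trans (by linarith)⟩

end NSHI

/-! ### Uniform local energy bounds and their direct consequences -/

namespace NSHI

lemma contII {G : ℝ → ℝ → ℝ} (cG : Continuous (fun z : ℝ × ℝ => G z.1 z.2)) (a b : ℝ) :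
    Continuous (fun s => ∫ x in a..b, G s x) :=
  intervalIntegral.continuous_parametric_intervalIntegral_of_continuous' cG a b

lemma contx {G : ℝ → ℝ → ℝ} (cG : Continuous (fun z : ℝ × ℝ => G z.1 z.2)) (s : ℝ) :
    Continuous (fun x => G s x) := cG.comp (by fun_prop : Continuous (fun x : ℝ => (s, x)))

/-- Uniform local energy bounds, with a constant depending on the data only. -/
lemma key_prop (B : Bg) : ∃ C : ℝ, 1 ≤ C ∧ ∀ (S : Sol B) (a b : ℝ), a ≤ b →
    (∀ s ∈ Icc 0 B.T, ∫ x in a..b, S.MF s x ≤ C) ∧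
    (∀ s ∈ Icc 0 B.T, ∫ x in a..b, S.BF s x ≤ C) ∧
    S.ε * (∫ s in (0:ℝ)..B.T, ∫ x in a..b, S.ux s x ^ 2) ≤ C ∧
    S.ε * (∫ s in (0:ℝ)..B.T, ∫ x in a..b, S.rx s x ^ 2) ≤ C := by
  obtain ⟨N, C, hN, hC, h⟩ := energy_bounds B
  set q : ℝ := (4 / 3) ^ N with hq
  have hq1 : 1 ≤ q := one_le_pow₀ (by norm_num)
  refine ⟨2 * (q * C), by nlinarith, fun S a b hab => ?_⟩
  obtain ⟨R0, hR0, hR⟩ := h S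
  have hT := B.hT
  have hε := S.hε
  obtain ⟨K, hK⟩ := ((isCompact_Icc (a := (0:ℝ)) (b := B.T)).prod
    (isCompact_Icc (a := a) (b := b))).exists_bound_of_continuousOn S.cY.continuousOn
  set R := R0 + |K| with hRdef
  have hRp : 0 < R := by positivity
  have hY : ∀ s ∈ Icc 0 B.T, ∀ x ∈ Icc a b, |S.Y s x| ≤ R := fun s hs x hx => by
    have := hK (s, x) ⟨hs, hx⟩
    rw [Real.norm_eq_abs] at this
    simp only at this
    linarith [le_abs_self K]
  obtain ⟨hB, hM⟩ := hR (2 * R) (by linarith [abs_nonneg K])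
  have hqC : 0 < q * C := by positivity
  have h2R : 0 < 2 * R := by positivity
  have hux0 : ∀ s ∈ Icc 0 B.T,
      0 ≤ S.ε / 2 * ∫ τ in (0:ℝ)..s, S.Wt N (2 * R) (fun s x => S.ux s x ^ 2) τ := fun s hs =>
    mul_nonneg (half_pos hε).le (intervalIntegral.integral_nonneg hs.1
      (fun _ _ => S.Wt_nonneg (fun _ => sq_nonneg _)))
  have hrx0 : ∀ s ∈ Icc 0 B.T,
      0 ≤ S.ε * ∫ τ in (0:ℝ)..s, S.Wt N (2 * R) (fun s x => S.rx s x ^ 2) τ := fun s hs =>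
    mul_nonneg hε.le (intervalIntegral.integral_nonneg hs.1
      (fun _ _ => S.Wt_nonneg (fun _ => sq_nonneg _)))
  refine ⟨fun s hs => ?_, fun s hs => ?_, ?_, ?_⟩
  · have h1 := S.int_le_Wt hN hRp S.cMF hab (S.MF_nonneg s) (hY s hs)
    have h2 : S.Wt N (2 * R) S.MF s ≤ C := by linarith [hM s hs, hux0 s hs]
    have : q * S.Wt N (2 * R) S.MF s ≤ q * C := by gcongr
    linarith
  · have h1 := S.int_le_Wt hN hRp S.cBF hab (S.BF_nonneg s) (hY s hs)
    have h2 : S.Wt N (2 * R) S.BF s ≤ C := by linarith [hB s hs, hrx0 s hs]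
    have : q * S.Wt N (2 * R) S.BF s ≤ q * C := by gcongr
    linarith
  · have cu : Continuous (fun z : ℝ × ℝ => S.ux z.1 z.2 ^ 2) := by fun_prop
    have h1 := tle1 hT.le (contII cu a b) (S.Wt_cont hN h2R cu) q (fun s hs =>
      S.int_le_Wt hN hRp cu hab (fun x => sq_nonneg _) (hY s hs))
    have h2 := hM B.T ⟨hT.le, le_rfl⟩
    have h3 : 0 ≤ S.Wt N (2 * R) S.MF B.T := S.Wt_nonneg (S.MF_nonneg _)
    have h4 := mul_le_mul_of_nonneg_left h1 hε.le
    have h5 : q * (S.ε / 2 * ∫ τ in (0:ℝ)..B.T, S.Wt N (2 * R) (fun s x => S.ux s x ^ 2) τ)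
        ≤ q * C := by gcongr; linarith
    linarith
  · have cu : Continuous (fun z : ℝ × ℝ => S.rx z.1 z.2 ^ 2) := by fun_prop
    have h1 := tle1 hT.le (contII cu a b) (S.Wt_cont hN h2R cu) q (fun s hs =>
      S.int_le_Wt hN hRp cu hab (fun x => sq_nonneg _) (hY s hs))
    have h2 := hB B.T ⟨hT.le, le_rfl⟩
    have h3 : 0 ≤ S.Wt N (2 * R) S.BF B.T := S.Wt_nonneg (S.BF_nonneg _)
    have h4 := mul_le_mul_of_nonneg_left h1 hε.le
    have h5 : q * (S.ε * ∫ τ in (0:ℝ)..B.T, S.Wt N (2 * R) (fun s x => S.rx s x ^ 2) τ)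
        ≤ q * C := by gcongr; linarith
    linarith

/-- On an interval of length at least `l0` some point is neither near vacuum nor carries large
density or velocity. -/
lemma good_pt (B : Bg) : ∃ l0 Cg : ℝ, 1 ≤ l0 ∧ 1 ≤ Cg ∧ ∀ (S : Sol B) (a b s : ℝ),
    s ∈ Icc 0 B.T → l0 ≤ b - a → ∃ x ∈ Icc a b, |S.u s x| ≤ Cg ∧ S.r s x ≤ Cg := by
  obtain ⟨C, hC, h⟩ := key_prop B
  obtain ⟨c, hc, hv⟩ := B.Ψ_vacuum
  obtain ⟨Ca, hCa, haf⟩ := B.Ψ_affine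
  have hm := B.hm
  have hr0 : 0 ≤ (Ca * (1 + c / 2)) ^ B.θ := by positivity
  refine ⟨1 + 2 * C / c, 1 + 2 * c / B.m + (Ca * (1 + c / 2)) ^ B.θ, by
    have : 0 ≤ 2 * C / c := by positivity
    linarith, by
    have : 0 ≤ 2 * c / B.m := by positivity
    linarith, fun S a b s hs hab => ?_⟩
  have hl : 0 < 2 * C / c := by positivity
  have hab' : a ≤ b := by linarith
  have hI := (h S a b hab').1 s hs
  have hex : ∃ x ∈ Icc a b, S.MF s x ≤ c / 2 := by
    by_contra hcon
    push Not at hcon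
    have h1 := tle1 hab' (continuous_const (y := c / 2)) (contx S.cMF s) 1
      (fun x hx => by rw [one_mul]; exact (hcon x hx).le)
    simp only [intervalIntegral.integral_const, smul_eq_mul, one_mul] at h1
    have h2 : 2 * C / c * (c / 2) = C := by field_simp
    have : (2 * C / c + 1) * (c / 2) ≤ (b - a) * (c / 2) := by gcongr; linarith
    linarith
  obtain ⟨x, hx, hMx⟩ := hex
  have hρ := S.pos s x
  have hΨ : S.Psi s x ≤ c / 2 := (S.MF_Psi s x).trans hMx
  have hρm : B.m / 2 ≤ S.ρ s x := by
    by_contra hcon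
    have : c ≤ S.Psi s x := hv x _ hρ (not_le.mp hcon).le
    linarith
  have hρC : S.ρ s x ≤ Ca * (1 + c / 2) := by
    have : S.ρ s x ≤ Ca * (1 + S.Psi s x) := (haf x _ hρ).1
    exact this.trans (by gcongr)
  refine ⟨x, hx, ?_, ?_⟩
  · have h1 := S.MF_u s x
    have h2 : B.m / 2 * S.u s x ^ 2 ≤ c := by
      have : B.m / 2 * S.u s x ^ 2 ≤ S.ρ s x * S.u s x ^ 2 := by gcongr
      linarith
    have h3 : S.u s x ^ 2 ≤ 2 * c / B.m := by
      rw [le_div_iff₀ hm]; linarith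
    have h4 : |S.u s x| ≤ 1 + S.u s x ^ 2 := by
      rw [← sq_abs]; nlinarith [sq_nonneg (|S.u s x| - 1)]
    linarith
  · have : S.r s x ≤ (Ca * (1 + c / 2)) ^ B.θ := Real.rpow_le_rpow hρ.le hρC B.hθ.le
    have : 0 ≤ 2 * c / B.m := by positivity
    linarith

/-- Pointwise control of `u` and `ρ^θ` on an interval by integrals of their derivatives. -/
lemma sup_bounds (B : Bg) : ∃ l0 Cg : ℝ, 1 ≤ l0 ∧ 1 ≤ Cg ∧ ∀ (S : Sol B) (a b s : ℝ),
    s ∈ Icc 0 B.T → l0 ≤ b - a → ∀ x ∈ Icc a b,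
    |S.u s x| ≤ Cg + (∫ y in a..b, |S.ux s y|) ∧ S.r s x ≤ Cg + ∫ y in a..b, |S.rx s y| := by
  obtain ⟨l0, Cg, h1, h2, h⟩ := good_pt B
  refine ⟨l0, Cg, h1, h2, fun S a b s hs hab x hx => ?_⟩
  obtain ⟨x0, hx0, hu, hr⟩ := h S a b s hs hab
  have o1 := osc_le (G := fun y => |S.ux s y|) (S.u_x s) (by fun_prop) (by fun_prop)
    (fun z _ => le_rfl) hx hx0
  have o2 := osc_le (G := fun y => |S.rx s y|) (S.r_x s) (by fun_prop) (by fun_prop)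
    (fun z _ => le_rfl) hx hx0
  constructor
  · have := abs_sub_abs_le_abs_sub (S.u s x) (S.u s x0)
    linarith
  · have := le_abs_self (S.r s x - S.r s x0)
    linarith

lemma int_sq_le {f : ℝ → ℝ} (cf : Continuous f) {a b : ℝ} (hab : a ≤ b) :
    ∫ y in a..b, |f y| ≤ (b - a) + ∫ y in a..b, f y ^ 2 := by
  have := tle2 hab (f := fun y => |f y|) (by fun_prop) (continuous_const (y := (1:ℝ)))
    (g2 := fun y => f y ^ 2) (by fun_prop) 1 1 (fun x _ => by
      rw [← sq_abs (f x)]; nlinarith [sq_nonneg (|f x| - 1)])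
  simpa using this

/-- A length beyond which every interval contains a point of moderate velocity and density. -/
noncomputable def Bg.l0 (B : Bg) : ℝ := (sup_bounds B).choose

lemma Bg.l0_ge (B : Bg) : 1 ≤ B.l0 := by
  obtain ⟨Cg, h1, h2, h⟩ := (sup_bounds B).choose_spec
  exact h1

/-- Squares of the pointwise bounds, linear in the dissipation. -/
lemma sup_sq_bounds (B : Bg) (l : ℝ) : ∃ C : ℝ, 0 < C ∧
    ∀ (S : Sol B) (a b s : ℝ),
    s ∈ Icc 0 B.T → B.l0 ≤ b - a → b - a ≤ l → ∀ x ∈ Icc a b,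
    S.u s x ^ 2 ≤ C * (1 + ∫ y in a..b, S.ux s y ^ 2) ∧
    S.r s x ^ 2 ≤ C * (1 + ∫ y in a..b, S.rx s y ^ 2) := by
  obtain ⟨Cg, h1, h2, h⟩ := (sup_bounds B).choose_spec
  refine ⟨2 * Cg ^ 2 + 2 * |l| , by positivity, fun S a b s hs hab hl x hx => ?_⟩
  have hab' : a ≤ b := by linarith [B.l0_ge]
  have cs : ∀ f : ℝ → ℝ, Continuous f → (∫ y in a..b, |f y|) ^ 2
      ≤ |l| * ∫ y in a..b, f y ^ 2 := fun f cf => by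
    have h3 := cauchy_schwarz hab' (f := fun y => |f y|) (g := fun _ => 1) (by fun_prop)
      (by fun_prop)
    simp only [mul_one, sq_abs, one_pow, intervalIntegral.integral_const, smul_eq_mul] at h3
    have h4 : 0 ≤ ∫ y in a..b, f y ^ 2 :=
      intervalIntegral.integral_nonneg hab' (fun _ _ => sq_nonneg _)
    have h5 : b - a ≤ |l| := hl.trans (le_abs_self l)
    nlinarith
  have fin : ∀ z I J : ℝ, 0 ≤ z → 0 ≤ I → 0 ≤ J → z ≤ Cg + I → I ^ 2 ≤ |l| * J →
      z ^ 2 ≤ (2 * Cg ^ 2 + 2 * |l|) * (1 + J) := fun z I J hz hI hJ hzI hIJ => by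
    have k1 : z ^ 2 ≤ (Cg + I) ^ 2 := by gcongr
    have k2 : (Cg + I) ^ 2 ≤ 2 * Cg ^ 2 + 2 * I ^ 2 := by nlinarith [sq_nonneg (Cg - I)]
    have k3 : 0 ≤ 2 * Cg ^ 2 * J := by positivity
    have k4 := abs_nonneg l
    nlinarith
  obtain ⟨e1, e2⟩ := h S a b s hs hab x hx
  constructor
  · rw [← sq_abs]
    exact fin _ _ _ (abs_nonneg _)
      (intervalIntegral.integral_nonneg hab' (fun _ _ => abs_nonneg _))
      (intervalIntegral.integral_nonneg hab' (fun _ _ => sq_nonneg _)) e1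
      (cs (fun y => S.ux s y) (by fun_prop))
  · exact fin _ _ _ (S.r_pos s x).le
      (intervalIntegral.integral_nonneg hab' (fun _ _ => abs_nonneg _))
      (intervalIntegral.integral_nonneg hab' (fun _ _ => sq_nonneg _)) e2
      (cs (fun y => S.rx s y) (by fun_prop))

/-- Local bounds, for fixed time, of the lower-order quantities. -/
lemma low_order (B : Bg) (l : ℝ) : ∃ C : ℝ, 1 ≤ C ∧ ∀ (S : Sol B) (a b s : ℝ),
    s ∈ Icc 0 B.T → a ≤ b → b - a ≤ l →
    (∫ x in a..b, S.ρ s x ≤ C) ∧ (∫ x in a..b, S.ρ s x * S.u s x ^ 2 ≤ C) ∧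
    (∫ x in a..b, S.ρ s x * S.r s x ^ 2 ≤ C) ∧ (∫ x in a..b, S.ρ s x * |S.u s x| ≤ C) := by
  obtain ⟨C, hC, h⟩ := key_prop B
  obtain ⟨Ca, hCa, haf⟩ := B.Ψ_affine
  have hκ := B.κ_pos
  set K := Ca * (|l| + C) with hK
  have hK0 : 0 < K := by positivity
  refine ⟨1 + K + K / B.κ + 2 * C, by
    have : 0 ≤ K + K / B.κ + 2 * C := by positivity
    linarith, fun S a b s hs hab hl => ?_⟩
  have hM := (h S a b hab).1 s hs
  have hl' : b - a ≤ |l| := hl.trans (le_abs_self l)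
  have hKκ : 0 < K / B.κ := by positivity
  have cM := contx S.cMF s
  have i1 : ∫ x in a..b, S.ρ s x ≤ K := by
    have := tle2 hab (f := fun x => S.ρ s x) (by fun_prop) (continuous_const (y := (1:ℝ))) cM Ca Ca
      (fun x _ => by
        have h1 : S.ρ s x ≤ Ca * (1 + S.Psi s x) := (haf x _ (S.pos s x)).1
        have h2 : Ca * (1 + S.Psi s x) ≤ Ca * (1 + S.MF s x) := by gcongr; exact S.MF_Psi s x
        linarith)
    simp only [intervalIntegral.integral_const, smul_eq_mul, mul_one] at this
    have h3 : Ca * (b - a) + Ca * (∫ x in a..b, S.MF s x) ≤ Ca * |l| + Ca * C := by gcongr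
    rw [hK]; linarith
  have i2 : ∫ x in a..b, S.ρ s x * S.u s x ^ 2 ≤ 2 * C := by
    have := tle1 hab (f := fun x => S.ρ s x * S.u s x ^ 2) (by fun_prop) cM 2
      (fun x _ => S.MF_u s x)
    linarith
  have i3 : ∫ x in a..b, S.ρ s x * S.r s x ^ 2 ≤ K / B.κ := by
    have := tle2 hab (f := fun x => S.ρ s x * S.r s x ^ 2) (by fun_prop)
      (continuous_const (y := (1:ℝ))) cM (Ca / B.κ) (Ca / B.κ)
      (fun x _ => by
        have h1 : B.κ * (S.ρ s x * S.r s x ^ 2) ≤ Ca * (1 + S.Psi s x) := (haf x _ (S.pos s x)).2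
        have h2 : Ca * (1 + S.Psi s x) ≤ Ca * (1 + S.MF s x) := by gcongr; exact S.MF_Psi s x
        have h3 : Ca / B.κ * 1 + Ca / B.κ * S.MF s x = Ca * (1 + S.MF s x) / B.κ := by ring
        rw [h3, le_div_iff₀ hκ]; linarith)
    simp only [intervalIntegral.integral_const, smul_eq_mul, mul_one] at this
    have h3 : Ca / B.κ * (b - a) + Ca / B.κ * (∫ x in a..b, S.MF s x)
      ≤ Ca / B.κ * |l| + Ca / B.κ * C := by gcongr
    have e : K / B.κ = Ca / B.κ * |l| + Ca / B.κ * C := by rw [hK]; ring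
    rw [e]; linarith
  have i4 : ∫ x in a..b, S.ρ s x * |S.u s x| ≤ K + 2 * C := by
    have := tle2 hab (f := fun x => S.ρ s x * |S.u s x|) (by fun_prop)
      (g1 := fun x => S.ρ s x) (by fun_prop)
      (g2 := fun x => S.ρ s x * S.u s x ^ 2) (by fun_prop) 1 1
      (fun x _ => by
        have := S.pos s x
        have h1 : |S.u s x| ≤ 1 + S.u s x ^ 2 := by
          rw [← sq_abs]; nlinarith [sq_nonneg (|S.u s x| - 1)]
        nlinarith)
    linarith
  refine ⟨by linarith, by linarith, by linarith, by linarith⟩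

/-- On a window of bounded length with bounded unweighted dissipation, the cubic quantities are
bounded. -/
lemma cubic_loc (B : Bg) (l Q : ℝ) : ∃ C : ℝ, 0 < C ∧ ∀ (S : Sol B) (a b : ℝ),
    B.l0 ≤ b - a → b - a ≤ l →
    (∫ s in (0:ℝ)..B.T, ∫ x in a..b, S.ux s x ^ 2) ≤ Q →
    (∫ s in (0:ℝ)..B.T, ∫ x in a..b, S.rx s x ^ 2) ≤ Q →
    ∫ s in (0:ℝ)..B.T, ∫ x in a..b, S.ρ s x * (|S.u s x| ^ 3 + S.r s x ^ 3) ≤ C := by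
  obtain ⟨Cg, hl0, hCg, hsup⟩ := (sup_bounds B).choose_spec
  obtain ⟨Cl, hCl, hlow⟩ := low_order B l
  have hT := B.hT
  refine ⟨Cl * (2 * (Cg + |l|) * B.T + 2 * |Q|) + 1, by positivity,
    fun S a b hab hbl hu hr => ?_⟩
  have hab' : a ≤ b := by linarith [B.l0_ge]
  have hl' : b - a ≤ |l| := hbl.trans (le_abs_self l)
  have cu : Continuous (fun z : ℝ × ℝ => S.ux z.1 z.2 ^ 2) := by fun_prop
  have cr : Continuous (fun z : ℝ × ℝ => S.rx z.1 z.2 ^ 2) := by fun_prop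
  have cub : Continuous (fun z : ℝ × ℝ =>
    S.ρ z.1 z.2 * (|S.u z.1 z.2| ^ 3 + S.r z.1 z.2 ^ 3)) := by fun_prop
  have key := tle3 hT.le
    (f := fun s => ∫ x in a..b, S.ρ s x * (|S.u s x| ^ 3 + S.r s x ^ 3)) (contII cub a b)
    (continuous_const (y := (1:ℝ)))
    (g2 := fun s => ∫ x in a..b, S.ux s x ^ 2) (contII cu a b)
    (g3 := fun s => ∫ x in a..b, S.rx s x ^ 2) (contII cr a b) (2 * Cl * (Cg + |l|)) Cl Cl (fun s hs => by
      obtain ⟨-, l2, l3, -⟩ := hlow S a b s hs hab' hbl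
      have u2 := int_sq_le (f := fun y => S.ux s y) (by fun_prop) hab'
      have r2 := int_sq_le (f := fun y => S.rx s y) (by fun_prop) hab'
      set U := Cg + |l| + ∫ y in a..b, S.ux s y ^ 2 with hU
      set V := Cg + |l| + ∫ y in a..b, S.rx s y ^ 2 with hV
      have hU0 : 0 ≤ U := by
        have : 0 ≤ ∫ y in a..b, S.ux s y ^ 2 :=
          intervalIntegral.integral_nonneg hab' (fun _ _ => sq_nonneg _)
        positivity
      have hV0 : 0 ≤ V := by
        have : 0 ≤ ∫ y in a..b, S.rx s y ^ 2 :=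
          intervalIntegral.integral_nonneg hab' (fun _ _ => sq_nonneg _)
        positivity
      have h1 := tle2 hab' (f := fun x => S.ρ s x * (|S.u s x| ^ 3 + S.r s x ^ 3)) (by fun_prop)
        (g1 := fun x => S.ρ s x * S.u s x ^ 2) (by fun_prop)
        (g2 := fun x => S.ρ s x * S.r s x ^ 2) (by fun_prop) U V (fun x hx => by
          obtain ⟨e1, e2⟩ := hsup S a b s hs hab x hx
          have hρ := S.pos s x
          have hrp := S.r_pos s x
          have k1 : |S.u s x| ≤ U := by linarith
          have k2 : S.r s x ≤ V := by linarith
          have k3 : |S.u s x| * (S.ρ s x * |S.u s x| ^ 2) ≤ U * (S.ρ s x * |S.u s x| ^ 2) := by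
            gcongr
          have k4 : S.r s x * (S.ρ s x * S.r s x ^ 2) ≤ V * (S.ρ s x * S.r s x ^ 2) := by gcongr
          rw [sq_abs] at k3
          have k5 : |S.u s x| ^ 3 = |S.u s x| * S.u s x ^ 2 := by rw [← sq_abs]; ring
          rw [k5]
          linarith)
      have h2 : U * (∫ x in a..b, S.ρ s x * S.u s x ^ 2) ≤ U * Cl := by gcongr
      have h3 : V * (∫ x in a..b, S.ρ s x * S.r s x ^ 2) ≤ V * Cl := by gcongr
      have h4 : U * Cl + V * Cl = 2 * Cl * (Cg + |l|) * 1 + Cl * (∫ y in a..b, S.ux s y ^ 2)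
          + Cl * (∫ y in a..b, S.rx s y ^ 2) := by rw [hU, hV]; ring
      linarith)
  simp only [intervalIntegral.integral_const, smul_eq_mul, mul_one, sub_zero] at key
  have h1 : Cl * (∫ s in (0:ℝ)..B.T, ∫ x in a..b, S.ux s x ^ 2) ≤ Cl * |Q| := by
    gcongr; exact hu.trans (le_abs_self Q)
  have h2 : Cl * (∫ s in (0:ℝ)..B.T, ∫ x in a..b, S.rx s x ^ 2) ≤ Cl * |Q| := by
    gcongr; exact hr.trans (le_abs_self Q)
  linarith

/-- Large viscosity: the density is bounded on a window of bounded length. -/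
lemma dens_large (B : Bg) (l : ℝ) : ∃ C : ℝ, 0 < C ∧ ∀ (S : Sol B) (a b : ℝ),
    1 ≤ S.ε → B.l0 ≤ b - a → b - a ≤ l →
    ∫ s in (0:ℝ)..B.T, ∫ x in a..b, S.ρ s x * (S.ρ s x * S.r s x ^ 2) ≤ C := by
  obtain ⟨Cg, hl0, hCg, hsup⟩ := (sup_bounds B).choose_spec
  obtain ⟨Cl, hCl, hlow⟩ := low_order B l
  obtain ⟨C1, hC1, hkey⟩ := key_prop B
  have hT := B.hT
  have hθ := B.hθ
  set V := Cg + B.θ * (8 * C1 + Cl) with hV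
  have hV0 : 0 < V := by positivity
  refine ⟨V ^ (1 / B.θ) * Cl * B.T + 1, by positivity, fun S a b hε hab hbl => ?_⟩
  have hab' : a ≤ b := by linarith [B.l0_ge]
  have cG : Continuous (fun z : ℝ × ℝ => S.ρ z.1 z.2 * (S.ρ z.1 z.2 * S.r z.1 z.2 ^ 2)) := by
    fun_prop
  have key := tle1 hT.le (contII cG a b) (continuous_const (y := (1:ℝ))) (V ^ (1 / B.θ) * Cl)
    (fun s hs => by
      obtain ⟨-, -, l3, -⟩ := hlow S a b s hs hab' hbl
      have hM := (hkey S a b hab').1 s hs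
      have hB := (hkey S a b hab').2.1 s hs
      have cM := contx S.cMF s
      have cB := contx S.cBF s
      have hI := tle3 hab' (f := fun x => |S.rx s x|) (by fun_prop) cB cM
        (g3 := fun x => S.ρ s x * S.r s x ^ 2) (by fun_prop) (4 * B.θ) (4 * B.θ) B.θ (fun x _ => by
          have hρ := S.pos s x
          have hr := S.r_pos s x
          have e1 : S.ρ s x * (S.w s x - S.u s x) ^ 2 = S.ε ^ 2 * (S.ρx s x ^ 2 / S.ρ s x ^ 3) := by
            unfold Sol.w; field_simp; ring
          have e2 : S.ρ s x * (S.w s x - S.u s x) ^ 2 ≤ 4 * S.BF s x + 4 * S.MF s x := by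
            have h1 := S.BF_w s x
            have h2 := S.MF_u s x
            nlinarith [mul_nonneg hρ.le (sq_nonneg (S.w s x + S.u s x))]
          have e3 : S.ρx s x ^ 2 / S.ρ s x ^ 3 ≤ 4 * S.BF s x + 4 * S.MF s x := by
            have : 0 ≤ S.ρx s x ^ 2 / S.ρ s x ^ 3 := by positivity
            have : 1 ≤ S.ε ^ 2 := one_le_pow₀ hε
            nlinarith
          have e4 : |S.rx s x| ≤ B.θ * (S.ρx s x ^ 2 / S.ρ s x ^ 3 + S.ρ s x * S.r s x ^ 2) := by
            unfold Sol.rx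
            rw [abs_div, abs_mul, abs_mul, abs_of_pos hθ, abs_of_pos hr, abs_of_pos hρ,
              ← sq_abs (S.ρx s x)]
            rw [mul_assoc, mul_div_assoc]
            gcongr
            rw [div_add' _ _ _ (by positivity), div_le_div_iff₀ hρ (by positivity)]
            have : 0 ≤ S.ρ s x * (|S.ρx s x| - S.r s x * S.ρ s x ^ 2) ^ 2 := by positivity
            have : 0 ≤ S.ρ s x * (S.r s x * |S.ρx s x| * S.ρ s x ^ 2) := by positivity
            nlinarith
          have e5 : B.θ * (S.ρx s x ^ 2 / S.ρ s x ^ 3 + S.ρ s x * S.r s x ^ 2)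
            ≤ B.θ * (4 * S.BF s x + 4 * S.MF s x + S.ρ s x * S.r s x ^ 2) := by gcongr
          linarith)
      have hI2 : ∫ x in a..b, |S.rx s x| ≤ B.θ * (8 * C1 + Cl) := by
        refine hI.trans ?_
        have : 4 * B.θ * (∫ x in a..b, S.BF s x) + 4 * B.θ * (∫ x in a..b, S.MF s x)
          + B.θ * (∫ x in a..b, S.ρ s x * S.r s x ^ 2) ≤ 4 * B.θ * C1 + 4 * B.θ * C1 + B.θ * Cl := by
          gcongr
        linarith
      have h1 := tle1 hab' (f := fun x => S.ρ s x * (S.ρ s x * S.r s x ^ 2)) (by fun_prop)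
        (g1 := fun x => S.ρ s x * S.r s x ^ 2) (by fun_prop) (V ^ (1 / B.θ)) (fun x hx => by
          have hρ := S.pos s x
          have e2 := (hsup S a b s hs hab x hx).2
          have e3 : S.ρ s x ^ B.θ ≤ V := by
            change S.r s x ≤ V
            linarith
          have e4 : S.ρ s x ≤ V ^ (1 / B.θ) := by
            have := Real.rpow_le_rpow (by positivity) e3 (by positivity : 0 ≤ 1 / B.θ)
            rwa [← Real.rpow_mul hρ.le, mul_one_div_cancel hθ.ne', Real.rpow_one] at this
          gcongr)
      have h2 : V ^ (1 / B.θ) * (∫ x in a..b, S.ρ s x * S.r s x ^ 2) ≤ V ^ (1 / B.θ) * Cl := by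
        gcongr
      linarith)
  simp only [intervalIntegral.integral_const, smul_eq_mul, mul_one, sub_zero] at key
  linarith

end NSHI

/-! ### Local integrability of the higher power of the density -/

namespace NSHI

lemma int_eq_interval {G : ℝ → ℝ} {R : ℝ} (h : ∀ x, R ≤ |x| → G x = 0) :
    ∫ x, G x = ∫ x in (-R)..R, G x := by
  symm
  apply intervalIntegral.integral_eq_integral_of_support_subset
  intro x hx
  have h1 : |x| < R := by
    by_contra h2
    exact hx (h x (not_lt.mp h2))
  exact ⟨(abs_lt.mp h1).1, (abs_lt.mp h1).2.le⟩

lemma ck_bump {k : ℕ} (hk : 1 ≤ k) {R : ℝ} (hR : 0 < R) : CK (fun _ x => bump R x ^ k) :=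
  ⟨by fun_prop, R, fun s x hx => by beta_reduce; rw [bump_zero hR hx, zero_pow (by omega)]⟩

lemma ck_dcut {k : ℕ} (hk : 2 ≤ k) {R : ℝ} (hR : 0 < R) : CK (fun _ x => dcut k R x) :=
  ⟨by fun_prop, R, fun s x hx => by
    unfold dcut; beta_reduce; rw [bump_zero hR hx, zero_pow (by omega)]; simp⟩

lemma abs_dcut4_le {R : ℝ} (hR : 0 < R) (y : ℝ) : |dcut 4 R y| ≤ 8 / R := by
  have h := abs_dcut_le (k := 4) (by norm_num) hR y
  have h1 : bump R y ^ (4 - 1) ≤ 1 := pow_le_one₀ (bump_nonneg _ _) (bump_le_one _ _)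
  calc _ ≤ _ := h
    _ ≤ 2 * (4 : ℕ) / R * 1 := by gcongr
    _ = 8 / R := by push_cast; ring

lemma dcut4_out {R : ℝ} (hR : 0 < R) {y : ℝ} (h : R ≤ |y|) : dcut 4 R y = 0 := by
  unfold dcut; rw [bump_zero hR h]; simp

lemma bump4_out {R : ℝ} (hR : 0 < R) {y : ℝ} (h : R ≤ |y|) : bump R y ^ 4 = 0 := by
  rw [bump_zero hR h]; simp

lemma bumpZ_pos {R : ℝ} (hR : 0 < R) : 0 < ∫ x in (-R)..R, bump R x ^ 4 := by
  apply intervalIntegral.intervalIntegral_pos_of_pos_on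
    ((by fun_prop : Continuous fun x => bump R x ^ 4).intervalIntegrable _ _) _ (by linarith)
  intro x hx
  have : |x| < R := abs_lt.mpr hx
  have h1 : 0 < bump R x := by
    unfold bump
    apply lt_of_lt_of_le _ (le_max_right _ _)
    have : |x / R| < 1 := by rw [abs_div, abs_of_pos hR, div_lt_one hR]; exact this
    have := (sq_lt_one_iff_abs_lt_one (x / R)).mpr this
    linarith
  positivity

namespace Sol
variable {B : Bg} (S : Sol B)

/-- Spatial average of the momentum potential `A` against the cutoff `bump R ^ 4`. -/
noncomputable def cav (R s : ℝ) : ℝ := (∫ x, bump R x ^ 4 * S.A s x) / ∫ x in (-R)..R, bump R x ^ 4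

/-- Minus the time derivative of `Sol.cav`. -/
noncomputable def gav (R s : ℝ) : ℝ :=
  (∫ x, bump R x ^ 4 * (S.ρ s x * S.u s x ^ 2 + S.p s x - S.ε * S.ux s x))
    / ∫ x in (-R)..R, bump R x ^ 4

lemma cav_cont {R : ℝ} (hR : 0 < R) : Continuous (S.cav R) := by
  have := ((ck_bump (k := 4) (by norm_num) hR).mul (g := S.A) S.cA).contI
  unfold cav
  exact this.div_const _

lemma gav_cont {R : ℝ} (hR : 0 < R) : Continuous (S.gav R) := by
  have := ((ck_bump (k := 4) (by norm_num) hR).mul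
    (g := fun s x => S.ρ s x * S.u s x ^ 2 + S.p s x - S.ε * S.ux s x) (by fun_prop)).contI
  unfold gav
  exact this.div_const _

lemma cav_t {R : ℝ} (hR : 0 < R) {s : ℝ} (hs : s ∈ Ioo 0 B.T) :
    HasDerivAt (S.cav R) (-(S.gav R s)) s := by
  have ckA := (ck_bump (k := 4) (by norm_num) hR).mul (g := S.A) S.cA
  have ckG := ((ck_bump (k := 4) (by norm_num) hR).mul
    (g := fun s x => -(S.ρ s x * S.u s x ^ 2 + S.p s x - S.ε * S.ux s x)) (by fun_prop))
  have hg : ∀ s ∈ Icc 0 B.T, _ := fun s hs => green (T := B.T) (P := fun s x => bump R x ^ 4 * S.A s x) (Q := fun _ _ => 0)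
    (Pt := fun s x => bump R x ^ 4 * -(S.ρ s x * S.u s x ^ 2 + S.p s x - S.ε * S.ux s x))
    (Qx := fun _ _ => 0)
    (G := fun s x => bump R x ^ 4 * -(S.ρ s x * S.u s x ^ 2 + S.p s x - S.ε * S.ux s x))
    ckA ⟨continuous_const, 0, fun _ _ _ => rfl⟩ ckG ⟨continuous_const, 0, fun _ _ _ => rfl⟩
    (fun s _ x => by simp) (fun s hs x => (S.A_t s hs x).const_mul _)
    (fun s _ x => hasDerivAt_const _ _) (s := s) hs
  have h1 : HasDerivAt (fun s => (∫ x, bump R x ^ 4 * S.A 0 x) + ∫ τ in (0:ℝ)..s, ∫ x,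
      bump R x ^ 4 * -(S.ρ τ x * S.u τ x ^ 2 + S.p τ x - S.ε * S.ux τ x))
      (∫ x, bump R x ^ 4 * -(S.ρ s x * S.u s x ^ 2 + S.p s x - S.ε * S.ux s x)) s :=
    (intervalIntegral.integral_hasDerivAt_right (ckG.ii 0 s)
      (ckG.contI.stronglyMeasurableAtFilter _ _) ckG.contI.continuousAt).const_add _
  have h2 : HasDerivAt (fun s => ∫ x, bump R x ^ 4 * S.A s x)
      (∫ x, bump R x ^ 4 * -(S.ρ s x * S.u s x ^ 2 + S.p s x - S.ε * S.ux s x)) s := by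
    refine h1.congr_of_eventuallyEq ?_
    filter_upwards [isOpen_Ioo.mem_nhds hs] with τ hτ
    exact hg τ ⟨hτ.1.le, hτ.2.le⟩
  refine (h2.div_const _).congr_deriv ?_
  unfold gav
  rw [← neg_div, ← integral_neg]
  congr 2
  funext x
  ring

lemma A_cav_le {R : ℝ} (hR : 0 < R) {s D : ℝ} (hD : ∫ x in (-R)..R, S.ρ s x * |S.u s x| ≤ D)
    {x : ℝ} (hx : x ∈ Icc (-R) R) : |S.A s x - S.cav R s| ≤ D := by
  have hZ := bumpZ_pos hR
  set Z := ∫ x in (-R)..R, bump R x ^ 4 with hZd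
  have key : ∀ y ∈ Icc (-R) R, |S.A s x - S.A s y| ≤ D := fun y hy => by
    rw [S.A_sub s y x]
    refine le_trans ?_ hD
    refine (intervalIntegral.norm_integral_le_abs_integral_norm (μ := volume) (a := y) (b := x)
      (f := fun z => S.ρ s z * S.u s z)).trans ?_
    have c : Continuous (fun z => S.ρ s z * |S.u s z|) := by fun_prop
    have e : ∀ z, ‖S.ρ s z * S.u s z‖ = S.ρ s z * |S.u s z| := fun z => by
      rw [Real.norm_eq_abs, abs_mul, abs_of_pos (S.pos s z)]
    simp only [e]
    have h0 : ∀ z, 0 ≤ S.ρ s z * |S.u s z| := fun z =>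
      mul_nonneg (S.pos s z).le (abs_nonneg _)
    rcases le_total y x with h | h
    · rw [abs_of_nonneg (intervalIntegral.integral_nonneg h (fun z _ => h0 z))]
      exact t_mono c h0 hy.1 h hx.2
    · rw [intervalIntegral.integral_symm, abs_neg,
        abs_of_nonneg (intervalIntegral.integral_nonneg h (fun z _ => h0 z))]
      exact t_mono c h0 hx.1 h hy.2
  have hRR : -R ≤ R := by linarith
  have h1 : Z * (S.A s x - S.cav R s) = ∫ y in (-R)..R, bump R y ^ 4 * (S.A s x - S.A s y) := by
    have e1 : Z * S.cav R s = ∫ y in (-R)..R, bump R y ^ 4 * S.A s y := by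
      rw [← int_eq_interval (fun y hy => by rw [bump4_out hR hy, zero_mul])]
      unfold cav
      rw [← hZd]
      field_simp
    rw [mul_sub, e1, hZd, ← intervalIntegral.integral_mul_const, ← intervalIntegral.integral_sub]
    · congr 1; funext y; ring
    · exact (by fun_prop : Continuous _).intervalIntegrable _ _
    · exact (by fun_prop : Continuous _).intervalIntegrable _ _
  have h2 : |Z * (S.A s x - S.cav R s)| ≤ D * Z := by
    rw [h1]
    refine (intervalIntegral.abs_integral_le_integral_abs hRR).trans ?_
    refine tle1 hRR (by fun_prop) (by fun_prop) D (fun y hy => ?_)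
    rw [abs_mul, abs_of_nonneg (pow_nonneg (bump_nonneg R y) 4), mul_comm]
    exact mul_le_mul_of_nonneg_right (key y hy) (pow_nonneg (bump_nonneg R y) 4)
  rw [abs_mul, abs_of_pos hZ, mul_comm] at h2
  exact le_of_mul_le_mul_right h2 hZ

end Sol

/-- Small viscosity: local integrability of `ρ^(γ+1)`, obtained by testing the continuity equation
with the momentum potential `A` minus its local average. -/
lemma dens_small (B : Bg) {k : ℝ} (hk : 0 < k) : ∃ C : ℝ, 0 < C ∧ ∀ S : Sol B, S.ε ≤ 1 →
    ∫ s in (0:ℝ)..B.T, ∫ x in (-k)..k, S.ρ s x * (S.ρ s x * S.r s x ^ 2) ≤ C := by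
  set R := 2 * k with hRd
  have hR : 0 < R := by positivity
  have hRR : -R ≤ R := by linarith
  obtain ⟨D, hD, hlow⟩ := low_order B (2 * R)
  obtain ⟨C1, hC1, hkey⟩ := key_prop B
  have hT := B.hT
  have hθ := B.hθ
  have hκ := B.κ_pos
  have hZ := bumpZ_pos hR
  set Z := ∫ x in (-R)..R, bump R x ^ 4 with hZd
  -- The threshold `K` is such that `ρ² ≤ K ρ + ρ p / 2`.
  obtain ⟨K, hK0, hK⟩ : ∃ K : ℝ, 0 < K ∧ ∀ ρ : ℝ, 0 < ρ →
      ρ ^ 2 ≤ K * ρ + 1 / 2 * (ρ * (B.κ * (ρ * (ρ ^ B.θ) ^ 2))) := by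
    refine ⟨((2 / B.κ) + 1) ^ (1 / B.θ) + 1, by positivity, fun ρ hρ => ?_⟩
    set q := (2 / B.κ) + 1 with hq
    have hq1 : 1 ≤ q := by have : 0 < 2 / B.κ := by positivity
                           linarith
    have hr : 0 < ρ ^ B.θ := Real.rpow_pos_of_pos hρ _
    rcases le_total ρ (q ^ (1 / B.θ)) with h | h
    · have : 0 ≤ 1 / 2 * (ρ * (B.κ * (ρ * (ρ ^ B.θ) ^ 2))) := by positivity
      nlinarith
    · have h1 : q ≤ ρ ^ B.θ := by
        calc q = (q ^ (1 / B.θ)) ^ B.θ := by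
              rw [← Real.rpow_mul (by linarith), one_div, inv_mul_cancel₀ hθ.ne', Real.rpow_one]
          _ ≤ _ := Real.rpow_le_rpow (by positivity) h hθ.le
      have h2 : q ≤ (ρ ^ B.θ) ^ 2 := by nlinarith
      have h3 : 2 ≤ B.κ * (ρ ^ B.θ) ^ 2 := by
        have : B.κ * q = 2 + B.κ := by rw [hq]; field_simp
        nlinarith
      have h4 : ρ ^ 2 * 2 ≤ ρ ^ 2 * (B.κ * (ρ ^ B.θ) ^ 2) := by gcongr
      have h5 : 0 ≤ (q ^ (1 / B.θ) + 1) * ρ := by positivity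
      nlinarith
  set G0 := (D + B.κ * D + 2 * R) / Z with hG0
  have hG0p : 0 ≤ G0 := by positivity
  set N0 := 8 / R * D * D + (K + G0) * D with hN0
  refine ⟨(4 / 3) ^ 4 / B.κ * (4 * D * D + 2 * N0 * B.T + 2 * (1 + D / Z) * C1) + 1,
    by positivity, fun S hε1 => ?_⟩
  have hε := S.hε
  have hl : ∀ s ∈ Icc 0 B.T, _ := fun s hs => hlow S (-R) R s hs hRR (by linarith)
  have hAc : ∀ s ∈ Icc 0 B.T, ∀ x ∈ Icc (-R) R, |S.A s x - S.cav R s| ≤ D := fun s hs x hx =>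
    S.A_cav_le hR (hl s hs).2.2.2 hx
  have cc := S.cav_cont hR
  have cg := S.gav_cont hR
  have cc1 : Continuous (fun z : ℝ × ℝ => S.cav R z.1) := cc.comp continuous_fst
  have cg1 : Continuous (fun z : ℝ × ℝ => S.gav R z.1) := cg.comp continuous_fst
  have kb := ck_bump (k := 4) (by norm_num) hR
  have kd := ck_dcut (k := 4) (by norm_num) hR
  have ckP : CK (fun s x => bump R x ^ 4 * (S.ρ s x * (S.A s x - S.cav R s))) :=
    kb.mul (by fun_prop)
  have ckQ : CK (fun s x => bump R x ^ 4 * (S.ρ s x * S.u s x * (S.A s x - S.cav R s))) :=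
    kb.mul (by fun_prop)
  have ckPt : CK (fun s x => bump R x ^ 4 * (-(S.ρx s x * S.u s x + S.ρ s x * S.ux s x)
      * (S.A s x - S.cav R s) + S.ρ s x * (-(S.ρ s x * S.u s x ^ 2 + S.p s x - S.ε * S.ux s x)
        - -(S.gav R s)))) := kb.mul (by fun_prop)
  have ckQx : CK (fun s x => dcut 4 R x * (S.ρ s x * S.u s x * (S.A s x - S.cav R s))
      + bump R x ^ 4 * ((S.ρx s x * S.u s x + S.ρ s x * S.ux s x) * (S.A s x - S.cav R s)
        + S.ρ s x * S.u s x * (S.ρ s x * S.u s x))) :=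
    (kd.mul (by fun_prop)).add (kb.mul (by fun_prop))
  have hgreen := green (T := B.T) ckP ckQ ckPt ckQx
    (G := fun s x => (dcut 4 R x * (S.ρ s x * S.u s x * (S.A s x - S.cav R s))
      + bump R x ^ 4 * (S.ρ s x * (S.ε * S.ux s x + S.gav R s)))
      - bump R x ^ 4 * (S.ρ s x * S.p s x))
    (fun s _ x => by ring)
    (fun s hs x => ((S.ρ_t s hs x).mul ((S.A_t s hs x).sub (S.cav_t hR hs))).const_mul _)
    (fun s _ x => by
      exact (hasDerivAt_bump_pow (k := 4) (by norm_num) R x).mul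
        (((S.ρ_x s x).mul (S.u_x s x)).mul ((S.A_x s x).sub_const _)))
    (s := B.T) ⟨hT.le, le_rfl⟩
  have ckF : CK (fun s x => dcut 4 R x * (S.ρ s x * S.u s x * (S.A s x - S.cav R s))
      + bump R x ^ 4 * (S.ρ s x * (S.ε * S.ux s x + S.gav R s))) :=
    (kd.mul (by fun_prop)).add (kb.mul (by fun_prop))
  have ckM : CK (fun s x => bump R x ^ 4 * (S.ρ s x * S.p s x)) := kb.mul (by fun_prop)
  have hsplit : ∀ s, ∫ x, ((dcut 4 R x * (S.ρ s x * S.u s x * (S.A s x - S.cav R s))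
      + bump R x ^ 4 * (S.ρ s x * (S.ε * S.ux s x + S.gav R s)))
      - bump R x ^ 4 * (S.ρ s x * S.p s x))
      = (∫ x, (dcut 4 R x * (S.ρ s x * S.u s x * (S.A s x - S.cav R s))
      + bump R x ^ 4 * (S.ρ s x * (S.ε * S.ux s x + S.gav R s))))
        - ∫ x, bump R x ^ 4 * (S.ρ s x * S.p s x) := fun s =>
    integral_sub (ckF.integrable s) (ckM.integrable s)
  simp only [hsplit] at hgreen
  rw [intervalIntegral.integral_sub (ckF.ii _ _) (ckM.ii _ _)] at hgreen
  -- Bound of the boundary terms in time.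
  have hP : ∀ s ∈ Icc 0 B.T,
      |∫ x, bump R x ^ 4 * (S.ρ s x * (S.A s x - S.cav R s))| ≤ D * D := fun s hs => by
    rw [int_eq_interval (fun y hy => by rw [bump4_out hR hy, zero_mul])]
    refine (intervalIntegral.abs_integral_le_integral_abs hRR).trans ?_
    have := tle1 hRR (f := fun x => |bump R x ^ 4 * (S.ρ s x * (S.A s x - S.cav R s))|)
      (by fun_prop) (g1 := fun x => S.ρ s x) (by fun_prop) D (fun x hx => by
        have h1 : bump R x ^ 4 ≤ 1 := pow_le_one₀ (bump_nonneg _ _) (bump_le_one _ _)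
        have h0 := pow_nonneg (bump_nonneg R x) 4
        have hρ := S.pos s x
        rw [abs_mul, abs_mul, abs_of_nonneg h0, abs_of_pos hρ]
        calc _ ≤ 1 * (S.ρ s x * D) := by
              gcongr
              exact hAc s hs x hx
          _ = _ := by ring)
    have h2 : D * (∫ x in (-R)..R, S.ρ s x) ≤ D * D := by
      gcongr; exact (hl s hs).1
    exact this.trans h2
  have hg : ∀ s ∈ Icc 0 B.T, |S.gav R s| ≤ G0 + 1 / Z * (S.ε * ∫ x in (-R)..R, S.ux s x ^ 2) :=
    fun s hs => by
    unfold Sol.gav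
    rw [abs_div, ← hZd, abs_of_pos hZ, div_le_iff₀ hZ]
    rw [int_eq_interval (fun y hy => by rw [bump4_out hR hy, zero_mul])]
    refine (intervalIntegral.abs_integral_le_integral_abs hRR).trans ?_
    have := tle4 hRR (f := fun x =>
        |bump R x ^ 4 * (S.ρ s x * S.u s x ^ 2 + S.p s x - S.ε * S.ux s x)|) (by fun_prop)
      (g1 := fun x => S.ρ s x * S.u s x ^ 2) (by fun_prop)
      (g2 := fun x => S.ρ s x * S.r s x ^ 2) (by fun_prop)
      (g3 := fun _ => 1) (by fun_prop)
      (g4 := fun x => S.ux s x ^ 2) (by fun_prop) 1 B.κ 1 S.ε (fun x hx => by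
        have h1 : bump R x ^ 4 ≤ 1 := pow_le_one₀ (bump_nonneg _ _) (bump_le_one _ _)
        have h0 := pow_nonneg (bump_nonneg R x) 4
        have hρ := S.pos s x
        have hp := S.p_pos s x
        rw [abs_mul, abs_of_nonneg h0]
        have h2 : |S.ρ s x * S.u s x ^ 2 + S.p s x - S.ε * S.ux s x|
            ≤ S.ρ s x * S.u s x ^ 2 + S.p s x + S.ε * (1 + S.ux s x ^ 2) := by
          have h3 : 0 ≤ S.ρ s x * S.u s x ^ 2 := by positivity
          rw [abs_le]
          constructor <;>
          nlinarith [mul_nonneg hε.le (sq_nonneg (S.ux s x - 1)),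
            mul_nonneg hε.le (sq_nonneg (S.ux s x + 1))]
        have h4 := mul_le_mul_of_nonneg_right h1 (abs_nonneg
          (S.ρ s x * S.u s x ^ 2 + S.p s x - S.ε * S.ux s x))
        rw [← S.p_eq]
        nlinarith)
    obtain ⟨-, l2, l3, -⟩ := hl s hs
    have e1 : (∫ x in (-R)..R, (1:ℝ)) = 2 * R := by simp; ring
    have e2 : (G0 + 1 / Z * (S.ε * ∫ x in (-R)..R, S.ux s x ^ 2)) * Z
        = D + B.κ * D + 2 * R + S.ε * ∫ x in (-R)..R, S.ux s x ^ 2 := by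
      rw [hG0]; field_simp
    rw [e1] at this
    have := mul_le_mul_of_nonneg_left l3 hκ.le
    linarith
  have hF := tle3 hT.le (f := fun s => ∫ x, (dcut 4 R x * (S.ρ s x * S.u s x *
      (S.A s x - S.cav R s)) + bump R x ^ 4 * (S.ρ s x * (S.ε * S.ux s x + S.gav R s))))
    ckF.contI (g1 := fun s => 1) (by fun_prop)
    (g2 := fun s => ∫ x in (-R)..R, S.ux s x ^ 2)
    (contII (G := fun s x => S.ux s x ^ 2) (by fun_prop) _ _)
    (g3 := fun s => ∫ x, bump R x ^ 4 * (S.ρ s x * S.p s x)) ckM.contI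
    N0 (S.ε * (1 + D / Z)) (1 / 2) (fun s hs => by
      rw [int_eq_interval (fun y hy => by rw [bump4_out hR hy, dcut4_out hR hy]; ring)]
      rw [int_eq_interval (G := fun x => bump R x ^ 4 * (S.ρ s x * S.p s x))
        (fun y hy => by rw [bump4_out hR hy]; ring)]
      have := tle4 hRR (f := fun x => dcut 4 R x * (S.ρ s x * S.u s x *
        (S.A s x - S.cav R s)) + bump R x ^ 4 * (S.ρ s x * (S.ε * S.ux s x + S.gav R s)))
        (by fun_prop)
        (g1 := fun x => S.ρ s x * |S.u s x|) (by fun_prop)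
        (g2 := fun x => S.ux s x ^ 2) (by fun_prop)
        (g3 := fun x => S.ρ s x) (by fun_prop)
        (g4 := fun x => bump R x ^ 4 * (S.ρ s x * S.p s x)) (by fun_prop)
        (8 / R * D) S.ε (K + |S.gav R s|) (1 / 2) (fun x hx => by
          have h1 : bump R x ^ 4 ≤ 1 := pow_le_one₀ (bump_nonneg _ _) (bump_le_one _ _)
          have h0 := pow_nonneg (bump_nonneg R x) 4
          have hρ := S.pos s x
          have t1 : dcut 4 R x * (S.ρ s x * S.u s x * (S.A s x - S.cav R s))
              ≤ 8 / R * D * (S.ρ s x * |S.u s x|) := by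
            refine (le_abs_self _).trans ?_
            rw [abs_mul, abs_mul, abs_mul, abs_of_pos hρ]
            calc _ ≤ 8 / R * (S.ρ s x * |S.u s x| * D) := by
                  gcongr
                  · exact abs_dcut4_le hR x
                  · exact hAc s hs x hx
              _ = _ := by ring
          have t2 : bump R x ^ 4 * (S.ρ s x * S.gav R s) ≤ |S.gav R s| * S.ρ s x := by
            refine (le_abs_self _).trans ?_
            rw [abs_mul, abs_mul, abs_of_pos hρ, abs_of_nonneg h0]
            calc _ ≤ 1 * (S.ρ s x * |S.gav R s|) := by gcongr
              _ = _ := by ring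
          have t3 : S.ρ s x * (S.ε * S.ux s x) ≤ S.ε * S.ux s x ^ 2 + S.ρ s x ^ 2 := by
            nlinarith [mul_nonneg hε.le (sq_nonneg (S.ux s x - S.ρ s x)),
              mul_nonneg hε.le (sq_nonneg (S.ux s x)),
              mul_nonneg (sub_nonneg.mpr hε1) (sq_nonneg (S.ρ s x)),
              mul_nonneg hε.le (sq_nonneg (S.ρ s x))]
          have t4 := hK (S.ρ s x) hρ
          have t4' : S.ρ s x ^ 2 ≤ K * S.ρ s x + 1 / 2 * (S.ρ s x * S.p s x) := t4
          have t5 : bump R x ^ 4 * (S.ρ s x * (S.ε * S.ux s x)) ≤ bump R x ^ 4 *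
              (S.ε * S.ux s x ^ 2 + (K * S.ρ s x + 1 / 2 * (S.ρ s x * S.p s x))) := by
            gcongr
            linarith
          have t6 : bump R x ^ 4 * (S.ε * S.ux s x ^ 2 + K * S.ρ s x)
              ≤ 1 * (S.ε * S.ux s x ^ 2 + K * S.ρ s x) := by gcongr
          linarith)
      obtain ⟨l1, -, -, l4⟩ := hl s hs
      have g1 := hg s hs
      have hg0 := abs_nonneg (S.gav R s)
      have m1 : 8 / R * D * (∫ x in (-R)..R, S.ρ s x * |S.u s x|) ≤ 8 / R * D * D := by gcongr
      have m2 : (K + |S.gav R s|) * (∫ x in (-R)..R, S.ρ s x)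
          ≤ (K + (G0 + 1 / Z * (S.ε * ∫ x in (-R)..R, S.ux s x ^ 2))) * D := by
        have hux : 0 ≤ ∫ x in (-R)..R, S.ux s x ^ 2 :=
          intervalIntegral.integral_nonneg hRR (fun _ _ => sq_nonneg _)
        have hρ0 : 0 ≤ ∫ x in (-R)..R, S.ρ s x :=
          intervalIntegral.integral_nonneg hRR (fun _ _ => (S.pos _ _).le)
        gcongr
      have e : 8 / R * D * D + (K + (G0 + 1 / Z * (S.ε * ∫ x in (-R)..R, S.ux s x ^ 2))) * D
          + S.ε * (∫ x in (-R)..R, S.ux s x ^ 2)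
          = N0 * 1 + S.ε * (1 + D / Z) * (∫ x in (-R)..R, S.ux s x ^ 2) := by
        rw [hN0]; ring
      linarith)
  simp only [intervalIntegral.integral_const, smul_eq_mul, mul_one, sub_zero] at hF
  have hdis := (hkey S (-R) R hRR).2.2.1
  have hdis2 : (1 + D / Z) * (S.ε * (∫ s in (0:ℝ)..B.T, ∫ x in (-R)..R, S.ux s x ^ 2))
      ≤ (1 + D / Z) * C1 := by gcongr
  have hP0 := (abs_le.mp (hP 0 ⟨le_rfl, hT.le⟩)).2
  have hPT := (abs_le.mp (hP B.T ⟨hT.le, le_rfl⟩)).1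
  have hmain : ∫ s in (0:ℝ)..B.T, ∫ x, bump R x ^ 4 * (S.ρ s x * S.p s x)
      ≤ 4 * D * D + 2 * N0 * B.T + 2 * (1 + D / Z) * C1 := by
    linarith
  have hfin := tle1 hT.le
    (f := fun s => ∫ x in (-k)..k, S.ρ s x * (S.ρ s x * S.r s x ^ 2))
    (contII (G := fun s x => S.ρ s x * (S.ρ s x * S.r s x ^ 2)) (by fun_prop) _ _)
    (g1 := fun s => ∫ x, bump R x ^ 4 * (S.ρ s x * S.p s x)) ckM.contI ((4 / 3) ^ 4 / B.κ)
    (fun s _ => by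
      have e1 := tle1 (a := -k) (b := k) (by linarith)
        (f := fun x => S.ρ s x * (S.ρ s x * S.r s x ^ 2)) (by fun_prop)
        (g1 := fun x => bump R x ^ 4 * (S.ρ s x * S.p s x)) (by fun_prop) ((4 / 3) ^ 4 / B.κ)
        (fun x hx => by
          have hb : 3 / 4 ≤ bump R x := by
            have := bump_ge (R := R) (c := 1 / 2) hR (y := x)
              (by rw [hRd]; have := abs_le.mpr hx; linarith)
            linarith
          have hb4 : (3 / 4) ^ 4 ≤ bump R x ^ 4 := by gcongr
          have hρ := S.pos s x
          have hr := S.r_pos s x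
          rw [S.p_eq]
          have : (4 / 3) ^ 4 / B.κ * (bump R x ^ 4 * (S.ρ s x * (B.κ * (S.ρ s x * S.r s x ^ 2))))
            = ((4 / 3) ^ 4 * bump R x ^ 4) * (S.ρ s x * (S.ρ s x * S.r s x ^ 2)) := by
            field_simp
          rw [this]
          have h1 : 1 ≤ (4 / 3) ^ 4 * bump R x ^ 4 := by norm_num at hb4 ⊢; linarith
          exact le_mul_of_one_le_left (by positivity) h1)
      refine e1.trans ?_
      gcongr
      rw [int_eq_interval (G := fun x => bump R x ^ 4 * (S.ρ s x * S.p s x))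
        (fun y hy => by rw [bump4_out hR hy]; ring)]
      exact t_mono (by fun_prop) (fun x => mul_nonneg (pow_nonneg (bump_nonneg R x) 4)
        (mul_nonneg (S.pos s x).le (S.p_pos s x).le)) (by linarith) (by linarith) (by linarith))
  have := mul_le_mul_of_nonneg_left hmain (by positivity : 0 ≤ (4 / 3) ^ 4 / B.κ)
  linarith

end NSHI

/-! ### Generating function and kernel of the entropy pair -/

namespace NSHI

/-- The function `√(1+s²)`, a smooth version of `|s|`. -/
noncomputable def fz (s : ℝ) : ℝ := Real.sqrt (1 + s ^ 2)

/-- The derivative of `fz`. -/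
noncomputable def hz (s : ℝ) : ℝ := s / fz s

/-- The generating function of the entropy pair, a smooth version of `s|s|/2`. -/
noncomputable def ψz (s : ℝ) : ℝ := ∫ y in (0:ℝ)..s, fz y

lemma fz_sq (s : ℝ) : fz s ^ 2 = 1 + s ^ 2 := Real.sq_sqrt (by positivity)
lemma fz_pos (s : ℝ) : 0 < fz s := Real.sqrt_pos.mpr (by positivity)
lemma fz_one_le (s : ℝ) : 1 ≤ fz s := by
  have := fz_sq s; have := fz_pos s; nlinarith [sq_nonneg s]
lemma fz_ge (s : ℝ) : |s| ≤ fz s := by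
  have h := fz_sq s; have := fz_pos s
  rw [← abs_of_pos (fz_pos s)]
  exact sq_le_sq.mp (by linarith)
lemma fz_le (s : ℝ) : fz s ≤ 1 + |s| := by
  have h : fz s ^ 2 = 1 + |s| ^ 2 := by rw [fz_sq, sq_abs]
  have := fz_pos s
  have h0 := abs_nonneg s
  nlinarith
lemma fz_neg (s : ℝ) : fz (-s) = fz s := by unfold fz; rw [neg_sq]
@[fun_prop] lemma fz_cont : Continuous fz := by unfold fz; fun_prop
@[fun_prop] lemma hz_cont : Continuous hz := by
  unfold hz; exact continuous_id.div fz_cont (fun s => (fz_pos s).ne')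

lemma hz_le (s : ℝ) : |hz s| ≤ 1 := by
  unfold hz
  rw [abs_div, abs_of_pos (fz_pos s), div_le_one (fz_pos s)]
  exact fz_ge s

lemma fz_lip (a b : ℝ) : |fz a - fz b| ≤ |a - b| := by
  have ha := fz_sq a; have hb := fz_sq b; have := fz_pos a; have := fz_pos b
  apply sq_le_sq.mp
  have h1 : 1 + a * b ≤ fz a * fz b := by
    have : 0 < fz a * fz b := by positivity
    have h2 : (1 + a * b) ^ 2 ≤ (fz a * fz b) ^ 2 := by
      rw [mul_pow, ha, hb]; nlinarith [sq_nonneg (a - b)]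
    have := sq_le_sq.mp h2
    rw [abs_of_pos ‹0 < fz a * fz b›] at this
    exact (le_abs_self _).trans this
  nlinarith

lemma fz_rem (y h : ℝ) : |fz (y + h) - fz y - hz y * h| ≤ h ^ 2 := by
  have ha := fz_sq y; have hb := fz_sq (y + h); have hA := fz_one_le y; have hB := fz_pos (y + h)
  have h1 : 1 + y * (y + h) ≤ fz y * fz (y + h) := by
    have : 0 < fz y * fz (y + h) := by positivity
    have h2 : (1 + y * (y + h)) ^ 2 ≤ (fz y * fz (y + h)) ^ 2 := by
      rw [mul_pow, ha, hb]; nlinarith [sq_nonneg h]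
    have := sq_le_sq.mp h2
    rw [abs_of_pos ‹0 < fz y * fz (y + h)›] at this
    exact (le_abs_self _).trans this
  have e : fz (y + h) - fz y - hz y * h = (fz y * fz (y + h) - fz y ^ 2 - y * h) / fz y := by
    unfold hz; field_simp
  rw [e, abs_of_nonneg (div_nonneg (by nlinarith) (fz_pos y).le), div_le_iff₀ (fz_pos y)]
  nlinarith [sq_nonneg (fz y - fz (y + h)), sq_nonneg h]

lemma ψz_deriv (s : ℝ) : HasDerivAt ψz (fz s) s :=
  intervalIntegral.integral_hasDerivAt_right (fz_cont.intervalIntegrable _ _)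
    (fz_cont.stronglyMeasurableAtFilter _ _) fz_cont.continuousAt

@[fun_prop] lemma ψz_cont : Continuous ψz :=
  continuous_iff_continuousAt.mpr fun s => (ψz_deriv s).continuousAt

lemma ψz_neg (s : ℝ) : ψz (-s) = - ψz s := by
  unfold ψz
  have := intervalIntegral.integral_comp_neg (a := 0) (b := s) fz
  simp only [fz_neg, neg_zero] at this
  rw [this, intervalIntegral.integral_symm]

lemma ψz_rem (y h : ℝ) : |ψz (y + h) - ψz y - fz y * h| ≤ h ^ 2 := by
  have e : ψz (y + h) - ψz y - fz y * h = ∫ z in y..(y + h), (fz z - fz y) := by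
    rw [intervalIntegral.integral_sub (fz_cont.intervalIntegrable _ _)
      (continuous_const.intervalIntegrable _ _), intervalIntegral.integral_const]
    unfold ψz
    rw [intervalIntegral.integral_interval_sub_left (fz_cont.intervalIntegrable _ _)
      (fz_cont.intervalIntegrable _ _), smul_eq_mul]
    ring
  rw [e]
  have := intervalIntegral.norm_integral_le_of_norm_le_const (a := y) (b := y + h) (C := |h|)
    (f := fun z => fz z - fz y) (fun z hz => by
      refine (fz_lip z y).trans ?_
      have := abs_sub_left_of_mem_uIcc (uIoc_subset_uIcc hz)
      rwa [add_sub_cancel_left] at this)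
  rw [Real.norm_eq_abs, add_sub_cancel_left, abs_mul_abs_self] at this
  rwa [pow_two]

lemma ψz_abs (y : ℝ) : |ψz y| ≤ |y| * (1 + |y|) := by
  have := intervalIntegral.norm_integral_le_of_norm_le_const (a := 0) (b := y) (C := 1 + |y|)
    (f := fz) (fun z hz => by
      rw [Real.norm_eq_abs, abs_of_pos (fz_pos z)]
      have := abs_sub_left_of_mem_uIcc (uIoc_subset_uIcc hz)
      rw [sub_zero, sub_zero] at this
      linarith [fz_le z])
  rw [Real.norm_eq_abs, sub_zero, mul_comm] at this
  exact this

/-- Quantitative monotonicity of the generating function. -/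
lemma ψz_mono (y : ℝ) {v : ℝ} (hv : 0 ≤ v) : v ^ 2 ≤ ψz (y + v) - ψz (y - v) := by
  have hd : ∀ v, HasDerivAt (fun v => ψz (y + v) - ψz (y - v) - v ^ 2)
      (fz (y + v) + fz (y - v) - 2 * v) v := fun v => by
    have h1 := (ψz_deriv (y + v)).comp v ((hasDerivAt_id v).const_add y)
    have h2 := (ψz_deriv (y - v)).comp v ((hasDerivAt_id v).const_sub y)
    refine ((h1.sub h2).sub ((hasDerivAt_id v).pow 2)).congr_deriv ?_
    simp
  have hm : Monotone (fun v => ψz (y + v) - ψz (y - v) - v ^ 2) :=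
    monotone_of_hasDerivAt_nonneg hd (fun v => by
      have h1 := fz_ge (y + v)
      have h2 := fz_ge (y - v)
      have h3 := le_abs_self (y + v)
      have h4 := neg_le_abs (y - v)
      simp only [Pi.zero_apply]
      linarith)
  have := hm hv
  simp at this
  linarith

/-- The kernel average `∫ F(a + b sin φ) σ(φ) dφ` over `[-π/2, π/2]`. -/
noncomputable def Ker (F σ : ℝ → ℝ) (a b : ℝ) : ℝ :=
  ∫ φ in (-(Real.pi / 2))..(Real.pi / 2), F (a + b * Real.sin φ) * σ φ

lemma pi2 : -(Real.pi / 2) ≤ Real.pi / 2 := by linarith [Real.pi_pos]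

lemma Ker_cont {F σ : ℝ → ℝ} (hF : Continuous F) (hσ : Continuous σ) :
    Continuous (fun z : ℝ × ℝ => Ker F σ z.1 z.2) := by
  unfold Ker
  exact intervalIntegral.continuous_parametric_intervalIntegral_of_continuous' (by fun_prop) _ _

lemma Ker_cont' {α : Type*} [TopologicalSpace α] {F σ : ℝ → ℝ} (hF : Continuous F)
    (hσ : Continuous σ) {f g : α → ℝ} (hf : Continuous f) (hg : Continuous g) :
    Continuous (fun z => Ker F σ (f z) (g z)) := (Ker_cont hF hσ).comp (hf.prodMk hg)

lemma Ker_fderiv {F f σ : ℝ → ℝ} (hF : Continuous F) (hf : Continuous f) (hσ : Continuous σ)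
    (hrem : ∀ y h, |F (y + h) - F y - f y * h| ≤ h ^ 2) (a b : ℝ) :
    HasFDerivAt (fun z : ℝ × ℝ => Ker F σ z.1 z.2)
      (Ker f σ a b • ContinuousLinearMap.fst ℝ ℝ ℝ
        + Ker f (fun φ => Real.sin φ * σ φ) a b • ContinuousLinearMap.snd ℝ ℝ ℝ) (a, b) := by
  set Lc := (Ker f σ a b • ContinuousLinearMap.fst ℝ ℝ ℝ
        + Ker f (fun φ => Real.sin φ * σ φ) a b • ContinuousLinearMap.snd ℝ ℝ ℝ) with hLc
  have hO : (fun z : ℝ × ℝ => Ker F σ z.1 z.2 - Ker F σ a b - Lc (z - (a, b)))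
      =O[nhds (a, b)] fun z => ‖z - (a, b)‖ ^ 2 := by
    apply Asymptotics.IsBigO.of_bound
      (4 * ∫ φ in (-(Real.pi / 2))..(Real.pi / 2), |σ φ|)
    filter_upwards with z
    have e : Ker F σ z.1 z.2 - Ker F σ a b - Lc (z - (a, b))
        = ∫ φ in (-(Real.pi / 2))..(Real.pi / 2), (F ((a + b * Real.sin φ)
          + ((z.1 - a) + (z.2 - b) * Real.sin φ)) - F (a + b * Real.sin φ)
          - f (a + b * Real.sin φ) * ((z.1 - a) + (z.2 - b) * Real.sin φ)) * σ φ := by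
      have e1 : Lc (z - (a, b)) = Ker f σ a b * (z.1 - a)
          + Ker f (fun φ => Real.sin φ * σ φ) a b * (z.2 - b) := by
        simp [hLc]
      rw [e1]
      unfold Ker
      rw [← intervalIntegral.integral_mul_const, ← intervalIntegral.integral_mul_const,
        ← intervalIntegral.integral_add, ← intervalIntegral.integral_sub,
        ← intervalIntegral.integral_sub]
      · congr 1; funext φ
        rw [show a + b * Real.sin φ + (z.1 - a + (z.2 - b) * Real.sin φ)
          = z.1 + z.2 * Real.sin φ by ring]
        ring
      all_goals exact (by fun_prop : Continuous _).intervalIntegrable _ _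
    rw [e, norm_pow, norm_norm]
    have hz1 : |z.1 - a| ≤ ‖z - (a, b)‖ := norm_fst_le (z - (a, b))
    have hz2 : |z.2 - b| ≤ ‖z - (a, b)‖ := norm_snd_le (z - (a, b))
    refine (intervalIntegral.abs_integral_le_integral_abs pi2).trans ?_
    have := tle1 pi2 (f := fun φ => |(F ((a + b * Real.sin φ)
          + ((z.1 - a) + (z.2 - b) * Real.sin φ)) - F (a + b * Real.sin φ)
          - f (a + b * Real.sin φ) * ((z.1 - a) + (z.2 - b) * Real.sin φ)) * σ φ|)
        (by fun_prop) (g1 := fun φ => |σ φ|) (by fun_prop) (4 * ‖z - (a, b)‖ ^ 2)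
        (fun φ _ => by
          rw [abs_mul]
          gcongr
          refine (hrem _ _).trans ?_
          have h1 : |(z.1 - a) + (z.2 - b) * Real.sin φ| ≤ 2 * ‖z - (a, b)‖ := by
            refine (abs_add_le _ _).trans ?_
            rw [abs_mul]
            have := mul_le_mul hz2 (Real.abs_sin_le_one φ) (abs_nonneg _) (norm_nonneg _)
            linarith
          rw [← sq_abs]
          calc _ ≤ (2 * ‖z - (a, b)‖) ^ 2 := by gcongr
            _ = _ := by ring)
    linarith
  have h0 := (hO.hasFDerivAt (𝕜 := ℝ) (by norm_num))
  have h1 := h0.add ((Lc.hasFDerivAt (x := (a, b))).add_const (Ker F σ a b - Lc (a, b)))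
  refine (h1.congr_fderiv (zero_add _)).congr_of_eventuallyEq ?_
  filter_upwards with z
  simp only [Pi.add_apply, map_sub]
  ring

/-- Chain rule for kernel averages. -/
lemma Ker_deriv {F f σ : ℝ → ℝ} (hF : Continuous F) (hf : Continuous f) (hσ : Continuous σ)
    (hrem : ∀ y h, |F (y + h) - F y - f y * h| ≤ h ^ 2) {U V : ℝ → ℝ} {U' V' t : ℝ}
    (hU : HasDerivAt U U' t) (hV : HasDerivAt V V' t) :
    HasDerivAt (fun s => Ker F σ (U s) (V s))
      (Ker f σ (U t) (V t) * U' + Ker f (fun φ => Real.sin φ * σ φ) (U t) (V t) * V') t := by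
  have := (Ker_fderiv hF hf hσ hrem (U t) (V t)).comp_hasDerivAt t (hU.prodMk hV)
  refine this.congr_deriv ?_
  simp

/-- The weight `cos^λ`. -/
noncomputable def gw (l φ : ℝ) : ℝ := Real.cos φ ^ l

lemma gw_cont {l : ℝ} (hl : 0 < l) : Continuous (gw l) := by
  unfold gw
  exact Real.continuous_cos.rpow_const (fun _ => Or.inr hl.le)

lemma gw_nonneg {l φ : ℝ} (h : φ ∈ Icc (-(Real.pi / 2)) (Real.pi / 2)) : 0 ≤ gw l φ :=
  Real.rpow_nonneg (Real.cos_nonneg_of_mem_Icc h) _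

lemma gw_le {l φ : ℝ} (hl : 0 < l) (h : φ ∈ Icc (-(Real.pi / 2)) (Real.pi / 2)) : gw l φ ≤ 1 :=
  Real.rpow_le_one (Real.cos_nonneg_of_mem_Icc h) (Real.cos_le_one φ) hl.le

lemma gw_neg (l φ : ℝ) : gw l (-φ) = gw l φ := by unfold gw; rw [Real.cos_neg]

lemma Ker_le {F σ : ℝ → ℝ} {a b c : ℝ} (hF : Continuous F) (hσ : Continuous σ)
    (h : ∀ φ ∈ Icc (-(Real.pi / 2)) (Real.pi / 2), |F (a + b * Real.sin φ)| ≤ c)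
    (h1 : ∀ φ ∈ Icc (-(Real.pi / 2)) (Real.pi / 2), |σ φ| ≤ 1) : |Ker F σ a b| ≤ 4 * c := by
  have hc : 0 ≤ c := (abs_nonneg _).trans (h (-(Real.pi / 2)) ⟨le_rfl, pi2⟩)
  unfold Ker
  refine (intervalIntegral.abs_integral_le_integral_abs pi2).trans ?_
  have := tle1 pi2 (f := fun φ => |F (a + b * Real.sin φ) * σ φ|) (by fun_prop)
    (g1 := fun _ => 1) (by fun_prop) c (fun φ hφ => by
      rw [abs_mul]
      exact mul_le_mul (h φ hφ) (h1 φ hφ) (abs_nonneg _) hc)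
  refine this.trans ?_
  rw [intervalIntegral.integral_const, smul_eq_mul, mul_one]
  have := Real.pi_le_four
  nlinarith

end NSHI

/-! ### Structure and coercivity of the entropy pair -/

namespace NSHI

section kern
variable {l : ℝ}

lemma sg_cont (hl : 0 < l) : Continuous (fun φ => Real.sin φ * gw l φ) :=
  Real.continuous_sin.mul (gw_cont hl)

lemma ssg_cont (hl : 0 < l) : Continuous (fun φ => Real.sin φ * (Real.sin φ * gw l φ)) :=
  Real.continuous_sin.mul (sg_cont hl)

lemma gw_abs (hl : 0 < l) : ∀ φ ∈ Icc (-(Real.pi / 2)) (Real.pi / 2), |gw l φ| ≤ 1 :=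
  fun φ hφ => by rw [abs_of_nonneg (gw_nonneg hφ)]; exact gw_le hl hφ

lemma sg_abs (hl : 0 < l) :
    ∀ φ ∈ Icc (-(Real.pi / 2)) (Real.pi / 2), |Real.sin φ * gw l φ| ≤ 1 := fun φ hφ => by
  rw [abs_mul]
  exact mul_le_one₀ (Real.abs_sin_le_one φ) (abs_nonneg _) (gw_abs hl φ hφ)

/-- Integration by parts in the kernel variable; this is the compatibility condition that makes
`(ρN, ρ(uN + θ r M))` an entropy pair. -/
lemma stein (hl : 0 < l) (a b : ℝ) :
    (l + 1) * Ker ψz (fun φ => Real.sin φ * gw l φ) a b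
      = b * (Ker fz (gw l) a b - Ker fz (fun φ => Real.sin φ * (Real.sin φ * gw l φ)) a b) := by
  have cg := gw_cont hl
  have hd : ∀ φ, HasDerivAt (fun φ => ψz (a + b * Real.sin φ) * Real.cos φ ^ (l + 1))
      (fz (a + b * Real.sin φ) * (b * Real.cos φ) * Real.cos φ ^ (l + 1)
        + ψz (a + b * Real.sin φ) * (-Real.sin φ * (l + 1) * Real.cos φ ^ l)) φ := fun φ => by
    have h1 := (ψz_deriv (a + b * Real.sin φ)).comp φ
      (((Real.hasDerivAt_sin φ).const_mul b).const_add a)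
    have h2 := (Real.hasDerivAt_cos φ).rpow_const (p := l + 1) (Or.inr (by linarith))
    refine (h1.mul h2).congr_deriv ?_
    simp
  have c1 : Continuous (fun φ : ℝ => Real.cos φ ^ (l + 1)) :=
    Real.continuous_cos.rpow_const (fun _ => Or.inr (by linarith))
  have c0 : Continuous (fun φ : ℝ => Real.cos φ ^ l) := cg
  have hI := intervalIntegral.integral_eq_sub_of_hasDerivAt (a := -(Real.pi / 2))
    (b := Real.pi / 2) (fun φ _ => hd φ)
    ((by fun_prop : Continuous _).intervalIntegrable _ _)
  rw [Real.cos_neg, Real.cos_pi_div_two, Real.zero_rpow (by linarith), mul_zero, mul_zero,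
    sub_zero] at hI
  have e : (∫ φ in (-(Real.pi / 2))..(Real.pi / 2),
      (fz (a + b * Real.sin φ) * (b * Real.cos φ) * Real.cos φ ^ (l + 1)
        + ψz (a + b * Real.sin φ) * (-Real.sin φ * (l + 1) * Real.cos φ ^ l)))
      = ∫ φ in (-(Real.pi / 2))..(Real.pi / 2),
        (b * (fz (a + b * Real.sin φ) * gw l φ
          - fz (a + b * Real.sin φ) * (Real.sin φ * (Real.sin φ * gw l φ)))
          - (l + 1) * (ψz (a + b * Real.sin φ) * (Real.sin φ * gw l φ))) := by
    apply intervalIntegral.integral_congr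
    intro φ hφ
    rw [uIcc_of_le pi2] at hφ
    have hc := Real.cos_nonneg_of_mem_Icc hφ
    have h1 : Real.cos φ ^ (l + 1) = gw l φ * Real.cos φ := by
      rw [Real.rpow_add_one' hc (by linarith)]; rfl
    have h2 := Real.sin_sq_add_cos_sq φ
    have h3 : Real.cos φ ^ l = gw l φ := rfl
    beta_reduce
    rw [h1, h3]
    linear_combination (fz (a + b * Real.sin φ) * b * gw l φ) * h2
  rw [e, intervalIntegral.integral_sub, intervalIntegral.integral_const_mul,
    intervalIntegral.integral_const_mul, intervalIntegral.integral_sub] at hI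
  · unfold Ker; linarith
  all_goals exact (by fun_prop : Continuous _).intervalIntegrable _ _

lemma int_symm {G : ℝ → ℝ} (hG : Continuous G) :
    ∫ φ in (-(Real.pi / 2))..(Real.pi / 2), G φ
      = ∫ φ in (-(Real.pi / 2))..(Real.pi / 2), 1 / 2 * (G φ + G (-φ)) := by
  rw [intervalIntegral.integral_const_mul, intervalIntegral.integral_add
    (hG.intervalIntegrable _ _) ((by fun_prop : Continuous fun φ => G (-φ)).intervalIntegrable _ _),
    intervalIntegral.integral_comp_neg, neg_neg]
  ring

lemma N_symm (hl : 0 < l) (a b : ℝ) : Ker ψz (gw l) a b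
    = ∫ φ in (-(Real.pi / 2))..(Real.pi / 2),
      1 / 2 * (ψz (b * Real.sin φ + a) - ψz (b * Real.sin φ - a)) * gw l φ := by
  have cg := gw_cont hl
  unfold Ker
  rw [int_symm (by fun_prop)]
  congr 1; funext φ
  rw [gw_neg, Real.sin_neg, show a + b * -Real.sin φ = -(b * Real.sin φ - a) by ring, ψz_neg,
    add_comm a]
  ring

lemma M_symm (hl : 0 < l) (a b : ℝ) : Ker ψz (fun φ => Real.sin φ * gw l φ) a b
    = ∫ φ in (-(Real.pi / 2))..(Real.pi / 2),
      1 / 2 * (Real.sin φ * (ψz (a + b * Real.sin φ) - ψz (a - b * Real.sin φ))) * gw l φ := by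
  have cg := gw_cont hl
  unfold Ker
  rw [int_symm (by fun_prop)]
  congr 1; funext φ
  beta_reduce
  rw [gw_neg, Real.sin_neg, show a + b * -Real.sin φ = a - b * Real.sin φ by ring]
  ring

lemma N_zero (hl : 0 < l) (b : ℝ) : Ker ψz (gw l) 0 b = 0 := by
  rw [N_symm hl]; simp

lemma ψz_mul (y v : ℝ) : |v| * v ^ 2 ≤ v * (ψz (y + v) - ψz (y - v)) := by
  rcases le_total 0 v with h | h
  · rw [abs_of_nonneg h]
    exact mul_le_mul_of_nonneg_left (ψz_mono y h) h
  · rw [abs_of_nonpos h]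
    have := ψz_mono y (v := -v) (by linarith)
    rw [sub_neg_eq_add, ← sub_eq_add_neg, neg_sq] at this
    nlinarith

lemma gint_pos (hl : 0 < l) : 0 < ∫ φ in (-(Real.pi / 2))..(Real.pi / 2), gw l φ := by
  apply intervalIntegral.intervalIntegral_pos_of_pos_on ((gw_cont hl).intervalIntegrable _ _) _
    (by linarith [Real.pi_pos])
  intro φ hφ
  exact Real.rpow_pos_of_pos (Real.cos_pos_of_mem_Ioo hφ) _

lemma sint_pos (hl : 0 < l) :
    0 < ∫ φ in (-(Real.pi / 2))..(Real.pi / 2), |Real.sin φ| ^ 3 * gw l φ := by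
  have cg := gw_cont hl
  have c : Continuous (fun φ => |Real.sin φ| ^ 3 * gw l φ) := by fun_prop
  have h1 : 0 < ∫ φ in (0:ℝ)..(Real.pi / 2), |Real.sin φ| ^ 3 * gw l φ := by
    apply intervalIntegral.intervalIntegral_pos_of_pos_on (c.intervalIntegrable _ _) _
      (by linarith [Real.pi_pos])
    intro φ hφ
    have h2 : 0 < Real.sin φ := Real.sin_pos_of_pos_of_lt_pi hφ.1 (by linarith [hφ.2, Real.pi_pos])
    have h3 : 0 < gw l φ := Real.rpow_pos_of_pos (Real.cos_pos_of_mem_Ioo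
      ⟨by linarith [hφ.1, Real.pi_pos], hφ.2⟩) _
    positivity
  have h2 : 0 ≤ ∫ φ in (-(Real.pi / 2))..(0:ℝ), |Real.sin φ| ^ 3 * gw l φ :=
    intervalIntegral.integral_nonneg (by linarith [Real.pi_pos]) (fun φ hφ =>
      mul_nonneg (by positivity) (gw_nonneg ⟨hφ.1, by linarith [hφ.2, Real.pi_pos]⟩))
  rw [← intervalIntegral.integral_add_adjacent_intervals (c.intervalIntegrable _ 0)
    (c.intervalIntegrable _ _)]
  linarith

/-- Coercivity of the entropy flux. -/
lemma flux_low (hl : 0 < l) : ∃ c : ℝ, 0 < c ∧ ∀ a b : ℝ, 0 ≤ b →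
    c * |a| ^ 3 ≤ a * Ker ψz (gw l) a b ∧
    c * b ^ 2 ≤ Ker ψz (fun φ => Real.sin φ * gw l φ) a b := by
  have cg := gw_cont hl
  have h1 := gint_pos hl
  have h2 := sint_pos hl
  set I1 := ∫ φ in (-(Real.pi / 2))..(Real.pi / 2), gw l φ with hI1
  set I2 := ∫ φ in (-(Real.pi / 2))..(Real.pi / 2), |Real.sin φ| ^ 3 * gw l φ with hI2
  refine ⟨min (I1 / 2) (I2 / 2), lt_min (by positivity) (by positivity), fun a b hb => ⟨?_, ?_⟩⟩
  · have : I1 / 2 * |a| ^ 3 ≤ a * Ker ψz (gw l) a b := by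
      rw [N_symm hl, ← intervalIntegral.integral_const_mul, show I1 / 2 * |a| ^ 3
        = (1 / 2 * |a| ^ 3) * I1 by ring, hI1, ← intervalIntegral.integral_const_mul]
      refine intervalIntegral.integral_mono_on pi2
        ((by fun_prop : Continuous _).intervalIntegrable _ _)
        ((by fun_prop : Continuous _).intervalIntegrable _ _) (fun φ hφ => ?_)
      have h3 := mul_le_mul_of_nonneg_right (ψz_mul (b * Real.sin φ) a) (gw_nonneg (l := l) hφ)
      have h4 : |a| ^ 3 = |a| * a ^ 2 := by rw [← sq_abs a]; ring
      rw [h4]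
      linarith
    refine le_trans ?_ this
    gcongr
    exact min_le_left _ _
  · have : I2 / 2 * b ^ 2 ≤ Ker ψz (fun φ => Real.sin φ * gw l φ) a b := by
      rw [M_symm hl, show I2 / 2 * b ^ 2
        = (1 / 2 * b ^ 2) * I2 by ring, hI2, ← intervalIntegral.integral_const_mul]
      refine intervalIntegral.integral_mono_on pi2
        ((by fun_prop : Continuous _).intervalIntegrable _ _)
        ((by fun_prop : Continuous _).intervalIntegrable _ _) (fun φ hφ => ?_)
      have hg := gw_nonneg (l := l) hφ
      have h4 : |Real.sin φ| ^ 3 * b ^ 2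
          ≤ Real.sin φ * (ψz (a + b * Real.sin φ) - ψz (a - b * Real.sin φ)) := by
        rcases le_total 0 (Real.sin φ) with h | h
        · rw [abs_of_nonneg h]
          have := mul_le_mul_of_nonneg_left (ψz_mono a (mul_nonneg hb h)) h
          linarith
        · rw [abs_of_nonpos h]
          have h5 := ψz_mono a (v := -(b * Real.sin φ)) (by nlinarith)
          rw [sub_neg_eq_add, ← sub_eq_add_neg] at h5
          have := mul_le_mul_of_nonneg_left h5 (neg_nonneg.mpr h)
          linarith
      have := mul_le_mul_of_nonneg_right h4 hg
      linarith
    refine le_trans ?_ this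
    gcongr
    exact min_le_right _ _

lemma abs_arg (a b φ : ℝ) : |a + b * Real.sin φ| ≤ |a| + |b| := by
  refine (abs_add_le _ _).trans ?_
  rw [abs_mul]
  have := mul_le_mul_of_nonneg_left (Real.abs_sin_le_one φ) (abs_nonneg b)
  linarith

lemma Kψ_abs {σ : ℝ → ℝ} (cσ : Continuous σ)
    (h1 : ∀ φ ∈ Icc (-(Real.pi / 2)) (Real.pi / 2), |σ φ| ≤ 1) (a b : ℝ) :
    |Ker ψz σ a b| ≤ 4 * ((|a| + |b|) * (1 + (|a| + |b|))) := by
  refine Ker_le ψz_cont cσ (fun φ _ => (ψz_abs _).trans ?_) h1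
  have := abs_arg a b φ
  gcongr

lemma Kh_abs {σ : ℝ → ℝ} (cσ : Continuous σ)
    (h1 : ∀ φ ∈ Icc (-(Real.pi / 2)) (Real.pi / 2), |σ φ| ≤ 1) (a b : ℝ) :
    |Ker hz σ a b| ≤ 4 := by
  have := Ker_le hz_cont cσ (a := a) (b := b) (c := 1) (fun φ _ => hz_le _) h1
  linarith

lemma J_near (hl : 0 < l) (a b b0 : ℝ) :
    |Ker fz (gw l) a b - Ker fz (gw l) 0 b0| ≤ 4 * (|a| + |b - b0|) := by
  have cg := gw_cont hl
  unfold Ker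
  rw [← intervalIntegral.integral_sub]
  · refine (intervalIntegral.abs_integral_le_integral_abs pi2).trans ?_
    have := tle1 pi2 (f := fun φ => |fz (a + b * Real.sin φ) * gw l φ
        - fz (0 + b0 * Real.sin φ) * gw l φ|) (by fun_prop)
      (g1 := fun _ => 1) (by fun_prop) (|a| + |b - b0|) (fun φ hφ => by
        rw [← sub_mul, abs_mul]
        have h1 := (fz_lip (a + b * Real.sin φ) (0 + b0 * Real.sin φ)).trans
          (le_of_eq_of_le (by congr 1; ring) (abs_arg a (b - b0) φ))
        exact mul_le_mul h1 (gw_abs hl φ hφ) (abs_nonneg _) (by positivity))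
    refine this.trans ?_
    rw [intervalIntegral.integral_const, smul_eq_mul, mul_one]
    have := Real.pi_le_four
    nlinarith [abs_nonneg a, abs_nonneg (b - b0)]
  all_goals exact (by fun_prop : Continuous _).intervalIntegrable _ _

lemma N_near (hl : 0 < l) (a b b0 : ℝ) :
    |Ker ψz (gw l) a b - Ker fz (gw l) 0 b0 * a| ≤ 4 * (a ^ 2 + |b - b0| * |a|) := by
  have cg := gw_cont hl
  rw [show Ker ψz (gw l) a b - Ker fz (gw l) 0 b0 * a = Ker ψz (gw l) a b
    - Ker ψz (gw l) 0 b - Ker fz (gw l) 0 b0 * a by rw [N_zero hl]; ring]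
  unfold Ker
  rw [← intervalIntegral.integral_mul_const, ← intervalIntegral.integral_sub,
    ← intervalIntegral.integral_sub]
  · refine (intervalIntegral.abs_integral_le_integral_abs pi2).trans ?_
    have := tle1 pi2 (f := fun φ => |ψz (a + b * Real.sin φ) * gw l φ
        - ψz (0 + b * Real.sin φ) * gw l φ - fz (0 + b0 * Real.sin φ) * gw l φ * a|) (by fun_prop)
      (g1 := fun _ => 1) (by fun_prop) (a ^ 2 + |b - b0| * |a|) (fun φ hφ => by
        have e : ψz (a + b * Real.sin φ) * gw l φ
          - ψz (0 + b * Real.sin φ) * gw l φ - fz (0 + b0 * Real.sin φ) * gw l φ * a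
          = ((ψz (b * Real.sin φ + a) - ψz (b * Real.sin φ) - fz (b * Real.sin φ) * a)
            + (fz (b * Real.sin φ) - fz (b0 * Real.sin φ)) * a) * gw l φ := by
          rw [zero_add, zero_add, add_comm a]; ring
        rw [e, abs_mul]
        refine mul_le_mul ((abs_add_le _ _).trans (add_le_add (ψz_rem _ _) ?_))
          (gw_abs hl φ hφ) (abs_nonneg _) (by positivity)
        rw [abs_mul]
        refine mul_le_mul_of_nonneg_right ((fz_lip _ _).trans ?_) (abs_nonneg _)
        rw [← sub_mul, abs_mul]
        exact mul_le_of_le_one_right (abs_nonneg _) (Real.abs_sin_le_one φ))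
    refine this.trans ?_
    rw [intervalIntegral.integral_const, smul_eq_mul, mul_one]
    have := Real.pi_le_four
    nlinarith [mul_nonneg (abs_nonneg a) (abs_nonneg (b - b0)), sq_nonneg a]
  all_goals exact (by fun_prop : Continuous _).intervalIntegrable _ _

end kern
end NSHI

/-! ### The entropy balance -/

namespace NSHI

namespace Bg
variable (B : Bg)

/-- The exponent of the entropy kernel: `(1 - y²)^λ dy` becomes `cos^l φ dφ` with `l = 2λ + 1 = 1/θ`
under `y = sin φ`. -/
noncomputable def l : ℝ := 1 / B.θ
lemma l_pos : 0 < B.l := by have := B.hθ; unfold l; positivity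
/-- The left end-state value of `ρ^θ`. -/
noncomputable def rm : ℝ := B.ρm ^ B.θ
/-- Value of `∂η/∂m` at the left end-state; subtracting this multiple of the momentum makes the
entropy quadratic near that state. -/
noncomputable def am : ℝ := Ker fz (gw B.l) 0 B.rm

lemma ρm_eq : B.ρm = B.ρb (-B.L) := (B.ρb_left _ le_rfl).symm
lemma ρm_pos : 0 < B.ρm := by rw [ρm_eq]; exact B.ρb_pos _
lemma rm_pos : 0 < B.rm := Real.rpow_pos_of_pos B.ρm_pos _
end Bg

namespace Sol
variable {B : Bg} (S : Sol B)

/-- The entropy divided by the density. -/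
noncomputable def Nk (s x : ℝ) : ℝ := Ker ψz (gw B.l) (S.u s x) (S.r s x)
/-- First moment of the kernel, entering the entropy flux. -/
noncomputable def Mk (s x : ℝ) : ℝ :=
  Ker ψz (fun φ => Real.sin φ * gw B.l φ) (S.u s x) (S.r s x)
/-- The derivative of the entropy with respect to the momentum. -/
noncomputable def Jk (s x : ℝ) : ℝ := Ker fz (gw B.l) (S.u s x) (S.r s x)
/-- First moment of the kernel against the derivative `fz` of the generating function. -/
noncomputable def Ik (s x : ℝ) : ℝ :=
  Ker fz (fun φ => Real.sin φ * gw B.l φ) (S.u s x) (S.r s x)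
/-- Second moment of the kernel against the derivative `fz` of the generating function. -/
noncomputable def Lk (s x : ℝ) : ℝ :=
  Ker fz (fun φ => Real.sin φ * (Real.sin φ * gw B.l φ)) (S.u s x) (S.r s x)
/-- The space derivative of `Sol.Jk`. -/
noncomputable def Jx (s x : ℝ) : ℝ :=
  Ker hz (gw B.l) (S.u s x) (S.r s x) * S.ux s x
    + Ker hz (fun φ => Real.sin φ * gw B.l φ) (S.u s x) (S.r s x) * S.rx s x

section cont
variable {α : Type*} [TopologicalSpace α] {f g : α → ℝ}
@[fun_prop] lemma cNk (hf : Continuous f) (hg : Continuous g) :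
    Continuous (fun a => S.Nk (f a) (g a)) :=
  Ker_cont' ψz_cont (gw_cont B.l_pos) (by fun_prop) (by fun_prop)
@[fun_prop] lemma cMk (hf : Continuous f) (hg : Continuous g) :
    Continuous (fun a => S.Mk (f a) (g a)) :=
  Ker_cont' ψz_cont (sg_cont B.l_pos) (by fun_prop) (by fun_prop)
@[fun_prop] lemma cJk (hf : Continuous f) (hg : Continuous g) :
    Continuous (fun a => S.Jk (f a) (g a)) :=
  Ker_cont' fz_cont (gw_cont B.l_pos) (by fun_prop) (by fun_prop)
@[fun_prop] lemma cIk (hf : Continuous f) (hg : Continuous g) :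
    Continuous (fun a => S.Ik (f a) (g a)) :=
  Ker_cont' fz_cont (sg_cont B.l_pos) (by fun_prop) (by fun_prop)
@[fun_prop] lemma cLk (hf : Continuous f) (hg : Continuous g) :
    Continuous (fun a => S.Lk (f a) (g a)) :=
  Ker_cont' fz_cont (ssg_cont B.l_pos) (by fun_prop) (by fun_prop)
@[fun_prop] lemma cJx (hf : Continuous f) (hg : Continuous g) :
    Continuous (fun a => S.Jx (f a) (g a)) :=
  ((Ker_cont' hz_cont (gw_cont B.l_pos) (by fun_prop) (by fun_prop)).mul (by fun_prop)).add
    ((Ker_cont' hz_cont (sg_cont B.l_pos) (by fun_prop) (by fun_prop)).mul (by fun_prop))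
end cont

lemma Jk_x (s x : ℝ) : HasDerivAt (fun y => S.Jk s y) (S.Jx s x) x :=
  Ker_deriv fz_cont hz_cont (gw_cont B.l_pos) fz_rem (S.u_x s x) (S.r_x s x)

/-- The normalised entropy. -/
noncomputable def en (s x : ℝ) : ℝ := S.ρ s x * (S.Nk s x - B.am * S.u s x)
/-- The normalised entropy flux. -/
noncomputable def qn (s x : ℝ) : ℝ :=
  S.ρ s x * (S.u s x * S.Nk s x + B.θ * (S.r s x * S.Mk s x))
    - B.am * (S.ρ s x * S.u s x ^ 2 + S.p s x)

@[fun_prop] lemma cen {α : Type*} [TopologicalSpace α] {f g : α → ℝ} (hf : Continuous f)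
    (hg : Continuous g) : Continuous (fun a => S.en (f a) (g a)) := by unfold en; fun_prop
@[fun_prop] lemma cqn {α : Type*} [TopologicalSpace α] {f g : α → ℝ} (hf : Continuous f)
    (hg : Continuous g) : Continuous (fun a => S.qn (f a) (g a)) := by unfold qn; fun_prop

/-- The space derivative of the flux, as produced by the chain rule. -/
noncomputable def qnx (s x : ℝ) : ℝ :=
  S.ρx s x * (S.u s x * S.Nk s x + B.θ * (S.r s x * S.Mk s x))
    + S.ρ s x * (S.ux s x * S.Nk s x + S.u s x * (S.Jk s x * S.ux s x + S.Ik s x * S.rx s x)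
      + B.θ * (S.rx s x * S.Mk s x + S.r s x * (S.Ik s x * S.ux s x + S.Lk s x * S.rx s x)))
    - B.am * (S.ρx s x * S.u s x ^ 2 + S.ρ s x * (2 * S.u s x * S.ux s x)
      + B.θ * S.ρ s x * S.r s x * S.rx s x)

@[fun_prop] lemma cqnx {α : Type*} [TopologicalSpace α] {f g : α → ℝ} (hf : Continuous f)
    (hg : Continuous g) : Continuous (fun a => S.qnx (f a) (g a)) := by unfold qnx; fun_prop

lemma qn_x (s x : ℝ) : HasDerivAt (fun y => S.qn s y) (S.qnx s x) x := by
  have hN : HasDerivAt (fun y => S.Nk s y) (S.Jk s x * S.ux s x + S.Ik s x * S.rx s x) x :=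
    Ker_deriv ψz_cont fz_cont (gw_cont B.l_pos) ψz_rem (S.u_x s x) (S.r_x s x)
  have hM : HasDerivAt (fun y => S.Mk s y) (S.Ik s x * S.ux s x + S.Lk s x * S.rx s x) x :=
    Ker_deriv ψz_cont fz_cont (sg_cont B.l_pos) ψz_rem (S.u_x s x) (S.r_x s x)
  have h := ((S.ρ_x s x).mul (((S.u_x s x).mul hN).add (((S.r_x s x).mul hM).const_mul B.θ))).sub
    ((((S.ρ_x s x).mul ((S.u_x s x).pow 2)).add (S.p_x s x)).const_mul B.am)
  refine h.congr_deriv ?_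
  unfold qnx
  simp only [Nat.cast_ofNat, Nat.add_one_sub_one, pow_one, Pi.pow_apply, Pi.add_apply, Pi.mul_apply]

/-- The entropy balance: transport part from the kernel identity `stein`, dissipation
from the viscosity. -/
lemma en_t {s : ℝ} (hs : s ∈ Ioo 0 B.T) (x : ℝ) : HasDerivAt (fun τ => S.en τ x)
    (S.ε * ((S.Jk s x - B.am) * S.uxx s x) - S.qnx s x) s := by
  have hN : HasDerivAt (fun τ => S.Nk τ x) _ s :=
    Ker_deriv ψz_cont fz_cont (gw_cont B.l_pos) ψz_rem (S.u_t s hs x) (S.r_t hs x)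
  have h := (S.ρ_t s hs x).mul (hN.sub ((S.u_t s hs x).const_mul B.am))
  refine h.congr_deriv ?_
  have hst := stein B.l_pos (S.u s x) (S.r s x)
  change (B.l + 1) * S.Mk s x = S.r s x * (S.Jk s x - S.Lk s x) at hst
  change _ * (S.Nk s x - B.am * S.u s x)
    + S.ρ s x * (S.Jk s x * _ + S.Ik s x * _ - _) = _
  have hθ := B.hθ.ne'
  have h1 : (1 + B.θ) * S.Mk s x = B.θ * (S.r s x * (S.Jk s x - S.Lk s x)) := by
    rw [← hst]; unfold Bg.l; field_simp
  have hρ := (S.pos s x).ne'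
  have hr := (S.r_pos s x).ne'
  unfold qnx
  change _ + S.ρ s x * (S.Jk s x * (-(S.u s x * S.ux s x)
      - B.θ ^ 2 * S.r s x ^ 2 * S.ρx s x / S.ρ s x + S.ε * S.uxx s x / S.ρ s x)
    + S.Ik s x * _ - B.am * (-(S.u s x * S.ux s x)
      - B.θ ^ 2 * S.r s x ^ 2 * S.ρx s x / S.ρ s x + S.ε * S.uxx s x / S.ρ s x)) = _
  rw [S.ρx_eq]
  field_simp
  linear_combination (B.θ * (S.r s x * S.ρ s x * S.rx s x)) * h1

lemma en_abs (s x : ℝ) :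
    |S.en s x| ≤ 4 * (S.ρ s x * (S.u s x ^ 2 + |S.r s x - B.rm| * |S.u s x|)) := by
  have h := N_near B.l_pos (S.u s x) (S.r s x) B.rm
  unfold en
  rw [abs_mul, abs_of_pos (S.pos s x)]
  have := mul_le_mul_of_nonneg_left h (S.pos s x).le
  unfold Nk Bg.am
  linarith

lemma Jk_abs (s x : ℝ) : |S.Jk s x - B.am| ≤ 4 * (|S.u s x| + |S.r s x - B.rm|) :=
  J_near B.l_pos _ _ _

lemma Jx_abs (s x : ℝ) : |S.Jx s x * S.ux s x| ≤ 6 * S.ux s x ^ 2 + 2 * S.rx s x ^ 2 := by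
  have h1 := Kh_abs (gw_cont B.l_pos) (gw_abs B.l_pos) (S.u s x) (S.r s x)
  have h2 := Kh_abs (sg_cont B.l_pos) (sg_abs B.l_pos) (S.u s x) (S.r s x)
  have h3 : |S.Jx s x| ≤ 4 * |S.ux s x| + 4 * |S.rx s x| := by
    unfold Jx
    refine (abs_add_le _ _).trans ?_
    rw [abs_mul, abs_mul]
    gcongr
  rw [abs_mul]
  have := mul_le_mul_of_nonneg_right h3 (abs_nonneg (S.ux s x))
  rw [← sq_abs (S.ux s x), ← sq_abs (S.rx s x)]
  nlinarith [sq_nonneg (|S.ux s x| - |S.rx s x|)]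

end Sol
end NSHI

/-! ### Bounds of the entropy pair and the quiet window -/

namespace NSHI

lemma int_eq_Ioc {G : ℝ → ℝ} {a b : ℝ} (h : ∀ x, x ∉ Ioc a b → G x = 0) :
    ∫ x, G x = ∫ x in a..b, G x := by
  symm
  apply intervalIntegral.integral_eq_integral_of_support_subset
  intro x hx
  by_contra h1
  exact hx (h x h1)

/-- Primitive of the difference of a bump and its translate by `-D`; it is compactly supported
and bounded independently of `D`. -/
lemma cutoff_pair {R D : ℝ} (hR : 0 < R) (hD : 0 ≤ D) : ∃ φ : ℝ → ℝ, Continuous φ ∧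
    (∀ x, HasDerivAt φ (bump R x ^ 4 - bump R (x + D) ^ 4) x) ∧ (∀ x, |φ x| ≤ 2 * R) ∧
    ∀ x, x ∉ Ioc (-D - R) R → φ x = 0 := by
  have c : Continuous (fun x => bump R x ^ 4) := by fun_prop
  have h0 : ∀ x, 0 ≤ bump R x ^ 4 := fun x => pow_nonneg (bump_nonneg R x) 4
  have hd : ∀ x, HasDerivAt (fun x => ∫ y in (0:ℝ)..x, bump R y ^ 4) (bump R x ^ 4) x := fun x =>
    intervalIntegral.integral_hasDerivAt_right (c.intervalIntegrable _ _)
      (c.stronglyMeasurableAtFilter _ _) c.continuousAt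
  set φ : ℝ → ℝ := fun x => (∫ y in (0:ℝ)..x, bump R y ^ 4) - ∫ y in (0:ℝ)..(x + D), bump R y ^ 4
    with hφ
  have hφd : ∀ x, HasDerivAt φ (bump R x ^ 4 - bump R (x + D) ^ 4) x := fun x =>
    (hd x).sub ((hd (x + D)).comp_add_const x D)
  have hφe : ∀ x, φ x = -∫ y in x..(x + D), bump R y ^ 4 := fun x => by
    have := intervalIntegral.integral_interval_sub_left (c.intervalIntegrable (μ := volume) 0 (x + D))
      (c.intervalIntegrable 0 x)
    rw [← this, hφ]; ring
  refine ⟨φ, continuous_iff_continuousAt.mpr fun x => (hφd x).continuousAt, hφd,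
    fun x => ?_, fun x hx => ?_⟩
  · have hx : x ≤ x + D := by linarith
    rw [hφe, abs_neg, abs_of_nonneg (intervalIntegral.integral_nonneg hx (fun y _ => h0 y))]
    have hi : Integrable (fun x => bump R x ^ 4) := (ck_bump (by norm_num) hR).integrable 0
    rw [intervalIntegral.integral_of_le hx]
    refine (setIntegral_le_integral hi (ae_of_all _ h0)).trans ?_
    rw [int_eq_interval (fun y hy => bump4_out hR hy)]
    have := tle1 (a := -R) (b := R) (by linarith) c (g1 := fun _ => 1) (by fun_prop) 1
      (fun x _ => by
        rw [one_mul]; exact pow_le_one₀ (bump_nonneg _ _) (bump_le_one _ _))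
    refine this.trans ?_
    simp; linarith
  · rw [hφe, neg_eq_zero]
    have : ∀ y ∈ uIcc x (x + D), bump R y ^ 4 = 0 := fun y hy => by
      rw [uIcc_of_le (by linarith)] at hy
      apply bump4_out hR
      rw [mem_Ioc, not_and_or, not_lt, not_le] at hx
      rcases hx with h | h
      · exact (by linarith [hy.2] : R ≤ -y).trans (neg_le_abs y)
      · exact (by linarith [hy.1] : R ≤ y).trans (le_abs_self y)
    rw [intervalIntegral.integral_congr this]
    simp

lemma qn_abs (B : Bg) : ∃ C : ℝ, 0 < C ∧ ∀ (S : Sol B) (s x : ℝ),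
    |S.qn s x| ≤ C * (S.ρ s x * (1 + (|S.u s x| ^ 3 + S.r s x ^ 3))) := by
  have hθ := B.hθ
  have hκ := B.κ_pos
  refine ⟨32 * (1 + B.θ) + 2 * |B.am| * (1 + B.κ), by positivity, fun S s x => ?_⟩
  have hρ := S.pos s x
  have hr := S.r_pos s x
  have hN := Kψ_abs (gw_cont B.l_pos) (gw_abs B.l_pos) (S.u s x) (S.r s x)
  have hM := Kψ_abs (sg_cont B.l_pos) (sg_abs B.l_pos) (S.u s x) (S.r s x)
  change |S.Nk s x| ≤ _ at hN
  change |S.Mk s x| ≤ _ at hM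
  rw [abs_of_pos hr] at hN hM
  set v := |S.u s x| with hv
  have hv0 : 0 ≤ v := abs_nonneg _
  set r := S.r s x
  set W := 4 * ((v + r) * (1 + (v + r))) with hW
  have e0 : S.qn s x = S.ρ s x * ((S.u s x * S.Nk s x + B.θ * (r * S.Mk s x))
      - B.am * (v ^ 2 + B.κ * r ^ 2)) := by
    unfold Sol.qn; rw [S.p_eq, hv, sq_abs]; ring
  have e1 : |S.u s x * S.Nk s x + B.θ * (r * S.Mk s x)| ≤ (1 + B.θ) * ((v + r) * W) := by
    refine (abs_add_le _ _).trans ?_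
    rw [abs_mul, abs_mul, abs_mul, abs_of_pos hθ, abs_of_pos hr]
    have h1 : v * |S.Nk s x| ≤ (v + r) * W := by gcongr; linarith
    have h2 : B.θ * (r * |S.Mk s x|) ≤ B.θ * ((v + r) * W) := by gcongr; linarith
    linarith
  have cube : ∀ y : ℝ, 0 ≤ y → y ^ 2 ≤ 1 + y ^ 3 := fun y hy => by
    nlinarith [mul_nonneg hy (sq_nonneg (y - 1)), sq_nonneg (y - 1)]
  have e2 : (v + r) * W ≤ 32 * (1 + (v ^ 3 + r ^ 3)) := by
    have h1 := cube (v + r) (by positivity)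
    have h2 : (v + r) ^ 3 ≤ 4 * (v ^ 3 + r ^ 3) := by
      nlinarith [mul_nonneg (add_nonneg hv0 hr.le) (sq_nonneg (v - r))]
    have : (v + r) * W = 4 * ((v + r) ^ 2 + (v + r) ^ 3) := by rw [hW]; ring
    rw [this]; linarith
  have e3 : |B.am * (v ^ 2 + B.κ * r ^ 2)| ≤ 2 * |B.am| * (1 + B.κ) * (1 + (v ^ 3 + r ^ 3)) := by
    rw [abs_mul, abs_of_nonneg (by positivity : 0 ≤ v ^ 2 + B.κ * r ^ 2)]
    have h1 := cube v hv0
    have h2 := mul_le_mul_of_nonneg_left (cube r hr.le) hκ.le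
    have h3 : v ^ 2 + B.κ * r ^ 2 ≤ 2 * (1 + B.κ) * (1 + (v ^ 3 + r ^ 3)) := by
      have : 0 ≤ v ^ 3 := by positivity
      have : 0 ≤ r ^ 3 := by positivity
      have : 0 ≤ B.κ * v ^ 3 := by positivity
      have : 0 ≤ B.κ * r ^ 3 := by positivity
      nlinarith
    calc _ ≤ |B.am| * (2 * (1 + B.κ) * (1 + (v ^ 3 + r ^ 3))) := by gcongr
      _ = _ := by ring
  rw [e0, abs_mul, abs_of_pos hρ]
  have e4 := (abs_sub (S.u s x * S.Nk s x + B.θ * (r * S.Mk s x))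
    (B.am * (v ^ 2 + B.κ * r ^ 2)))
  have e5 : (1 + B.θ) * ((v + r) * W) ≤ (1 + B.θ) * (32 * (1 + (v ^ 3 + r ^ 3))) := by gcongr
  calc _ ≤ S.ρ s x * ((32 * (1 + B.θ) + 2 * |B.am| * (1 + B.κ)) * (1 + (v ^ 3 + r ^ 3))) := by
        gcongr
        linarith
    _ = _ := by ring

lemma qn_low (B : Bg) : ∃ c C : ℝ, 0 < c ∧ 0 < C ∧ ∀ (S : Sol B) (s x : ℝ),
    c * (S.ρ s x * (|S.u s x| ^ 3 + S.r s x ^ 3))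
      ≤ S.qn s x + C * (S.ρ s x * S.u s x ^ 2 + S.ρ s x * S.r s x ^ 2) := by
  have hθ := B.hθ
  have hκ := B.κ_pos
  obtain ⟨c, hc, h⟩ := flux_low B.l_pos
  refine ⟨c * min 1 B.θ, |B.am| * (1 + B.κ) + 1, by positivity, by positivity, fun S s x => ?_⟩
  have hρ := S.pos s x
  have hr := S.r_pos s x
  obtain ⟨h1, h2⟩ := h (S.u s x) (S.r s x) hr.le
  change _ ≤ S.u s x * S.Nk s x at h1
  change _ ≤ S.Mk s x at h2
  have h3 : min 1 B.θ * (c * |S.u s x| ^ 3) ≤ S.u s x * S.Nk s x := by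
    refine le_trans ?_ h1
    exact mul_le_of_le_one_left (by positivity) (min_le_left _ _)
  have h4 : min 1 B.θ * (S.r s x * (c * S.r s x ^ 2)) ≤ B.θ * (S.r s x * S.Mk s x) := by
    have := min_le_right 1 B.θ
    gcongr
  have h5 : B.am * (S.ρ s x * S.u s x ^ 2 + S.p s x) ≤ (|B.am| * (1 + B.κ) + 1) *
      (S.ρ s x * S.u s x ^ 2 + S.ρ s x * S.r s x ^ 2) := by
    rw [S.p_eq]
    have ha := le_abs_self B.am
    have ha0 := abs_nonneg B.am
    calc B.am * (S.ρ s x * S.u s x ^ 2 + B.κ * (S.ρ s x * S.r s x ^ 2))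
        ≤ |B.am| * (S.ρ s x * S.u s x ^ 2 + B.κ * (S.ρ s x * S.r s x ^ 2)) := by gcongr
      _ ≤ |B.am| * ((1 + B.κ) * (S.ρ s x * S.u s x ^ 2 + S.ρ s x * S.r s x ^ 2)) := by
        gcongr
        have : 0 ≤ B.κ * (S.ρ s x * S.u s x ^ 2) := by positivity
        have : 0 ≤ S.ρ s x * S.r s x ^ 2 := by positivity
        linarith
      _ ≤ _ := by
        have : 0 ≤ S.ρ s x * S.u s x ^ 2 + S.ρ s x * S.r s x ^ 2 := by positivity
        linarith
  have h6 := mul_le_mul_of_nonneg_left (add_le_add h3 h4) hρ.le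
  unfold Sol.qn
  linarith

lemma Bg.E_le (B : Bg) (x : ℝ) : (B.ρb x ^ B.θ - B.rm) ^ 2 ≤ (B.M ^ B.θ) ^ 2 := by
  have h1 : B.ρb x ^ B.θ ≤ B.M ^ B.θ :=
    Real.rpow_le_rpow (B.ρb_pos x).le (B.ρb_le x) B.hθ.le
  have h2 : B.rm ≤ B.M ^ B.θ := by
    unfold Bg.rm; rw [B.ρm_eq]
    exact Real.rpow_le_rpow (B.ρb_pos _).le (B.ρb_le _) B.hθ.le
  have h3 := B.rm_pos
  have h4 : 0 < B.ρb x ^ B.θ := Real.rpow_pos_of_pos (B.ρb_pos x) _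
  apply sq_le_sq'  <;> linarith

/-- The normalised entropy is controlled by the energy up to the region where the background
differs from its left end-state. -/
lemma en_bound (B : Bg) {R : ℝ} (hR : 0 < R) : ∃ C : ℝ, 0 < C ∧ ∀ (S : Sol B) (a s : ℝ),
    s ∈ Icc 0 B.T → a ≤ -B.L → ∫ x in a..R, |S.en s x| ≤ C := by
  obtain ⟨C0, hC0, hkey⟩ := key_prop B
  obtain ⟨Ca, hCa, haf⟩ := B.Ψ_affine
  obtain ⟨Cr, hCr, hrd⟩ := B.Ψ_rdiff
  have hL := B.hL
  set Em := (B.M ^ B.θ) ^ 2 with hEm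
  have hEm0 : 0 ≤ Em := by positivity
  set K := 16 + 8 * Cr + 8 * Ca * Em with hK
  refine ⟨K * C0 + 8 * Ca * (Em * (R + B.L)) + 1, by positivity, fun S a s hs ha => ?_⟩
  have haR : a ≤ R := by linarith
  have cE : Continuous (fun x => (B.ρb x ^ B.θ - B.rm) ^ 2) := by
    have : Continuous (fun x => B.ρb x ^ B.θ) :=
      B.cρb.rpow_const (fun x => Or.inl (B.ρb_pos x).ne')
    fun_prop
  have h1 := tle2 haR (f := fun x => |S.en s x|) (by fun_prop)
    (g1 := fun x => S.MF s x) (contx S.cMF s)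
    (g2 := fun x => (B.ρb x ^ B.θ - B.rm) ^ 2) cE K (8 * Ca) (fun x _ => by
      have hρ := S.pos s x
      refine (S.en_abs s x).trans ?_
      have hp := S.Psi_nonneg s x
      have m1 := S.MF_u s x
      have m2 := S.MF_Psi s x
      have m3 : S.ρ s x * (S.r s x - B.ρb x ^ B.θ) ^ 2 ≤ Cr * S.Psi s x := hrd x _ hρ
      have m4 : S.ρ s x ≤ Ca * (1 + S.Psi s x) := (haf x _ hρ).1
      have hE := B.E_le x
      set E := (B.ρb x ^ B.θ - B.rm) ^ 2 with hEd
      have hE0 : 0 ≤ E := sq_nonneg _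
      have m5 : S.ρ s x * E ≤ Ca * (1 + S.Psi s x) * E := by gcongr
      have m6 : Ca * (S.Psi s x * E) ≤ Ca * (S.MF s x * Em) := by
        have := S.MF_nonneg s x
        gcongr
      have m7 : |S.r s x - B.rm| * |S.u s x| ≤ S.u s x ^ 2
          + 2 * (S.r s x - B.ρb x ^ B.θ) ^ 2 + 2 * E := by
        have : (S.r s x - B.rm) ^ 2 ≤ 2 * (S.r s x - B.ρb x ^ B.θ) ^ 2 + 2 * E := by
          nlinarith [sq_nonneg ((S.r s x - B.ρb x ^ B.θ) - (B.ρb x ^ B.θ - B.rm))]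
        rw [← sq_abs (S.u s x)]
        rw [← sq_abs (S.r s x - B.rm)] at this
        nlinarith [sq_nonneg (|S.r s x - B.rm| - |S.u s x|), sq_nonneg (|S.r s x - B.rm|),
          sq_nonneg (|S.u s x|)]
      have m8 := mul_le_mul_of_nonneg_left m7 hρ.le
      have m9 : Cr * S.Psi s x ≤ Cr * S.MF s x := by gcongr
      rw [hK]
      linarith)
  have h2 : ∫ x in a..R, (B.ρb x ^ B.θ - B.rm) ^ 2 ≤ Em * (R + B.L) := by
    rw [← intervalIntegral.integral_add_adjacent_intervals (b := -B.L)
      (cE.intervalIntegrable _ _) (cE.intervalIntegrable _ _)]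
    have z1 : ∫ x in a..(-B.L), (B.ρb x ^ B.θ - B.rm) ^ 2 = 0 := by
      rw [intervalIntegral.integral_congr (g := fun _ => (0:ℝ))]
      · simp
      · intro x hx
        rw [uIcc_of_le ha] at hx
        beta_reduce
        rw [B.ρb_left x hx.2]
        simp [Bg.rm]
    have z2 := tle1 (a := -B.L) (b := R) (by linarith) cE (g1 := fun _ => 1) (by fun_prop) Em
      (fun x _ => by rw [mul_one]; exact B.E_le x)
    simp only [intervalIntegral.integral_const, smul_eq_mul, mul_one] at z2
    linarith
  have h3 := (hkey S a R haR).1 s hs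
  have h4 : K * (∫ x in a..R, S.MF s x) ≤ K * C0 := by gcongr
  have h5 : 8 * Ca * (∫ x in a..R, (B.ρb x ^ B.θ - B.rm) ^ 2) ≤ 8 * Ca * (Em * (R + B.L)) := by
    gcongr
  linarith

/-- Viscous flux term on a window of moderate length. -/
lemma visc_term (B : Bg) (l : ℝ) : ∃ C : ℝ, 0 < C ∧ ∀ (S : Sol B) (a b : ℝ), S.ε ≤ 1 →
    B.l0 ≤ b - a → b - a ≤ l →
    ∫ s in (0:ℝ)..B.T, ∫ x in a..b, S.ε * |(S.Jk s x - B.am) * S.ux s x| ≤ C := by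
  obtain ⟨C0, hC0, hkey⟩ := key_prop B
  obtain ⟨Cs, hCs, hsup⟩ := sup_sq_bounds B l
  have hT := B.hT
  set K0 := 24 * (2 * Cs + B.rm ^ 2) * |l| with hK0
  refine ⟨K0 * B.T + (1 + 24 * Cs * |l|) * C0 + 24 * Cs * |l| * C0 + 1,
    by positivity, fun S a b hε1 hab hl => ?_⟩
  have hε := S.hε
  have hab' : a ≤ b := by linarith [B.l0_ge]
  have cu : Continuous (fun z : ℝ × ℝ => S.ux z.1 z.2 ^ 2) := by fun_prop
  have cr : Continuous (fun z : ℝ × ℝ => S.rx z.1 z.2 ^ 2) := by fun_prop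
  have hll : b - a ≤ |l| := hl.trans (le_abs_self l)
  have hmain := tle3 hT.le
    (f := fun s => ∫ x in a..b, S.ε * |(S.Jk s x - B.am) * S.ux s x|)
    (contII (G := fun s x => S.ε * |(S.Jk s x - B.am) * S.ux s x|) (by fun_prop) _ _)
    (g1 := fun _ => 1) (by fun_prop)
    (g2 := fun s => ∫ x in a..b, S.ux s x ^ 2) (contII (G := fun s x => S.ux s x ^ 2) cu _ _)
    (g3 := fun s => ∫ x in a..b, S.rx s x ^ 2) (contII (G := fun s x => S.rx s x ^ 2) cr _ _)
    K0 ((1 + 24 * Cs * |l|) * S.ε) (24 * Cs * |l| * S.ε) (fun s hs => by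
      set U := ∫ x in a..b, S.ux s x ^ 2 with hU
      set V := ∫ x in a..b, S.rx s x ^ 2 with hV
      have hU0 : 0 ≤ U := intervalIntegral.integral_nonneg hab' (fun _ _ => sq_nonneg _)
      have hV0 : 0 ≤ V := intervalIntegral.integral_nonneg hab' (fun _ _ => sq_nonneg _)
      set X := 24 * (Cs * (1 + U) + Cs * (1 + V) + B.rm ^ 2) with hX
      have hX0 : 0 ≤ X := by positivity
      have h1 := tle2 hab' (f := fun x => S.ε * |(S.Jk s x - B.am) * S.ux s x|) (by fun_prop)
        (g1 := fun x => S.ux s x ^ 2) (by fun_prop) (g2 := fun _ => 1) (by fun_prop) S.ε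
        (S.ε * X) (fun x hx => by
          obtain ⟨b1, b2⟩ := hsup S a b s hs hab hl x hx
          have hJ := S.Jk_abs s x
          have hr := S.r_pos s x
          have hrm := B.rm_pos
          have hd : |S.r s x - B.rm| ≤ S.r s x + B.rm := by
            rw [abs_le]; constructor <;> linarith
          have hJ2 : |S.Jk s x - B.am| ≤ 4 * (|S.u s x| + (S.r s x + B.rm)) := by linarith
          have hJ3 : |S.Jk s x - B.am| ^ 2 ≤ 48 * (S.u s x ^ 2 + S.r s x ^ 2 + B.rm ^ 2) := by
            have := pow_le_pow_left₀ (abs_nonneg _) hJ2 2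
            rw [← sq_abs (S.u s x)]
            nlinarith [sq_nonneg (|S.u s x| - S.r s x), sq_nonneg (|S.u s x| - B.rm),
              sq_nonneg (S.r s x - B.rm)]
          have h2 : |(S.Jk s x - B.am) * S.ux s x| ≤ S.ux s x ^ 2 + X := by
            rw [abs_mul, ← sq_abs (S.ux s x)]
            nlinarith [sq_nonneg (|S.Jk s x - B.am| - |S.ux s x|), sq_nonneg (|S.ux s x|)]
          have := mul_le_mul_of_nonneg_left h2 hε.le
          linarith)
      simp only [intervalIntegral.integral_const, smul_eq_mul, mul_one] at h1
      have h2 : S.ε * X * (b - a) ≤ S.ε * X * |l| := by gcongr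
      have h3 : S.ε * X * |l| = S.ε * K0 + 24 * Cs * |l| * S.ε * U + 24 * Cs * |l| * S.ε * V := by
        rw [hX, hK0]; ring
      have h4 : S.ε * K0 ≤ 1 * K0 := by gcongr
      linarith)
  simp only [intervalIntegral.integral_const, smul_eq_mul, mul_one, sub_zero] at hmain
  obtain ⟨-, -, d1, d2⟩ := hkey S a b hab'
  have e1 := mul_le_mul_of_nonneg_left d1 (by positivity : 0 ≤ 1 + 24 * Cs * |l|)
  have e2 := mul_le_mul_of_nonneg_left d2 (by positivity : 0 ≤ 24 * Cs * |l|)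
  linarith

/-- Among many disjoint windows to the left, one has small total gradients; the distance to the
origin depends on the solution. -/
lemma quiet_window {B : Bg} (S : Sol B) {R : ℝ} (hR : 0 < R) : ∃ D : ℝ, B.L ≤ D ∧ 0 ≤ D ∧
    (∫ s in (0:ℝ)..B.T, ∫ x in (-D - R)..(-D + R), S.ux s x ^ 2) ≤ 1 ∧
    (∫ s in (0:ℝ)..B.T, ∫ x in (-D - R)..(-D + R), S.rx s x ^ 2) ≤ 1 := by
  obtain ⟨C0, hC0, hkey⟩ := key_prop B
  have hT := B.hT
  have hL := B.hL
  have hε := S.hε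
  have cg : Continuous (fun z : ℝ × ℝ => S.ux z.1 z.2 ^ 2 + S.rx z.1 z.2 ^ 2) := by fun_prop
  set F : ℝ → ℝ → ℝ := fun a b =>
    ∫ s in (0:ℝ)..B.T, ∫ x in a..b, (S.ux s x ^ 2 + S.rx s x ^ 2) with hF
  have hadd : ∀ a b c, F a b + F b c = F a c := fun a b c => by
    rw [hF]
    beta_reduce
    rw [← intervalIntegral.integral_add
      ((contII (G := fun s x => S.ux s x ^ 2 + S.rx s x ^ 2) cg a b).intervalIntegrable _ _)
      ((contII (G := fun s x => S.ux s x ^ 2 + S.rx s x ^ 2) cg b c).intervalIntegrable _ _)]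
    congr 1; funext s
    exact intervalIntegral.integral_add_adjacent_intervals
      ((contx (G := fun s x => S.ux s x ^ 2 + S.rx s x ^ 2) cg s).intervalIntegrable _ _)
      ((contx (G := fun s x => S.ux s x ^ 2 + S.rx s x ^ 2) cg s).intervalIntegrable _ _)
  have hsplit : ∀ a b, F a b = (∫ s in (0:ℝ)..B.T, ∫ x in a..b, S.ux s x ^ 2)
      + ∫ s in (0:ℝ)..B.T, ∫ x in a..b, S.rx s x ^ 2 := fun a b => by
    rw [hF]
    beta_reduce
    rw [← intervalIntegral.integral_add
      ((contII (G := fun s x => S.ux s x ^ 2) (by fun_prop) a b).intervalIntegrable _ _)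
      ((contII (G := fun s x => S.rx s x ^ 2) (by fun_prop) a b).intervalIntegrable _ _)]
    congr 1; funext s
    exact intervalIntegral.integral_add
      ((by fun_prop : Continuous fun x => S.ux s x ^ 2).intervalIntegrable _ _)
      ((by fun_prop : Continuous fun x => S.rx s x ^ 2).intervalIntegrable _ _)
  have hnn : ∀ a b, a ≤ b → (0 ≤ ∫ s in (0:ℝ)..B.T, ∫ x in a..b, S.ux s x ^ 2) ∧
      0 ≤ ∫ s in (0:ℝ)..B.T, ∫ x in a..b, S.rx s x ^ 2 := fun a b hab =>
    ⟨intervalIntegral.integral_nonneg hT.le (fun s _ =>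
      intervalIntegral.integral_nonneg hab (fun _ _ => sq_nonneg _)),
     intervalIntegral.integral_nonneg hT.le (fun s _ =>
      intervalIntegral.integral_nonneg hab (fun _ _ => sq_nonneg _))⟩
  set c : ℕ → ℝ := fun j => -B.L - 2 * R * j with hc
  have hc0 : c 0 = -B.L := by simp [hc]
  have hcs : ∀ j, c (j + 1) = c j - 2 * R := fun j => by simp only [hc]; push_cast; ring
  have hcL : ∀ j, c j ≤ -B.L := fun j => by
    have : (0:ℝ) ≤ 2 * R * j := by positivity
    simp only [hc]; linarith
  by_cases h : ∃ j, F (c (j + 1)) (c j) ≤ 1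
  · obtain ⟨j, hj⟩ := h
    have hjL := hcL j
    refine ⟨-(c j) + R, by linarith, by linarith, ?_⟩
    rw [show -(-(c j) + R) - R = c (j + 1) by rw [hcs]; ring,
      show -(-(c j) + R) + R = c j by ring]
    rw [hsplit] at hj
    obtain ⟨n1, n2⟩ := hnn (c (j + 1)) (c j) (by rw [hcs]; linarith)
    exact ⟨by linarith, by linarith⟩
  · exfalso
    push Not at h
    have hn : ∀ n : ℕ, (n : ℝ) ≤ F (c n) (c 0) := fun n => by
      induction n with
      | zero => simp [hF]
      | succ n ih =>
        have := h n
        rw [← hadd _ (c n)]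
        push_cast
        linarith
    obtain ⟨n, hn2⟩ := exists_nat_gt (2 * C0 / S.ε)
    obtain ⟨-, -, d1, d2⟩ := hkey S (c n) (c 0) (by rw [hc0]; exact hcL n)
    have := hn n
    rw [hsplit] at this
    rw [div_lt_iff₀ hε] at hn2
    nlinarith

end NSHI

/-! ### The cubic estimate and the combined estimate -/

namespace NSHI

/-- Small viscosity: local integrability of `ρ (|u|³ + ρ^(3θ))`, obtained by testing the
kinetic entropy balance with a cutoff whose derivative is the difference of the bump at the
origin and of a bump placed in a window where the solution is quiet. -/
lemma cubic_small (B : Bg) {k : ℝ} (hk : 0 < k) (hl0 : B.l0 ≤ 4 * k) :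
    ∃ C : ℝ, 0 < C ∧ ∀ S : Sol B, S.ε ≤ 1 →
    ∫ s in (0:ℝ)..B.T, ∫ x in (-k)..k, S.ρ s x * (|S.u s x| ^ 3 + S.r s x ^ 3) ≤ C := by
  set R := 2 * k with hRd
  have hR : 0 < R := by positivity
  have hRR : -R ≤ R := by linarith
  obtain ⟨C1, hC1, hkey⟩ := key_prop B
  obtain ⟨Cl, hCl, hlow⟩ := low_order B (2 * R)
  obtain ⟨Cc, hCc, hcub⟩ := cubic_loc B (2 * R) 1
  obtain ⟨Cv, hCv, hvis⟩ := visc_term B (2 * R)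
  obtain ⟨Ce, hCe, hen⟩ := en_bound B hR
  obtain ⟨Ca, hCa, hqa⟩ := qn_abs B
  obtain ⟨c, Cq, hc, hCq, hql⟩ := qn_low B
  have hT := B.hT
  have hL := B.hL
  refine ⟨(4 / 3) ^ 4 / c * (4 * R * Ce + (Ca * (Cl * B.T) + Ca * Cc + Cv) + 16 * R * C1
    + (Cq * (Cl * B.T) + Cq * (Cl * B.T) + Cv)), by positivity, fun S hε1 => ?_⟩
  have hε := S.hε
  obtain ⟨D, hLD, hD0, hqu, hqr⟩ := quiet_window S hR
  obtain ⟨φ, cφ, dφ, bφ, zφ⟩ := cutoff_pair hR hD0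
  have hDR : -D - R ≤ R := by linarith
  have hDD : -D - R ≤ -D + R := by linarith
  have kb := ck_bump (k := 4) (by norm_num) hR
  have kφ : CK (fun _ x => φ x) := ⟨by fun_prop, D + R + 1, fun s x hx => zφ x (fun h => by
    have : |x| ≤ D + R := abs_le.mpr ⟨by linarith [h.1], by linarith [h.2]⟩
    linarith)⟩
  have kb2 : CK (fun _ x => bump R (x + D) ^ 4) := ⟨by fun_prop, D + R, fun s x hx => by
    refine bump4_out hR ?_
    have : |x| ≤ |x + D| + |D| := by
      have := abs_sub (x + D) D
      simpa using this
    rw [abs_of_nonneg hD0] at this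
    linarith⟩
  have cb1 : Continuous (fun x => bump R x ^ 4) := by fun_prop
  have cb2 : Continuous (fun x => bump R (x + D) ^ 4) := by fun_prop
  have cJ : Continuous (fun z : ℝ × ℝ => S.ε * ((S.Jk z.1 z.2 - B.am) * S.ux z.1 z.2)) := by
    fun_prop
  have cF : Continuous (fun z : ℝ × ℝ => S.qn z.1 z.2
      - S.ε * ((S.Jk z.1 z.2 - B.am) * S.ux z.1 z.2)) := by fun_prop
  have ckP : CK (fun s x => φ x * S.en s x) := kφ.mul (by fun_prop)
  have ckQ : CK (fun s x => φ x * (S.qn s x - S.ε * ((S.Jk s x - B.am) * S.ux s x))) :=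
    kφ.mul cF
  have ckPt : CK (fun s x => φ x * (S.ε * ((S.Jk s x - B.am) * S.uxx s x) - S.qnx s x)) :=
    kφ.mul (by fun_prop)
  have k1 : CK (fun s x => bump R x ^ 4 *
      (S.qn s x - S.ε * ((S.Jk s x - B.am) * S.ux s x))) := kb.mul cF
  have k2 : CK (fun s x => bump R (x + D) ^ 4 *
      (S.qn s x - S.ε * ((S.Jk s x - B.am) * S.ux s x))) := kb2.mul cF
  have k3 : CK (fun s x => φ x * (S.ε * (S.Jx s x * S.ux s x))) := kφ.mul (by fun_prop)
  have ckQx : CK (fun s x => (bump R x ^ 4 - bump R (x + D) ^ 4) *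
      (S.qn s x - S.ε * ((S.Jk s x - B.am) * S.ux s x))
      + φ x * (S.qnx s x - S.ε * (S.Jx s x * S.ux s x + (S.Jk s x - B.am) * S.uxx s x))) :=
    ((kb.sub kb2).mul cF).add (kφ.mul (by fun_prop))
  have hgreen := green (T := B.T) ckP ckQ ckPt ckQx
    (G := fun s x => bump R x ^ 4 * (S.qn s x - S.ε * ((S.Jk s x - B.am) * S.ux s x))
      - bump R (x + D) ^ 4 * (S.qn s x - S.ε * ((S.Jk s x - B.am) * S.ux s x))
      - φ x * (S.ε * (S.Jx s x * S.ux s x)))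
    (fun s _ x => by ring)
    (fun s hs x => (S.en_t hs x).const_mul _)
    (fun s _ x => (dφ x).mul ((S.qn_x s x).sub
      ((((S.Jk_x s x).sub_const B.am).mul (S.ux_x s x)).const_mul S.ε)))
    (s := B.T) ⟨hT.le, le_rfl⟩
  have hsplit : ∀ s, ∫ x, (bump R x ^ 4 * (S.qn s x - S.ε * ((S.Jk s x - B.am) * S.ux s x))
      - bump R (x + D) ^ 4 * (S.qn s x - S.ε * ((S.Jk s x - B.am) * S.ux s x))
      - φ x * (S.ε * (S.Jx s x * S.ux s x)))
      = (∫ x, bump R x ^ 4 * (S.qn s x - S.ε * ((S.Jk s x - B.am) * S.ux s x)))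
        - (∫ x, bump R (x + D) ^ 4 * (S.qn s x - S.ε * ((S.Jk s x - B.am) * S.ux s x)))
        - ∫ x, φ x * (S.ε * (S.Jx s x * S.ux s x)) := fun s => by
    rw [integral_sub ((k1.sub k2).integrable s) (k3.integrable s),
      integral_sub (k1.integrable s) (k2.integrable s)]
  simp only [hsplit] at hgreen
  rw [intervalIntegral.integral_sub ((k1.ii _ _).sub (k2.ii _ _)) (k3.ii _ _),
    intervalIntegral.integral_sub (k1.ii _ _) (k2.ii _ _)] at hgreen
  have hP : ∀ s ∈ Icc 0 B.T, |∫ x, φ x * S.en s x| ≤ 2 * R * Ce := fun s hs => by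
    rw [int_eq_Ioc (fun y hy => by rw [zφ y hy, zero_mul])]
    refine (intervalIntegral.abs_integral_le_integral_abs hDR).trans ?_
    refine (tle1 hDR (f := fun x => |φ x * S.en s x|) (by fun_prop)
      (g1 := fun x => |S.en s x|) (by fun_prop) (2 * R) (fun x _ => by
        rw [abs_mul]; gcongr; exact bφ x)).trans ?_
    gcongr
    exact hen S (-D - R) s hs (by linarith)
  -- The far window, where the solution is quiet.
  have h2 : |∫ s in (0:ℝ)..B.T, ∫ x, bump R (x + D) ^ 4 *
      (S.qn s x - S.ε * ((S.Jk s x - B.am) * S.ux s x))| ≤ Ca * (Cl * B.T) + Ca * Cc + Cv := by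
    refine (intervalIntegral.abs_integral_le_integral_abs hT.le).trans ?_
    have hh := tle3 hT.le (f := fun s => |∫ x, bump R (x + D) ^ 4 *
        (S.qn s x - S.ε * ((S.Jk s x - B.am) * S.ux s x))|) k2.contI.abs
      (g1 := fun s => Cl) (by fun_prop)
      (g2 := fun s => ∫ x in (-D - R)..(-D + R), S.ρ s x * (|S.u s x| ^ 3 + S.r s x ^ 3))
      (contII (G := fun s x => S.ρ s x * (|S.u s x| ^ 3 + S.r s x ^ 3)) (by fun_prop) _ _)
      (g3 := fun s => ∫ x in (-D - R)..(-D + R), S.ε * |(S.Jk s x - B.am) * S.ux s x|)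
      (contII (G := fun s x => S.ε * |(S.Jk s x - B.am) * S.ux s x|) (by fun_prop) _ _)
      Ca Ca 1 (fun s hs => by
        rw [int_eq_Ioc (a := -D - R) (b := -D + R) (fun y hy => by
          rw [bump4_out hR (y := y + D), zero_mul]
          by_contra h
          have h := abs_lt.mp (not_le.mp h)
          exact hy ⟨by linarith [h.1], by linarith [h.2]⟩)]
        refine (intervalIntegral.abs_integral_le_integral_abs hDD).trans ?_
        have h3 := tle3 hDD (f := fun x => |bump R (x + D) ^ 4 *
            (S.qn s x - S.ε * ((S.Jk s x - B.am) * S.ux s x))|) (by fun_prop)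
          (g1 := fun x => S.ρ s x) (by fun_prop)
          (g2 := fun x => S.ρ s x * (|S.u s x| ^ 3 + S.r s x ^ 3)) (by fun_prop)
          (g3 := fun x => S.ε * |(S.Jk s x - B.am) * S.ux s x|) (by fun_prop)
          Ca Ca 1 (fun x _ => by
            have h1 : bump R (x + D) ^ 4 ≤ 1 := pow_le_one₀ (bump_nonneg _ _) (bump_le_one _ _)
            have h0 := pow_nonneg (bump_nonneg R (x + D)) 4
            rw [abs_mul, abs_of_nonneg h0]
            refine (mul_le_of_le_one_left (abs_nonneg _) h1).trans ?_
            refine (abs_sub _ _).trans ?_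
            rw [abs_mul S.ε, abs_of_pos hε]
            linarith [hqa S s x])
        have h4 := mul_le_mul_of_nonneg_left
          (hlow S (-D - R) (-D + R) s hs hDD (by linarith)).1 hCa.le
        linarith)
    have e : ∫ s in (0:ℝ)..B.T, Cl = Cl * B.T := by simp [mul_comm]
    rw [e] at hh
    have h5 := mul_le_mul_of_nonneg_left
      (hcub S (-D - R) (-D + R) (by linarith) (by linarith) hqu hqr) hCa.le
    have h6 := hvis S (-D - R) (-D + R) hε1 (by linarith) (by linarith)
    linarith
  have h3 : |∫ s in (0:ℝ)..B.T, ∫ x, φ x * (S.ε * (S.Jx s x * S.ux s x))| ≤ 16 * R * C1 := by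
    refine (intervalIntegral.abs_integral_le_integral_abs hT.le).trans ?_
    have hh := tle2 hT.le (f := fun s => |∫ x, φ x * (S.ε * (S.Jx s x * S.ux s x))|) k3.contI.abs
      (g1 := fun s => ∫ x in (-D - R)..R, S.ux s x ^ 2)
      (contII (G := fun s x => S.ux s x ^ 2) (by fun_prop) _ _)
      (g2 := fun s => ∫ x in (-D - R)..R, S.rx s x ^ 2)
      (contII (G := fun s x => S.rx s x ^ 2) (by fun_prop) _ _)
      (2 * R * S.ε * 6) (2 * R * S.ε * 2) (fun s hs => by
        rw [int_eq_Ioc (a := -D - R) (b := R) (fun y hy => by rw [zφ y hy, zero_mul])]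
        refine (intervalIntegral.abs_integral_le_integral_abs hDR).trans ?_
        exact tle2 hDR (f := fun x => |φ x * (S.ε * (S.Jx s x * S.ux s x))|) (by fun_prop)
          (g1 := fun x => S.ux s x ^ 2) (by fun_prop)
          (g2 := fun x => S.rx s x ^ 2) (by fun_prop) _ _ (fun x _ => by
            rw [abs_mul, abs_mul S.ε, abs_of_pos hε]
            calc _ ≤ 2 * R * (S.ε * (6 * S.ux s x ^ 2 + 2 * S.rx s x ^ 2)) := by
                  gcongr
                  · exact bφ x
                  · exact S.Jx_abs s x
              _ = _ := by ring))
    obtain ⟨-, -, d1, d2⟩ := hkey S (-D - R) R hDR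
    have d1 := mul_le_mul_of_nonneg_left d1 (by positivity : 0 ≤ 2 * R * 6)
    have d2 := mul_le_mul_of_nonneg_left d2 (by positivity : 0 ≤ 2 * R * 2)
    linarith
  -- The window at the origin, where the flux controls the cubic quantity.
  have kM : CK (fun s x => bump R x ^ 4 * (S.ρ s x * (|S.u s x| ^ 3 + S.r s x ^ 3))) :=
    kb.mul (by fun_prop)
  have h1 : c * (∫ s in (0:ℝ)..B.T, ∫ x, bump R x ^ 4 * (S.ρ s x * (|S.u s x| ^ 3 + S.r s x ^ 3)))
      ≤ (∫ s in (0:ℝ)..B.T, ∫ x, bump R x ^ 4 *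
        (S.qn s x - S.ε * ((S.Jk s x - B.am) * S.ux s x)))
        + (Cq * (Cl * B.T) + Cq * (Cl * B.T) + Cv) := by
    rw [← intervalIntegral.integral_const_mul]
    have hh := tle3 hT.le (f := fun s => c * ∫ x, bump R x ^ 4 *
        (S.ρ s x * (|S.u s x| ^ 3 + S.r s x ^ 3))) (kM.contI.const_mul c)
      (g1 := fun s => ∫ x, bump R x ^ 4 *
        (S.qn s x - S.ε * ((S.Jk s x - B.am) * S.ux s x))) k1.contI
      (g2 := fun s => Cl) (by fun_prop)
      (g3 := fun s => ∫ x in (-R)..R, S.ε * |(S.Jk s x - B.am) * S.ux s x|)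
      (contII (G := fun s x => S.ε * |(S.Jk s x - B.am) * S.ux s x|) (by fun_prop) _ _)
      1 (2 * Cq) 1 (fun s hs => by
        rw [int_eq_interval (fun y hy => by rw [bump4_out hR hy, zero_mul]),
          int_eq_interval (fun y hy => by rw [bump4_out hR hy, zero_mul]),
          ← intervalIntegral.integral_const_mul]
        have h3 := tle4 hRR (f := fun x => c * (bump R x ^ 4 *
            (S.ρ s x * (|S.u s x| ^ 3 + S.r s x ^ 3)))) (by fun_prop)
          (g1 := fun x => bump R x ^ 4 *
            (S.qn s x - S.ε * ((S.Jk s x - B.am) * S.ux s x))) (by fun_prop)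
          (g2 := fun x => S.ρ s x * S.u s x ^ 2) (by fun_prop)
          (g3 := fun x => S.ρ s x * S.r s x ^ 2) (by fun_prop)
          (g4 := fun x => S.ε * |(S.Jk s x - B.am) * S.ux s x|) (by fun_prop)
          1 Cq Cq 1 (fun x _ => by
            have h1 : bump R x ^ 4 ≤ 1 := pow_le_one₀ (bump_nonneg _ _) (bump_le_one _ _)
            have h0 := pow_nonneg (bump_nonneg R x) 4
            have hρ := S.pos s x
            have q1 := mul_le_mul_of_nonneg_left (hql S s x) h0
            have q2 := mul_le_of_le_one_left (by positivity :
              0 ≤ Cq * (S.ρ s x * S.u s x ^ 2 + S.ρ s x * S.r s x ^ 2)) h1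
            have q3 := mul_le_of_le_one_left (by positivity :
              0 ≤ S.ε * |(S.Jk s x - B.am) * S.ux s x|) h1
            have q4 := mul_le_mul_of_nonneg_left (mul_le_mul_of_nonneg_left
              (le_abs_self ((S.Jk s x - B.am) * S.ux s x)) hε.le) h0
            linarith)
        obtain ⟨-, l2, l3, -⟩ := hlow S (-R) R s hs hRR (by linarith)
        have l2 := mul_le_mul_of_nonneg_left l2 hCq.le
        have l3 := mul_le_mul_of_nonneg_left l3 hCq.le
        linarith)
    have e : ∫ s in (0:ℝ)..B.T, Cl = Cl * B.T := by simp [mul_comm]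
    rw [e] at hh
    have h6 := hvis S (-R) R hε1 (by linarith) (by linarith)
    linarith
  have hP0 := (abs_le.mp (hP 0 ⟨le_rfl, hT.le⟩)).1
  have hPT := (abs_le.mp (hP B.T ⟨hT.le, le_rfl⟩)).2
  have h2' := (abs_le.mp h2).2
  have h3' := (abs_le.mp h3).2
  have hmain : c * (∫ s in (0:ℝ)..B.T, ∫ x, bump R x ^ 4 *
        (S.ρ s x * (|S.u s x| ^ 3 + S.r s x ^ 3)))
      ≤ 4 * R * Ce + (Ca * (Cl * B.T) + Ca * Cc + Cv) + 16 * R * C1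
        + (Cq * (Cl * B.T) + Cq * (Cl * B.T) + Cv) := by linarith
  have hfin := tle1 hT.le
    (f := fun s => ∫ x in (-k)..k, S.ρ s x * (|S.u s x| ^ 3 + S.r s x ^ 3))
    (contII (G := fun s x => S.ρ s x * (|S.u s x| ^ 3 + S.r s x ^ 3)) (by fun_prop) _ _)
    (g1 := fun s => ∫ x, bump R x ^ 4 * (S.ρ s x * (|S.u s x| ^ 3 + S.r s x ^ 3)))
    kM.contI ((4 / 3) ^ 4) (fun s _ => by
      have e1 := tle1 (a := -k) (b := k) (by linarith)
        (f := fun x => S.ρ s x * (|S.u s x| ^ 3 + S.r s x ^ 3)) (by fun_prop)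
        (g1 := fun x => bump R x ^ 4 * (S.ρ s x * (|S.u s x| ^ 3 + S.r s x ^ 3)))
        (by fun_prop) ((4 / 3) ^ 4)
        (fun x hx => by
          have hb : 3 / 4 ≤ bump R x := by
            have := bump_ge (R := R) (c := 1 / 2) hR (y := x)
              (by rw [hRd]; have := abs_le.mpr hx; linarith)
            linarith
          have hb4 : (3 / 4) ^ 4 ≤ bump R x ^ 4 := by gcongr
          have hρ := S.pos s x
          have hr := S.r_pos s x
          rw [← mul_assoc]
          have h1 : 1 ≤ (4 / 3) ^ 4 * bump R x ^ 4 := by norm_num at hb4 ⊢; linarith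
          exact le_mul_of_one_le_left (by positivity) h1)
      refine e1.trans ?_
      gcongr
      rw [int_eq_interval (G := fun x => bump R x ^ 4 * (S.ρ s x * (|S.u s x| ^ 3 + S.r s x ^ 3)))
        (fun y hy => by rw [bump4_out hR hy]; ring)]
      exact t_mono (by fun_prop) (fun x => by
        have hρ := S.pos s x
        have hr := S.r_pos s x
        have := bump_nonneg R x
        positivity) (by linarith) (by linarith) (by linarith))
  refine hfin.trans ?_
  rw [div_mul_eq_mul_div, le_div_iff₀ hc, mul_assoc, mul_comm _ c]
  gcongr

/-- The estimate for the frozen-time form of the problem, uniform in the viscosity. -/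
lemma combined (B : Bg) {k : ℝ} (hk : 0 < k) (hl0 : B.l0 ≤ 2 * k) :
    ∃ C : ℝ, 0 < C ∧ ∀ S : Sol B,
    ∫ s in (0:ℝ)..B.T, ∫ x in (-k)..k, (S.ρ s x * |S.u s x| ^ 3 + S.ρ s x * S.r s x ^ 3
      + S.ρ s x * (S.ρ s x * S.r s x ^ 2)) ≤ C := by
  obtain ⟨C0, hC0, hkey⟩ := key_prop B
  obtain ⟨C1, hC1, h1⟩ := cubic_small B hk (by linarith)
  obtain ⟨C2, hC2, h2⟩ := dens_small B hk
  obtain ⟨C3, hC3, h3⟩ := cubic_loc B (2 * k) C0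
  obtain ⟨C4, hC4, h4⟩ := dens_large B (2 * k)
  have hT := B.hT
  refine ⟨C1 + C2 + C3 + C4, by positivity, fun S => ?_⟩
  have hkk : -k ≤ k := by linarith
  have hsum := tle2 hT.le (f := fun s => ∫ x in (-k)..k, (S.ρ s x * |S.u s x| ^ 3
      + S.ρ s x * S.r s x ^ 3 + S.ρ s x * (S.ρ s x * S.r s x ^ 2)))
    (contII (G := fun s x => S.ρ s x * |S.u s x| ^ 3
      + S.ρ s x * S.r s x ^ 3 + S.ρ s x * (S.ρ s x * S.r s x ^ 2)) (by fun_prop) _ _)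
    (g1 := fun s => ∫ x in (-k)..k, S.ρ s x * (|S.u s x| ^ 3 + S.r s x ^ 3))
    (contII (G := fun s x => S.ρ s x * (|S.u s x| ^ 3 + S.r s x ^ 3)) (by fun_prop) _ _)
    (g2 := fun s => ∫ x in (-k)..k, S.ρ s x * (S.ρ s x * S.r s x ^ 2))
    (contII (G := fun s x => S.ρ s x * (S.ρ s x * S.r s x ^ 2)) (by fun_prop) _ _) 1 1
    (fun s _ => tle2 hkk (by fun_prop) (by fun_prop) (by fun_prop) 1 1 (fun x _ => by
      apply le_of_eq; ring))
  refine hsum.trans ?_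
  rcases le_total S.ε 1 with hε | hε
  · linarith [h1 S hε, h2 S hε]
  · obtain ⟨-, -, d1, d2⟩ := hkey S (-k) k hkk
    have nn : ∀ f : ℝ → ℝ → ℝ, 0 ≤ ∫ s in (0:ℝ)..B.T, ∫ x in (-k)..k, f s x ^ 2 := fun f =>
      intervalIntegral.integral_nonneg hT.le fun s _ =>
        intervalIntegral.integral_nonneg hkk fun x _ => sq_nonneg _
    have e1 := h3 S (-k) k (by linarith) (by linarith)
      ((le_mul_of_one_le_left (nn S.ux) hε).trans d1)
      ((le_mul_of_one_le_left (nn S.rx) hε).trans d2)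
    have e2 := h4 S (-k) k hε (by linarith) (by linarith)
    linarith

end NSHI

/-! ### Potentials of conservation laws with frozen time -/

namespace NSHI

lemma c1_data {F : ℝ → ℝ → ℝ} {n : WithTop ℕ∞} (hn : n ≠ 0)
    (h : ContDiff ℝ n (fun z : ℝ × ℝ => F z.1 z.2)) :
    (∀ s x, HasDerivAt (fun τ => F τ x) (fderiv ℝ (fun z : ℝ × ℝ => F z.1 z.2) (s, x) (1, 0)) s) ∧
    (∀ s x, HasDerivAt (fun y => F s y)
      (fderiv ℝ (fun z : ℝ × ℝ => F z.1 z.2) (s, x) (0, 1)) x) := by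
  refine ⟨fun s x => ?_, fun s x => ?_⟩
  · have h1 := ((h.differentiable hn) (s, x)).hasFDerivAt
    exact h1.comp_hasDerivAt (f := fun τ : ℝ => (τ, x)) s
      ((hasDerivAt_id s).prodMk (hasDerivAt_const s x))
  · have h1 := ((h.differentiable hn) (s, x)).hasFDerivAt
    exact h1.comp_hasDerivAt (f := fun y : ℝ => (s, y)) x
      ((hasDerivAt_const x s).prodMk (hasDerivAt_id x))

/-- Partial derivatives of a `C²` function of two variables, with equality of the mixed ones. -/
lemma c2_data {F : ℝ → ℝ → ℝ} (h : ContDiff ℝ 2 (fun z : ℝ × ℝ => F z.1 z.2)) :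
    ∃ Ft Fx Fxx Fxt : ℝ → ℝ → ℝ,
      Continuous (fun z : ℝ × ℝ => Ft z.1 z.2) ∧ Continuous (fun z : ℝ × ℝ => Fx z.1 z.2) ∧
      Continuous (fun z : ℝ × ℝ => Fxx z.1 z.2) ∧ Continuous (fun z : ℝ × ℝ => Fxt z.1 z.2) ∧
      (∀ s x, HasDerivAt (fun τ => F τ x) (Ft s x) s) ∧
      (∀ s x, HasDerivAt (fun y => F s y) (Fx s x) x) ∧
      (∀ s x, HasDerivAt (fun y => Fx s y) (Fxx s x) x) ∧
      (∀ s x, HasDerivAt (fun τ => Fx τ x) (Fxt s x) s) ∧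
      (∀ s x, HasDerivAt (fun y => Ft s y) (Fxt s x) x) := by
  set f : ℝ × ℝ → ℝ := fun z => F z.1 z.2 with hf
  have h1 : ContDiff ℝ 1 (fderiv ℝ f) := h.fderiv_right (by norm_num)
  have ha : ∀ v : ℝ × ℝ, ContDiff ℝ 1 (fun z => fderiv ℝ f z v) := fun v =>
    h1.clm_apply contDiff_const
  have hd := c1_data (by norm_num) h
  have hx := c1_data (F := fun s x => fderiv ℝ f (s, x) (0, 1)) (n := 1) (by norm_num) (ha (0, 1))
  have ht := c1_data (F := fun s x => fderiv ℝ f (s, x) (1, 0)) (n := 1) (by norm_num) (ha (1, 0))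
  have hc : ∀ v w : ℝ × ℝ, Continuous (fun z => fderiv ℝ (fun z => fderiv ℝ f z v) z w) :=
    fun v w => ((ha v).continuous_fderiv (by norm_num)).clm_apply continuous_const
  have hsec : ∀ (v w z : ℝ × ℝ), fderiv ℝ (fun z => fderiv ℝ f z v) z w
      = fderiv ℝ (fderiv ℝ f) z w v := fun v w z => by
    have := ((h1.differentiable (by norm_num)) z).hasFDerivAt
    rw [((this.clm_apply (hasFDerivAt_const v z))).fderiv]
    simp
  have hsym : ∀ (z : ℝ × ℝ) v w, fderiv ℝ (fderiv ℝ f) z v w = fderiv ℝ (fderiv ℝ f) z w v :=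
    fun z v w => (h.contDiffAt.isSymmSndFDerivAt (by simp)) v w
  refine ⟨fun s x => fderiv ℝ f (s, x) (1, 0), fun s x => fderiv ℝ f (s, x) (0, 1),
    fun s x => fderiv ℝ (fun z => fderiv ℝ f z (0, 1)) (s, x) (0, 1),
    fun s x => fderiv ℝ (fun z => fderiv ℝ f z (0, 1)) (s, x) (1, 0),
    (ha _).continuous, (ha _).continuous, hc _ _, hc _ _, hd.1, hd.2, hx.2, hx.1,
    fun s x => ?_⟩
  have := ht.2 s x
  convert this using 1
  rw [hsec, hsym]
  exact hsec _ _ _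

/-- Projection of time onto `[0, T]`. -/
noncomputable def clamp (T s : ℝ) : ℝ := max 0 (min s T)

lemma clamp_mem {T : ℝ} (hT : 0 < T) (s : ℝ) : clamp T s ∈ Icc 0 T :=
  ⟨le_max_left _ _, max_le hT.le (min_le_right _ _)⟩

lemma clamp_of_mem {T s : ℝ} (hs : s ∈ Icc 0 T) : clamp T s = s := by
  unfold clamp; rw [min_eq_left hs.2, max_eq_right hs.1]

@[fun_prop]
lemma continuous_clamp (T : ℝ) : Continuous (clamp T) := by unfold clamp; fun_prop

lemma clamp_eventually {T s : ℝ} (hs : s ∈ Ioo 0 T) : ∀ᶠ τ in nhds s, clamp T τ = τ := by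
  filter_upwards [isOpen_Ioo.mem_nhds hs] with τ hτ
  exact clamp_of_mem ⟨hτ.1.le, hτ.2.le⟩

lemma clamp_hasDerivAt {T s d : ℝ} {f : ℝ → ℝ} (hs : s ∈ Ioo 0 T) (hf : HasDerivAt f d s) :
    HasDerivAt (fun τ => f (clamp T τ)) d s :=
  hf.congr_of_eventuallyEq ((clamp_eventually hs).mono fun τ hτ => by beta_reduce; rw [hτ])

lemma clamp_cont {T : ℝ} {F : ℝ → ℝ → ℝ} (hF : Continuous (fun z : ℝ × ℝ => F z.1 z.2)) :
    Continuous (fun z : ℝ × ℝ => F (clamp T z.1) z.2) :=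
  hF.comp (by fun_prop : Continuous fun z : ℝ × ℝ => (clamp T z.1, z.2))

/-- The potential of the conservation law `aₜ + bₓ = 0`, with time frozen outside `[0, T]`. -/
noncomputable def pot (T : ℝ) (a b : ℝ → ℝ → ℝ) (s x : ℝ) : ℝ :=
  (∫ y in (0:ℝ)..x, a s y) - ∫ τ in (0:ℝ)..(clamp T s), b τ 0

section pot
variable {T : ℝ} {a b at' bx : ℝ → ℝ → ℝ}

lemma pot_cont (ca : Continuous (fun z : ℝ × ℝ => a z.1 z.2))
    (cb : Continuous (fun z : ℝ × ℝ => b z.1 z.2)) :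
    Continuous (fun z : ℝ × ℝ => pot T a b z.1 z.2) := by
  unfold pot
  refine Continuous.sub ?_ ?_
  · exact intervalIntegral.continuous_parametric_intervalIntegral_of_continuous
      (f := fun (z : ℝ × ℝ) y => a z.1 y)
      (ca.comp (by fun_prop : Continuous fun q : (ℝ × ℝ) × ℝ => (q.1.1, q.2))) continuous_snd
  · exact intervalIntegral.continuous_parametric_intervalIntegral_of_continuous
      (f := fun (z : ℝ × ℝ) τ => b τ 0)
      (cb.comp (by fun_prop : Continuous fun q : (ℝ × ℝ) × ℝ => (q.2, (0:ℝ)))) (by fun_prop)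

lemma pot_x (ca : Continuous (fun z : ℝ × ℝ => a z.1 z.2)) (s x : ℝ) :
    HasDerivAt (fun y => pot T a b s y) (a s x) x := by
  have c : Continuous (fun y => a s y) := contx ca s
  exact (intervalIntegral.integral_hasDerivAt_right (c.intervalIntegrable _ _)
    (c.stronglyMeasurableAtFilter _ _) c.continuousAt).sub_const _

lemma pot_t (ca : Continuous (fun z : ℝ × ℝ => a z.1 z.2))
    (cb : Continuous (fun z : ℝ × ℝ => b z.1 z.2))
    (cat : Continuous (fun z : ℝ × ℝ => at' z.1 z.2))
    (cbx : Continuous (fun z : ℝ × ℝ => bx z.1 z.2))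
    (ha : ∀ s ∈ Ioo 0 T, ∀ x, HasDerivAt (fun τ => a τ x) (at' s x) s)
    (hb : ∀ s ∈ Ioo 0 T, ∀ x, HasDerivAt (fun y => b s y) (bx s x) x)
    (hab : ∀ s ∈ Ioo 0 T, ∀ x, at' s x + bx s x = 0) {s : ℝ} (hs : s ∈ Ioo 0 T) (x : ℝ) :
    HasDerivAt (fun τ => pot T a b τ x) (-(b s x)) s := by
  obtain ⟨M, hM⟩ := (isCompact_Icc (a := (0:ℝ)) (b := T)).prod
    (isCompact_uIcc (a := (0:ℝ)) (b := x)) |>.exists_bound_of_continuousOn cat.continuousOn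
  have h1 := (intervalIntegral.hasDerivAt_integral_of_dominated_loc_of_deriv_le (μ := volume)
    (F := a) (F' := at') (bound := fun _ => M) (a := 0) (b := x) (isOpen_Ioo.mem_nhds hs)
    (Eventually.of_forall fun τ => (contx ca τ).aestronglyMeasurable)
    ((contx ca s).intervalIntegrable _ _) (contx cat s).aestronglyMeasurable
    (ae_of_all _ fun y hy τ hτ => hM (τ, y) ⟨⟨hτ.1.le, hτ.2.le⟩, uIoc_subset_uIcc hy⟩)
    (by simp) (ae_of_all _ fun y _ τ hτ => ha τ hτ y)).2
  have c0 : Continuous (fun τ => b τ 0) :=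
    cb.comp (by fun_prop : Continuous fun τ : ℝ => (τ, (0:ℝ)))
  have h2 : HasDerivAt (fun τ => ∫ σ in (0:ℝ)..(clamp T τ), b σ 0) (b s 0) s :=
    clamp_hasDerivAt (f := fun τ => ∫ σ in (0:ℝ)..τ, b σ 0) hs
      (intervalIntegral.integral_hasDerivAt_right (c0.intervalIntegrable _ _)
        (c0.stronglyMeasurableAtFilter _ _) c0.continuousAt)
  refine (h1.sub h2).congr_deriv ?_
  have h3 : ∫ y in (0:ℝ)..x, bx s y = b s x - b s 0 :=
    intervalIntegral.integral_eq_sub_of_hasDerivAt (fun y _ => hb s hs y)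
      ((contx cbx s).intervalIntegrable _ _)
  have h4 : ∫ y in (0:ℝ)..x, at' s y = -∫ y in (0:ℝ)..x, bx s y := by
    rw [← intervalIntegral.integral_neg]
    congr 1; funext y; linarith [hab s hs y]
  rw [h4, h3]; ring

end pot

/-- A positive continuous function asymptotic to a background with values in `[m, M]` is bounded
above and away from zero. -/
lemma two_sided {f g : ℝ → ℝ} {m M : ℝ} (hm : 0 < m) (hf : Continuous f) (hpos : ∀ x, 0 < f x)
    (hg : ∀ x, m ≤ g x ∧ g x ≤ M) (h : Tendsto (fun x => f x - g x) (cocompact ℝ) (nhds 0)) :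
    ∃ c C : ℝ, 0 < c ∧ ∀ x, c ≤ f x ∧ f x ≤ C := by
  have h1 : ∀ᶠ x in cocompact ℝ, |f x - g x| < m / 2 := by
    have := Metric.tendsto_nhds.mp h (m / 2) (by positivity)
    simpa [Real.dist_eq] using this
  obtain ⟨K, hK, hKs⟩ := mem_cocompact.mp h1
  rcases K.eq_empty_or_nonempty with he | hne
  · refine ⟨m / 2, M + m / 2, by positivity, fun x => ?_⟩
    have h3 : |f x - g x| < m / 2 := hKs (by simp [he])
    have := abs_lt.mp h3
    exact ⟨by linarith [(hg x).1], by linarith [(hg x).2]⟩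
  · obtain ⟨x0, -, hx0⟩ := hK.exists_isMinOn hne hf.continuousOn
    obtain ⟨x1, -, hx1⟩ := hK.exists_isMaxOn hne hf.continuousOn
    refine ⟨min (f x0) (m / 2), max (f x1) (M + m / 2), lt_min (hpos _) (by positivity),
      fun x => ?_⟩
    by_cases hx : x ∈ K
    · exact ⟨(min_le_left _ _).trans (hx0 hx), (hx1 hx).trans (le_max_left _ _)⟩
    · have h3 : |f x - g x| < m / 2 := hKs hx
      have := abs_lt.mp h3
      exact ⟨(min_le_right _ _).trans (by linarith [(hg x).1]),
        le_trans (by linarith [(hg x).2]) (le_max_right _ _)⟩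

/-- If `a ≥ c(s) > 0` at each time then the potential is coercive in `x`, uniformly in time, by
compactness of the time interval. -/
lemma pot_coercive {T : ℝ} (hT : 0 < T) {a b : ℝ → ℝ → ℝ}
    (ca : Continuous (fun z : ℝ × ℝ => a z.1 z.2)) (cb : Continuous (fun z : ℝ × ℝ => b z.1 z.2))
    (hcl : ∀ s x, a (clamp T s) x = a s x)
    (hpos : ∀ s, ∃ c : ℝ, 0 < c ∧ ∀ x, c ≤ a s x) (R : ℝ) :
    ∃ X : ℝ, ∀ s x, X ≤ |x| → R ≤ |pot T a b s x| := by
  have cp := pot_cont (T := T) ca cb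
  have hmono : ∀ s, Monotone (pot T a b s) := fun s => by
    obtain ⟨c, hc, h⟩ := hpos s
    exact monotone_of_hasDerivAt_nonneg (fun x => pot_x ca s x) (fun x => (hc.le.trans (h x)))
  have hlin : ∀ s, ∃ c : ℝ, 0 < c ∧ ∀ x, 0 ≤ x →
      pot T a b s 0 + c * x ≤ pot T a b s x ∧ pot T a b s (-x) ≤ pot T a b s 0 - c * x := fun s => by
    obtain ⟨c, hc, h⟩ := hpos s
    have hm : Monotone (fun x => pot T a b s x - c * x) :=
      monotone_of_hasDerivAt_nonneg
        (fun x => (pot_x ca s x).sub ((hasDerivAt_id x).const_mul c))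
        (fun x => by simp only [mul_one]; simpa using h x)
    refine ⟨c, hc, fun x hx => ?_⟩
    have h1 := hm hx
    have h2 := hm (neg_nonpos.mpr hx)
    simp only [mul_zero, mul_neg] at h1 h2
    constructor <;> linarith
  have hcov := (isCompact_Icc (a := (0:ℝ)) (b := T)).elim_directed_cover
    (fun n : ℕ => {s | R < pot T a b s n} ∩ {s | pot T a b s (-n) < -R})
    (fun n => by
      have c1 : Continuous fun s => pot T a b s n :=
        cp.comp (by fun_prop : Continuous fun s : ℝ => (s, (n:ℝ)))
      have c2 : Continuous fun s => pot T a b s (-n) :=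
        cp.comp (by fun_prop : Continuous fun s : ℝ => (s, (-n:ℝ)))
      exact (isOpen_lt continuous_const c1).inter (isOpen_lt c2 continuous_const))
    (fun s _ => by
      obtain ⟨c, hc, h⟩ := hlin s
      obtain ⟨n, hn⟩ := exists_nat_gt ((R + |pot T a b s 0|) / c)
      rw [div_lt_iff₀ hc] at hn
      obtain ⟨h1, h2⟩ := h n n.cast_nonneg
      have := neg_abs_le (pot T a b s 0)
      have := le_abs_self (pot T a b s 0)
      exact mem_iUnion.mpr ⟨n, by simp only [mem_ofPred_eq]; linarith,
        by simp only [mem_ofPred_eq]; linarith⟩)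
    (directed_of_isDirected_le fun i j hij s hs => by
      have : (i:ℝ) ≤ j := by exact_mod_cast hij
      exact ⟨lt_of_lt_of_le hs.1 (hmono s this),
        lt_of_le_of_lt (hmono s (neg_le_neg this)) hs.2⟩)
  obtain ⟨n, hn⟩ := hcov
  refine ⟨n, fun s x hx => ?_⟩
  have hs := hn (clamp_mem hT s)
  have he : ∀ y, pot T a b (clamp T s) y = pot T a b s y := fun y => by
    unfold pot
    rw [clamp_of_mem (clamp_mem hT s)]
    simp only [hcl]
  have h1 : R < pot T a b s n := by rw [← he]; exact hs.1
  have h2 : pot T a b s (-n) < -R := by rw [← he]; exact hs.2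
  rcases le_abs.mp hx with h | h
  · exact (h1.le.trans (hmono s h)).trans (le_abs_self _)
  · have := hmono s (by linarith : x ≤ -(n:ℝ))
    have := neg_abs_le (pot T a b s x)
    linarith

/-- The limit at infinity of an integrable function vanishes. -/
lemma lim_zero {f : ℝ → ℝ} (hf : Integrable f) {l : Filter ℝ} (hl : l = atTop ∨ l = atBot)
    {c : ℝ} (h : Tendsto f l (nhds c)) : c = 0 := by
  refine (hf.integrableAtFilter l).eq_zero_of_tendsto (fun s hs => ?_) h
  rcases hl with rfl | rfl
  · obtain ⟨b, hb⟩ := mem_atTop_sets.mp hs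
    refine top_le_iff.mp ?_
    rw [← Real.volume_Ici (a := b)]
    exact measure_mono hb
  · obtain ⟨b, hb⟩ := mem_atBot_sets.mp hs
    refine top_le_iff.mp ?_
    rw [← Real.volume_Iic (a := b)]
    exact measure_mono hb

end NSHI

/-! ### From classical solutions to the frozen-time form -/

namespace NSHI

lemma hasDerivAt_rpow_θ {θ : ℝ} {f : ℝ → ℝ} {f' x : ℝ} (hf : HasDerivAt f f' x) (h : 0 < f x) :
    HasDerivAt (fun y => f y ^ θ) (θ * f x ^ θ / f x * f') x := by
  refine (hf.rpow_const (p := θ) (Or.inl h.ne')).congr_deriv ?_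
  rw [Real.rpow_sub_one h.ne']; ring

lemma hasDerivAt_pressure {θ : ℝ} (hθ : 0 < θ) {f : ℝ → ℝ} {f' x : ℝ} (hf : HasDerivAt f f' x)
    (h : 0 < f x) : HasDerivAt (fun y => θ ^ 2 / (2 * θ + 1) * (f y * (f y ^ θ) ^ 2))
      (θ ^ 2 * (f x ^ θ) ^ 2 * f') x := by
  refine ((hf.mul ((hasDerivAt_rpow_θ (θ := θ) hf h).pow 2)).const_mul _).congr_deriv ?_
  have : 2 * θ + 1 ≠ 0 := by positivity
  simp only [Nat.cast_ofNat, Nat.add_one_sub_one, pow_one, Pi.pow_apply]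
  field_simp
  ring

/-- The background data of the problem. -/
lemma exists_bg {θ t L₀ ρplus ρminus E₀ E₁ : ℝ} (hθ : 0 < θ) (ht : 0 < t) (hL₀ : 0 < L₀)
    (hp : 0 < ρplus) (hm : 0 < ρminus) {ρb : ℝ → ℝ} (hρb : ContDiff ℝ (⊤ : ℕ∞) ρb)
    (hmono : Monotone ρb ∨ Antitone ρb) (hplus : ∀ x, L₀ ≤ x → ρb x = ρplus)
    (hminus : ∀ x, x ≤ -L₀ → ρb x = ρminus) :
    ∃ B : Bg, B.θ = θ ∧ B.T = t ∧ B.E0 = E₀ ∧ B.E1 = E₁ ∧ B.ρb = ρb := by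
  have hb : ∀ x, min ρplus ρminus ≤ ρb x ∧ ρb x ≤ max ρplus ρminus := fun x => by
    have e1 := hplus (max x L₀) (le_max_right _ _)
    have e2 := hminus (min x (-L₀)) (min_le_right _ _)
    rcases hmono with h | h
    · have h1 := h (le_max_left x L₀)
      have h2 := h (min_le_left x (-L₀))
      rw [e1] at h1; rw [e2] at h2
      exact ⟨(min_le_right _ _).trans h2, h1.trans (le_max_left _ _)⟩
    · have h1 := h (le_max_left x L₀)
      have h2 := h (min_le_left x (-L₀))
      rw [e1] at h1; rw [e2] at h2
      exact ⟨(min_le_left _ _).trans h1, h2.trans (le_max_right _ _)⟩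
  have hpos : ∀ x, 0 < ρb x := fun x => (lt_min hp hm).trans_le (hb x).1
  have hd : ∀ x, HasDerivAt ρb (deriv ρb x) x := fun x =>
    ((hρb.differentiable (by simp)) x).hasDerivAt
  have cd : Continuous (deriv ρb) := hρb.continuous_deriv (by simp)
  have cρ := hρb.continuous
  have hz : ∀ x, L₀ + 1 ≤ |x| → deriv ρb x = 0 := fun x hx => by
    rcases le_abs.mp hx with h | h
    · have : ρb =ᶠ[nhds x] fun _ => ρplus := by
        filter_upwards [Ioi_mem_nhds (by linarith : L₀ < x)] with y hy
        exact hplus y (le_of_lt hy)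
      rw [this.deriv_eq]; simp
    · have : ρb =ᶠ[nhds x] fun _ => ρminus := by
        filter_upwards [Iio_mem_nhds (by linarith : x < -L₀)] with y hy
        exact hminus y (le_of_lt hy)
      rw [this.deriv_eq]; simp
  refine ⟨{ θ := θ, T := t, L := L₀ + 1, m := min ρplus ρminus, M := max ρplus ρminus,
            ρm := ρminus, E0 := E₀, E1 := E₁, ρb := ρb,
            Ebx := fun x => θ ^ 2 * (ρb x ^ θ) ^ 2 / ρb x * deriv ρb x,
            hθ := hθ, hT := ht, hL := by linarith, hm := lt_min hp hm,
            ρb_ge := fun x => (hb x).1, ρb_le := fun x => (hb x).2, cρb := cρ, cEbx := ?_,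
            Ebx_zero := fun x hx => by rw [hz x hx, mul_zero], dEb := fun x => ?_,
            dpb := fun x => ?_, ρb_left := fun x hx => hminus x (by linarith) },
          rfl, rfl, rfl, rfl, rfl⟩
  · have c1 : Continuous fun x => ρb x ^ θ := cρ.rpow_const (fun x => Or.inl (hpos x).ne')
    exact ((continuous_const.mul (c1.pow 2)).div cρ (fun x => (hpos x).ne')).mul cd
  · refine (((hasDerivAt_rpow_θ (θ := θ) (hd x) (hpos x)).pow 2).const_mul (θ / 2)).congr_deriv ?_
    simp only [Nat.cast_ofNat, Nat.add_one_sub_one, pow_one]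
    ring
  · refine (hasDerivAt_pressure hθ (hd x) (hpos x)).congr_deriv ?_
    have := (hpos x).ne'
    field_simp

/-- A classical solution, with time frozen outside `[0, T]`, gives a `Sol`. -/
lemma exists_sol (B : Bg) {ε : ℝ} (hε : 0 < ε) {ρ u : ℝ → ℝ → ℝ}
    (hρ : ContDiff ℝ 2 (fun z : ℝ × ℝ => ρ z.1 z.2))
    (hu : ContDiff ℝ 2 (fun z : ℝ × ℝ => u z.1 z.2))
    (hpos : ∀ s x : ℝ, s ∈ Icc 0 B.T → 0 < ρ s x)
    (hcont : ∀ s x : ℝ, s ∈ Icc 0 B.T →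
      deriv (fun τ => ρ τ x) s + deriv (fun y => ρ s y * u s y) x = 0)
    (hmom : ∀ s x : ℝ, s ∈ Icc 0 B.T → deriv (fun τ => ρ τ x * u τ x) s
      + deriv (fun y => ρ s y * (u s y) ^ 2 + B.pr (ρ s y)) x
        = ε * deriv (deriv (fun y => u s y)) x)
    (htend : ∀ s : ℝ, s ∈ Icc 0 B.T →
      Tendsto (fun x => ρ s x - B.ρb x) (cocompact ℝ) (nhds 0))
    (hInt : ∀ s : ℝ, s ∈ Icc 0 B.T →
      Integrable (fun x => ρ s x * u s x ^ 2 / 2 + B.Ψ x (ρ s x)))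
    (h0 : ∫ x, (ρ 0 x * u 0 x ^ 2 / 2 + B.Ψ x (ρ 0 x)) ≤ B.E0)
    (h1i : Integrable (fun x => ε ^ 2 * (deriv (fun y => ρ 0 y) x) ^ 2 / (ρ 0 x) ^ 3
      + 2 * ε * |deriv (fun y => ρ 0 y) x * u 0 x| / ρ 0 x + ρ 0 x * |u 0 x|))
    (h1 : ∫ x, (ε ^ 2 * (deriv (fun y => ρ 0 y) x) ^ 2 / (ρ 0 x) ^ 3
      + 2 * ε * |deriv (fun y => ρ 0 y) x * u 0 x| / ρ 0 x + ρ 0 x * |u 0 x|) ≤ B.E1) :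
    ∃ S : Sol B, ∀ s ∈ Icc 0 B.T, ∀ x, S.ρ s x = ρ s x ∧ S.u s x = u s x := by
  have hT := B.hT
  have hθ := B.hθ
  obtain ⟨ρt, ρx, ρxx, ρxt, cρt, cρx, cρxx, cρxt, dρt, dρx, dρxx, dρxt, dρtx⟩ := c2_data hρ
  obtain ⟨ut, ux, uxx, uxt, cut, cux, cuxx, cuxt, dut, dux, duxx, duxt, dutx⟩ := c2_data hu
  have cρ : Continuous (fun z : ℝ × ℝ => ρ z.1 z.2) := hρ.continuous
  have cu : Continuous (fun z : ℝ × ℝ => u z.1 z.2) := hu.continuous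
  -- The equations in non-conservative form.
  have e1 : ∀ s ∈ Icc 0 B.T, ∀ x, ρt s x = -(ρx s x * u s x + ρ s x * ux s x) :=
    fun s hs x => by
    have := hcont s x hs
    have h2 : HasDerivAt (fun y => ρ s y * u s y) (ρx s x * u s x + ρ s x * ux s x) x :=
      (dρx s x).mul (dux s x)
    rw [(dρt s x).deriv, h2.deriv] at this
    linarith
  have dpr : ∀ s ∈ Icc 0 B.T, ∀ x, HasDerivAt (fun y => B.pr (ρ s y))
      (B.θ ^ 2 * (ρ s x ^ B.θ) ^ 2 * ρx s x) x := fun s hs x =>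
    hasDerivAt_pressure hθ (dρx s x) (hpos s x hs)
  have dflux : ∀ s ∈ Icc 0 B.T, ∀ x, HasDerivAt (fun y => ρ s y * (u s y) ^ 2 + B.pr (ρ s y))
      (ρx s x * u s x ^ 2 + ρ s x * (2 * u s x * ux s x)
        + B.θ ^ 2 * (ρ s x ^ B.θ) ^ 2 * ρx s x) x := fun s hs x => by
    refine (((dρx s x).mul ((dux s x).pow 2)).add (dpr s hs x)).congr_deriv ?_
    simp
  have e2 : ∀ s ∈ Icc 0 B.T, ∀ x, (ρt s x * u s x + ρ s x * ut s x)
      + (ρx s x * u s x ^ 2 + ρ s x * (2 * u s x * ux s x)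
        + B.θ ^ 2 * (ρ s x ^ B.θ) ^ 2 * ρx s x) = ε * uxx s x := fun s hs x => by
    have := hmom s x hs
    have e : deriv (fun y => u s y) = fun y => ux s y := funext fun y => (dux s y).deriv
    have h2 : HasDerivAt (fun τ => ρ τ x * u τ x) (ρt s x * u s x + ρ s x * ut s x) s :=
      (dρt s x).mul (dut s x)
    rw [h2.deriv, (dflux s hs x).deriv, e, (duxx s x).deriv] at this
    exact this
  have e3 : ∀ s ∈ Icc 0 B.T, ∀ x, ut s x = -(u s x * ux s x)
      - B.θ ^ 2 * (ρ s x ^ B.θ) ^ 2 * ρx s x / ρ s x + ε * uxx s x / ρ s x := fun s hs x => by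
    have h := e2 s hs x
    rw [e1 s hs x] at h
    have hp := (hpos s x hs).ne'
    field_simp
    linarith
  have e4 : ∀ s ∈ Icc 0 B.T, ∀ x, ρxt s x
      = -(ρxx s x * u s x + 2 * ρx s x * ux s x + ρ s x * uxx s x) := fun s hs x => by
    have h := dρtx s x
    have e : (fun y => ρt s y) = fun y => -(ρx s y * u s y + ρ s y * ux s y) :=
      funext fun y => e1 s hs y
    rw [e] at h
    have h2 := (((dρxx s x).mul (dux s x)).add ((dρx s x).mul (duxx s x))).neg
    rw [h.unique h2]
    ring
  set c := clamp B.T with hc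
  have cm : ∀ s, c s ∈ Icc 0 B.T := clamp_mem hT
  have cs : ∀ s ∈ Icc 0 B.T, c s = s := fun s hs => clamp_of_mem hs
  have cs' : ∀ s ∈ Ioo 0 B.T, c s = s := fun s hs => cs s ⟨hs.1.le, hs.2.le⟩
  have I : ∀ s ∈ Ioo 0 B.T, s ∈ Icc 0 B.T := fun s hs => ⟨hs.1.le, hs.2.le⟩
  have hend : ∀ s, s = 0 ∨ s = B.T → s ∈ Icc 0 B.T := by
    rintro s (rfl | rfl)
    · exact ⟨le_rfl, hT.le⟩
    · exact ⟨hT.le, le_rfl⟩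
  have kρ : Continuous (fun z : ℝ × ℝ => ρ (c z.1) z.2) := clamp_cont cρ
  have ku : Continuous (fun z : ℝ × ℝ => u (c z.1) z.2) := clamp_cont cu
  have kρx : Continuous (fun z : ℝ × ℝ => ρx (c z.1) z.2) := clamp_cont cρx
  have kux : Continuous (fun z : ℝ × ℝ => ux (c z.1) z.2) := clamp_cont cux
  have kρt : Continuous (fun z : ℝ × ℝ => ρt (c z.1) z.2) := clamp_cont cρt
  have kut : Continuous (fun z : ℝ × ℝ => ut (c z.1) z.2) := clamp_cont cut
  have kuxx : Continuous (fun z : ℝ × ℝ => uxx (c z.1) z.2) := clamp_cont cuxx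
  have kr : Continuous (fun z : ℝ × ℝ => ρ (c z.1) z.2 ^ B.θ) :=
    kρ.rpow_const (fun z => Or.inl (hpos _ _ (cm _)).ne')
  have kp : Continuous (fun z : ℝ × ℝ => B.pr (ρ (c z.1) z.2)) := by
    unfold Bg.pr
    fun_prop
  have kA : Continuous (fun z : ℝ × ℝ => ρ (c z.1) z.2 * u (c z.1) z.2 ^ 2
      + B.pr (ρ (c z.1) z.2) - ε * ux (c z.1) z.2) := by fun_prop
  have kρu : Continuous (fun z : ℝ × ℝ => ρ (c z.1) z.2 * u (c z.1) z.2) := by fun_prop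
  have kY := pot_cont (T := B.T) (a := fun s x => ρ (c s) x)
    (b := fun s x => ρ (c s) x * u (c s) x) kρ kρu
  have kAA := pot_cont (T := B.T) (a := fun s x => ρ (c s) x * u (c s) x)
    (b := fun s x => ρ (c s) x * u (c s) x ^ 2 + B.pr (ρ (c s) x) - ε * ux (c s) x) kρu kA
  have twos : ∀ s, ∃ c1 C1 : ℝ, 0 < c1 ∧ ∀ x, c1 ≤ ρ (c s) x ∧ ρ (c s) x ≤ C1 := fun s =>
    two_sided B.hm (contx cρ (c s)) (fun x => hpos _ x (cm s))
      (fun x => ⟨B.ρb_ge x, B.ρb_le x⟩) (htend _ (cm s))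
  refine ⟨{ ε := ε, ρ := fun s x => ρ (c s) x, u := fun s x => u (c s) x,
            ρx := fun s x => ρx (c s) x, ux := fun s x => ux (c s) x,
            ρxx := fun s x => ρxx (c s) x, uxx := fun s x => uxx (c s) x,
            Y := pot B.T (fun s x => ρ (c s) x) (fun s x => ρ (c s) x * u (c s) x),
            A := pot B.T (fun s x => ρ (c s) x * u (c s) x)
              (fun s x => ρ (c s) x * u (c s) x ^ 2 + B.pr (ρ (c s) x) - ε * ux (c s) x),
            hε := hε, pos := fun s x => hpos _ x (cm s), cρ := kρ, cu := ku, cρx := kρx,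
            cux := kux, cρxx := clamp_cont cρxx, cuxx := kuxx, cY := kY, cA := kAA,
            ρ_x := fun s x => dρx _ x, u_x := fun s x => dux _ x, ρx_x := fun s x => dρxx _ x,
            ux_x := fun s x => duxx _ x, Y_x := fun s x => pot_x kρ s x,
            A_x := fun s x => pot_x kρu s x, ρ_t := fun s hs x => ?_, u_t := fun s hs x => ?_,
            ρx_t := fun s hs x => ?_, Y_t := fun s hs x => ?_, A_t := fun s hs x => ?_,
            Y_coercive := ?_, ends := ?_, ends_int := fun s hs => ?_, init0 := ?_,
            init1_int := ?_, init1 := ?_ }, fun s hs x => ?_⟩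
  · rw [cs' s hs, ← e1 s (I s hs) x]
    exact clamp_hasDerivAt (f := fun τ => ρ τ x) hs (dρt s x)
  · rw [cs' s hs, ← e3 s (I s hs) x]
    exact clamp_hasDerivAt (f := fun τ => u τ x) hs (dut s x)
  · rw [cs' s hs, ← e4 s (I s hs) x]
    exact clamp_hasDerivAt (f := fun τ => ρx τ x) hs (dρxt s x)
  · refine pot_t kρ kρu (at' := fun s x => ρt (c s) x) kρt
      (bx := fun s x => ρx (c s) x * u (c s) x + ρ (c s) x * ux (c s) x)
      (by fun_prop) (fun s hs x => ?_) (fun s hs x => ?_) (fun s hs x => ?_) hs x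
    · rw [cs' s hs]
      exact clamp_hasDerivAt (f := fun τ => ρ τ x) hs (dρt s x)
    · exact (dρx _ x).mul (dux _ x)
    · rw [e1 _ (cm s) x]; ring
  · refine pot_t kρu kA (at' := fun s x => ρt (c s) x * u (c s) x + ρ (c s) x * ut (c s) x)
      (by fun_prop) (bx := fun s x => ρx (c s) x * u (c s) x ^ 2
        + ρ (c s) x * (2 * u (c s) x * ux (c s) x)
        + B.θ ^ 2 * (ρ (c s) x ^ B.θ) ^ 2 * ρx (c s) x - ε * uxx (c s) x)
      (by fun_prop) (fun s hs x => ?_) (fun s hs x => ?_) (fun s hs x => ?_) hs x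
    · rw [cs' s hs]
      exact clamp_hasDerivAt (f := fun τ => ρ τ x * u τ x) hs ((dρt s x).mul (dut s x))
    · exact (dflux _ (cm s) x).sub ((duxx _ x).const_mul ε)
    · linarith [e2 _ (cm s) x]
  · refine pot_coercive hT kρ kρu (fun s x => ?_) (fun s => ?_)
    · rw [← hc, cs _ (cm s)]
    · obtain ⟨c1, C1, h1, h2⟩ := twos s
      exact ⟨c1, h1, fun x => (h2 x).1⟩
  · obtain ⟨c1, C1, hc1, h2⟩ := twos 0
    obtain ⟨c3, C3, hc3, h4⟩ := twos B.T
    refine ⟨min c1 c3, max C1 C3, lt_min hc1 hc3, ?_⟩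
    rintro s (rfl | rfl) x
    · exact ⟨(min_le_left _ _).trans (h2 x).1, (h2 x).2.trans (le_max_left _ _)⟩
    · exact ⟨(min_le_right _ _).trans (h4 x).1, (h4 x).2.trans (le_max_right _ _)⟩
  · rw [cs s (hend s hs)]
    exact hInt s (hend s hs)
  · rw [cs 0 (hend 0 (Or.inl rfl))]
    exact h0
  · rw [cs 0 (hend 0 (Or.inl rfl))]
    simpa only [(dρx 0 _).deriv] using h1i
  · rw [cs 0 (hend 0 (Or.inl rfl))]
    simpa only [(dρx 0 _).deriv] using h1
  · exact ⟨congrArg (fun τ => ρ τ x) (cs s hs), congrArg (fun τ => u τ x) (cs s hs)⟩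

end NSHI

/-! ### Conclusion -/

namespace NSHI

/-- With zero background velocity the relative mechanical energy splits into the kinetic energy
and the relative internal energy. -/
lemma relMechEnergy_eq (B : Bg) {x ρ u : ℝ} (hρ : 0 < ρ) :
    relMechEnergy (2 * B.θ + 1) B.κ (B.ρb x) (B.ρb x * 0) ρ (ρ * u)
      = ρ * u ^ 2 / 2 + B.Ψ x ρ := by
  have hθ := B.hθ
  have hb := B.ρb_pos x
  have e : ∀ y : ℝ, 0 < y → y ^ (2 * B.θ + 1) = y * (y ^ B.θ) ^ 2 := fun y hy => by
    rw [Real.rpow_add_one hy.ne', mul_comm (2:ℝ), Real.rpow_mul hy.le, mul_comm]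
    norm_num
  have e' : B.ρb x ^ (2 * B.θ + 1 - 1) = (B.ρb x ^ B.θ) ^ 2 := by
    rw [add_sub_cancel_right, mul_comm (2:ℝ), Real.rpow_mul hb.le]
    norm_num
  unfold relMechEnergy mechEnergy Bg.Ψ Bg.pr Bg.pb Bg.Eb Bg.κ
  rw [e ρ hρ, e _ hb, e']
  have : 2 * B.θ + 1 ≠ 0 := by positivity
  rw [add_sub_cancel_right]
  field_simp
  ring

/-- Finiteness of the initial momentum `∫ ρ|u|` forces the background velocity to vanish at both
ends, hence everywhere. -/
lemma ub_zero {ε L₀ uplus uminus m M : ℝ} (hε : 0 < ε) (hm : 0 < m) {ρb ub : ℝ → ℝ}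
    {ρ u : ℝ → ℝ} (hρb : ∀ x, m ≤ ρb x ∧ ρb x ≤ M) (hmono : Monotone ub ∨ Antitone ub)
    (hplus : ∀ x, L₀ ≤ x → ub x = uplus) (hminus : ∀ x, x ≤ -L₀ → ub x = uminus)
    (cρ : Continuous ρ) (cu : Continuous u) (hpos : ∀ x, 0 < ρ x)
    (hρ : Tendsto (fun x => ρ x - ρb x) (cocompact ℝ) (nhds 0))
    (hu : Tendsto (fun x => u x - ub x) (cocompact ℝ) (nhds 0))
    (hInt : Integrable (fun x => ε ^ 2 * (deriv ρ x) ^ 2 / (ρ x) ^ 3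
      + 2 * ε * |deriv ρ x * u x| / ρ x + ρ x * |u x|)) (x : ℝ) : ub x = 0 := by
  obtain ⟨c, C, hc, hb⟩ := two_sided hm cρ hpos hρb hρ
  have h1 : Integrable u := by
    refine (hInt.const_mul (1 / c)).mono' cu.aestronglyMeasurable (ae_of_all _ fun y => ?_)
    have hp := hpos y
    rw [Real.norm_eq_abs, one_div, ← div_eq_inv_mul, le_div_iff₀ hc]
    have t1 : 0 ≤ ε ^ 2 * (deriv ρ y) ^ 2 / (ρ y) ^ 3 := by positivity
    have t2 : 0 ≤ 2 * ε * |deriv ρ y * u y| / ρ y := by positivity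
    have t3 := mul_le_mul_of_nonneg_right (hb y).1 (abs_nonneg (u y))
    linarith
  have hp : uplus = 0 := by
    refine lim_zero h1 (Or.inl rfl) ?_
    have := (hu.mono_left atTop_le_cocompact).add_const uplus
    rw [zero_add] at this
    refine this.congr' ?_
    filter_upwards [eventually_ge_atTop L₀] with y hy
    rw [hplus y hy]; ring
  have hmn : uminus = 0 := by
    refine lim_zero h1 (Or.inr rfl) ?_
    have := (hu.mono_left atBot_le_cocompact).add_const uminus
    rw [zero_add] at this
    refine this.congr' ?_
    filter_upwards [eventually_le_atBot (-L₀)] with y hy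
    rw [hminus y hy]; ring
  have e1 := hplus (max x L₀) (le_max_right _ _)
  have e2 := hminus (min x (-L₀)) (min_le_right _ _)
  rcases hmono with h | h
  · have a1 := h (le_max_left x L₀)
    have a2 := h (min_le_left x (-L₀))
    linarith
  · have a1 := h (le_max_left x L₀)
    have a2 := h (min_le_left x (-L₀))
    linarith

/-- Comparison of the space-time integral over `(0,T] × K` with the iterated interval integral. -/
lemma final_integral {T k : ℝ} (hT : 0 < T) (hk : 0 < k) {K : Set ℝ} (hK : IsCompact K)
    (hKk : K ⊆ Ioc (-k) k) {F : ℝ × ℝ → ℝ} {G : ℝ → ℝ → ℝ}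
    (cG : Continuous (fun z : ℝ × ℝ => G z.1 z.2)) (hG : ∀ s x, 0 ≤ G s x)
    (h : ∀ s ∈ Icc 0 T, ∀ x, F (s, x) = G s x) :
    ∫ q in Ioc (0:ℝ) T ×ˢ K, F q ≤ ∫ s in (0:ℝ)..T, ∫ x in (-k)..k, G s x := by
  have h1 : ∫ q in Ioc (0:ℝ) T ×ˢ K, F q = ∫ q in Ioc (0:ℝ) T ×ˢ K, G q.1 q.2 :=
    setIntegral_congr_fun (measurableSet_Ioc.prod hK.measurableSet) fun q hq =>
      h q.1 ⟨hq.1.1.le, hq.1.2⟩ q.2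
  have hi : IntegrableOn (fun q : ℝ × ℝ => G q.1 q.2) (Ioc (0:ℝ) T ×ˢ Ioc (-k) k) :=
    (cG.continuousOn.integrableOn_compact (isCompact_Icc.prod isCompact_Icc)).mono_set
      (prod_mono Ioc_subset_Icc_self Ioc_subset_Icc_self)
  rw [h1]
  calc _ ≤ ∫ q in Ioc (0:ℝ) T ×ˢ Ioc (-k) k, G q.1 q.2 :=
        setIntegral_mono_set hi (ae_of_all _ fun q => hG _ _)
          (prod_mono le_rfl hKk).eventuallyLE
    _ = ∫ s in Ioc (0:ℝ) T, ∫ x in Ioc (-k) k, G s x := by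
        rw [Measure.volume_eq_prod] at hi ⊢
        exact setIntegral_prod _ hi
    _ = _ := by
        rw [intervalIntegral.integral_of_le hT.le]
        congr 1; funext s
        rw [intervalIntegral.integral_of_le (by linarith)]

end NSHI

/-- **Higher integrability estimate for the one-dimensional Navier–Stokes equations.**
For every compact `K ⊂ ℝ` and `t ∈ (0,T]` there is `C₂ = C₂(E₀,E₁,K,γ,t)`, independent
of `ε`, such that every classical positive solution with the stated initial bounds
satisfies `∫₀ᵗ ∫_K ( ρ|u|³ + ρ^{γ+θ} + ρ^{γ+1} ) dx dτ ≤ C₂`. -/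
theorem navier_stokes_higher_integrability
    (γ θ : ℝ) (hγ : 1 < γ) (hθ : θ = (γ - 1) / 2)
    (κ : ℝ) (hκ : κ = (γ - 1) ^ 2 / (4 * γ))
    (T : ℝ) (hT : 0 < T)
    (ρplus ρminus uplus uminus L₀ : ℝ) (hρplus : 0 < ρplus) (hρminus : 0 < ρminus)
    (hL₀ : 0 < L₀)
    (ρb ub : ℝ → ℝ) (hρb : ContDiff ℝ (⊤ : ℕ∞) ρb) (hub : ContDiff ℝ (⊤ : ℕ∞) ub)
    (hρbmono : Monotone ρb ∨ Antitone ρb) (hubmono : Monotone ub ∨ Antitone ub)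
    (hbplus : ∀ x : ℝ, L₀ ≤ x → ρb x = ρplus ∧ ub x = uplus)
    (hbminus : ∀ x : ℝ, x ≤ -L₀ → ρb x = ρminus ∧ ub x = uminus)
    (E₀ E₁ : ℝ) :
    ∀ K : Set ℝ, IsCompact K → ∀ t : ℝ, t ∈ Set.Ioc 0 T →
    ∃ C₂ : ℝ, 0 < C₂ ∧
      ∀ ε : ℝ, 0 < ε →
      ∀ ρ u : ℝ → ℝ → ℝ,
        ContDiff ℝ 2 (fun pt : ℝ × ℝ => ρ pt.1 pt.2) →
        ContDiff ℝ 2 (fun pt : ℝ × ℝ => u pt.1 pt.2) →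
        (∀ s x : ℝ, s ∈ Set.Icc 0 T → 0 < ρ s x) →
        (∀ s x : ℝ, s ∈ Set.Icc 0 T →
          deriv (fun τ => ρ τ x) s + deriv (fun y => ρ s y * u s y) x = 0) →
        (∀ s x : ℝ, s ∈ Set.Icc 0 T →
          deriv (fun τ => ρ τ x * u τ x) s
              + deriv (fun y => ρ s y * (u s y) ^ 2 + κ * ρ s y ^ γ) x
            = ε * deriv (deriv (fun y => u s y)) x) →
        (∀ s : ℝ, s ∈ Set.Icc 0 T →
          Tendsto (fun x => ρ s x - ρb x) (cocompact ℝ) (nhds 0) ∧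
          Tendsto (fun x => u s x - ub x) (cocompact ℝ) (nhds 0) ∧
          Tendsto (fun x => deriv (fun y => ρ s y - ρb y) x) (cocompact ℝ) (nhds 0) ∧
          Tendsto (fun x => deriv (fun y => u s y - ub y) x) (cocompact ℝ) (nhds 0)) →
        (∀ s : ℝ, s ∈ Set.Icc 0 T →
          Integrable (fun x =>
            relMechEnergy γ κ (ρb x) (ρb x * ub x) (ρ s x) (ρ s x * u s x))) →
        (∫ x : ℝ, relMechEnergy γ κ (ρb x) (ρb x * ub x) (ρ 0 x) (ρ 0 x * u 0 x)) ≤ E₀ →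
        Integrable (fun x => ε ^ 2 * (deriv (fun y => ρ 0 y) x) ^ 2 / (ρ 0 x) ^ 3
          + 2 * ε * |deriv (fun y => ρ 0 y) x * u 0 x| / ρ 0 x + ρ 0 x * |u 0 x|) →
        (∫ x : ℝ, (ε ^ 2 * (deriv (fun y => ρ 0 y) x) ^ 2 / (ρ 0 x) ^ 3
          + 2 * ε * |deriv (fun y => ρ 0 y) x * u 0 x| / ρ 0 x + ρ 0 x * |u 0 x|)) ≤ E₁ →
        (∫ q in Set.Ioc (0 : ℝ) t ×ˢ K,
            (ρ q.1 q.2 * |u q.1 q.2| ^ 3 + ρ q.1 q.2 ^ (γ + θ) + ρ q.1 q.2 ^ (γ + 1)))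
          ≤ C₂ := by
  intro K hK t ht
  have hθ0 : 0 < θ := by rw [hθ]; linarith
  obtain ⟨B, rfl, rfl, rfl, rfl, rfl⟩ := NSHI.exists_bg (E₀ := E₀) (E₁ := E₁) hθ0 ht.1 hL₀ hρplus
    hρminus hρb hρbmono (fun x hx => (hbplus x hx).1) (fun x hx => (hbminus x hx).1)
  have hγ' : γ = 2 * B.θ + 1 := by linarith
  have hκ' : κ = B.κ := by
    rw [hκ, hγ']; unfold NSHI.Bg.κ
    have : 2 * B.θ + 1 ≠ 0 := by positivity
    field_simp
    ring
  subst hγ' hκ'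
  have sub : ∀ s, s ∈ Icc 0 B.T → s ∈ Icc 0 T := fun s hs => ⟨hs.1, hs.2.trans ht.2⟩
  have h0T : (0:ℝ) ∈ Icc 0 T := ⟨le_rfl, hT.le⟩
  by_cases hub0 : ∀ x, ub x = 0
  swap
  -- A nonzero background velocity is incompatible with the initial bound, so any constant works.
  · refine ⟨1, one_pos, fun ε hε ρ u hρ hu hpos _ _ htend _ _ hi _ => ?_⟩
    exact absurd (NSHI.ub_zero hε B.hm (fun x => ⟨B.ρb_ge x, B.ρb_le x⟩) hubmono
      (fun x hx => (hbplus x hx).2) (fun x hx => (hbminus x hx).2)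
      (NSHI.contx hρ.continuous 0) (NSHI.contx hu.continuous 0) (fun x => hpos 0 x h0T)
      (htend 0 h0T).1 (htend 0 h0T).2.1 hi) hub0
  obtain ⟨k0, hk0⟩ := hK.isBounded.subset_closedBall 0
  set k := max (|k0| + 1) B.l0 with hk
  have hl0 := B.l0_ge
  have hkl : B.l0 ≤ k := le_max_right _ _
  have hk0' : |k0| + 1 ≤ k := le_max_left _ _
  have hkpos : 0 < k := by linarith
  have hKk : K ⊆ Ioc (-k) k := fun x hx => by
    have h1 : |x| ≤ k0 := by simpa [Real.dist_eq] using hk0 hx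
    have h2 := abs_le.mp (h1.trans (le_abs_self k0))
    exact ⟨by linarith [h2.1], by linarith [h2.2]⟩
  obtain ⟨C, hC, hbound⟩ := NSHI.combined B hkpos (by linarith)
  refine ⟨C, hC, fun ε hε ρ u hρ hu hpos hcont hmom htend hInt h0 h1i h1 => ?_⟩
  have epow : ∀ y : ℝ, 0 < y → B.κ * y ^ (2 * B.θ + 1) = B.pr y := fun y hy => by
    unfold NSHI.Bg.pr
    rw [Real.rpow_add_one hy.ne', mul_comm (2:ℝ), Real.rpow_mul hy.le, mul_comm (_ ^ (2:ℝ))]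
    norm_num
  have erel : ∀ s ∈ Icc 0 T, (fun x => relMechEnergy (2 * B.θ + 1) B.κ (B.ρb x) (B.ρb x * ub x)
      (ρ s x) (ρ s x * u s x)) = fun x => ρ s x * u s x ^ 2 / 2 + B.Ψ x (ρ s x) :=
    fun s hs => funext fun x => by
      rw [hub0 x, NSHI.relMechEnergy_eq B (hpos s x hs)]
  obtain ⟨S, hS⟩ := NSHI.exists_sol B hε hρ hu (fun s x hs => hpos s x (sub s hs))
    (fun s x hs => hcont s x (sub s hs))
    (fun s x hs => by
      have := hmom s x (sub s hs)
      simpa only [epow _ (hpos s _ (sub s hs))] using this)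
    (fun s hs => (htend s (sub s hs)).1)
    (fun s hs => by rw [← erel s (sub s hs)]; exact hInt s (sub s hs))
    (by rw [← erel 0 h0T]; exact h0) h1i h1
  refine le_trans (NSHI.final_integral (k := k) B.hT hkpos hK hKk
    (G := fun s x => S.ρ s x * |S.u s x| ^ 3 + S.ρ s x * S.r s x ^ 3
      + S.ρ s x * (S.ρ s x * S.r s x ^ 2)) (by fun_prop) (fun s x => ?_) (fun s hs x => ?_))
    (hbound S)
  · have := S.pos s x
    have := S.r_pos s x
    positivity
  · obtain ⟨e1, e2⟩ := hS s hs x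
    have hp := hpos s x (sub s hs)
    unfold NSHI.Sol.r
    simp only [e1, e2]
    have q1 : ρ s x ^ (2 * B.θ + 1 + B.θ) = ρ s x * (ρ s x ^ B.θ) ^ 3 := by
      rw [show 2 * B.θ + 1 + B.θ = B.θ * 3 + 1 by ring, Real.rpow_add_one hp.ne',
        Real.rpow_mul hp.le, mul_comm]
      norm_num
    have q2 : ρ s x ^ (2 * B.θ + 1 + 1) = ρ s x * (ρ s x * (ρ s x ^ B.θ) ^ 2) := by
      rw [show 2 * B.θ + 1 + 1 = B.θ * 2 + 1 + 1 by ring, Real.rpow_add_one hp.ne',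
        Real.rpow_add_one hp.ne', Real.rpow_mul hp.le]
      norm_num
      ring
    rw [q1, q2]
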